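/- Let p ∈ (1,∞), κ ∈ (0,1), w ∈ A_p(𝓗^{n-1}) and b ∈ BMO(𝓗^{n-1}). Then the commutator of the Cauchy–Szegő operator [b,𝒞] is bounded on the weighted Morrey space L^{p,κ}_w(𝓗^{n-1}): there exists a constant C > 0, independent of b and f, such that for every f ∈ L^{p,κ}_w(𝓗^{n-1}), ‖[b,𝒞]f‖_{L^{p,κ}_w} ≤ C ‖b‖_BMO ‖f‖_{L^{p,κ}_w}. -/

import Mathlib

/-!
The group with the metric `rho` is an Ahlfors regular space of dimension `4n+2` (the triangle
inequality is Cygan's), and left translates of a self-similar tile provide dyadic cubes; both are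
recorded in the classes `CZ.Ahl` and `CZ.Dya`. The four real components of the Cauchy–Szegő kernel
are standard Calderón–Zygmund kernels whose integrals over annuli vanish. The analysis is done for
one such kernel on an abstract space with these two structures.

The kernel is cut smoothly into pieces living at the scales `2 ^ j`. Pieces at different scales are
almost orthogonal, so the Cotlar–Stein lemma `cotlar_stein` bounds the truncated operators on `L²`,
uniformly in the truncation (`ltwo_trk`). A Calderón–Zygmund decomposition on dyadic cubes gives the
weak `(1,1)` bound, and Cotlar's inequality extends it to the maximal truncation. For the indicator
of a set with null boundary, cancellation makes the truncations eventually constant off the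
boundary; finite unions of balls approximate measurable sets, so by density the principal value
exists almost everywhere for integrable functions (`PV_int`). Applied locally to `f` and `b f`, this
gives the limit defining the commutator.

For the norm inequality, `sparse_step` is a stopping time argument: on a cube `P` the truncated
commutator is bounded by `|b - b_P|` times the average of `|f|` plus the average of `|(b - b_P) f|`,
over a dilate of `P`, up to the same problem on stopping subcubes of small total measure. An `A_p`
weight is fair (a subset carrying a fraction of the volume of a ball carries a fraction of its
weight), so stopping families are Carleson for the weight, and the John–Nirenberg inequality holds
with respect to the weight and its dual.
Summation over the family gives the local weighted estimate `loc_bd`. On a ball, the far part of `f`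
is estimated by its averages over the dilated balls; `κ < 1` and the reverse doubling of the weight
make the series converge (`tail_bd`, `morrey_trunc`). Fatou's lemma passes to the limit of
truncations.

For every `β > bmoNorm b`, `b` agrees almost everywhere with `β b'`, where `b'` is measurable with
oscillations at most `1` (`bmo_rep`); the estimate for `b'` is uniform, and `β` then decreases to
`bmoNorm b`. A weight vanishing almost everywhere satisfies the `A_p` condition as it is encoded and
makes the norm inequality trivial, but puts no restriction on `f`. The limit nevertheless exists
almost everywhere for arbitrary `b` and `f` (`exists_any`): the integral of a non-integrable
truncation is `0`, and at a point where all truncations are integrable the kernel, whose size has a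
positive lower bound on spheres, makes `(b g - b) f` integrable on annuli around `g`.
-/

open MeasureTheory Filter Topology ENNReal NNReal
noncomputable section

namespace QHeis

abbrev G (n : ℕ) := (Fin 3 → ℝ) × (Fin (4*(n-1)) → ℝ)

def bmat : Fin 3 → Fin 4 → Fin 4 → ℝ :=
  ![![![0,1,0,0], ![-1,0,0,0], ![0,0,0,-1], ![0,0,1,0]],
    ![![0,0,1,0], ![0,0,0,1], ![-1,0,0,0], ![0,-1,0,0]],
    ![![0,0,0,1], ![0,0,-1,0], ![0,1,0,0], ![-1,0,0,0]]]

def idx {n : ℕ} (l : Fin (n-1)) (k : Fin 4) : Fin (4*(n-1)) :=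
  ⟨4 * l.1 + k.1, by have h1 := l.2; have h2 := k.2; omega⟩

def mul {n : ℕ} (a b : G n) : G n :=
  (fun α => a.1 α + b.1 α +
      2 * ∑ l : Fin (n-1), ∑ k : Fin 4, ∑ j : Fin 4,
        bmat α k j * a.2 (idx l k) * b.2 (idx l j),
    a.2 + b.2)

def inv {n : ℕ} (a : G n) : G n := (-a.1, -a.2)

def hnorm {n : ℕ} (g : G n) : ℝ :=
  ((∑ i, (g.2 i)^2)^2 + ∑ α, (g.1 α)^2) ^ ((4:ℝ)⁻¹)

def rho {n : ℕ} (h g : G n) : ℝ := hnorm (mul (inv g) h)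

def ball {n : ℕ} (g : G n) (r : ℝ) : Set (G n) := {h | rho h g < r}

def dil {n : ℕ} (r : ℝ) (g : G n) : G n := (fun α => r^2 * g.1 α, fun i => r * g.2 i)

def avg {n : ℕ} (B : Set (G n)) (f : G n → ℝ) : ℝ := (volume B).toReal⁻¹ * ∫ x in B, f x

def oscB {n : ℕ} (f : G n → ℝ) (g : G n) (r : ℝ) : ℝ :=
  avg (ball g r) (fun x => |f x - avg (ball g r) f|)

def IsLocInt {n : ℕ} (f : G n → ℝ) : Prop :=
  ∀ (g : G n) (r : ℝ), 0 < r → IntegrableOn f (ball g r)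

def InBMO {n : ℕ} (b : G n → ℝ) : Prop :=
  IsLocInt b ∧ ∃ C : ℝ, ∀ (g : G n) (r : ℝ), 0 < r → oscB b g r ≤ C

def bmoNorm {n : ℕ} (b : G n → ℝ) : ℝ :=
  sInf {C : ℝ | 0 ≤ C ∧ ∀ (g : G n) (r : ℝ), 0 < r → oscB b g r ≤ C}

def InVMO {n : ℕ} (b : G n → ℝ) : Prop :=
  InBMO b ∧ ∀ ε : ℝ, 0 < ε → ∃ φ : G n → ℝ, ContDiff ℝ (⊤ : ℕ∞) φ ∧ HasCompactSupport φ ∧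
    InBMO (fun x => b x - φ x) ∧ bmoNorm (fun x => b x - φ x) < ε

def wInt {n : ℕ} (w : G n → ℝ) (E : Set (G n)) : ℝ≥0∞ := ∫⁻ x in E, ENNReal.ofReal (w x)

def IsApGt1 {n : ℕ} (p : ℝ) (w : G n → ℝ) : Prop :=
  ∃ C : ℝ, ∀ (g : G n) (r : ℝ), 0 < r →
    (wInt w (ball g r) / volume (ball g r)) *
      ((∫⁻ x in ball g r, (ENNReal.ofReal (w x)) ^ (-(1/(p-1)))) / volume (ball g r)) ^ (p-1)
      ≤ ENNReal.ofReal C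

def IsA1 {n : ℕ} (w : G n → ℝ) : Prop :=
  ∃ C : ℝ, ∀ (g : G n) (r : ℝ), 0 < r →
    wInt w (ball g r) / volume (ball g r)
      ≤ ENNReal.ofReal C * essInf (fun x => ENNReal.ofReal (w x)) (volume.restrict (ball g r))

def IsAp {n : ℕ} (p : ℝ) (w : G n → ℝ) : Prop :=
  Measurable w ∧ (∀ x, 0 ≤ w x) ∧ (∀ (g : G n) (r : ℝ), 0 < r → wInt w (ball g r) < ⊤) ∧
    ((p = 1 ∧ IsA1 w) ∨ (1 < p ∧ IsApGt1 p w))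

def morreyNormE {n : ℕ} (p κ : ℝ) (w : G n → ℝ) (F : G n → ℝ≥0∞) : ℝ≥0∞ :=
  ⨆ (g : G n) (r : ℝ) (_ : 0 < r),
    ((∫⁻ x in ball g r, (F x) ^ p * ENNReal.ofReal (w x)) / (wInt w (ball g r)) ^ κ) ^ (1/p)

def morreyNorm {n : ℕ} (p κ : ℝ) (w f : G n → ℝ) : ℝ≥0∞ :=
  morreyNormE p κ w (fun x => ENNReal.ofReal |f x|)

def MemMorrey {n : ℕ} (p κ : ℝ) (w f : G n → ℝ) : Prop :=
  Measurable f ∧ morreyNorm p κ w f < ⊤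

def lpwNorm {n : ℕ} (p : ℝ) (w f : G n → ℝ) : ℝ≥0∞ :=
  (∫⁻ g, (ENNReal.ofReal |f g|) ^ p * ENNReal.ofReal (w g)) ^ (1/p)

def lpwNormQ {n : ℕ} (p : ℝ) (w : G n → ℝ) (f : G n → Quaternion ℝ) : ℝ≥0∞ :=
  (∫⁻ g, (ENNReal.ofReal ‖f g‖) ^ p * ENNReal.ofReal (w g)) ^ (1/p)

def dre (F : Quaternion ℝ → Quaternion ℝ) (σ : Quaternion ℝ) : Quaternion ℝ :=
  deriv (fun s : ℝ => F (σ + (s : Quaternion ℝ))) 0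

def sker (m : ℕ) (c : ℝ) (σ : Quaternion ℝ) : Quaternion ℝ :=
  c • (dre^[m] (fun τ => ((Quaternion.normSq τ) ^ 2)⁻¹ • star τ)) σ

def toQ {n : ℕ} (g : G n) : Quaternion ℝ := ⟨∑ i, (g.2 i)^2, g.1 0, g.1 1, g.1 2⟩

def Kker {n : ℕ} (c : ℝ) (g : G n) : Quaternion ℝ := sker (2*(n-1)) c (toQ g)

def Kker2 {n : ℕ} (c : ℝ) (g h : G n) : Quaternion ℝ := Kker c (mul (inv h) g)

def commTendsto {n : ℕ} (c : ℝ) (b f : G n → ℝ) (g : G n) (L : Quaternion ℝ) : Prop :=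
  Tendsto (fun ε : ℝ => ∫ h in {h : G n | ε < rho g h}, ((b g - b h) * f h) • Kker2 c g h)
    (nhdsWithin 0 (Set.Ioi 0)) (nhds L)

def commFun {n : ℕ} (c : ℝ) (b f : G n → ℝ) (g : G n) : Quaternion ℝ :=
  limUnder (nhdsWithin (0:ℝ) (Set.Ioi 0))
    (fun ε : ℝ => ∫ h in {h : G n | ε < rho g h}, ((b g - b h) * f h) • Kker2 c g h)

def eT {n : ℕ} (α : Fin 3) : G n := (Pi.single α 1, 0)
def eY {n : ℕ} (i : Fin (4*(n-1))) : G n := (0, Pi.single i 1)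

def pderiv {n : ℕ} (v : G n) (f : G n → ℝ) (g : G n) : ℝ :=
  deriv (fun s : ℝ => f (g + s • v)) 0

def Y {n : ℕ} (l : Fin (n-1)) (j : Fin 4) (f : G n → ℝ) (g : G n) : ℝ :=
  pderiv (eY (idx l j)) f g +
    2 * ∑ α : Fin 3, (∑ k : Fin 4, bmat α k j * g.2 (idx l k)) * pderiv (eT α) f g

def gradHsup {n : ℕ} (b : G n → ℝ) : ℝ :=
  sSup {a : ℝ | ∃ (g : G n) (l : Fin (n-1)) (j : Fin 4), a = |Y l j b g|}

def maxFunE {n : ℕ} (f : G n → ℝ) (g : G n) : ℝ≥0∞ :=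
  ⨆ (g0 : G n) (r : ℝ) (_ : 0 < r) (_ : g ∈ ball g0 r),
    (∫⁻ x in ball g0 r, ENNReal.ofReal |f x|) / volume (ball g0 r)

def Ceta {n : ℕ} (c : ℝ) (φ : ℝ → ℝ) (η : ℝ) (f : G n → ℝ) (g : G n) : Quaternion ℝ :=
  ∫ h, (φ (rho g h / η) * f h) • Kker2 c g h

def commEta {n : ℕ} (c : ℝ) (φ : ℝ → ℝ) (η : ℝ) (b f : G n → ℝ) (g : G n) : Quaternion ℝ :=
  ∫ h, ((b g - b h) * (φ (rho g h / η) * f h)) • Kker2 c g h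

def CstarE {n : ℕ} (c : ℝ) (φ : ℝ → ℝ) (f : G n → ℝ) (g : G n) : ℝ≥0∞ :=
  ⨆ (η : ℝ) (_ : 0 < η), ENNReal.ofReal ‖Ceta c φ η f g‖

def IsCompactComm {n : ℕ} (c p κ : ℝ) (w b : G n → ℝ) : Prop :=
  ∀ F : Set (G n → ℝ), (∀ f ∈ F, MemMorrey p κ w f) →
    (∃ M : ℝ, ∀ f ∈ F, morreyNorm p κ w f ≤ ENNReal.ofReal M) →
    ∀ ε : ℝ, 0 < ε → ∃ T : Set (G n → Quaternion ℝ), T.Finite ∧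
      ∀ f ∈ F, ∃ t ∈ T,
        morreyNormE p κ w (fun g => ENNReal.ofReal ‖commFun c b f g - t g‖) < ENNReal.ofReal ε

end QHeis

set_option linter.unusedSectionVars false
set_option linter.deprecated false
set_option linter.style.longLine false

open ENNReal (div_le_div_right div_le_iff le_tsum ofReal tsum_add tsum_le_tsum)

namespace CZ
open Metric Set
open ContinuousLinearMap (adjoint)
open Function (uncurry)

/-! ### Ahlfors regular spaces and the maximal function -/

/-- Metric spaces in which a ball of radius `r` has measure exactly `c0 * r ^ Q`. -/
class Ahl (X : Type) [MetricSpace X] [MeasureSpace X] where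
  Q : ℕ
  c0 : ℝ
  Qpos : 1 ≤ Q
  c0pos : 0 < c0
  vol_ball : ∀ (x : X) (r : ℝ), 0 < r → volume (ball x r) = ofReal (c0 * r ^ Q)

/-- Measures that are positive and finite on balls and doubling with constant `D`. -/
structure Doub {X : Type} [MetricSpace X] [MeasurableSpace X] (ν : Measure X) (D : ℝ≥0) :
    Prop where
  pos : ∀ x r, 0 < r → ν (ball x r) ≠ 0
  fin : ∀ x r, ν (ball x r) ≠ ⊤
  dbl : ∀ x r, 0 < r → ν (ball x (6 * r)) ≤ D * ν (ball x r)

/-- The uncentred maximal function with respect to the measure `ν`. -/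
def MF {X : Type} [MetricSpace X] [MeasurableSpace X] (ν : Measure X) (f : X → ℝ≥0∞) (x : X) :
    ℝ≥0∞ :=
  ⨆ (z : X) (r : ℝ) (_ : 0 < r) (_ : x ∈ ball z r), (∫⁻ y in ball z r, f y ∂ν) / ν (ball z r)

section maximal
variable {X : Type} [MetricSpace X] [MeasurableSpace X] {ν : Measure X} {D : ℝ≥0}
  {f g : X → ℝ≥0∞}

lemma le_MF {x z : X} {r : ℝ} (hr : 0 < r) (hx : x ∈ ball z r) :
    (∫⁻ y in ball z r, f y ∂ν) / ν (ball z r) ≤ MF ν f x :=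
  le_iSup_of_le z <| le_iSup_of_le r <| le_iSup_of_le hr <| le_iSup_of_le hx le_rfl

lemma lint_le_MF (hD : Doub ν D) {x z : X} {r : ℝ} (hr : 0 < r) (hx : x ∈ ball z r) :
    ∫⁻ y in ball z r, f y ∂ν ≤ ν (ball z r) * MF ν f x := by
  have := le_MF (ν := ν) (f := f) hr hx
  rwa [div_le_iff (hD.pos z r hr) (hD.fin z r), mul_comm] at this

lemma MF_mono (h : ∀ᵐ x ∂ν, f x ≤ g x) (x : X) : MF ν f x ≤ MF ν g x := by
  refine iSup_mono fun z => iSup_mono fun r => iSup_mono fun hr => iSup_mono fun hx => ?_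
  gcongr ?_ / _
  exact lintegral_mono_ae (ae_restrict_of_ae h)

lemma MF_add_le (hf : Measurable f) (x : X) : MF ν (fun y => f y + g y) x ≤ MF ν f x + MF ν g x := by
  refine iSup_le fun z => iSup_le fun r => iSup_le fun hr => iSup_le fun hx => ?_
  rw [lintegral_add_left hf, ENNReal.add_div]
  exact add_le_add (le_MF hr hx) (le_MF hr hx)

lemma MF_const_le (hD : Doub ν D) (t : ℝ≥0∞) (x : X) : MF ν (fun _ => t) x ≤ t := by
  refine iSup_le fun z => iSup_le fun r => iSup_le fun hr => iSup_le fun hx => ?_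
  rw [lintegral_const, Measure.restrict_apply_univ]
  exact (ENNReal.mul_div_cancel_right (hD.pos z r hr) (hD.fin z r)).le

lemma isOpen_MF (t : ℝ≥0∞) : IsOpen {x | t < MF ν f x} := by
  rw [isOpen_iff_mem_nhds]
  intro x hx
  simp only [mem_ofPred_eq, MF, lt_iSup_iff] at hx
  obtain ⟨z, r, hr, hx, ht⟩ := hx
  filter_upwards [isOpen_ball.mem_nhds hx] with y hy
  exact ht.trans_le (le_MF hr hy)

lemma measurable_MF [OpensMeasurableSpace X] : Measurable (MF ν f) :=
  measurable_of_Ioi fun t => (isOpen_MF t).measurableSet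

/-- Weak type (1,1) of the maximal function, by the Vitali covering lemma. -/
lemma MF_weak [OpensMeasurableSpace X] [SecondCountableTopology X] (hD : Doub ν D) {t : ℝ≥0∞} :
    t * ν {x | t < MF ν f x} ≤ D * ∫⁻ x, f x ∂ν := by
  let U : ℕ → Set X := fun R => ⋃ (a : X × ℝ) (_ : 0 < a.2 ∧ a.2 ≤ R ∧
    t < (∫⁻ y in ball a.1 a.2, f y ∂ν) / ν (ball a.1 a.2)), ball a.1 a.2
  have hU : {x | t < MF ν f x} = ⋃ R, U R := by
    ext x
    simp only [MF, lt_iSup_iff, mem_ofPred_eq, U, mem_iUnion, Prod.exists]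
    constructor
    · rintro ⟨z, r, hr, hx, ht⟩
      obtain ⟨R, hR⟩ := exists_nat_ge r
      exact ⟨R, z, r, ⟨hr, hR, ht⟩, hx⟩
    · rintro ⟨R, z, r, ⟨hr, hR, ht⟩, hx⟩
      exact ⟨z, r, hr, hx, ht⟩
  have hmono : Monotone U := by
    intro a b hab
    refine iUnion_mono fun c => iUnion_mono' fun h => ⟨⟨h.1, h.2.1.trans ?_, h.2.2⟩, le_rfl⟩
    exact_mod_cast hab
  rw [hU, hmono.measure_iUnion, ENNReal.mul_iSup]
  refine iSup_le fun R => ?_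
  obtain ⟨u, hut, hud, huc⟩ := Vitali.exists_disjoint_subfamily_covering_enlargement_ball
    {a : X × ℝ | 0 < a.2 ∧ a.2 ≤ R ∧ t < (∫⁻ y in ball a.1 a.2, f y ∂ν) / ν (ball a.1 a.2)}
    (fun a => a.1) (fun a => a.2) R (fun a ha => ha.2.1) 6 (by norm_num)
  have hc : u.Countable := hud.countable_of_isOpen (fun a _ => isOpen_ball)
    (fun a ha => ⟨a.1, mem_ball_self (hut ha).1⟩)
  have h1 : U R ⊆ ⋃ a ∈ u, ball a.1 (6 * a.2) := by
    refine iUnion_subset fun a => iUnion_subset fun ha => ?_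
    obtain ⟨b, hb, hab⟩ := huc a ha
    exact hab.trans (subset_biUnion_of_mem (u := fun a : X × ℝ => ball a.1 (6 * a.2)) hb)
  have := hc.to_subtype
  calc t * ν (U R) ≤ t * ∑' a : u, ν (ball a.1.1 (6 * a.1.2)) := by
        gcongr
        refine (measure_mono h1).trans ?_
        rw [biUnion_eq_iUnion]
        exact measure_iUnion_le _
    _ ≤ t * ∑' a : u, D * ν (ball a.1.1 a.1.2) := by
        gcongr with a
        exact hD.dbl _ _ (hut a.2).1
    _ = D * ∑' a : u, t * ν (ball a.1.1 a.1.2) := by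
        rw [ENNReal.tsum_mul_left, ENNReal.tsum_mul_left]; ring
    _ ≤ D * ∑' a : u, ∫⁻ y in ball a.1.1 a.1.2, f y ∂ν := by
        gcongr with a
        have h := hut a.2
        rw [← ENNReal.le_div_iff_mul_le (Or.inl (hD.pos _ _ h.1)) (Or.inl (hD.fin _ _))]
        exact h.2.2.le
    _ = D * ∫⁻ y in ⋃ a : u, ball a.1.1 a.1.2, f y ∂ν := by
        rw [lintegral_iUnion (fun a => measurableSet_ball)]
        intro a b hab
        exact hud a.2 b.2 (fun h => hab (Subtype.ext h))
    _ ≤ D * ∫⁻ x, f x ∂ν := by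
        gcongr
        exact Measure.restrict_le_self

/-- The part of the maximal function above level `t` comes from the part of `f` above `t / 2`. -/
lemma MF_level [OpensMeasurableSpace X] (hD : Doub ν D) (hf : Measurable f) (t : ℝ≥0∞) :
    {x | t < MF ν f x} ⊆ {x | t / 2 < MF ν ({y | t / 2 < f y}.indicator f) x} := by
  intro x hx
  by_contra h
  simp only [mem_ofPred_eq, not_lt] at h hx
  have h1 : MF ν f x ≤ MF ν (fun y => {y | t / 2 < f y}.indicator f y + t / 2) x := by
    refine MF_mono (Eventually.of_forall fun y => ?_) x
    by_cases hy : t / 2 < f y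
    · simp [indicator, hy]
    · simp only [indicator, mem_ofPred_eq, hy, if_false, zero_add]
      exact not_lt.1 hy
  have h2 := (MF_add_le (ν := ν) (f := {y | t / 2 < f y}.indicator f) (g := fun _ => t / 2)
    (hf.indicator (measurableSet_lt measurable_const hf)) x)
  have := h1.trans (h2.trans (add_le_add h (MF_const_le hD _ x)))
  rw [ENNReal.add_halves] at this
  exact absurd hx (not_lt.2 this)

/-- Strong type of the maximal function for `p > 1`, with a constant depending only on
`p` and the doubling constant. -/
lemma MF_strong [OpensMeasurableSpace X] [SecondCountableTopology X] (hD : Doub ν D) (p : ℝ)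
    (hp : 1 < p) (hf : Measurable f) :
    ∫⁻ x, MF ν f x ^ p ∂ν ≤ ofReal (D * 2 ^ p * p / (p - 1)) * ∫⁻ x, f x ^ p ∂ν := by
  by_cases htop : ∫⁻ x, f x ^ p ∂ν = ⊤
  · rw [htop, mul_top']
    split_ifs with h0
    · have hD0 : (D : ℝ) = 0 := by
        by_contra hne
        have : 0 < D * 2 ^ p * p / (p - 1) := by
          have : (0:ℝ) < D := lt_of_le_of_ne D.2 (Ne.symm hne)
          have : 0 < p - 1 := by linarith
          positivity
        simp at h0; linarith
      rcases isEmpty_or_nonempty X with hX | ⟨⟨x⟩⟩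
      · simp
      · have := hD.dbl x 1 one_pos
        have h6 := hD.pos x (6*1) (by norm_num)
        have : D = 0 := by exact_mod_cast hD0
        simp_all
    · exact le_top
  have hfin : ∀ᵐ x ∂ν, f x < ⊤ := by
    filter_upwards [ae_lt_top (hf.pow_const p) htop] with x hx
    by_contra h
    rw [not_lt, top_le_iff] at h
    rw [h, top_rpow_of_pos (by linarith)] at hx
    exact lt_irrefl _ hx
  have hp0 : 0 < p := by linarith
  have hp1 : 0 < p - 1 := by linarith
  -- it suffices to treat the truncations of the maximal function
  suffices H : ∀ N : ℕ, ∫⁻ x, (min (MF ν f x) N) ^ p ∂ν ≤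
      ofReal (D * 2 ^ p * p / (p - 1)) * ∫⁻ x, f x ^ p ∂ν by
    have hsup : ∀ x, MF ν f x ^ p = ⨆ N : ℕ, (min (MF ν f x) N) ^ p := by
      intro x
      have h1 : MF ν f x = ⨆ N : ℕ, min (MF ν f x) N := by
        rw [← inf_iSup_eq, iSup_natCast, inf_top_eq]
      conv_lhs => rw [h1]
      exact (ENNReal.orderIsoRpow p hp0).map_iSup _
    simp_rw [hsup]
    rw [lintegral_iSup (fun N => (measurable_MF.min measurable_const).pow_const p)]
    · exact iSup_le H
    · intro a b hab x
      dsimp only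
      gcongr
  intro N
  set μ := ν.withDensity f with hμ
  have hreal : ∀ a : ℝ≥0∞, a ≠ ⊤ → a ^ p = ofReal (a.toReal ^ p) := by
    intro a ha
    rw [← ofReal_rpow_of_nonneg toReal_nonneg hp0.le, ofReal_toReal ha]
  have hmin : ∀ x, min (MF ν f x) N ≠ ⊤ := fun x =>
    ((min_le_right _ _).trans_lt (natCast_lt_top N)).ne
  simp_rw [fun x => hreal _ (hmin x)]
  rw [lintegral_rpow_eq_lintegral_meas_lt_mul ν (Eventually.of_forall fun x => toReal_nonneg)
    (measurable_MF.min measurable_const).ennreal_toReal.aemeasurable hp0]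
  have hstep : ∀ t : ℝ, 0 < t → ν {a | t < (min (MF ν f a) N).toReal} * ofReal (t ^ (p - 1)) ≤
      ofReal (2 * D) * (μ {x | t < 2 * (f x).toReal} * ofReal (t ^ (p - 1 - 1))) := by
    intro t ht
    have h1 : ν {a | t < (min (MF ν f a) N).toReal} ≤ ν {x | ofReal t < MF ν f x} := by
      refine measure_mono fun x hx => ?_
      exact ((ofReal_lt_iff_lt_toReal ht.le (hmin x)).2 hx).trans_le (min_le_left _ _)
    have h2 := h1.trans (measure_mono (MF_level (ν := ν) hD hf (ofReal t)))
    have h3 := MF_weak (f := {y | ofReal t / 2 < f y}.indicator f) hD (t := ofReal t / 2)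
    rw [lintegral_indicator (measurableSet_lt measurable_const hf)] at h3
    have h4 : ∫⁻ a in {a | ofReal t / 2 < f a}, f a ∂ν ≤ μ {x | t < 2 * (f x).toReal} := by
      rw [hμ, withDensity_apply _ (measurableSet_lt measurable_const
        (hf.ennreal_toReal.const_mul 2))]
      refine lintegral_mono_set' ?_
      filter_upwards [hfin] with x hx h
      have h' : ofReal t / 2 < f x := h
      have : (ofReal t / 2).toReal < (f x).toReal := (toReal_lt_toReal
        (div_ne_top ofReal_ne_top (by norm_num)) hx.ne).2 h'
      rw [toReal_div, toReal_ofReal ht.le] at this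
      change t < 2 * (f x).toReal
      simp at this
      linarith
    have h5 : ofReal (t ^ (p-1)) = ofReal t / 2 * (ofReal 2 * ofReal (t ^ (p-1-1))) := by
      rw [show ofReal t / 2 = ofReal (t / 2) by
        rw [ofReal_div_of_pos two_pos]; simp, ← ofReal_mul (by norm_num),
        ← ofReal_mul (by positivity)]
      congr 1
      rw [Real.rpow_sub_one ht.ne' (p-1)]
      field_simp
    calc _ ≤ ν {x | ofReal t / 2 < MF ν ({y | ofReal t / 2 < f y}.indicator f) x} *
          (ofReal t / 2 * (ofReal 2 * ofReal (t ^ (p-1-1)))) := by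
          rw [← h5]; gcongr
      _ = (ofReal t / 2 * ν {x | ofReal t / 2 < MF ν ({y | ofReal t / 2 < f y}.indicator f) x}) *
          (ofReal 2 * ofReal (t ^ (p-1-1))) := by ring
      _ ≤ (D * μ {x | t < 2 * (f x).toReal}) * (ofReal 2 * ofReal (t ^ (p-1-1))) := by
          exact mul_le_mul' (h3.trans (mul_le_mul' le_rfl h4)) le_rfl
      _ = _ := by
          rw [ofReal_mul two_pos.le, ofReal_coe_nnreal]; ring
  have hL := lintegral_rpow_eq_lintegral_meas_lt_mul μ (f := fun x => 2 * (f x).toReal)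
    (Eventually.of_forall fun x => by positivity) (hf.ennreal_toReal.const_mul 2).aemeasurable hp1
  calc _ ≤ ofReal p * ∫⁻ t in Ioi 0, ofReal (2 * D) *
        (μ {x | t < 2 * (f x).toReal} * ofReal (t ^ (p - 1 - 1))) := by
        refine mul_le_mul' le_rfl ?_
        exact setLIntegral_mono' measurableSet_Ioi fun t ht => hstep t ht
    _ = ofReal (p / (p - 1)) * ofReal (2 * D) * ∫⁻ x, ofReal ((2 * (f x).toReal) ^ (p-1)) ∂μ := by
        rw [lintegral_const_mul' _ _ ofReal_ne_top, hL, ofReal_div_of_pos hp1]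
        set I := ∫⁻ t in Ioi 0, μ {x | t < 2 * (f x).toReal} * ofReal (t ^ (p - 1 - 1))
        rw [show ofReal p / ofReal (p-1) * ofReal (2 * D) * (ofReal (p-1) * I) =
          (ofReal p / ofReal (p-1) * ofReal (p-1)) * (ofReal (2 * D) * I) by ring,
          ENNReal.div_mul_cancel (by simpa using hp1) ofReal_ne_top]
    _ = ofReal (p / (p - 1)) * ofReal (2 * D) * ∫⁻ x, ofReal (2 ^ (p-1)) * f x ^ p ∂ν := by
        congr 1
        rw [hμ, lintegral_withDensity_eq_lintegral_mul _ hf (by fun_prop)]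
        refine lintegral_congr_ae ?_
        filter_upwards [hfin] with x hx
        rw [hreal _ hx.ne, ← ofReal_mul (by positivity), Pi.mul_apply]
        nth_rw 1 [← ofReal_toReal hx.ne]
        rw [← ofReal_mul (by positivity), Real.mul_rpow two_pos.le toReal_nonneg]
        congr 1
        rcases (toReal_nonneg (a := f x)).eq_or_lt with h | h
        · rw [← h, Real.zero_rpow hp0.ne']; ring
        · rw [Real.rpow_sub_one h.ne']; field_simp
    _ = _ := by
        rw [lintegral_const_mul' _ _ ofReal_ne_top, ← mul_assoc, ← ofReal_mul (by positivity),
          ← ofReal_mul (by positivity)]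
        congr 2
        rw [Real.rpow_sub_one two_ne_zero]; field_simp

end maximal

section ahl
variable {X : Type} [MetricSpace X] [MeasureSpace X] [BorelSpace X] [SecondCountableTopology X]
  [Ahl X]

open Ahl

variable (X) in
lemma c0_pos : 0 < c0 X := c0pos
variable (X) in
lemma Q_pos : 1 ≤ Q X := Qpos

lemma vol_pos (x : X) {r : ℝ} (hr : 0 < r) : volume (ball x r) ≠ 0 := by
  rw [vol_ball x r hr]; have := c0_pos X
  simpa using by positivity

lemma vol_fin (x : X) (r : ℝ) : volume (ball x r) ≠ ⊤ := by
  rcases lt_or_ge 0 r with hr | hr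
  · rw [vol_ball x r hr]; exact ofReal_ne_top
  · rw [ball_eq_empty.2 hr]; simp

lemma vol_real (x : X) {r : ℝ} (hr : 0 < r) : volume.real (ball x r) = c0 X * r ^ Q X := by
  have := c0_pos X
  rw [Measure.real, vol_ball x r hr, toReal_ofReal (by positivity)]

instance : IsLocallyFiniteMeasure (volume : Measure X) :=
  ⟨fun x => ⟨ball x 1, ball_mem_nhds x one_pos, (vol_fin x 1).lt_top⟩⟩

lemma vol_closedBall (x : X) {r : ℝ} (hr : 0 ≤ r) :
    volume (closedBall x r) = ofReal (c0 X * r ^ Q X) := by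
  have h1 : ∀ᶠ s in 𝓝[>] r, volume (closedBall x r) ≤ ofReal (c0 X * s ^ Q X) := by
    filter_upwards [self_mem_nhdsWithin] with s hs
    rw [← vol_ball x s (hr.trans_lt hs)]
    exact measure_mono (closedBall_subset_ball hs)
  have h2 : Tendsto (fun s : ℝ => ofReal (c0 X * s ^ Q X)) (𝓝[>] r)
      (𝓝 (ofReal (c0 X * r ^ Q X))) := by
    refine tendsto_ofReal (Tendsto.mono_left ?_ nhdsWithin_le_nhds)
    exact (Continuous.tendsto (by fun_prop) r)
  refine le_antisymm (ge_of_tendsto h2 h1) ?_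
  rcases hr.eq_or_lt with h | h
  · rw [← h, zero_pow (by have := Q_pos X; omega)]; simp
  · rw [← vol_ball x r h]; exact measure_mono ball_subset_closedBall

lemma vol_sphere (x : X) (r : ℝ) : volume (sphere x r) = 0 := by
  rcases lt_or_ge r 0 with h | h
  · rw [sphere_eq_empty_of_neg h]; simp
  · rw [← closedBall_sdiff_ball, measure_sdiff ball_subset_closedBall measurableSet_ball.nullMeasurableSet
      (vol_fin x r), vol_closedBall x h]
    rcases h.eq_or_lt with h | h
    · rw [← h, zero_pow (by have := Q_pos X; omega)]; simp
    · rw [vol_ball x r h, tsub_self]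

lemma ball_ae_eq (x : X) (r : ℝ) : (ball x r : Set X) =ᵐ[volume] closedBall x r := by
  refine (ae_le_set.2 ?_).antisymm (ae_le_set.2 ?_)
  · rw [sdiff_eq_empty.2 ball_subset_closedBall]; simp
  · rw [closedBall_sdiff_ball]; exact vol_sphere x r

instance : NullSingletonClass (volume : Measure X) := ⟨fun x => by
  rw [← sphere_zero]; exact vol_sphere x 0⟩

lemma vol_mul (x : X) {r t : ℝ} (hr : 0 < r) (ht : 0 < t) :
    volume (ball x (t * r)) = ofReal (t ^ Q X) * volume (ball x r) := by
  rw [vol_ball x _ (by positivity), vol_ball x _ hr, ← ofReal_mul (by positivity)]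
  congr 1; ring

variable (X) in
lemma doub_vol : Doub (volume : Measure X) (6 ^ Q X) where
  pos x _ hr := vol_pos x hr
  fin := vol_fin
  dbl x r hr := by
    rw [vol_mul x hr (by norm_num), ofReal_pow (by norm_num)]; simp

instance : IsUnifLocDoublingMeasure (volume : Measure X) := by
  refine ⟨⟨2 ^ Q X, ?_⟩⟩
  filter_upwards [self_mem_nhdsWithin] with r hr x
  have hr : 0 < r := hr
  rw [vol_closedBall x (by positivity), vol_closedBall x hr.le, mul_pow, ← mul_assoc, mul_comm (c0 X),
    mul_assoc, ofReal_mul (by positivity), ofReal_pow (by norm_num)]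
  simp

/-- Integration of a kernel of order `-(Q+1)` against `u` away from `x`. -/
lemma lint_annuli {u : X → ℝ≥0∞} (hu : Measurable u) (x : X) {r : ℝ} (hr : 0 < r) :
    ∫⁻ y in (ball x r)ᶜ, ofReal (r / dist x y ^ (Q X + 1)) * u y ≤
      ofReal (2 ^ (Q X + 1) * c0 X) * MF volume u x := by
  have hc := c0_pos X
  have hpt : ∀ y ∈ (ball x r)ᶜ, ofReal (r / dist x y ^ (Q X + 1)) * u y ≤
      ∑' j : ℕ, (ball x (2 ^ (j+1) * r)).indicator
        (fun y => ofReal ((1/2) ^ j / (2 ^ j * r) ^ Q X) * u y) y := by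
    intro y hy
    have hy' : r ≤ dist x y := by simpa [dist_comm] using hy
    obtain ⟨j, hj1, hj2⟩ := exists_nat_pow_near (one_le_div hr |>.2 hy') (one_lt_two)
    rw [le_div_iff₀ hr] at hj1
    rw [div_lt_iff₀ hr] at hj2
    refine le_trans ?_ (le_tsum j)
    rw [indicator_of_mem (by simpa [dist_comm] using hj2)]
    refine mul_le_mul' (ofReal_le_ofReal ?_) le_rfl
    calc r / dist x y ^ (Q X + 1) ≤ r / (2 ^ j * r) ^ (Q X + 1) := by gcongr
      _ = _ := by rw [pow_succ]; field_simp; rw [← mul_pow]; norm_num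
  calc _ ≤ ∫⁻ y in (ball x r)ᶜ, ∑' j : ℕ, (ball x (2 ^ (j+1) * r)).indicator
        (fun y => ofReal ((1/2) ^ j / (2 ^ j * r) ^ Q X) * u y) y :=
        setLIntegral_mono' measurableSet_ball.compl hpt
    _ ≤ ∫⁻ y, ∑' j : ℕ, (ball x (2 ^ (j+1) * r)).indicator
        (fun y => ofReal ((1/2) ^ j / (2 ^ j * r) ^ Q X) * u y) y :=
        lintegral_mono' Measure.restrict_le_self le_rfl
    _ = ∑' j : ℕ, ofReal ((1/2) ^ j / (2 ^ j * r) ^ Q X) * ∫⁻ y in ball x (2 ^ (j+1) * r), u y := by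
        rw [lintegral_tsum fun j => ((hu.const_mul _).indicator measurableSet_ball).aemeasurable]
        congr 1; ext j
        rw [lintegral_indicator measurableSet_ball, lintegral_const_mul _ hu]
    _ ≤ ∑' j : ℕ, ofReal (1/2) ^ j * (ofReal (2 ^ Q X * c0 X) * MF volume u x) := by
        refine tsum_le_tsum fun j => ?_
        refine (mul_le_mul' le_rfl (lint_le_MF (doub_vol X) (by positivity)
          (mem_ball_self (by positivity)))).trans ?_
        rw [vol_ball x _ (by positivity), ← mul_assoc, ← mul_assoc, ← ofReal_mul (by positivity),
          ← ofReal_pow (by norm_num), ← ofReal_mul (by positivity)]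
        refine mul_le_mul' (ofReal_le_ofReal (le_of_eq ?_)) le_rfl
        rw [pow_succ 2 j, show (2:ℝ) ^ j * 2 * r = 2 * (2 ^ j * r) by ring]
        have ha : 0 < (2:ℝ) ^ j * r := by positivity
        generalize (2:ℝ) ^ j * r = a at ha
        rw [mul_pow]; field_simp
    _ = _ := by
        rw [ENNReal.tsum_mul_right, ENNReal.tsum_geometric, ← mul_assoc]
        congr 1
        rw [← ofReal_one, ← ofReal_sub _ (by norm_num), ← ofReal_inv_of_pos (by norm_num),
          ← ofReal_mul (by norm_num)]
        congr 1; rw [pow_succ]; ring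

lemma lint_annuli_one (x : X) {r : ℝ} (hr : 0 < r) :
    ∫⁻ y in (ball x r)ᶜ, ofReal (r / dist x y ^ (Q X + 1)) ≤
      ofReal (2 ^ (Q X + 1) * c0 X) := by
  have := lint_annuli (u := fun _ => 1) measurable_const x hr
  simp only [mul_one] at this
  exact this.trans (mul_le_of_le_one_right' (MF_const_le (doub_vol X) 1 x))

/-! ### Dyadic cubes and stopping families -/

/-- A system of nested measurable partitions: `code k x` names the cube of generation `k`
(diameter about `2 ^ k`) that contains `x`. -/
class Dya (X : Type) [MetricSpace X] [MeasureSpace X] [Ahl X] where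
  ι : Type
  cnt : Countable ι
  code : ℤ → X → ι
  cen : ℤ → ι → X
  rad : ℝ
  low : ℝ
  meas : ∀ k i, MeasurableSet (code k ⁻¹' {i})
  nest : ∀ k x y, code k x = code k y → code (k+1) x = code (k+1) y
  one_le_rad : 1 ≤ rad
  sub : ∀ k x, dist x (cen k (code k x)) < rad * 2 ^ k
  low_pos : 0 < low
  low_le : ∀ k i, ofReal (low * (2 ^ k) ^ Ahl.Q X) ≤ volume (code k ⁻¹' {i})

open Dya
section dya
variable [Dya X]

instance : Countable (ι X) := cnt

/-- The cube of generation `q.1` and name `q.2`. -/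
def cu (q : ℤ × ι X) : Set X := preimage (code q.1) {q.2}

/-- The centre of a cube. -/
def ce (q : ℤ × ι X) : X := cen q.1 q.2

/-- The ball associated with a cube: it contains the cube together with a neighbourhood of
comparable size, and the balls of the proper subcubes. -/
def st (q : ℤ × ι X) : Set X := ball (ce q) (8 * rad X * 2 ^ q.1)

/-- The cube of generation `k` containing `x`. -/
def at' (k : ℤ) (x : X) : ℤ × ι X := (k, code k x)

lemma mem_cu_at (k : ℤ) (x : X) : x ∈ cu (at' k x) := rfl

lemma mem_cu {q : ℤ × ι X} {x : X} : x ∈ cu q ↔ at' q.1 x = q := by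
  simp [cu, at', Prod.ext_iff]

lemma meas_cu (q : ℤ × ι X) : MeasurableSet (cu q) := meas q.1 q.2

lemma rad_pos : 0 < rad X := one_pos.trans_le (one_le_rad)

lemma dist_ce {q : ℤ × ι X} {x : X} (hx : x ∈ cu q) : dist x (ce q) < rad X * 2 ^ q.1 := by
  have := sub q.1 x
  rw [show code q.1 x = q.2 from hx] at this
  exact this

lemma srad_pos (q : ℤ × ι X) : 0 < 8 * rad X * 2 ^ q.1 := by
  have := rad_pos (X := X); positivity

lemma cu_sub_st (q : ℤ × ι X) : cu q ⊆ st q := by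
  intro x hx
  have := dist_ce hx
  have := srad_pos q
  rw [st, mem_ball]; linarith

lemma meas_st (q : ℤ × ι X) : MeasurableSet (st q) := measurableSet_ball

lemma vol_st (q : ℤ × ι X) : volume (st q) = ofReal (c0 X * (8 * rad X * 2 ^ q.1) ^ Q X) :=
  vol_ball _ _ (srad_pos q)

lemma vol_st_pos (q : ℤ × ι X) : volume (st q) ≠ 0 := vol_pos _ (srad_pos q)
lemma vol_st_fin (q : ℤ × ι X) : volume (st q) ≠ ⊤ := vol_fin _ _

lemma vol_cu_pos (q : ℤ × ι X) : volume (cu q) ≠ 0 := by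
  refine (lt_of_lt_of_le ?_ (low_le q.1 q.2)).ne'
  have := low_pos (X := X)
  simpa using by positivity

lemma vol_cu_fin (q : ℤ × ι X) : volume (cu q) ≠ ⊤ :=
  ((measure_mono (cu_sub_st q)).trans_lt (vol_st_fin q).lt_top).ne

variable (X) in
/-- The ratio between the measures of a cube and of its associated ball. -/
def kst : ℝ := c0 X * (8 * rad X) ^ Q X / low X

lemma kst_pos : 0 < kst X := by
  have := rad_pos (X := X); have := low_pos (X := X); have := c0_pos X
  unfold kst; positivity

lemma vol_st_le (q : ℤ × ι X) : volume (st q) ≤ ofReal (kst X) * volume (cu q) := by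
  refine le_trans ?_ (mul_le_mul' le_rfl (low_le q.1 q.2))
  rw [vol_st, ← ofReal_mul kst_pos.le, kst]
  have := low_pos (X := X)
  apply le_of_eq; congr 1; field_simp; ring

lemma code_mono {k l : ℤ} (h : k ≤ l) {x y : X} (hxy : code k x = code k y) : code l x = code l y := by
  induction l, h using Int.leInduction with
  | base => exact hxy
  | succ m _ ih => exact nest m x y ih

lemma cu_sub {P q : ℤ × ι X} (h : P.1 ≤ q.1) {x : X} (hP : x ∈ cu P) (hq : x ∈ cu q) : cu P ⊆ cu q := by
  intro y hy
  have h1 : code P.1 y = code P.1 x := (show code P.1 y = P.2 from hy).trans (show code P.1 x = P.2 from hP).symm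
  exact (code_mono h h1).trans hq

lemma st_sub {P q : ℤ × ι X} (h : P.1 < q.1) {x : X} (hP : x ∈ cu P) (hq : x ∈ cu q) : st P ⊆ st q := by
  intro y hy
  have h1 := dist_ce hP
  have h2 := dist_ce hq
  have h3 : dist y (ce P) < 8 * rad X * 2 ^ P.1 := hy
  have h4 : (2:ℝ) ^ P.1 * 2 ≤ 2 ^ q.1 := by
    rw [← zpow_add_one₀ two_ne_zero]; exact zpow_le_zpow_right₀ one_le_two (by omega)
  have := dist_triangle4 y (ce P) x (ce q)
  rw [dist_comm (ce P) x] at this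
  have hr := rad_pos (X := X)
  rw [st, mem_ball]
  have h5 : rad X * (2 ^ P.1 * 2) ≤ rad X * 2 ^ q.1 := by gcongr
  have : (0:ℝ) < rad X * 2 ^ P.1 := by positivity
  linarith

lemma cu_nonempty (P : ℤ × ι X) : (cu P).Nonempty := by
  by_contra h
  rw [not_nonempty_iff_eq_empty] at h
  exact vol_cu_pos P (by rw [h]; simp)

/-- The maximal cubes with property `S`. -/
def stp (S : ℤ × ι X → Prop) : Set (ℤ × ι X) :=
  {P | S P ∧ ∀ x ∈ cu P, ∀ k', P.1 < k' → ¬ S (at' k' x)}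

lemma stop_disj (S : ℤ × ι X → Prop) : (stp S).PairwiseDisjoint cu := by
  intro P hP P' hP' hne
  rw [Function.onFun, disjoint_left]
  intro x hx hx'
  have key : ∀ P ∈ stp S, ∀ P' ∈ stp S, x ∈ cu P → x ∈ cu P' → ¬ P.1 < P'.1 := by
    intro P hP P' hP' hx hx' hlt
    refine hP.2 x hx _ hlt ?_
    rw [mem_cu.1 hx']; exact hP'.1
  have h1 := key P hP P' hP' hx hx'
  have h2 := key P' hP' P hP hx' hx
  have h3 : P.1 = P'.1 := by omega
  exact hne (by rw [← mem_cu.1 hx, ← mem_cu.1 hx', h3])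

lemma stop_cover {S : ℤ × ι X → Prop} {K : ℤ} (hK : ∀ q, K ≤ q.1 → ¬ S q) (x : X) :
    (x ∈ ⋃ P ∈ stp S, cu P) ↔ ∃ k, S (at' k x) := by
  simp only [mem_iUnion, exists_prop]
  constructor
  · rintro ⟨P, hP, hx⟩
    exact ⟨P.1, by rw [mem_cu.1 hx]; exact hP.1⟩
  · rintro ⟨k, hk⟩
    obtain ⟨l, hl, hmax⟩ := Int.exists_greatest_of_bdd (P := fun k => S (at' k x))
      ⟨K, fun z hz => le_of_not_ge fun h => hK _ h hz⟩ ⟨k, hk⟩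
    refine ⟨at' l x, ⟨hl, fun y hy k' hk' hS => ?_⟩, mem_cu_at l x⟩
    have : at' k' y = at' k' x := by
      refine Prod.ext rfl ?_
      exact code_mono hk'.le (show code l y = code l x from hy)
    rw [this] at hS
    exact absurd (hmax k' hS) (not_le.2 hk')

lemma meas_stp (S : ℤ × ι X → Prop) : MeasurableSet (⋃ P ∈ stp S, cu P) :=
  MeasurableSet.biUnion (to_countable _) fun P _ => meas_cu P

/-- Integrals over the union of a stopping family. -/
lemma lint_stp (S : ℤ × ι X → Prop) (ν : Measure X) (f : X → ℝ≥0∞) :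
    ∫⁻ x in ⋃ P ∈ stp S, cu P, f x ∂ν = ∑' P : stp S, ∫⁻ x in cu P.1, f x ∂ν :=
  lintegral_biUnion (to_countable _) (fun P _ => meas_cu P) (stop_disj S) f

lemma meas_stp_eq (S : ℤ × ι X → Prop) (ν : Measure X) :
    ν (⋃ P ∈ stp S, cu P) = ∑' P : stp S, ν (cu P.1) :=
  measure_biUnion (to_countable _) (stop_disj S) (fun P _ => meas_cu P)

/-- Integrability on balls. -/
def LI (f : X → ℝ) : Prop := ∀ x r, IntegrableOn f (ball x r)

lemma LI.loc {f : X → ℝ} (h : LI f) : LocallyIntegrable f :=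
  fun x => ⟨ball x 1, ball_mem_nhds x one_pos, h x 1⟩

/-- The Lebesgue differentiation theorem along the balls of the cubes containing a point. -/
lemma leb_diff {f : X → ℝ} (hf : LI f) :
    ∀ᵐ x, ∀ (l : ℝ≥0∞) (K : ℤ),
      (∀ k ≤ K, ∫⁻ y in st (at' k x), ‖f y‖ₑ ≤ l * volume (st (at' k x))) → ‖f x‖ₑ ≤ l := by
  have hfn : LocallyIntegrable (fun x => ‖f x‖) := LI.loc fun x r => (hf x r).norm
  filter_upwards [IsUnifLocDoublingMeasure.ae_tendsto_average volume hfn 1] with x hx l K h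
  have hr := rad_pos (X := X)
  have ht : Tendsto (fun j : ℕ => 8 * rad X * (2:ℝ) ^ (-(j:ℤ))) atTop (𝓝[>] 0) := by
    refine tendsto_nhdsWithin_iff.2 ⟨?_, Eventually.of_forall fun j => by
      have : (0:ℝ) < 8 * rad X * (2:ℝ) ^ (-(j:ℤ)) := by positivity
      exact this⟩
    have := (tendsto_pow_atTop_nhds_zero_of_lt_one (by norm_num : (0:ℝ) ≤ 1/2) (by norm_num)).const_mul (8 * rad X)
    simpa using this
  have := hx (fun j : ℕ => ce (at' (-(j:ℤ)) x)) (fun j : ℕ => 8 * rad X * (2:ℝ) ^ (-(j:ℤ))) ht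
    (Eventually.of_forall fun j => by
      rw [one_mul]; exact ball_subset_closedBall (cu_sub_st _ (mem_cu_at _ x)))
  have h2 := (continuous_ofReal.tendsto _).comp this
  rw [← ofReal_norm]
  refine le_of_tendsto h2 ?_
  filter_upwards [eventually_ge_atTop (-K).toNat] with j hj
  have h3 := h (-(j:ℤ)) (by omega)
  simp only [Function.comp]
  rw [setAverage_congr (ball_ae_eq _ _).symm]
  change ofReal (⨍ y in st (at' (-(j:ℤ)) x), ‖f y‖) ≤ l
  have hint : IntegrableOn f (st (at' (-(j:ℤ)) x)) := hf _ _
  rw [setAverage_eq, smul_eq_mul, ofReal_mul (by positivity),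
    ofReal_integral_norm_eq_lintegral_enorm hint, Measure.real, ofReal_inv_of_pos
    (toReal_pos (vol_st_pos _) (vol_st_fin _)), ofReal_toReal (vol_st_fin _)]
  rwa [mul_comm, ← div_eq_mul_inv, div_le_iff (vol_st_pos _) (vol_st_fin _)]

end dya

/-! ### The Cotlar–Stein lemma -/

section cotlar
variable {E : Type} [NormedAddCommGroup E] [InnerProductSpace ℝ E] [CompleteSpace E]

/-- The sum of `f` over all words of length `n` in the alphabet `s`. -/
def sumW {F : Type} [AddCommMonoid F] (s : Finset ℤ) : ℕ → (List ℤ → F) → F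
  | 0, f => f []
  | n + 1, f => ∑ i ∈ s, sumW s n (fun l => f (i :: l))

lemma norm_sumW_le {F : Type} [NormedAddCommGroup F] (s : Finset ℤ) (n : ℕ) {f : List ℤ → F}
    {g : List ℤ → ℝ} (h : ∀ l, l.length = n → ‖f l‖ ≤ g l) : ‖sumW s n f‖ ≤ sumW s n g := by
  induction n generalizing f g with
  | zero => exact h [] rfl
  | succ n ih => exact (norm_sum_le _ _).trans (Finset.sum_le_sum fun i _ => ih fun l hl => h _ (by simp [hl]))

lemma mul_sumW {F : Type} [NonUnitalNonAssocSemiring F] (s : Finset ℤ) (n : ℕ) (a : F) (f : List ℤ → F) :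
    a * sumW s n f = sumW s n (fun l => a * f l) := by
  induction n generalizing f with
  | zero => rfl
  | succ n ih => simp only [sumW, Finset.mul_sum, ih]

/-- `T i` or its adjoint. -/
def alt (T : ℤ → E →L[ℝ] E) (b : Bool) (i : ℤ) : E →L[ℝ] E :=
  if b then adjoint (T i) else T i

/-- The alternating product `T*ᵢ Tⱼ T*ₖ ⋯` along a word. -/
def opw (T : ℤ → E →L[ℝ] E) : List ℤ → Bool → E →L[ℝ] E
  | [], _ => 1
  | i :: l, b => alt T b i * opw T l (!b)

/-- The bound for a word obtained by grouping consecutive letters in pairs. -/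
def prw (c : ℤ → ℝ) : List ℤ → ℝ
  | [] => 1
  | [_] => c 0
  | i :: j :: l => c (i - j) ^ 2 * prw c l

/-- The geometric mean of the two pairings. -/
def qw (c : ℤ → ℝ) : List ℤ → ℝ
  | [] => 1
  | [_] => 1
  | i :: j :: l => c (i - j) * qw c (j :: l)

variable {T : ℤ → E →L[ℝ] E} {c : ℤ → ℝ}

lemma prw_nonneg (hc : ∀ n, 0 ≤ c n) : ∀ l, 0 ≤ prw c l
  | [] => zero_le_one
  | [_] => hc 0
  | _ :: _ :: l => mul_nonneg (sq_nonneg _) (prw_nonneg hc l)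

lemma qw_nonneg (hc : ∀ n, 0 ≤ c n) : ∀ l, 0 ≤ qw c l
  | [] => zero_le_one
  | [_] => zero_le_one
  | _ :: j :: l => mul_nonneg (hc _) (qw_nonneg hc (j :: l))

lemma norm_alt_mul (h1 : ∀ i j, ‖adjoint (T i) * T j‖ ≤ c (i - j) ^ 2)
    (h2 : ∀ i j, ‖T i * adjoint (T j)‖ ≤ c (i - j) ^ 2) (b : Bool) (i j : ℤ) :
    ‖alt T b i * alt T (!b) j‖ ≤ c (i - j) ^ 2 := by
  cases b
  · simpa [alt] using h2 i j
  · simpa [alt] using h1 i j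

lemma norm_alt (hc : ∀ n, 0 ≤ c n)
    (h1 : ∀ i j, ‖adjoint (T i) * T j‖ ≤ c (i - j) ^ 2) (b : Bool) (i : ℤ) :
    ‖alt T b i‖ ≤ c 0 := by
  have h : ‖T i‖ ≤ c 0 := by
    have := h1 i i
    rw [sub_self, show adjoint (T i) * T i = (adjoint (T i)).comp (T i) from rfl,
      ContinuousLinearMap.norm_adjoint_comp_self, ← sq] at this
    exact (sq_le_sq₀ (norm_nonneg _) (hc 0)).1 this
  cases b
  · simpa [alt] using h
  · simpa [alt] using h

lemma norm_opw (hc : ∀ n, 0 ≤ c n)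
    (h1 : ∀ i j, ‖adjoint (T i) * T j‖ ≤ c (i - j) ^ 2)
    (h2 : ∀ i j, ‖T i * adjoint (T j)‖ ≤ c (i - j) ^ 2) :
    ∀ (l : List ℤ) (b : Bool), ‖opw T l b‖ ≤ prw c l
  | [], _ => (ContinuousLinearMap.norm_id_le : ‖ContinuousLinearMap.id ℝ E‖ ≤ 1)
  | [i], b => by simpa [opw, prw] using norm_alt hc h1 b i
  | i :: j :: l, b => by
    simp only [opw, prw, Bool.not_not, ← mul_assoc]
    exact (norm_mul_le _ _).trans (mul_le_mul (norm_alt_mul h1 h2 b i j) (norm_opw hc h1 h2 l b)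
      (norm_nonneg _) (sq_nonneg _))

lemma prw_mul (hc : ∀ n, 0 ≤ c n) : ∀ (i : ℤ) (l : List ℤ), prw c (i :: l) * prw c l ≤ c 0 * qw c (i :: l) ^ 2
  | i, [] => by simp [prw, qw]
  | i, j :: l => by
    have := mul_le_mul_of_nonneg_left (prw_mul hc j l) (sq_nonneg (c (i - j)))
    simp only [qw, prw]
    nlinarith

lemma norm_opw' (hc : ∀ n, 0 ≤ c n)
    (h1 : ∀ i j, ‖adjoint (T i) * T j‖ ≤ c (i - j) ^ 2)
    (h2 : ∀ i j, ‖T i * adjoint (T j)‖ ≤ c (i - j) ^ 2) (i : ℤ) (l : List ℤ) (b : Bool) :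
    ‖opw T (i :: l) b‖ ≤ c 0 * qw c (i :: l) := by
  have e1 := norm_opw hc h1 h2 (i :: l) b
  have e2 : ‖opw T (i :: l) b‖ ≤ c 0 * prw c l :=
    (norm_mul_le _ _).trans (mul_le_mul (norm_alt hc h1 b i) (norm_opw hc h1 h2 l _) (norm_nonneg _) (hc 0))
  have e3 := mul_le_mul e1 e2 (norm_nonneg _) (prw_nonneg hc _)
  have e4 := mul_le_mul_of_nonneg_left (prw_mul hc i l) (hc 0)
  refine abs_le_of_sq_le_sq' ?_ (mul_nonneg (hc 0) (qw_nonneg hc _)) |>.2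
  nlinarith

lemma sumW_qw (hc : ∀ n, 0 ≤ c n) {A : ℝ} (hA : ∀ F : Finset ℤ, ∑ n ∈ F, c n ≤ A) (s : Finset ℤ) (n : ℕ) (i : ℤ) :
    sumW s n (fun l => qw c (i :: l)) ≤ A ^ n := by
  induction n generalizing i with
  | zero => simp [sumW, qw]
  | succ n ih =>
    have hA0 : 0 ≤ A := by simpa using hA ∅
    simp only [sumW, qw]
    calc ∑ j ∈ s, sumW s n (fun l => c (i - j) * qw c (j :: l))
        = ∑ j ∈ s, c (i - j) * sumW s n (fun l => qw c (j :: l)) := by simp only [mul_sumW]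
      _ ≤ ∑ j ∈ s, c (i - j) * A ^ n := Finset.sum_le_sum fun j _ => mul_le_mul_of_nonneg_left (ih j) (hc _)
      _ = (∑ j ∈ s, c (i - j)) * A ^ n := by rw [Finset.sum_mul]
      _ ≤ A * A ^ n := by
        refine mul_le_mul_of_nonneg_right ?_ (pow_nonneg hA0 n)
        have := hA (s.image fun j => i - j)
        rwa [Finset.sum_image (fun a _ b _ h => by simpa using h)] at this
      _ = A ^ (n + 1) := by ring

lemma alt_sum (s : Finset ℤ) (b : Bool) :
    (if b then adjoint (∑ i ∈ s, T i) else ∑ i ∈ s, T i) = ∑ i ∈ s, alt T b i := by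
  cases b <;> simp [alt]

lemma pow_eq_sumW (s : Finset ℤ) (n : ℕ) :
    (adjoint (∑ i ∈ s, T i) * ∑ i ∈ s, T i) ^ n = sumW s (2 * n) (fun l => opw T l true) := by
  induction n with
  | zero => rfl
  | succ n ih =>
    have h1 := alt_sum (T := T) s true
    have h2 := alt_sum (T := T) s false
    simp only [if_true, Bool.false_eq_true, if_false] at h1 h2
    rw [pow_succ', ih, h1]
    rw [h2]
    simp only [Nat.mul_succ, sumW, opw, Bool.not_true, Bool.not_false, ← mul_sumW, Finset.sum_mul,
      Finset.mul_sum, mul_assoc]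
    exact Finset.sum_comm

/-- The Cotlar–Stein almost orthogonality lemma for finite sums. -/
lemma cotlar_stein (hc : ∀ n, 0 ≤ c n)
    (h1 : ∀ i j, ‖adjoint (T i) * T j‖ ≤ c (i - j) ^ 2)
    (h2 : ∀ i j, ‖T i * adjoint (T j)‖ ≤ c (i - j) ^ 2)
    {A : ℝ} (hA : ∀ F : Finset ℤ, ∑ n ∈ F, c n ≤ A) (s : Finset ℤ) : ‖∑ i ∈ s, T i‖ ≤ A := by
  set S := ∑ i ∈ s, T i with hS
  have hA0 : 0 ≤ A := by simpa using hA ∅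
  have key : ∀ m : ℕ, (‖S‖ ^ 2) ^ 2 ^ m ≤ s.card * (A ^ 2) ^ 2 ^ m := by
    intro m
    have hsa := IsSelfAdjoint.star_mul_self S
    have hn : ‖(adjoint S * S) ^ 2 ^ m‖ = (‖S‖ ^ 2) ^ 2 ^ m := by
      have := hsa.nnnorm_pow_two_pow m
      rw [ContinuousLinearMap.star_eq_adjoint] at this
      have h3 : ‖(adjoint S * S) ^ 2 ^ m‖ = ‖adjoint S * S‖ ^ 2 ^ m := by
        simpa using congrArg toReal this
      rw [h3, show adjoint S * S = (adjoint S).comp S from rfl,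
        ContinuousLinearMap.norm_adjoint_comp_self, sq]
    rw [← hn, pow_eq_sumW]
    obtain ⟨k, hk⟩ : ∃ k, 2 * 2 ^ m = k + 1 := ⟨2 * 2 ^ m - 1, by have := Nat.two_pow_pos m; omega⟩
    rw [hk, ← pow_mul, hk]
    refine (norm_sumW_le (g := fun l => c 0 * qw c l) s (k + 1) ?_).trans ?_
    · intro l hl
      rcases l with _ | ⟨i, l⟩
      · simp at hl
      · exact norm_opw' hc h1 h2 i l _
    · simp only [sumW, ← mul_sumW]
      calc ∑ i ∈ s, c 0 * sumW s k (fun l => qw c (i :: l)) ≤ ∑ i ∈ s, A * A ^ k := by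
            refine Finset.sum_le_sum fun i _ => mul_le_mul (by simpa using hA {0}) (sumW_qw hc hA s k i) ?_ hA0
            exact (norm_nonneg _).trans (norm_sumW_le (f := fun l => qw c (i :: l)) s k fun l _ =>
              (abs_of_nonneg (qw_nonneg hc _)).le)
        _ = s.card * A ^ (k + 1) := by rw [Finset.sum_const, nsmul_eq_mul]; ring
  by_contra hlt
  rw [not_le] at hlt
  have hSp : 0 < ‖S‖ := hA0.trans_lt hlt
  rcases hA0.eq_or_lt with h0 | h0
  · have := key 0
    rw [← h0] at this
    norm_num at this
    rw [this] at hSp; simp at hSp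
  · have hr : 1 < (‖S‖ / A) ^ 2 := one_lt_pow₀ ((one_lt_div h0).2 hlt) two_ne_zero
    obtain ⟨n, hn⟩ := pow_unbounded_of_one_lt (s.card : ℝ) hr
    have hk := key n
    have h3 : ((‖S‖ / A) ^ 2) ^ n ≤ ((‖S‖ / A) ^ 2) ^ 2 ^ n := pow_le_pow_right₀ hr.le (Nat.lt_two_pow_self).le
    rw [div_pow, div_pow _ _ (2 ^ n)] at h3
    have h4 : (‖S‖ ^ 2) ^ 2 ^ n / (A ^ 2) ^ 2 ^ n ≤ s.card := by
      rw [div_le_iff₀ (by positivity)]; exact hk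
    rw [div_pow] at hn
    linarith

end cotlar

/-! ### Operators with bounded kernels of finite range on `L²` -/

section band

/-- The integral operator with kernel `k`. -/
def op (k : X → X → ℝ) (f : X → ℝ) (x : X) : ℝ := ∫ y, k x y * f y

/-- The kernel `k` is bounded by `B` and vanishes at distance `≥ R`. -/
structure BK (k : X → X → ℝ) (B R : ℝ) : Prop where
  meas : Measurable (uncurry k)
  rpos : 0 < R
  bd : ∀ x y, |k x y| ≤ B
  supp : ∀ x y, R ≤ dist x y → k x y = 0

variable {k k' : X → X → ℝ} {B B' R R' : ℝ} {f g : X → ℝ}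

lemma BK.nonneg [Nonempty X] (h : BK k B R) : 0 ≤ B :=
  (abs_nonneg _).trans (h.bd (Classical.arbitrary X) (Classical.arbitrary X))

lemma BK.tr (h : BK k B R) : BK (fun x y => k y x) B R where
  meas := h.meas.comp measurable_swap
  rpos := h.rpos
  bd x y := h.bd y x
  supp x y hxy := h.supp y x (by rwa [dist_comm])

lemma BK.le_ind (h : BK k B R) (x y : X) : ‖k x y‖ₑ ≤ (ball x R).indicator (fun _ => ofReal B) y := by
  by_cases hy : y ∈ ball x R
  · rw [indicator_of_mem hy, Real.enorm_eq_ofReal_abs]; exact ofReal_le_ofReal (h.bd x y)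
  · rw [indicator_of_notMem hy, h.supp x y (by simpa [dist_comm] using hy)]; simp

lemma BK.lint_le (h : BK k B R) (u : X → ℝ≥0∞) (x : X) :
    ∫⁻ y, ‖k x y‖ₑ * u y ≤ ofReal B * ∫⁻ y in ball x R, u y := by
  rw [← lintegral_const_mul' _ _ ofReal_ne_top, ← lintegral_indicator measurableSet_ball]
  refine lintegral_mono fun y => (mul_le_mul' (h.le_ind x y) le_rfl).trans ?_
  by_cases hy : y ∈ ball x R <;> simp [hy]

lemma enorm_op_le (k : X → X → ℝ) (f : X → ℝ) (x : X) : ‖op k f x‖ₑ ≤ ∫⁻ y, ‖k x y‖ₑ * ‖f y‖ₑ :=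
  (enorm_integral_le_lintegral_enorm _).trans (by simp only [enorm_mul]; exact le_rfl)

lemma BK.enorm_op (h : BK k B R) (f : X → ℝ) (x : X) :
    ‖op k f x‖ₑ ≤ ofReal B * ∫⁻ y in ball x R, ‖f y‖ₑ :=
  (enorm_op_le k f x).trans (h.lint_le _ x)

lemma meas_op (h : Measurable (uncurry k)) (hf : Measurable f) : Measurable (op k f) :=
  ((h.mul (hf.comp measurable_snd)).stronglyMeasurable.integral_prod_right).measurable

lemma sq_lint_le {ν : Measure X} {s : Set X} {u : X → ℝ≥0∞} (hu : Measurable u) :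
    (∫⁻ y in s, u y ∂ν) ^ 2 ≤ ν s * ∫⁻ y in s, u y ^ 2 ∂ν := by
  have h := ENNReal.lintegral_mul_le_Lp_mul_Lq (ν.restrict s) Real.HolderConjugate.two_two
    (f := fun _ => (1 : ℝ≥0∞)) (g := u) aemeasurable_const hu.aemeasurable
  simp only [Pi.mul_apply, one_mul, ENNReal.one_rpow, lintegral_one, Measure.restrict_apply_univ] at h
  refine (pow_le_pow_left' h 2).trans_eq ?_
  rw [mul_pow, ← ENNReal.rpow_natCast, ← ENNReal.rpow_natCast, ← ENNReal.rpow_mul, ← ENNReal.rpow_mul]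
  norm_num

/-- Averaging over balls of a fixed radius preserves integrals. -/
lemma lint_ball_swap {u : X → ℝ≥0∞} (hu : Measurable u) (hR : 0 < R) :
    ∫⁻ x, ∫⁻ y in ball x R, u y = ofReal (c0 X * R ^ Q X) * ∫⁻ y, u y := by
  have hm : MeasurableSet {p : X × X | dist p.1 p.2 < R} := measurableSet_lt (by fun_prop) measurable_const
  have h1 : ∀ x, ∫⁻ y in ball x R, u y = ∫⁻ y, {p : X × X | dist p.1 p.2 < R}.indicator (fun p => u p.2) (x, y) := by
    intro x
    rw [← lintegral_indicator measurableSet_ball]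
    refine lintegral_congr fun y => ?_
    simp only [indicator, mem_ball, mem_setOf_eq, dist_comm y x]
  simp_rw [h1]
  rw [lintegral_lintegral_swap (f := fun x y => {p : X × X | dist p.1 p.2 < R}.indicator (fun p => u p.2) (x, y))
    ((hu.comp measurable_snd).indicator hm).aemeasurable,
    ← lintegral_const_mul _ hu]
  refine lintegral_congr fun y => ?_
  have h2 : ∀ x, {p : X × X | dist p.1 p.2 < R}.indicator (fun p => u p.2) (x, y)
      = (ball y R).indicator (fun _ => u y) x := by
    intro x; simp only [indicator, mem_ball, mem_setOf_eq]
  simp_rw [h2]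
  rw [lintegral_indicator_const measurableSet_ball, vol_ball y R hR, mul_comm]

lemma BK.lint_op (h : BK k B R) (hf : Measurable f) :
    ∫⁻ x, ‖op k f x‖ₑ ^ 2 ≤ (ofReal B * ofReal (c0 X * R ^ Q X)) ^ 2 * ∫⁻ x, ‖f x‖ₑ ^ 2 := by
  calc ∫⁻ x, ‖op k f x‖ₑ ^ 2
      ≤ ∫⁻ x, ofReal B ^ 2 * (ofReal (c0 X * R ^ Q X) * ∫⁻ y in ball x R, ‖f y‖ₑ ^ 2) := by
        refine lintegral_mono fun x => ?_
        calc ‖op k f x‖ₑ ^ 2 ≤ (ofReal B * ∫⁻ y in ball x R, ‖f y‖ₑ) ^ 2 := by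
              gcongr; exact h.enorm_op f x
          _ ≤ _ := by
              rw [mul_pow, ← vol_ball x R h.rpos]
              exact mul_le_mul' le_rfl (sq_lint_le hf.enorm)
    _ = _ := by
        rw [lintegral_const_mul' _ _ (by simp), lintegral_const_mul' _ _ ofReal_ne_top,
          lint_ball_swap (hf.enorm.pow_const 2) h.rpos]
        ring

lemma memLp_two_iff (hf : Measurable f) : MemLp f 2 volume ↔ ∫⁻ x, ‖f x‖ₑ ^ 2 < ⊤ := by
  rw [MemLp, and_iff_right hf.aestronglyMeasurable, eLpNorm_lt_top_iff_lintegral_rpow_enorm_lt_top two_ne_zero ofNat_ne_top]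
  norm_num

lemma lint_sq_of_memLp (hf : MemLp f 2 volume) : ∫⁻ x, ‖f x‖ₑ ^ 2 < ⊤ := by
  have := (eLpNorm_lt_top_iff_lintegral_rpow_enorm_lt_top two_ne_zero ofNat_ne_top).1 hf.2
  simpa using this

lemma integrableOn_ball_of_memLp (hf : MemLp f 2 volume) (x : X) (r : ℝ) : IntegrableOn f (ball x r) := by
  have : IsFiniteMeasure (volume.restrict (ball x r)) := ⟨by simpa using (vol_fin x r).lt_top⟩
  exact (hf.restrict (ball x r)).integrable (by norm_num)

lemma BK.integrable (h : BK k B R) (hf : LI f) (x : X) : Integrable fun y => k x y * f y := by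
  have h1 : Integrable (fun y => k x y * (ball x R).indicator f y) := by
    refine ((integrable_indicator_iff measurableSet_ball).2 (hf x R)).bdd_mul (c := B)
      (h.meas.comp measurable_prodMk_left).aestronglyMeasurable (ae_of_all _ fun y => ?_)
    exact h.bd x y
  refine h1.congr (ae_of_all _ fun y => ?_)
  by_cases hy : y ∈ ball x R
  · simp [hy]
  · simp [h.supp x y (by simpa [dist_comm] using hy)]

lemma op_congr (h : f =ᵐ[volume] g) (x : X) : op k f x = op k g x := by
  refine integral_congr_ae ?_
  filter_upwards [h] with y hy
  rw [hy]

lemma op_fun_congr (h : f =ᵐ[volume] g) : op k f = op k g := funext (op_congr h)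

lemma BK.memLp (h : BK k B R) (hf : MemLp f 2 volume) : MemLp (op k f) 2 volume := by
  obtain ⟨g, hg, hfg⟩ := hf.1
  rw [op_fun_congr hfg, memLp_two_iff (meas_op h.meas hg.measurable)]
  refine (h.lint_op hg.measurable).trans_lt (mul_lt_top ?_ (lint_sq_of_memLp (hf.ae_eq hfg)))
  exact pow_lt_top (mul_lt_top ofReal_lt_top ofReal_lt_top)

lemma eLpNorm_two (f : X → ℝ) : eLpNorm f 2 volume = (∫⁻ x, ‖f x‖ₑ ^ 2) ^ (1 / 2 : ℝ) := by
  rw [eLpNorm_eq_lintegral_rpow_enorm_toReal two_ne_zero ofNat_ne_top]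
  norm_num

lemma BK.eLpNorm_op (h : BK k B R) (hf : MemLp f 2 volume) :
    eLpNorm (op k f) 2 volume ≤ ofReal B * ofReal (c0 X * R ^ Q X) * eLpNorm f 2 volume := by
  obtain ⟨g, hg, hfg⟩ := hf.1
  rw [op_fun_congr hfg, eLpNorm_congr_ae hfg, eLpNorm_two, eLpNorm_two]
  refine (ENNReal.rpow_le_rpow (h.lint_op hg.measurable) (by norm_num)).trans ?_
  rw [mul_rpow_of_nonneg _ _ (by norm_num), ← ENNReal.rpow_natCast, ← ENNReal.rpow_mul]
  norm_num

lemma LI_of_memLp (hf : MemLp f 2 volume) : LI f := fun x r => integrableOn_ball_of_memLp hf x r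

variable [Nonempty X]

/-- The operator with a banded kernel as a bounded operator on `L²`. -/
def opL (h : BK k B R) : Lp ℝ 2 (volume : Measure X) →L[ℝ] Lp ℝ 2 (volume : Measure X) :=
  LinearMap.mkContinuous
    { toFun := fun f => (h.memLp (Lp.memLp f)).toLp _
      map_add' := fun f g => by
        rw [← MemLp.toLp_add]
        refine MemLp.toLp_congr _ _ (ae_of_all _ fun x => ?_)
        rw [op_congr (Lp.coeFn_add f g), Pi.add_apply, op, op, op,
          ← integral_add (h.integrable (LI_of_memLp (Lp.memLp f)) x) (h.integrable (LI_of_memLp (Lp.memLp g)) x)]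
        simp only [Pi.add_apply, mul_add]
      map_smul' := fun a f => by
        rw [RingHom.id_apply, ← MemLp.toLp_const_smul]
        refine MemLp.toLp_congr _ _ (ae_of_all _ fun x => ?_)
        rw [op_congr (Lp.coeFn_smul a f), Pi.smul_apply, op, op, smul_eq_mul, ← integral_const_mul]
        refine integral_congr_ae (ae_of_all _ fun y => ?_)
        simp only [Pi.smul_apply, smul_eq_mul]; ring }
    (B * (c0 X * R ^ Q X)) (fun f => by
      have hc := c0_pos X
      have hR := h.rpos
      have hB := h.nonneg
      simp only [LinearMap.coe_mk, AddHom.coe_mk, Lp.norm_toLp]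
      rw [Lp.norm_def]
      refine (toReal_mono ?_ (h.eLpNorm_op (Lp.memLp f))).trans ?_
      · exact mul_ne_top (mul_ne_top ofReal_ne_top ofReal_ne_top) (Lp.memLp f).2.ne
      · rw [toReal_mul, toReal_mul, toReal_ofReal hB, toReal_ofReal (by positivity)])

lemma coe_opL (h : BK k B R) (f : Lp ℝ 2 (volume : Measure X)) : opL h f =ᵐ[volume] op k f :=
  MemLp.coeFn_toLp (h.memLp (Lp.memLp f))

lemma norm_opL (h : BK k B R) : ‖opL h‖ ≤ B * (c0 X * R ^ Q X) :=
  LinearMap.mkContinuous_norm_le _ (by have := c0_pos X; have := h.rpos; have := h.nonneg; positivity) _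

/-- The composed kernel. -/
def ck (k k' : X → X → ℝ) (x y : X) : ℝ := ∫ z, k x z * k' z y

lemma meas_ck (h : Measurable (uncurry k)) (h' : Measurable (uncurry k')) :
    Measurable (uncurry (ck k k')) := by
  have : Measurable (uncurry fun (p : X × X) (z : X) => k p.1 z * k' z p.2) :=
    (h.comp (by fun_prop : Measurable fun q : (X × X) × X => (q.1.1, q.2))).mul
      (h'.comp (by fun_prop : Measurable fun q : (X × X) × X => (q.2, q.1.2)))
  exact this.stronglyMeasurable.integral_prod_right.measurable

lemma op_op (h : BK k B R) (h' : BK k' B' R') (hf : LI f) (hfm : Measurable f) (x : X) :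
    op k (op k' f) x = op (ck k k') f x := by
  have h1 : op k (op k' f) x = ∫ z, ∫ y, k x z * (k' z y * f y) := by
    simp only [op, integral_const_mul]
  have h2 : op (ck k k') f x = ∫ y, ∫ z, k x z * (k' z y * f y) := by
    simp only [op, ck, ← integral_mul_const, mul_assoc]
  rw [h1, h2]
  refine integral_integral_swap ?_
  have hm : Measurable (uncurry fun z y => k x z * (k' z y * f y)) :=
    ((h.meas.comp measurable_prodMk_left).comp measurable_fst).mul (h'.meas.mul (hfm.comp measurable_snd))
  have hi : Integrable (fun p : X × X => (ball x R).indicator (fun _ => (1 : ℝ)) p.1 *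
      (ball x (R + R')).indicator f p.2) ((volume : Measure X).prod volume) := by
    refine Integrable.mul_prod ?_ ?_
    · exact (integrable_indicator_iff measurableSet_ball).2 (integrableOn_const (vol_fin x R))
    · exact (integrable_indicator_iff measurableSet_ball).2 (hf x _)
  refine Integrable.mono' (hi.norm.const_mul (B * B')) hm.aestronglyMeasurable (ae_of_all _ fun p => ?_)
  obtain ⟨z, y⟩ := p
  simp only [uncurry]
  have hB := h.nonneg
  have hB' := h'.nonneg
  rcases lt_or_ge (dist x z) R with hz | hz
  · rcases lt_or_ge (dist z y) R' with hy | hy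
    · have e1 : z ∈ ball x R := by rwa [mem_ball, dist_comm]
      have e2 : y ∈ ball x (R + R') := by
        rw [mem_ball, dist_comm]; exact (dist_triangle x z y).trans_lt (by linarith)
      rw [indicator_of_mem e1, indicator_of_mem e2, norm_mul, norm_mul, one_mul]
      have := h.bd x z
      have := h'.bd z y
      simp only [Real.norm_eq_abs]
      rw [← mul_assoc]
      gcongr
    · rw [h'.supp z y hy]; simp; positivity
  · rw [h.supp x z hz]; simp; positivity

lemma opL_mul (h : BK k B R) (h' : BK k' B' R') {B'' R'' : ℝ} (h'' : BK (ck k k') B'' R'') :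
    opL h * opL h' = opL h'' := by
  ext f
  obtain ⟨g, hg, hfg⟩ := (Lp.memLp f).1
  have h1 : (opL h * opL h') f = opL h (opL h' f) := rfl
  rw [h1]
  filter_upwards [coe_opL h (opL h' f), coe_opL h'' f] with x hx hx'
  rw [hx, hx', op_congr (coe_opL h' f), op_fun_congr hfg (k := k'), op_congr hfg]
  exact op_op h h' (LI_of_memLp ((Lp.memLp f).ae_eq hfg)) hg.measurable x

lemma integrable_triple (h : BK k B R) (hf : MemLp f 2 volume) (hg : MemLp g 2 volume) (hfm : Measurable f)
    (hgm : Measurable g) :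
    Integrable (fun p : X × X => k p.1 p.2 * f p.2 * g p.1) ((volume : Measure X).prod volume) := by
  have hm : Measurable (fun p : X × X => k p.1 p.2 * f p.2 * g p.1) :=
    (h.meas.mul (hfm.comp measurable_snd)).mul (hgm.comp measurable_fst)
  have ha : BK (fun x y => |k x y|) B R :=
    ⟨continuous_abs.measurable.comp h.meas, h.rpos, fun x y => by rw [abs_abs]; exact h.bd x y,
      fun x y hxy => by simp [h.supp x y hxy]⟩
  refine (integrable_prod_iff hm.aestronglyMeasurable).2 ⟨ae_of_all _ fun x => ?_, ?_⟩
  · exact (h.integrable (LI_of_memLp hf) x).mul_const (g x)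
  · have h1 : MemLp (op (fun x y => |k x y|) fun y => |f y|) 2 volume := ha.memLp hf.abs
    refine (h1.integrable_mul hg.abs).congr (ae_of_all _ fun x => ?_)
    simp only [Pi.mul_apply, op, norm_mul, Real.norm_eq_abs, integral_mul_const, Pi.abs_apply]

lemma adjoint_opL (h : BK k B R) : adjoint (opL h) = opL h.tr := by
  symm
  rw [ContinuousLinearMap.eq_adjoint_iff]
  intro f g
  rw [L2.inner_def, L2.inner_def]
  obtain ⟨f', hf', hff⟩ := (Lp.memLp f).1
  obtain ⟨g', hg', hgg⟩ := (Lp.memLp g).1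
  have h1 : ∫ a, inner ℝ ((opL h.tr f : X → ℝ) a) ((g : X → ℝ) a) = ∫ a, ∫ y, k y a * f' y * g' a := by
    refine integral_congr_ae ?_
    filter_upwards [coe_opL h.tr f, hgg] with x hx hx'
    rw [hx, hx', op_congr hff, integral_mul_const]
    simp [op, mul_comm]
  have h2 : ∫ a, inner ℝ ((f : X → ℝ) a) ((opL h g : X → ℝ) a) = ∫ y, ∫ a, k y a * f' y * g' a := by
    refine integral_congr_ae ?_
    filter_upwards [coe_opL h g, hff] with x hx hx'
    rw [hx, hx', op_congr hgg]
    have : inner ℝ (f' x) (op k g' x) = op k g' x * f' x := rfl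
    rw [this, op, ← integral_mul_const]
    refine integral_congr_ae (ae_of_all _ fun y => ?_)
    simp only; ring
  rw [h1, h2]
  refine integral_integral_swap ?_
  exact integrable_triple h.tr ((Lp.memLp f).ae_eq hff) ((Lp.memLp g).ae_eq hgg) hf'.measurable hg'.measurable

end band

/-! ### Calderón–Zygmund kernels and almost orthogonality of their pieces -/

section kern

/-- A standard kernel: size and Lipschitz regularity in both variables, with constant `A`. -/
structure SK (k : X → X → ℝ) (A : ℝ) : Prop where
  nonneg : 0 ≤ A
  meas : Measurable (uncurry k)
  size : ∀ x y, |k x y| * dist x y ^ Q X ≤ A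
  sm1 : ∀ x x' y, 2 * dist x x' ≤ dist x y → |k x y - k x' y| * dist x y ^ (Q X + 1) ≤ A * dist x x'
  sm2 : ∀ x y z, 2 * dist y z ≤ dist x y → |k x y - k x z| * dist x y ^ (Q X + 1) ≤ A * dist y z

/-- A standard kernel whose integrals over all annuli vanish. -/
structure CZK (k : X → X → ℝ) (A : ℝ) : Prop extends SK k A where
  can1 : ∀ x r R, 0 < r → r ≤ R → ∫ y in {y | r < dist x y ∧ dist x y ≤ R}, k x y = 0
  can2 : ∀ y r R, 0 < r → r ≤ R → ∫ x in {x | r < dist x y ∧ dist x y ≤ R}, k x y = 0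

/-- The piecewise linear cutoff, `0` on `(-∞, 1]` and `1` on `[2, ∞)`. -/
def eta (s : ℝ) : ℝ := max 0 (min 1 (s - 1))

/-- The smoothly truncated kernel. -/
def trk (k : X → X → ℝ) (r : ℝ) (x y : X) : ℝ := k x y * eta (dist x y / r)

/-- The piece of the kernel living at distance comparable to `r`. -/
def pie (k : X → X → ℝ) (r : ℝ) (x y : X) : ℝ := k x y * (eta (dist x y / r) - eta (dist x y / (2 * r)))

lemma eta_nonneg (s : ℝ) : 0 ≤ eta s := le_max_left _ _
lemma eta_le (s : ℝ) : eta s ≤ 1 := max_le zero_le_one (min_le_left _ _)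
lemma eta_zero {s : ℝ} (h : s ≤ 1) : eta s = 0 := by
  rw [eta, max_eq_left]; exact (min_le_right _ _).trans (by linarith)
lemma eta_one {s : ℝ} (h : 2 ≤ s) : eta s = 1 := by
  rw [eta, min_eq_left (by linarith)]; simp
lemma eta_mono {s t : ℝ} (h : s ≤ t) : eta s ≤ eta t := by
  unfold eta; gcongr
lemma eta_lip (s t : ℝ) : |eta s - eta t| ≤ |s - t| := by
  unfold eta
  refine (abs_max_sub_max_le_max _ _ _ _).trans (max_le (by simp) ?_)
  refine (abs_min_sub_min_le_max _ _ _ _).trans (max_le (by simp) ?_)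
  rw [sub_sub_sub_cancel_right]
lemma continuous_eta : Continuous eta := by unfold eta; fun_prop

variable {k : X → X → ℝ} {A r : ℝ}

lemma SK.tr (h : SK k A) : SK (fun x y => k y x) A where
  nonneg := h.nonneg
  meas := h.meas.comp measurable_swap
  size x y := by rw [dist_comm]; exact h.size y x
  sm1 x x' y hx := by rw [dist_comm x y] at *; exact h.sm2 y x x' hx
  sm2 x y y' hx := by rw [dist_comm x y] at *; exact h.sm1 y y' x hx

lemma CZK.tr (h : CZK k A) : CZK (fun x y => k y x) A where
  toSK := h.toSK.tr
  can1 x r R := by simp_rw [dist_comm x]; exact h.can2 x r R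
  can2 y r R := by simp_rw [dist_comm _ y]; exact h.can1 y r R

lemma SK.size' (h : SK k A) {x y : X} {s : ℝ} (hs : 0 < s) (hd : s ≤ dist x y) : |k x y| ≤ A / s ^ Q X := by
  rw [le_div_iff₀ (by positivity)]
  exact (mul_le_mul_of_nonneg_left (by gcongr) (abs_nonneg _)).trans (h.size x y)

lemma SK.sm1' (h : SK k A) {x x' y : X} (hd : 2 * dist x x' ≤ dist x y) {s : ℝ} (hs : 0 < s) (hsd : s ≤ dist x y) :
    |k x y - k x' y| ≤ A * dist x x' / s ^ (Q X + 1) := by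
  rw [le_div_iff₀ (by positivity)]
  exact (mul_le_mul_of_nonneg_left (by gcongr) (abs_nonneg _)).trans (h.sm1 x x' y hd)

lemma meas_trk (h : Measurable (uncurry k)) : Measurable (uncurry (trk k r)) := by
  have : Measurable fun p : X × X => eta (dist p.1 p.2 / r) := continuous_eta.measurable.comp (by fun_prop)
  exact h.mul this

lemma trk_zero (hr : 0 < r) {x y : X} (h : dist x y ≤ r) : trk k r x y = 0 := by
  rw [trk, eta_zero ((div_le_one hr).2 h), mul_zero]

lemma trk_eq (hr : 0 < r) {x y : X} (h : 2 * r ≤ dist x y) : trk k r x y = k x y := by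
  rw [trk, eta_one ((le_div_iff₀ hr).2 h), mul_one]

lemma abs_trk_le (x y : X) : |trk k r x y| ≤ |k x y| := by
  rw [trk, abs_mul, abs_of_nonneg (eta_nonneg _)]
  exact mul_le_of_le_one_right (abs_nonneg _) (eta_le _)

lemma SK.trk_bd (h : SK k A) (hr : 0 < r) (x y : X) : |trk k r x y| ≤ A / r ^ Q X := by
  rcases le_or_gt (dist x y) r with hd | hd
  · rw [trk_zero hr hd]; have := h.nonneg; simp; positivity
  · exact (abs_trk_le x y).trans (h.size' hr hd.le)

lemma abs_dist_sub_le' (x x' y : X) : |dist x y - dist x' y| ≤ dist x x' := by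
  rw [abs_le]
  have h1 := dist_triangle x x' y
  have h2 := dist_triangle x' x y
  rw [dist_comm x' x] at h2
  constructor <;> linarith

lemma SK.trk_sm1 (h : SK k A) (hr : 0 < r) (x x' y : X) (hd : 2 * dist x x' ≤ dist x y) :
    |trk k r x y - trk k r x' y| * dist x y ^ (Q X + 1) ≤ (5 * 2 ^ Q X * A) * dist x x' := by
  have hA := h.nonneg
  have h2 : (1:ℝ) ≤ 2 ^ Q X := one_le_pow₀ (by norm_num)
  have hab := abs_le.1 (abs_dist_sub_le' x x' y)
  have hx0 : 0 ≤ dist x x' := dist_nonneg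
  have e : trk k r x y - trk k r x' y = (k x y - k x' y) * eta (dist x y / r)
      + k x' y * (eta (dist x y / r) - eta (dist x' y / r)) := by unfold trk; ring
  have e1 : |(k x y - k x' y) * eta (dist x y / r)| * dist x y ^ (Q X + 1) ≤ A * dist x x' := by
    rw [abs_mul, abs_of_nonneg (eta_nonneg _)]
    exact (mul_le_mul_of_nonneg_right (mul_le_of_le_one_right (abs_nonneg _) (eta_le _)) (by positivity)).trans
      (h.sm1 x x' y hd)
  have e2 : |k x' y| * dist x y ^ Q X ≤ 2 ^ Q X * A := by
    calc |k x' y| * dist x y ^ Q X ≤ |k x' y| * (2 * dist x' y) ^ Q X := by gcongr; linarith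
      _ = 2 ^ Q X * (|k x' y| * dist x' y ^ Q X) := by rw [mul_pow]; ring
      _ ≤ _ := by gcongr; exact h.size x' y
  have e3 : |eta (dist x y / r) - eta (dist x' y / r)| * dist x y ≤ 4 * dist x x' := by
    rcases le_or_gt (dist x y) (4 * r) with hd4 | hd4
    · have a1 : |dist x y / r - dist x' y / r| ≤ dist x x' / r := by
        rw [← _root_.sub_div, abs_div, abs_of_pos hr]
        exact div_le_div_of_nonneg_right (abs_dist_sub_le' x x' y) hr.le
      calc _ ≤ (dist x x' / r) * (4 * r) :=
            mul_le_mul ((eta_lip _ _).trans a1) hd4 dist_nonneg (by positivity)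
        _ = _ := by field_simp
    · rw [eta_one (by rw [le_div_iff₀ hr]; linarith), eta_one (by rw [le_div_iff₀ hr]; linarith)]
      simp
  calc _ ≤ (|(k x y - k x' y) * eta (dist x y / r)| + |k x' y * (eta (dist x y / r) - eta (dist x' y / r))|)
        * dist x y ^ (Q X + 1) := by rw [e]; gcongr; exact abs_add_le _ _
    _ = |(k x y - k x' y) * eta (dist x y / r)| * dist x y ^ (Q X + 1) +
        (|k x' y| * dist x y ^ Q X) * (|eta (dist x y / r) - eta (dist x' y / r)| * dist x y) := by
        rw [abs_mul (k x' y)]; ring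
    _ ≤ A * dist x x' + (2 ^ Q X * A) * (4 * dist x x') := by gcongr
    _ ≤ _ := by nlinarith [mul_nonneg hA hx0]

lemma trk_tr (x y : X) : trk k r y x = trk (fun x y => k y x) r x y := by
  simp only [trk, dist_comm]

lemma SK.trk (h : SK k A) (hr : 0 < r) : SK (trk k r) (5 * 2 ^ Q X * A) where
  nonneg := by have := h.nonneg; positivity
  meas := meas_trk h.meas
  size x y := by
    refine (mul_le_mul_of_nonneg_right (abs_trk_le x y) (by positivity)).trans ((h.size x y).trans ?_)
    have h2 : (1:ℝ) ≤ 2 ^ Q X := one_le_pow₀ (by norm_num)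
    nlinarith [h.nonneg]
  sm1 := h.trk_sm1 hr
  sm2 x y y' hd := by
    rw [trk_tr (k := k) y x, trk_tr (k := k) y' x, dist_comm x y]; exact h.tr.trk_sm1 hr y y' x (by rwa [dist_comm y x])

/-- A kernel at scale `r`: supported at distance `< 4r`, Lipschitz and of mean zero in both variables. -/
structure PK (K : X → X → ℝ) (A r : ℝ) : Prop where
  bk : BK K (A / r ^ Q X) (4 * r)
  lip : ∀ x y y', |K x y - K x y'| ≤ A / r ^ (Q X + 1) * dist y y'
  lip' : ∀ x x' y, |K x y - K x' y| ≤ A / r ^ (Q X + 1) * dist x x'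
  mean : ∀ x, ∫ y, K x y = 0
  mean' : ∀ y, ∫ x, K x y = 0

lemma PK.tr {K : X → X → ℝ} (h : PK K A r) : PK (fun x y => K y x) A r :=
  ⟨h.bk.tr, fun x y y' => h.lip' y y' x, fun x x' y => h.lip y x x', h.mean', h.mean⟩

lemma pie_tr (x y : X) : pie k r y x = pie (fun x y => k y x) r x y := by
  simp only [pie, dist_comm]

lemma psi_nonneg (hr : 0 < r) {s : ℝ} (hs : 0 ≤ s) : 0 ≤ eta (s / r) - eta (s / (2 * r)) := by
  have : eta (s / (2 * r)) ≤ eta (s / r) := eta_mono (by gcongr; linarith)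
  linarith

lemma psi_le (s t : ℝ) : eta s - eta t ≤ 1 := by
  linarith [eta_le s, eta_nonneg t]

lemma pie_zero (hr : 0 < r) {x y : X} (h : dist x y ≤ r) : pie k r x y = 0 := by
  rw [pie, eta_zero ((div_le_one hr).2 h), eta_zero ((div_le_one (by positivity)).2 (by linarith))]; simp

lemma pie_zero' (hr : 0 < r) {x y : X} (h : 4 * r ≤ dist x y) : pie k r x y = 0 := by
  rw [pie, eta_one ((le_div_iff₀ hr).2 (by linarith)), eta_one ((le_div_iff₀ (by positivity)).2 (by linarith))]
  simp

lemma abs_pie_le (hr : 0 < r) (x y : X) : |pie k r x y| ≤ |k x y| := by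
  rw [pie, abs_mul, abs_of_nonneg (psi_nonneg hr dist_nonneg)]
  exact mul_le_of_le_one_right (abs_nonneg _) (psi_le _ _)

lemma SK.pie_bd (h : SK k A) (hr : 0 < r) (x y : X) : |pie k r x y| ≤ A / r ^ Q X := by
  rcases le_or_gt (dist x y) r with hd | hd
  · rw [pie_zero hr hd]; have := h.nonneg; simp; positivity
  · exact (abs_pie_le hr x y).trans (h.size' hr hd.le)

lemma SK.pie_bk (h : SK k A) (hr : 0 < r) : BK (pie k r) (A / r ^ Q X) (4 * r) where
  meas := by
    have : Measurable fun p : X × X => eta (dist p.1 p.2 / r) - eta (dist p.1 p.2 / (2 * r)) :=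
      (continuous_eta.measurable.comp (by fun_prop)).sub (continuous_eta.measurable.comp (by fun_prop))
    exact h.meas.mul this
  rpos := by positivity
  bd := h.pie_bd hr
  supp x y hd := pie_zero' hr hd

lemma SK.pie_lip_aux (h : SK k A) (hr : 0 < r) (x x' y : X) (hd : r < dist x y) (hx : dist x x' < r / 2) :
    |pie k r x y - pie k r x' y| ≤ (4 * 2 ^ Q X * A) / r ^ (Q X + 1) * dist x x' := by
  have hA := h.nonneg
  have h2 : (1:ℝ) ≤ 2 ^ Q X := one_le_pow₀ (by norm_num)
  have hab := abs_le.1 (abs_dist_sub_le' x x' y)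
  have hx0 : 0 ≤ dist x x' := dist_nonneg
  set u := eta (dist x y / r) - eta (dist x y / (2 * r))
  set v := eta (dist x' y / r) - eta (dist x' y / (2 * r))
  have e : pie k r x y - pie k r x' y = (k x y - k x' y) * u + k x' y * (u - v) := by unfold pie; ring
  have e1 : |(k x y - k x' y) * u| ≤ A * dist x x' / r ^ (Q X + 1) := by
    rw [abs_mul, abs_of_nonneg (psi_nonneg hr dist_nonneg)]
    exact (mul_le_of_le_one_right (abs_nonneg _) (psi_le _ _)).trans (h.sm1' (by linarith) hr hd.le)
  have e2 : |k x' y| ≤ A / (r / 2) ^ Q X := h.size' (by positivity) (by linarith)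
  have e3 : |u - v| ≤ 2 * (dist x x' / r) := by
    have a1 := eta_lip (dist x y / r) (dist x' y / r)
    have a2 := eta_lip (dist x y / (2 * r)) (dist x' y / (2 * r))
    have b1 : dist x y / r - dist x' y / r = (dist x y - dist x' y) / r := by ring
    have b2 : dist x y / (2 * r) - dist x' y / (2 * r) = (dist x y - dist x' y) / (2 * r) := by ring
    rw [b1, abs_div] at a1
    rw [b2, abs_div] at a2
    rw [abs_of_pos hr] at a1
    rw [abs_of_pos (by positivity : 0 < 2 * r)] at a2
    have a3 : |dist x y - dist x' y| / r ≤ dist x x' / r := by gcongr; exact abs_dist_sub_le' x x' y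
    have a4 : |dist x y - dist x' y| / (2 * r) ≤ dist x x' / r := by
      gcongr
      · exact abs_dist_sub_le' x x' y
      · linarith
    calc |u - v| = |(eta (dist x y / r) - eta (dist x' y / r)) - (eta (dist x y / (2 * r)) - eta (dist x' y / (2 * r)))| := by
          congr 1; simp only [u, v]; ring
      _ ≤ _ := abs_sub _ _
      _ ≤ _ := by linarith
  calc _ ≤ |(k x y - k x' y) * u| + |k x' y| * |u - v| := by rw [e, ← abs_mul]; exact abs_add_le _ _
    _ ≤ A * dist x x' / r ^ (Q X + 1) + A / (r / 2) ^ Q X * (2 * (dist x x' / r)) := by gcongr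
    _ = (1 + 2 * 2 ^ Q X) * (A / r ^ (Q X + 1) * dist x x') := by rw [div_pow, pow_succ]; field_simp
    _ ≤ (4 * 2 ^ Q X) * (A / r ^ (Q X + 1) * dist x x') := by gcongr; linarith
    _ = _ := by ring

lemma SK.pie_lip (h : SK k A) (hr : 0 < r) (x x' y : X) :
    |pie k r x y - pie k r x' y| ≤ (4 * 2 ^ Q X * A) / r ^ (Q X + 1) * dist x x' := by
  have hA := h.nonneg
  have h2 : (1:ℝ) ≤ 2 ^ Q X := one_le_pow₀ (by norm_num)
  rcases lt_or_ge (dist x x') (r / 2) with hx | hx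
  · rcases lt_or_ge r (dist x y) with hd | hd
    · exact h.pie_lip_aux hr x x' y hd hx
    · rcases lt_or_ge r (dist x' y) with hd' | hd'
      · rw [abs_sub_comm, dist_comm x x'] at *
        exact h.pie_lip_aux hr x' x y hd' hx
      · rw [pie_zero hr hd, pie_zero hr hd']; simp; positivity
  · calc _ ≤ |pie k r x y| + |pie k r x' y| := abs_sub _ _
      _ ≤ A / r ^ Q X + A / r ^ Q X := add_le_add (h.pie_bd hr x y) (h.pie_bd hr x' y)
      _ = (4 * 1 * A) / r ^ (Q X + 1) * (r / 2) := by rw [pow_succ]; field_simp; ring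
      _ ≤ _ := by gcongr

lemma eta_eq_integral (s : ℝ) : eta s = ∫ θ in Ico (0:ℝ) 1, (Iio (s - 1)).indicator (fun _ => (1:ℝ)) θ := by
  rw [setIntegral_indicator measurableSet_Iio, setIntegral_const, Ico_inter_Iio]
  rw [Real.volume_real_Ico, smul_eq_mul, mul_one, sub_zero, max_comm, eta]

/-- The radial cutoffs are averages of indicators of intervals, so that vanishing of the integrals
over annuli gives mean zero. -/
lemma CZK.pie_mean (h : CZK k A) (hr : 0 < r) (x : X) : ∫ y, pie k r x y = 0 := by
  set S : Set (X × ℝ) := {p | (1 + p.2) * r < dist x p.1 ∧ dist x p.1 ≤ (2 + 2 * p.2) * r} with hS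
  have hSm : MeasurableSet S := by
    rw [hS, setOf_and]
    exact (measurableSet_lt (by fun_prop) (by fun_prop)).inter (measurableSet_le (by fun_prop) (by fun_prop))
  have hA := h.nonneg
  have e1 : ∀ y, pie k r x y = ∫ θ in Ico (0:ℝ) 1, S.indicator (fun p => k x p.1) (y, θ) := by
    intro y
    rw [pie, eta_eq_integral, eta_eq_integral, ← integral_sub, ← integral_const_mul]
    · refine setIntegral_congr_fun measurableSet_Ico fun θ hθ => ?_
      have i1 : dist x y / r - 1 > θ ↔ (1 + θ) * r < dist x y := by
        rw [gt_iff_lt, lt_sub_iff_add_lt', lt_div_iff₀ hr]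
      have i2 : dist x y / (2 * r) - 1 > θ ↔ (2 + 2 * θ) * r < dist x y := by
        rw [gt_iff_lt, lt_sub_iff_add_lt', lt_div_iff₀ (by positivity)]; ring_nf
      have i3 : (1 + θ) * r ≤ (2 + 2 * θ) * r := by
        have := hθ.1
        gcongr <;> linarith
      simp only [indicator, mem_Iio, hS, mem_setOf_eq]
      by_cases c1 : θ < dist x y / r - 1
      · by_cases c2 : θ < dist x y / (2 * r) - 1
        · have := i2.1 c2
          rw [if_pos c1, if_pos c2, if_neg (by intro h; linarith [h.2])]; simp
        · have := fun h => c2 (i2.2 h)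
          rw [if_pos c1, if_neg c2, if_pos ⟨i1.1 c1, not_lt.1 this⟩]; simp
      · have c2 : ¬ θ < dist x y / (2 * r) - 1 := fun h => c1 (i1.2 (i3.trans_lt (i2.1 h)))
        have := fun h => c1 (i1.2 h)
        rw [if_neg c1, if_neg c2, if_neg (fun h => this h.1)]; simp
    · exact (integrable_indicator_iff measurableSet_Iio).2 (integrable_const _).integrableOn
    · exact (integrable_indicator_iff measurableSet_Iio).2 (integrable_const _).integrableOn
  simp_rw [e1]
  rw [integral_integral_swap]
  · refine (setIntegral_congr_fun measurableSet_Ico fun θ hθ => ?_).trans (integral_zero _ _)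
    have hθ0 := hθ.1
    have := h.can1 x ((1 + θ) * r) ((2 + 2 * θ) * r) (by positivity) (by gcongr <;> linarith)
    rw [← this, ← integral_indicator]
    · rfl
    · rw [setOf_and]
      exact (measurableSet_lt (by fun_prop) (by fun_prop)).inter (measurableSet_le (by fun_prop) (by fun_prop))
  · have hf : IsFiniteMeasure (volume.restrict (ball x (5 * r))) := ⟨by simpa using (vol_fin x _).lt_top⟩
    have hi : Integrable (fun p : X × ℝ => (ball x (5 * r)).indicator (fun _ => (1:ℝ)) p.1 * 1)
        ((volume : Measure X).prod (volume.restrict (Ico (0:ℝ) 1))) := by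
      refine Integrable.mul_prod (f := (ball x (5 * r)).indicator (fun _ => (1:ℝ))) (g := fun _ => 1) ?_ (integrable_const _)
      exact (integrable_indicator_iff measurableSet_ball).2 (integrable_const _)
    refine Integrable.mono' (hi.const_mul (A / r ^ Q X)) ?_ ?_
    · have : Measurable fun p : X × ℝ => k x p.1 := (h.meas.comp measurable_prodMk_left).comp measurable_fst
      exact (this.indicator hSm).aestronglyMeasurable
    · have : ∀ᵐ p ∂((volume : Measure X).prod (volume.restrict (Ico (0:ℝ) 1))), p.2 ∈ Ico (0:ℝ) 1 :=
        Measure.quasiMeasurePreserving_snd.ae (ae_restrict_mem measurableSet_Ico)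
      filter_upwards [this] with p hp
      simp only [uncurry]
      by_cases hpS : p ∈ S
      · have hp' := hpS
        rw [hS, mem_setOf_eq] at hpS
        have hp0 := hp.1
        have hp1 := hp.2
        rw [indicator_of_mem hp', indicator_of_mem]
        · simp only [mul_one, Real.norm_eq_abs]
          refine h.size' hr ?_
          nlinarith [hpS.1]
        · rw [mem_ball, dist_comm]; nlinarith [hpS.2]
      · rw [indicator_of_notMem (a := (p.1, p.2)) hpS, norm_zero, mul_one]
        refine mul_nonneg (by positivity) (indicator_nonneg (fun _ _ => zero_le_one) _)

lemma CZK.pie_pk (h : CZK k A) (hr : 0 < r) : PK (pie k r) (4 * 2 ^ Q X * A) r where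
  bk := by
    have := h.toSK.pie_bk hr
    refine ⟨this.meas, this.rpos, fun x y => (this.bd x y).trans ?_, this.supp⟩
    have h2 : (1:ℝ) ≤ 2 ^ Q X := one_le_pow₀ (by norm_num)
    gcongr
    nlinarith [h.nonneg]
  lip x y y' := by
    rw [pie_tr (k := k) y x, pie_tr (k := k) y' x]; exact h.toSK.tr.pie_lip hr y y' x
  lip' := h.toSK.pie_lip hr
  mean := h.pie_mean hr
  mean' y := by simp_rw [pie_tr y]; exact h.tr.pie_mean hr y

end kern

/-! ### The uniform `L²` bound for truncated operators -/

section ltwo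

variable {k K K' : X → X → ℝ} {A r r' : ℝ}

lemma BK.int (h : BK K A r) (x : X) : Integrable (K x) := by
  have := h.integrable (f := fun _ => 1) (fun x r => integrableOn_const (vol_fin x r)) x
  simpa using this

variable [Nonempty X]

/-- The cancellation of the finer kernel against the regularity of the coarser one. -/
lemma ck_bd (h : PK K A r) (h' : PK K' A r') (hA : 0 ≤ A) (hrr : r ≤ r') :
    BK (ck K fun x y => K' y x) (4 ^ (Q X + 1) * c0 X * A ^ 2 * (r / r') / r' ^ Q X) (8 * r') where
  meas := meas_ck h.bk.meas h'.bk.tr.meas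
  rpos := by have := h'.bk.rpos; linarith
  bd x y := by
    have hr : 0 < r := by have := h.bk.rpos; linarith
    have hr' : 0 < r' := hr.trans_le hrr
    have hc := c0_pos X
    have hLI : LI (fun z => K' y z) := fun x s => (h'.bk.int y).integrableOn
    have e1 : ck K (fun x y => K' y x) x y = ∫ z, K x z * (K' y z - K' y x) := by
      simp only [mul_sub]
      rw [integral_sub (h.bk.integrable hLI x) ((h.bk.int x).mul_const _), integral_mul_const, h.mean x]
      simp [ck]
    have e2 : ∀ z, ‖K x z * (K' y z - K' y x)‖ ≤
        (ball x (4 * r)).indicator (fun _ => A / r ^ Q X * (A / r' ^ (Q X + 1) * (4 * r))) z := by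
      intro z
      by_cases hz : z ∈ ball x (4 * r)
      · rw [indicator_of_mem hz, norm_mul, Real.norm_eq_abs, Real.norm_eq_abs]
        have := h'.lip y z x
        have h1 := h.bk.bd x z
        have h2 : dist z x ≤ 4 * r := (mem_ball.1 hz).le
        have h3 : |K' y z - K' y x| ≤ A / r' ^ (Q X + 1) * (4 * r) := this.trans (by gcongr)
        exact mul_le_mul h1 h3 (abs_nonneg _) (by positivity)
      · rw [indicator_of_notMem hz, h.bk.supp x z (by simpa [dist_comm] using hz)]; simp
    rw [e1]
    refine (norm_integral_le_integral_norm _).trans ((integral_mono_of_nonneg (ae_of_all _ fun z => norm_nonneg _)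
      ((integrable_indicator_iff measurableSet_ball).2 (integrableOn_const (vol_fin x _))) (ae_of_all _ e2)).trans ?_)
    rw [integral_indicator_const _ measurableSet_ball, vol_real x (by positivity), smul_eq_mul]
    apply le_of_eq
    rw [mul_pow]; field_simp; ring
  supp x y hd := by
    refine integral_eq_zero_of_ae (ae_of_all _ fun z => ?_)
    simp only [Pi.zero_apply]
    rcases lt_or_ge (dist x z) (4 * r) with h1 | h1
    · rw [h'.bk.supp y z, mul_zero]
      have := dist_triangle x z y
      rw [dist_comm z y] at this
      linarith
    · rw [h.bk.supp x z h1, zero_mul]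

lemma norm_ck (h : PK K A r) (h' : PK K' A r') (hA : 0 ≤ A) (hrr : r ≤ r') :
    ‖opL h.bk * opL h'.bk.tr‖ ≤ 4 ^ (Q X + 1) * 8 ^ Q X * c0 X ^ 2 * A ^ 2 * (r / r') := by
  rw [opL_mul h.bk h'.bk.tr (ck_bd h h' hA hrr)]
  refine (norm_opL _).trans (le_of_eq ?_)
  have : 0 < r' := by have := h'.bk.rpos; linarith
  rw [mul_pow]; field_simp

lemma norm_ck' (h : PK K A r) (h' : PK K' A r') (hA : 0 ≤ A) (hrr : r' ≤ r) :
    ‖opL h.bk * opL h'.bk.tr‖ ≤ 4 ^ (Q X + 1) * 8 ^ Q X * c0 X ^ 2 * A ^ 2 * (r' / r) := by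
  have e : opL h.bk * opL h'.bk.tr = adjoint (opL h'.bk * opL h.bk.tr) := by
    change _ = adjoint ((opL h'.bk).comp (opL h.bk.tr))
    rw [ContinuousLinearMap.adjoint_comp, adjoint_opL, adjoint_opL]
    rfl
  rw [e, LinearIsometryEquiv.norm_map]
  exact norm_ck h' h hA hrr

lemma norm_ck_zpow {i j : ℤ} (hr : 0 < r) (h : PK K A (r * 2 ^ i)) (h' : PK K' A (r * 2 ^ j)) (hA : 0 ≤ A) :
    ‖opL h.bk * opL h'.bk.tr‖ ≤ ((1 + 4 ^ (Q X + 1) * 8 ^ Q X * c0 X ^ 2) * A * (3 / 4) ^ (i - j).natAbs) ^ 2 := by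
  have hc := c0_pos X
  set c := 4 ^ (Q X + 1) * 8 ^ Q X * c0 X ^ 2 with hcdef
  have hc0 : 0 < c := by positivity
  have key : ‖opL h.bk * opL h'.bk.tr‖ ≤ c * A ^ 2 * (1 / 2) ^ (i - j).natAbs := by
    rcases le_total i j with hij | hij
    · have := norm_ck h h' hA (by gcongr; norm_num)
      refine this.trans (le_of_eq ?_)
      congr 1
      obtain ⟨n, rfl⟩ := Int.exists_add_of_le hij
      rw [show i - (i + n) = -(n:ℤ) by ring, Int.natAbs_neg, Int.natAbs_natCast, zpow_add₀ two_ne_zero, zpow_natCast]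
      field_simp; simp
    · have := norm_ck' h h' hA (by gcongr; norm_num)
      refine this.trans (le_of_eq ?_)
      congr 1
      obtain ⟨n, rfl⟩ := Int.exists_add_of_le hij
      rw [show j + n - j = (n:ℤ) by ring, Int.natAbs_natCast, zpow_add₀ two_ne_zero, zpow_natCast]
      field_simp; simp
  refine key.trans ?_
  rw [mul_pow, mul_pow, ← pow_mul, mul_comm _ 2, pow_mul]
  have h1 : c ≤ (1 + c) ^ 2 := by nlinarith
  gcongr
  norm_num

lemma sum_int_le (F : Finset ℤ) : ∑ n ∈ F, (3 / 4 : ℝ) ^ n.natAbs ≤ 7 := by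
  have h1 : HasSum (fun n : ℕ => (3 / 4 : ℝ) ^ n) 4 := by
    convert hasSum_geometric_of_lt_one (r := (3/4:ℝ)) (by norm_num) (by norm_num) using 1; norm_num
  have h2 : HasSum (fun n : ℕ => (3 / 4 : ℝ) ^ (n + 1)) 3 := by
    have := h1.mul_right (3/4:ℝ)
    rw [show (4:ℝ) * (3/4) = 3 by norm_num] at this
    simpa only [pow_succ] using this
  have h3 : HasSum (fun n : ℤ => (3 / 4 : ℝ) ^ n.natAbs) 7 := by
    have := HasSum.of_nat_of_neg_add_one (f := fun n : ℤ => (3 / 4 : ℝ) ^ n.natAbs) (m := 4) (m' := 3)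
      (by simpa using h1) (by
        refine (h2.congr_fun fun n => ?_) 
        congr 1)
    convert this using 1; norm_num
  exact sum_le_hasSum F (fun _ _ => by positivity) h3

variable (X) in
/-- The constant in the `L²` bound. -/
def C2 : ℝ := (1 + 4 ^ (Q X + 1) * 8 ^ Q X * c0 X ^ 2) * (4 * 2 ^ Q X) * 7

lemma opL_add {B B' R R' B'' R'' : ℝ} (h : BK K B R) (h' : BK K' B' R') (h'' : BK (fun x y => K x y + K' x y) B'' R'') :
    opL h + opL h' = opL h'' := by
  ext f
  filter_upwards [coe_opL h f, coe_opL h' f, coe_opL h'' f, Lp.coeFn_add (opL h f) (opL h' f)] with x h1 h2 h3 h4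
  rw [ContinuousLinearMap.add_apply, h4, Pi.add_apply, h1, h2, h3, op, op, op,
    ← integral_add (h.integrable (LI_of_memLp (Lp.memLp f)) x) (h'.integrable (LI_of_memLp (Lp.memLp f)) x)]
  simp only [add_mul]

lemma pie_eq (x y : X) : pie k r x y = trk k r x y - trk k (2 * r) x y := by
  simp only [pie, trk]; ring

/-- The difference of two truncations is a finite sum of pieces. -/
lemma dif_bk (h : SK k A) (hr : 0 < r) (N : ℕ) :
    BK (fun x y => trk k r x y - trk k (r * 2 ^ N) x y) (2 * (A / r ^ Q X)) (2 * (r * 2 ^ N)) where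
  meas := (meas_trk h.meas).sub (meas_trk h.meas)
  rpos := by positivity
  bd x y := by
    have hA := h.nonneg
    refine (abs_sub _ _).trans ?_
    have h1 := h.trk_bd hr x y
    have h2 := h.trk_bd (r := r * 2 ^ N) (by positivity) x y
    have h3 : A / (r * 2 ^ N) ^ Q X ≤ A / r ^ Q X := by
      gcongr
      exact le_mul_of_one_le_right hr.le (one_le_pow₀ (by norm_num))
    linarith
  supp x y hd := by
    have h1 : r ≤ r * 2 ^ N := le_mul_of_one_le_right hr.le (one_le_pow₀ (by norm_num))
    rw [trk_eq hr (by linarith), trk_eq (by positivity) hd, sub_self]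

lemma sum_pie (h : CZK k A) (hr : 0 < r) (N : ℕ) (f : Lp ℝ 2 (volume : Measure X)) :
    (∑ n ∈ Finset.range N, opL (h.pie_pk (r := r * 2 ^ (n : ℤ)) (by positivity)).bk) f =
      opL (dif_bk h.toSK hr N) f := by
  induction N with
  | zero =>
    ext
    filter_upwards [coe_opL (dif_bk h.toSK hr 0) f, Lp.coeFn_zero ℝ 2 (volume : Measure X)] with x h1 h2
    simp only [Finset.range_zero, Finset.sum_empty, ContinuousLinearMap.zero_apply]
    rw [h1]
    refine h2.trans ?_
    simp [op]
  | succ N ih =>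
    rw [Finset.sum_range_succ, ContinuousLinearMap.add_apply, ih, ← ContinuousLinearMap.add_apply]
    congr 1
    have e : (fun x y => (trk k r x y - trk k (r * 2 ^ N) x y) + pie k (r * 2 ^ (N : ℤ)) x y) =
        fun x y => trk k r x y - trk k (r * 2 ^ (N + 1)) x y := by
      funext x y
      rw [pie_eq, zpow_natCast, show 2 * (r * 2 ^ N) = r * 2 ^ (N + 1) by ring]; ring
    have h'' := dif_bk h.toSK hr (N + 1)
    rw [← e] at h''
    rw [opL_add _ _ h'']
    congr 1

lemma norm_dif (h : CZK k A) (hr : 0 < r) (N : ℕ) : ‖opL (dif_bk h.toSK hr N)‖ ≤ C2 X * A := by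
  have hc := c0_pos X
  have hA := h.nonneg
  let T : ℤ → Lp ℝ 2 (volume : Measure X) →L[ℝ] Lp ℝ 2 (volume : Measure X) :=
    fun n => opL (h.pie_pk (r := r * 2 ^ n) (by positivity)).bk
  let c : ℤ → ℝ := fun n => (1 + 4 ^ (Q X + 1) * 8 ^ Q X * c0 X ^ 2) * (4 * 2 ^ Q X * A) * (3 / 4) ^ n.natAbs
  have := cotlar_stein (T := T) (c := c) (fun n => by positivity) (fun i j => ?_) (fun i j => ?_) (A := C2 X * A)
    (fun F => ?_) ((Finset.range N).map Nat.castEmbedding)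
  · rw [Finset.sum_map] at this
    convert this using 2
    ext1 f
    rw [← sum_pie h hr N f]
    rfl
  · simp only [T, adjoint_opL]
    exact norm_ck_zpow hr (h.pie_pk (r := r * 2 ^ i) (by positivity)).tr (h.pie_pk (r := r * 2 ^ j) (by positivity)).tr
      (by positivity)
  · simp only [T, adjoint_opL]
    exact norm_ck_zpow hr (h.pie_pk (r := r * 2 ^ i) (by positivity)) (h.pie_pk (r := r * 2 ^ j) (by positivity))
      (by positivity)
  · simp only [c]
    rw [← Finset.mul_sum]
    have := mul_le_mul_of_nonneg_left (sum_int_le F)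
      (by positivity : 0 ≤ (1 + 4 ^ (Q X + 1) * 8 ^ Q X * c0 X ^ 2) * (4 * 2 ^ Q X * A))
    refine this.trans (le_of_eq ?_)
    rw [C2]; ring

/-- The truncated operators are bounded on `L²`, uniformly in the truncation. -/
lemma ltwo_trk (h : CZK k A) (hr : 0 < r) {f : X → ℝ} (hf : Measurable f) (hf1 : Integrable f) :
    ∫⁻ x, ‖op (trk k r) f x‖ₑ ^ 2 ≤ ofReal (C2 X * A) ^ 2 * ∫⁻ x, ‖f x‖ₑ ^ 2 := by
  have hc := c0_pos X
  have hA := h.nonneg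
  have hC2 : 0 < C2 X := by unfold C2; positivity
  by_cases hf2 : MemLp f 2 volume
  swap
  · rcases hA.eq_or_lt with h0 | h0
    · have hk : ∀ x y, trk k r x y = 0 := fun x y => by
        have := h.toSK.trk_bd hr x y
        rw [← h0, zero_div] at this
        exact abs_nonpos_iff.1 this
      simp [op, hk]
    · rw [memLp_two_iff hf, not_lt_top] at hf2
      rw [hf2, mul_top]; · exact le_top
      have : 0 < C2 X * A := by positivity
      simpa using this
  set B := fun N => dif_bk h.toSK hr N
  have h1 : ∀ N, ∫⁻ x, ‖op (fun x y => trk k r x y - trk k (r * 2 ^ N) x y) f x‖ₑ ^ 2 ≤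
      ofReal (C2 X * A) ^ 2 * ∫⁻ x, ‖f x‖ₑ ^ 2 := by
    intro N
    have e1 : op (fun x y => trk k r x y - trk k (r * 2 ^ N) x y) f =ᵐ[volume] opL (B N) (hf2.toLp f) := by
      filter_upwards [coe_opL (B N) (hf2.toLp f)] with x hx
      rw [hx, op_congr (hf2.coeFn_toLp)]
    have e2 : eLpNorm (op (fun x y => trk k r x y - trk k (r * 2 ^ N) x y) f) 2 volume ≤
        ofReal (C2 X * A) * eLpNorm f 2 volume := by
      rw [eLpNorm_congr_ae e1, ← ofReal_toReal (Lp.eLpNorm_ne_top (opL (B N) (hf2.toLp f))),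
        ← ofReal_toReal hf2.2.ne, ← ofReal_mul (by positivity)]
      refine ofReal_le_ofReal ?_
      rw [← Lp.norm_toLp f hf2, ← Lp.norm_def]
      exact (opL (B N)).le_of_opNorm_le (norm_dif h hr N) _
    rw [eLpNorm_two, eLpNorm_two] at e2
    have e3 := pow_le_pow_left' e2 2
    rw [mul_pow] at e3
    simpa only [← ENNReal.rpow_natCast, ← ENNReal.rpow_mul, Nat.cast_ofNat, one_div,
      inv_mul_cancel₀ (two_ne_zero (α := ℝ)), ENNReal.rpow_one] using e3
  have hlim : ∀ x, Tendsto (fun N => ‖op (fun x y => trk k r x y - trk k (r * 2 ^ N) x y) f x‖ₑ ^ 2) atTop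
      (𝓝 (‖op (trk k r) f x‖ₑ ^ 2)) := by
    intro x
    refine ((ENNReal.continuous_pow 2).tendsto _).comp ((continuous_enorm.tendsto _).comp ?_)
    have hi : ∀ s, 0 < s → Integrable (fun y => trk k s x y * f y) := fun s hs =>
      hf1.bdd_mul (c := A / s ^ Q X) ((meas_trk h.meas).comp measurable_prodMk_left).aestronglyMeasurable
        (ae_of_all _ fun y => h.toSK.trk_bd hs x y)
    have e : ∀ N : ℕ, op (fun x y => trk k r x y - trk k (r * 2 ^ N) x y) f x =
        op (trk k r) f x - op (trk k (r * 2 ^ N)) f x := fun N => by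
      simp only [op, sub_mul]
      exact integral_sub (hi _ hr) (hi _ (by positivity))
    simp only [e]
    have h0 : Tendsto (fun N : ℕ => op (trk k (r * 2 ^ N)) f x) atTop (𝓝 0) := by
      have hb : ∀ N : ℕ, ‖op (trk k (r * 2 ^ N)) f x‖ ≤ (A / r ^ Q X * ∫ y, ‖f y‖) * (1 / 2) ^ N := by
        intro N
        have b1 : A / (r * 2 ^ N) ^ Q X ≤ A / r ^ Q X * (1 / 2) ^ N := by
          rw [mul_pow, ← _root_.div_div, one_div, inv_pow, ← div_eq_mul_inv]
          gcongr
          exact le_self_pow₀ (one_le_pow₀ (by norm_num)) (by have := Q_pos X; omega)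
        calc _ ≤ ∫ y, ‖trk k (r * 2 ^ N) x y * f y‖ := norm_integral_le_integral_norm _
          _ ≤ ∫ y, A / (r * 2 ^ N) ^ Q X * ‖f y‖ := by
            refine integral_mono_of_nonneg (ae_of_all _ fun y => norm_nonneg _) (hf1.norm.const_mul _)
              (ae_of_all _ fun y => ?_)
            simp only [norm_mul]
            gcongr
            exact h.toSK.trk_bd (by positivity) x y
          _ = A / (r * 2 ^ N) ^ Q X * ∫ y, ‖f y‖ := integral_const_mul _ _
          _ ≤ (A / r ^ Q X * (1 / 2) ^ N) * ∫ y, ‖f y‖ := by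
            gcongr
          _ = _ := by ring
      refine squeeze_zero_norm hb ?_
      have := (tendsto_pow_atTop_nhds_zero_of_lt_one (r := (1/2:ℝ)) (by norm_num) (by norm_num)).const_mul
        (A / r ^ Q X * ∫ y, ‖f y‖)
      simpa using this
    simpa using tendsto_const_nhds.sub h0
  calc ∫⁻ x, ‖op (trk k r) f x‖ₑ ^ 2
      = ∫⁻ x, liminf (fun N => ‖op (fun x y => trk k r x y - trk k (r * 2 ^ N) x y) f x‖ₑ ^ 2) atTop :=
        lintegral_congr fun x => ((hlim x).liminf_eq).symm
    _ ≤ liminf (fun N => ∫⁻ x, ‖op (fun x y => trk k r x y - trk k (r * 2 ^ N) x y) f x‖ₑ ^ 2) atTop :=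
        lintegral_liminf_le fun N => (meas_op (B N).meas hf).enorm.pow_const 2
    _ ≤ _ := by
        refine liminf_le_of_le (by isBoundedDefault) fun b hb => ?_
        obtain ⟨N, hN⟩ := hb.exists
        exact hN.trans (h1 N)

end ltwo

/-! ### Weak type `(1,1)` for the truncated operators -/

section weak
variable [Dya X] [Nonempty X]

variable {k K : X → X → ℝ} {A r : ℝ} {f g : X → ℝ}

lemma vol_parent (P : ℤ × ι X) (x : X) : volume (st (at' (P.1 + 1) x)) = ofReal (2 ^ Q X) * volume (st P) := by
  rw [vol_st, vol_st, ← ofReal_mul (by positivity)]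
  congr 1
  simp only [at']
  rw [zpow_add_one₀ two_ne_zero, show 8 * rad X * (2 ^ P.1 * 2) = 2 * (8 * rad X * 2 ^ P.1) by ring, mul_pow 2]
  ring

lemma vol_st_tendsto {I t : ℝ≥0∞} (ht : t ≠ 0) (hI : I ≠ ⊤) :
    ∃ N : ℤ, ∀ q : ℤ × ι X, N ≤ q.1 → I ≤ t * volume (st q) := by
  by_cases ht' : t = ⊤
  · refine ⟨0, fun q _ => ?_⟩
    rw [ht', top_mul (vol_st_pos q)]; exact le_top
  have hc := c0_pos X
  have hr := rad_pos (X := X)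
  have hQ := Q_pos X
  have h8 : 0 < 8 * rad X := by positivity
  obtain ⟨n, hn⟩ := pow_unbounded_of_one_lt (I.toReal / (t.toReal * (c0 X * (8 * rad X) ^ Q X))) one_lt_two
  refine ⟨n, fun q hq => ?_⟩
  have ht0 : 0 < t.toReal := toReal_pos ht ht'
  have h1 : (2:ℝ) ^ n ≤ (2 ^ q.1) ^ Q X := by
    calc (2:ℝ) ^ n = 2 ^ (n : ℤ) := (zpow_natCast _ _).symm
      _ ≤ 2 ^ q.1 := zpow_le_zpow_right₀ (by norm_num) hq
      _ ≤ _ := le_self_pow₀ (one_le_zpow₀ (by norm_num) (by omega)) (by omega)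
  rw [div_lt_iff₀ (by positivity)] at hn
  rw [vol_st, ← ofReal_toReal hI, ← ofReal_toReal ht', ← ofReal_mul ht0.le]
  refine ofReal_le_ofReal (hn.le.trans ?_)
  rw [mul_pow (8 * rad X)]
  calc _ ≤ (2 ^ q.1) ^ Q X * (t.toReal * (c0 X * (8 * rad X) ^ Q X)) := mul_le_mul_of_nonneg_right h1 (by positivity)
    _ = _ := by ring

variable (X) in
/-- The ratio between the bound of the good part and the height. -/
def kcz : ℝ≥0∞ := ofReal (2 ^ Q X) * ofReal (kst X) + 1

/-- Calderón–Zygmund decomposition at height `t`: `g` is the good part and the cubes are `stp S`. -/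
lemma cz_dec (hf : Measurable f) (hi : Integrable f) {t : ℝ≥0∞} (ht : t ≠ 0) :
    ∃ (S : ℤ × ι X → Prop) (g : X → ℝ), Measurable g ∧ (∀ᵐ x, ‖g x‖ₑ ≤ kcz X * t) ∧
      ∫⁻ x, ‖g x‖ₑ ≤ ∫⁻ x, ‖f x‖ₑ ∧ (∀ x ∉ ⋃ P ∈ stp S, cu P, g x = f x) ∧
      (∀ P ∈ stp S, ∫ x in cu P, (f x - g x) = 0) ∧
      t * volume (⋃ P ∈ stp S, cu P) ≤ (6 ^ Q X : ℝ≥0) * ∫⁻ x, ‖f x‖ₑ := by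
  have hI : ∫⁻ x, ‖f x‖ₑ ≠ ⊤ := hi.2.ne
  let S : ℤ × ι X → Prop := fun q => t * volume (st q) < ∫⁻ y in st q, ‖f y‖ₑ
  obtain ⟨N, hN⟩ := vol_st_tendsto (X := X) ht hI
  have hS : ∀ q, N ≤ q.1 → ¬ S q := fun q hq => not_lt.2 ((setLIntegral_le_lintegral _ _).trans (hN q hq))
  set Ω := ⋃ P ∈ stp S, cu P with hΩ
  have mΩ : MeasurableSet Ω := meas_stp S
  let a : ℤ × ι X → ℝ := fun P => (volume.real (cu P))⁻¹ * ∫ y in cu P, f y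
  have hpos : ∀ P : ℤ × ι X, volume.real (cu P) ≠ 0 := fun P =>
    ENNReal.toReal_ne_zero.2 ⟨vol_cu_pos P, vol_cu_fin P⟩
  obtain ⟨g, hg, hgs⟩ := exists_measurable_piecewise (ι := Option (stp S))
    (fun o => o.elim Ωᶜ (fun P => cu P.1)) (by
      rintro (_ | P)
      · exact mΩ.compl
      · exact meas_cu P.1)
    (fun o x => o.elim (f x) (fun P => a P.1)) (by
      rintro (_ | P)
      · exact hf
      · exact measurable_const) (by
      rintro (_ | P) (_ | P') hne x ⟨h1, h2⟩
      · rfl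
      · exact absurd (mem_biUnion P'.2 h2) h1
      · exact absurd (mem_biUnion P.2 h1) h2
      · have hPP : P.1 ≠ P'.1 := fun h => hne (by rw [Subtype.ext h])
        exact absurd h2 (disjoint_left.1 (stop_disj S P.2 P'.2 hPP) h1))
  have hg0 : ∀ x ∉ Ω, g x = f x := fun x hx => hgs none hx
  have hg1 : ∀ P ∈ stp S, ∀ x ∈ cu P, g x = a P := fun P hP x hx => hgs (some ⟨P, hP⟩) hx
  have ha : ∀ P, ‖a P‖ₑ * volume (cu P) ≤ ∫⁻ y in cu P, ‖f y‖ₑ := by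
    intro P
    have e : ‖a P‖ₑ * volume (cu P) = ‖∫ y in cu P, f y‖ₑ := by
      have : volume (cu P) = ‖volume.real (cu P)‖ₑ := by
        rw [Measure.real, Real.enorm_of_nonneg toReal_nonneg, ofReal_toReal (vol_cu_fin P)]
      rw [this, ← enorm_mul]
      congr 1
      simp only [a]
      field_simp [hpos P]
    rw [e]
    exact enorm_integral_le_lintegral_enorm _
  refine ⟨S, g, hg, ?_, ?_, hg0, ?_, ?_⟩
  · filter_upwards [leb_diff (f := f) (fun x r => hi.integrableOn)] with x hx
    by_cases hxΩ : x ∈ Ω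
    · obtain ⟨P, hP, hxP⟩ := mem_iUnion₂.1 hxΩ
      rw [hg1 P hP x hxP]
      have h1 : ¬ S (at' (P.1 + 1) x) := hP.2 x hxP _ (by omega)
      have h2 : ∫⁻ y in cu P, ‖f y‖ₑ ≤ (kcz X * t) * volume (cu P) := by
        calc ∫⁻ y in cu P, ‖f y‖ₑ ≤ ∫⁻ y in st (at' (P.1 + 1) x), ‖f y‖ₑ :=
            lintegral_mono_set ((cu_sub_st P).trans (st_sub (by simp [at']) hxP (mem_cu_at _ x)))
          _ ≤ t * volume (st (at' (P.1 + 1) x)) := not_lt.1 h1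
          _ ≤ t * (ofReal (2 ^ Q X) * (ofReal (kst X) * volume (cu P))) := by
            rw [vol_parent]; gcongr; exact vol_st_le P
          _ = (ofReal (2 ^ Q X) * ofReal (kst X)) * t * volume (cu P) := by ring
          _ ≤ _ := by unfold kcz; gcongr; exact le_self_add
      exact (ENNReal.mul_le_mul_iff_left (vol_cu_pos P) (vol_cu_fin P)).1 ((ha P).trans h2)
    · rw [hg0 x hxΩ]
      have h1 : ∀ k, ¬ S (at' k x) := fun k hk => hxΩ ((stop_cover hS x).2 ⟨k, hk⟩)
      refine (hx t 0 fun k _ => not_lt.1 (h1 k)).trans ?_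
      unfold kcz
      calc t = 1 * t := (one_mul t).symm
        _ ≤ _ := by gcongr; exact le_add_self
  · rw [← lintegral_add_compl _ mΩ, ← lintegral_add_compl (fun x => ‖f x‖ₑ) mΩ, lint_stp, lint_stp]
    refine add_le_add (tsum_le_tsum fun P => ?_) (le_of_eq ?_)
    · rw [setLIntegral_congr_fun (meas_cu P.1) (g := fun _ => ‖a P.1‖ₑ) (fun x hx => by simp only [hg1 P.1 P.2 x hx]),
        setLIntegral_const]
      exact ha P.1
    · exact setLIntegral_congr_fun mΩ.compl fun x hx => by simp only [hg0 x hx]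
  · intro P hP
    rw [setIntegral_congr_fun (meas_cu P) (g := fun x => f x - a P) (fun x hx => by simp only [hg1 P hP x hx]),
      integral_sub hi.integrableOn (integrableOn_const (vol_cu_fin P)), setIntegral_const, smul_eq_mul]
    simp only [a]
    rw [mul_inv_cancel_left₀ (hpos P), sub_self]
  · refine le_trans ?_ (MF_weak (doub_vol X) (t := t))
    gcongr
    refine iUnion₂_subset fun P hP x hx => ?_
    refine lt_of_lt_of_le ?_ (le_MF (srad_pos P) (cu_sub_st P hx))
    exact (ENNReal.lt_div_iff_mul_lt (Or.inl (vol_st_pos P)) (Or.inl (vol_st_fin P))).2 hP.1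

lemma int_bdd (hm : Measurable (uncurry K)) {B : ℝ} (hb : ∀ x y, |K x y| ≤ B) (hi : Integrable f) (x : X) :
    Integrable fun y => K x y * f y :=
  hi.bdd_mul (c := B) (hm.comp measurable_prodMk_left).aestronglyMeasurable (ae_of_all _ fun y => hb x y)

/-- The action of a regular kernel on a function of mean zero in a cube, far from the cube. -/
lemma far_cube (hK : SK K A) {B : ℝ} (hb : ∀ x y, |K x y| ≤ B) (hi : Integrable f) {P : ℤ × ι X}
    (h0 : ∫ y in cu P, f y = 0) {x : X} (hx : x ∉ st P) :
    ‖∫ y in cu P, K x y * f y‖ₑ ≤ ofReal A *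
      (ofReal (8 * rad X * 2 ^ P.1 / dist (ce P) x ^ (Q X + 1)) * ∫⁻ y in cu P, ‖f y‖ₑ) := by
  have hrP : 0 < rad X * 2 ^ P.1 := by have := rad_pos (X := X); positivity
  have hd : 8 * rad X * 2 ^ P.1 ≤ dist (ce P) x := by
    simpa [st, dist_comm, not_lt] using hx
  have hA := hK.nonneg
  have hd0 : 0 < dist (ce P) x := by linarith
  have e : ∫ y in cu P, K x y * f y = ∫ y in cu P, (K x y - K x (ce P)) * f y := by
    simp only [sub_mul]
    rw [integral_sub (int_bdd hK.meas hb hi x).integrableOn (hi.const_mul _).integrableOn, integral_const_mul, h0]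
    simp
  rw [e]
  refine (enorm_integral_le_lintegral_enorm _).trans ?_
  rw [← mul_assoc, ← ofReal_mul hA, ← lintegral_const_mul' _ _ ofReal_ne_top]
  refine setLIntegral_mono' (meas_cu P) fun y hy => ?_
  rw [enorm_mul]
  gcongr
  rw [Real.enorm_eq_ofReal_abs]
  refine ofReal_le_ofReal ?_
  have hdy := dist_ce hy
  have := hK.sm2 x (ce P) y (by rw [dist_comm x, dist_comm (ce P) y]; linarith)
  rw [abs_sub_comm, dist_comm x, dist_comm (ce P) y] at this
  rw [← mul_div_assoc, le_div_iff₀ (by positivity)]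
  refine this.trans ?_
  gcongr
  linarith

/-- Weak type `(1,1)` from the `L²` bound and regularity, with a uniform constant. -/
lemma weak_aux (A : ℝ) {N : ℝ≥0∞} (hN : N ≠ ⊤) : ∃ C : ℝ≥0∞, C ≠ ⊤ ∧ ∀ (K : X → X → ℝ) (B : ℝ), SK K A →
    (∀ x y, |K x y| ≤ B) →
    (∀ f : X → ℝ, Measurable f → Integrable f → ∫⁻ x, ‖op K f x‖ₑ ^ 2 ≤ N ^ 2 * ∫⁻ x, ‖f x‖ₑ ^ 2) →
    ∀ f : X → ℝ, Measurable f → Integrable f → ∀ t : ℝ≥0∞, t ≠ 0 → t ≠ ⊤ →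
      t * volume {x | t < ‖op K f x‖ₑ} ≤ C * ∫⁻ x, ‖f x‖ₑ := by
  refine ⟨4 * N ^ 2 * kcz X + ofReal (kst X) * (6 ^ Q X : ℝ≥0) +
    2 * (ofReal A * ofReal (2 ^ (Q X + 1) * c0 X) * 2), ?_, ?_⟩
  · unfold kcz
    finiteness
  intro K B hK hb h2 f hf hi t ht ht'
  obtain ⟨S, g, hg, hgb, hg1, hgo, hgm, hΩ⟩ := cz_dec hf hi ht
  set Ω := ⋃ P ∈ stp S, cu P with hΩd
  set Ω' := ⋃ P ∈ stp S, st P with hΩ'd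
  have mΩ : MeasurableSet Ω := meas_stp S
  have mΩ' : MeasurableSet Ω' := by
    refine MeasurableSet.biUnion (to_countable _) fun P _ => meas_st P
  have hgi : Integrable g := ⟨hg.aestronglyMeasurable, hg1.trans_lt hi.2⟩
  have hfg : Integrable (fun x => f x - g x) := hi.sub hgi
  have hsub : {x | t < ‖op K f x‖ₑ} ⊆ ({x | t / 2 ≤ ‖op K g x‖ₑ} ∪ Ω') ∪
      {x | t / 2 ≤ Ω'ᶜ.indicator (fun x => ‖op K (fun x => f x - g x) x‖ₑ) x} := by
    intro x hx
    by_contra hcon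
    simp only [mem_union, mem_setOf_eq, not_or, not_le] at hcon
    obtain ⟨⟨h1, h2⟩, h3⟩ := hcon
    rw [indicator_of_mem (show x ∈ Ω'ᶜ from h2)] at h3
    have e : op K f x = op K g x + op K (fun x => f x - g x) x := by
      simp only [op, mul_sub]
      rw [integral_sub (int_bdd hK.meas hb hi x) (int_bdd hK.meas hb hgi x)]; ring
    have : ‖op K f x‖ₑ < t := by
      rw [e]
      calc _ ≤ _ := enorm_add_le _ _
        _ < t / 2 + t / 2 := ENNReal.add_lt_add h1 h3
        _ = t := ENNReal.add_halves t
    exact lt_asymm hx this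
  have p1 : t * volume {x | t / 2 ≤ ‖op K g x‖ₑ} ≤ 4 * N ^ 2 * kcz X * ∫⁻ x, ‖f x‖ₑ := by
    have q1 : (t / 2) ^ 2 * volume {x | t / 2 ≤ ‖op K g x‖ₑ} ≤ N ^ 2 * (kcz X * t * ∫⁻ x, ‖f x‖ₑ) := by
      calc (t / 2) ^ 2 * volume {x | t / 2 ≤ ‖op K g x‖ₑ}
          ≤ (t / 2) ^ 2 * volume {x | (t / 2) ^ 2 ≤ ‖op K g x‖ₑ ^ 2} := by
            refine mul_le_mul' le_rfl (measure_mono fun x hx => ?_)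
            exact pow_le_pow_left' (show t / 2 ≤ _ from hx) 2
        _ ≤ ∫⁻ x, ‖op K g x‖ₑ ^ 2 := mul_meas_ge_le_lintegral ((meas_op hK.meas hg).enorm.pow_const 2) _
        _ ≤ N ^ 2 * ∫⁻ x, ‖g x‖ₑ ^ 2 := h2 g hg hgi
        _ ≤ N ^ 2 * ∫⁻ x, kcz X * t * ‖g x‖ₑ := by
            refine mul_le_mul' le_rfl (lintegral_mono_ae ?_)
            filter_upwards [hgb] with x hx
            rw [sq]; gcongr
        _ ≤ _ := by
            rw [lintegral_const_mul _ hg.enorm]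
            gcongr
    have e : (t / 2) ^ 2 * 4 = t * t := by
      rw [div_eq_mul_inv, mul_pow, sq t, mul_assoc, show (2⁻¹ : ℝ≥0∞) ^ 2 * 4 = 1 by
        rw [← ENNReal.inv_pow, show (2:ℝ≥0∞) ^ 2 = 4 by norm_num]
        exact ENNReal.inv_mul_cancel (by norm_num) (by norm_num), mul_one]
    rw [← ENNReal.mul_le_mul_iff_right ht ht', ← mul_assoc, ← e]
    calc _ = 4 * ((t / 2) ^ 2 * volume {x | t / 2 ≤ ‖op K g x‖ₑ}) := by ring
      _ ≤ 4 * (N ^ 2 * (kcz X * t * ∫⁻ x, ‖f x‖ₑ)) := by gcongr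
      _ = _ := by ring
  have p2 : t * volume Ω' ≤ ofReal (kst X) * (6 ^ Q X : ℝ≥0) * ∫⁻ x, ‖f x‖ₑ := by
    have : volume Ω' ≤ ofReal (kst X) * volume Ω := by
      rw [hΩd, meas_stp_eq, ← ENNReal.tsum_mul_left, hΩ'd, biUnion_eq_iUnion]
      exact (measure_iUnion_le _).trans (tsum_le_tsum fun P => vol_st_le P.1)
    calc t * volume Ω' ≤ t * (ofReal (kst X) * volume Ω) := by gcongr
      _ = ofReal (kst X) * (t * volume Ω) := by ring
      _ ≤ _ := by rw [mul_assoc]; gcongr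
  have p3 : ∫⁻ x in Ω'ᶜ, ‖op K (fun x => f x - g x) x‖ₑ ≤
      (ofReal A * ofReal (2 ^ (Q X + 1) * c0 X) * 2) * ∫⁻ x, ‖f x‖ₑ := by
    have q1 : ∀ x ∈ Ω'ᶜ, ‖op K (fun x => f x - g x) x‖ₑ ≤ ∑' P : stp S, ofReal A *
      (ofReal (8 * rad X * 2 ^ P.1.1 / dist (ce P.1) x ^ (Q X + 1)) * ∫⁻ y in cu P.1, ‖f y - g y‖ₑ) := by
      intro x hx
      have e : op K (fun x => f x - g x) x = ∫ y in ⋃ P : stp S, cu P.1, K x y * (f y - g y) := by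
        rw [op, ← biUnion_eq_iUnion (stp S) (fun P _ => cu P), setIntegral_eq_integral_of_forall_compl_eq_zero]
        intro y hy
        rw [hgo y hy]; simp
      rw [e, integral_iUnion (fun P => meas_cu P.1)
        (fun P P' h => stop_disj S P.2 P'.2 fun h' => h (Subtype.ext h')) (int_bdd hK.meas hb hfg x).integrableOn]
      refine (enorm_tsum_le_tsum_enorm).trans (tsum_le_tsum fun P => ?_)
      exact far_cube hK hb hfg (hgm P.1 P.2) fun h => hx (mem_biUnion P.2 h)
    calc _ ≤ ∫⁻ x in Ω'ᶜ, ∑' P : stp S, ofReal A *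
      (ofReal (8 * rad X * 2 ^ P.1.1 / dist (ce P.1) x ^ (Q X + 1)) * ∫⁻ y in cu P.1, ‖f y - g y‖ₑ) :=
          setLIntegral_mono' mΩ'.compl q1
      _ = ∑' P : stp S, ∫⁻ x in Ω'ᶜ, ofReal A *
      (ofReal (8 * rad X * 2 ^ P.1.1 / dist (ce P.1) x ^ (Q X + 1)) * ∫⁻ y in cu P.1, ‖f y - g y‖ₑ) := by
          refine lintegral_tsum fun P => ?_
          fun_prop
      _ ≤ ∑' P : stp S, ofReal A * (ofReal (2 ^ (Q X + 1) * c0 X) * ∫⁻ y in cu P.1, ‖f y - g y‖ₑ) := by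
          refine tsum_le_tsum fun P => ?_
          rw [lintegral_const_mul _ (by fun_prop), lintegral_mul_const _ (by fun_prop)]
          gcongr
          refine (lintegral_mono_set ?_).trans (lint_annuli_one (ce P.1) (srad_pos P.1))
          exact compl_subset_compl.2 (subset_biUnion_of_mem (u := st) P.2)
      _ = ofReal A * (ofReal (2 ^ (Q X + 1) * c0 X) * ∫⁻ x in Ω, ‖f x - g x‖ₑ) := by
          rw [ENNReal.tsum_mul_left, ENNReal.tsum_mul_left, hΩd, lint_stp]
      _ ≤ ofReal A * (ofReal (2 ^ (Q X + 1) * c0 X) * (2 * ∫⁻ x, ‖f x‖ₑ)) := by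
          gcongr
          calc ∫⁻ x in Ω, ‖f x - g x‖ₑ ≤ ∫⁻ x, ‖f x - g x‖ₑ := setLIntegral_le_lintegral _ _
            _ ≤ ∫⁻ x, (‖f x‖ₑ + ‖g x‖ₑ) := lintegral_mono fun x => enorm_sub_le
            _ = (∫⁻ x, ‖f x‖ₑ) + ∫⁻ x, ‖g x‖ₑ := lintegral_add_left hf.enorm _
            _ ≤ _ := by rw [two_mul]; exact add_le_add le_rfl hg1
      _ = _ := by ring
  have p3' : t * volume {x | t / 2 ≤ Ω'ᶜ.indicator (fun x => ‖op K (fun x => f x - g x) x‖ₑ) x} ≤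
      2 * ((ofReal A * ofReal (2 ^ (Q X + 1) * c0 X) * 2) * ∫⁻ x, ‖f x‖ₑ) := by
    have := mul_meas_ge_le_lintegral (μ := volume) (f := Ω'ᶜ.indicator (fun x => ‖op K (fun x => f x - g x) x‖ₑ))
      ((meas_op hK.meas (hf.sub hg)).enorm.indicator mΩ'.compl) (t / 2)
    rw [lintegral_indicator mΩ'.compl] at this
    calc _ = 2 * (t / 2 * volume {x | t / 2 ≤ Ω'ᶜ.indicator (fun x => ‖op K (fun x => f x - g x) x‖ₑ) x}) := by
          rw [← mul_assoc, ENNReal.mul_div_cancel (by norm_num) (by norm_num)]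
      _ ≤ _ := mul_le_mul' le_rfl (this.trans p3)
  calc t * volume {x | t < ‖op K f x‖ₑ}
      ≤ t * (volume {x | t / 2 ≤ ‖op K g x‖ₑ} + volume Ω' +
        volume {x | t / 2 ≤ Ω'ᶜ.indicator (fun x => ‖op K (fun x => f x - g x) x‖ₑ) x}) := by
        gcongr
        refine (measure_mono hsub).trans ((measure_union_le _ _).trans ?_)
        gcongr
        exact measure_union_le _ _
    _ ≤ _ := by
        rw [mul_add, mul_add, add_mul, add_mul]
        refine add_le_add (add_le_add p1 p2) (p3'.trans (le_of_eq ?_))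
        ring

lemma weak_trk (h : CZK k A) : ∃ C : ℝ≥0∞, C ≠ ⊤ ∧ ∀ r, 0 < r → ∀ f : X → ℝ, Measurable f → Integrable f →
    ∀ t : ℝ≥0∞, t ≠ 0 → t ≠ ⊤ → t * volume {x | t < ‖op (trk k r) f x‖ₑ} ≤ C * ∫⁻ x, ‖f x‖ₑ := by
  obtain ⟨C, hC, H⟩ := weak_aux (X := X) (5 * 2 ^ Q X * A) (N := ofReal (C2 X * A)) ofReal_ne_top
  exact ⟨C, hC, fun r hr f hf hi t ht hT => H _ _ (h.toSK.trk hr) (h.toSK.trk_bd hr)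
    (fun f hf hi => ltwo_trk h hr hf hi) f hf hi t ht hT⟩

/-! ### The maximal truncation and almost everywhere convergence -/

/-- The kernel `k` truncated sharply at distance `ε`. -/
def shk (k : X → X → ℝ) (ε : ℝ) (x y : X) : ℝ := if ε < dist x y then k x y else 0

/-- The maximal sharp truncation. -/
def Ws (k : X → X → ℝ) (f : X → ℝ) (x : X) : ℝ≥0∞ := ⨆ (ε : ℝ) (_ : 0 < ε), ‖op (shk k ε) f x‖ₑ

lemma meas_shk (h : Measurable (uncurry k)) {ε : ℝ} : Measurable (uncurry (shk k ε)) := by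
  unfold shk
  exact Measurable.ite (measurableSet_lt measurable_const measurable_dist) h measurable_const

lemma SK.shk_bd (h : SK k A) {ε : ℝ} (hε : 0 < ε) (x y : X) : |shk k ε x y| ≤ A / ε ^ Q X := by
  have hA := h.nonneg
  unfold shk
  split_ifs with h1
  · exact h.size' hε h1.le
  · simp; positivity

lemma op_add (hm : Measurable (uncurry K)) {B : ℝ} (hb : ∀ x y, |K x y| ≤ B) (hi : Integrable f)
    (hg : Integrable g) (x : X) : op K (fun x => f x + g x) x = op K f x + op K g x := by
  simp only [op, mul_add]
  exact integral_add (int_bdd hm hb hi x) (int_bdd hm hb hg x)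

lemma op_sub (hm : Measurable (uncurry K)) {B : ℝ} (hb : ∀ x y, |K x y| ≤ B) (hi : Integrable f)
    (hg : Integrable g) (x : X) : op K (fun x => f x - g x) x = op K f x - op K g x := by
  simp only [op, mul_sub]
  exact integral_sub (int_bdd hm hb hi x) (int_bdd hm hb hg x)

/-- Away from the two points, the change of a regular kernel is controlled by the maximal function. -/
lemma sk_diff (hK : SK K A) {u : X → ℝ≥0∞} (hu : Measurable u) {x z : X} {s : ℝ} (hs : 0 < s) (hxz : 2 * dist x z ≤ s) :
    ∫⁻ y in (ball x s)ᶜ, ‖K x y - K z y‖ₑ * u y ≤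
      ofReal A * (ofReal (2 ^ (Q X + 1) * c0 X) * MF volume u x) := by
  have hA := hK.nonneg
  refine le_trans ?_ (mul_le_mul' le_rfl (lint_annuli hu x hs))
  rw [← lintegral_const_mul' _ _ ofReal_ne_top]
  refine setLIntegral_mono' measurableSet_ball.compl fun y hy => ?_
  have hy' : s ≤ dist x y := by simpa [dist_comm] using hy
  rw [← mul_assoc, ← ofReal_mul hA, Real.enorm_eq_ofReal_abs]
  gcongr
  have hd : 0 < dist x y := by linarith
  have := hK.sm1 x z y (by linarith)
  rw [← mul_div_assoc, le_div_iff₀ (by positivity)]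
  refine this.trans ?_
  gcongr
  have := dist_nonneg (x := x) (y := z)
  linarith

lemma lint_ball_le_MF {u : X → ℝ≥0∞} {x z : X} {s t B : ℝ} (hs : 0 < s) (hx : x ∈ ball z (t * s)) (ht : 0 < t) :
    ofReal (B / s ^ Q X) * ∫⁻ y in ball z (t * s), u y ≤
      ofReal (B * (c0 X * t ^ Q X)) * MF volume u x := by
  refine (mul_le_mul' le_rfl (lint_le_MF (doub_vol X) (by positivity) hx)).trans (le_of_eq ?_)
  rw [← mul_assoc, vol_ball z _ (by positivity : 0 < t * s)]
  have hc := c0_pos X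
  rw [← ofReal_mul' (by positivity)]
  congr 2
  rw [mul_pow]
  field_simp

lemma trk_shift (h : CZK k A) (hr : 0 < r) {R : ℝ} (hrR : r ≤ R) (hf : Measurable f) (hi : Integrable f)
    {x z : X} (hz : dist x z < R / 4) :
    ‖op (trk k R) f x‖ₑ ≤ ‖op (trk k r) f z‖ₑ + ‖op (trk k r) ((ball x (4 * R)).indicator f) z‖ₑ +
      (ofReal (A * (c0 X * 4 ^ Q X)) +
        ofReal (5 * 2 ^ Q X * A) * ofReal (2 ^ (Q X + 1) * c0 X)) * MF volume (fun y => ‖f y‖ₑ) x := by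
  have hR : 0 < R := hr.trans_le hrR
  have hA := h.nonneg
  set B := ball x (4 * R) with hB
  have hfB : Integrable (B.indicator f) := hi.indicator measurableSet_ball
  have e1 : op (trk k R) f x - op (trk k R) f z = ∫ y, (trk k R x y - trk k R z y) * f y := by
    simp only [op, sub_mul]
    exact (integral_sub (int_bdd (meas_trk h.meas) (h.toSK.trk_bd hR) hi x) (int_bdd (meas_trk h.meas) (h.toSK.trk_bd hR) hi z)).symm
  have b1 : ‖op (trk k R) f x - op (trk k R) f z‖ₑ ≤
      ofReal (5 * 2 ^ Q X * A) * (ofReal (2 ^ (Q X + 1) * c0 X) * MF volume (fun y => ‖f y‖ₑ) x) := by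
    rw [e1]
    refine (enorm_integral_le_lintegral_enorm _).trans (le_trans (le_of_eq ?_)
      (sk_diff (h.toSK.trk hR) hf.enorm (x := x) (z := z) (s := R / 2) (by positivity) (by linarith)))
    rw [← lintegral_indicator measurableSet_ball.compl]
    refine lintegral_congr fun y => ?_
    by_cases hy : y ∈ (ball x (R / 2))ᶜ
    · rw [indicator_of_mem hy, enorm_mul]
    · rw [indicator_of_notMem hy]
      have hy' : dist x y < R / 2 := by simpa [dist_comm] using hy
      have := dist_triangle z x y
      rw [dist_comm z x] at this
      rw [trk_zero hR (by linarith), trk_zero hR (by linarith)]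
      simp
  have e2 : op (trk k R) f z = op (trk k R) (B.indicator f) z + (op (trk k r) f z - op (trk k r) (B.indicator f) z) := by
    rw [← op_sub (meas_trk h.meas) (h.toSK.trk_bd hr) hi hfB, ← sub_eq_iff_eq_add',
      ← op_sub (meas_trk h.meas) (h.toSK.trk_bd hR) hi hfB]
    refine integral_congr_ae (ae_of_all _ fun y => ?_)
    by_cases hy : y ∈ B
    · simp [indicator_of_mem hy]
    · have hy' : 4 * R ≤ dist x y := by simpa [B, dist_comm] using hy
      have := dist_triangle x z y
      simp only
      rw [trk_eq hR (by linarith), trk_eq hr (by linarith)]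
  have b2 : ‖op (trk k R) (B.indicator f) z‖ₑ ≤ ofReal (A * (c0 X * 4 ^ Q X)) * MF volume (fun y => ‖f y‖ₑ) x := by
    refine le_trans ?_ (lint_ball_le_MF hR (mem_ball_self (x := x) (by positivity : 0 < 4 * R)) (by norm_num))
    refine (enorm_op_le _ _ _).trans ?_
    rw [← lintegral_indicator measurableSet_ball, ← lintegral_const_mul' _ _ ofReal_ne_top]
    refine lintegral_mono fun y => ?_
    by_cases hy : y ∈ B
    · rw [indicator_of_mem hy, indicator_of_mem hy, Real.enorm_eq_ofReal_abs]
      gcongr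
      exact h.toSK.trk_bd hR z y
    · simp [indicator_of_notMem hy]
  calc ‖op (trk k R) f x‖ₑ = ‖(op (trk k R) f x - op (trk k R) f z) + op (trk k R) f z‖ₑ := by congr 1; ring
    _ ≤ _ + (_ + (_ + _)) := by
      refine (enorm_add_le _ _).trans (add_le_add b1 ?_)
      rw [e2]
      exact (enorm_add_le _ _).trans (add_le_add b2 enorm_sub_le)
    _ = _ := by ring

/-- Weak type `(1,1)` of the supremum of the smooth truncations at scales `2 ^ J`, `J ≥ -m`. -/
lemma weak_dyadic (h : CZK k A) : ∃ C : ℝ≥0∞, C ≠ ⊤ ∧ ∀ (m : ℤ) (f : X → ℝ), Measurable f → Integrable f →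
    ∀ t : ℝ≥0∞, t ≠ 0 → t ≠ ⊤ → t * volume {x | ∃ J, m ≤ J ∧ t < ‖op (trk k (2 ^ J)) f x‖ₑ} ≤ C * ∫⁻ x, ‖f x‖ₑ := by
  obtain ⟨C1, hC1, H⟩ := weak_trk h
  set c1 : ℝ≥0∞ := (ofReal (A * (c0 X * 4 ^ Q X)) +
        ofReal (5 * 2 ^ Q X * A) * ofReal (2 ^ (Q X + 1) * c0 X)) with hc1
  have hc1t : c1 ≠ ⊤ := by finiteness
  set D : ℝ≥0∞ := ((6 ^ Q X : ℝ≥0) : ℝ≥0∞) with hD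
  -- `a` is the constant such that `M f ≤ t / a` makes the error terms harmless
  set a : ℝ≥0∞ := 3 * c1 + 6 * C1 * ofReal (16 ^ Q X) + 1 with ha
  have hat : a ≠ ⊤ := by finiteness
  have ha0 : a ≠ 0 := by simp [ha]
  refine ⟨a * D + 12 * D * C1, by finiteness, fun m f hf hi t ht ht' => ?_⟩
  have t3 : t / 3 ≠ 0 := ENNReal.div_ne_zero.2 ⟨ht, by norm_num⟩
  have t3' : t / 3 ≠ ⊤ := div_ne_top ht' (by norm_num)
  set r : ℝ := 2 ^ m
  have hr : 0 < r := by positivity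
  set u : X → ℝ≥0∞ := fun y => ‖f y‖ₑ
  set E := {z | t / 3 < ‖op (trk k r) f z‖ₑ} with hE
  have mE : MeasurableSet E := measurableSet_lt measurable_const (meas_op (meas_trk h.meas) hf).enorm
  have hsub : {x | ∃ J, m ≤ J ∧ t < ‖op (trk k (2 ^ J)) f x‖ₑ} ⊆
      {x | t / a < MF volume u x} ∪ {x | 1 / 4 < MF volume (E.indicator fun _ => 1) x} := by
    rintro x ⟨J, hJ, hx⟩
    by_contra hcon
    simp only [mem_union, mem_setOf_eq, not_or, not_lt] at hcon
    obtain ⟨h1, h2⟩ := hcon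
    set R : ℝ := 2 ^ J
    have hR : 0 < R := by positivity
    have hrR : r ≤ R := zpow_le_zpow_right₀ (by norm_num) hJ
    set B := ball x (4 * R)
    set S := {z | t / 3 < ‖op (trk k r) (B.indicator f) z‖ₑ}
    have hcov : ball x (R / 4) ⊆ (E ∩ ball x (R / 4)) ∪ S := by
      intro z hz
      by_contra hc
      simp only [mem_union, mem_inter_iff, hz, and_true, not_or] at hc
      have z1 : ‖op (trk k r) f z‖ₑ ≤ t / 3 := not_lt.1 hc.1
      have z2 : ‖op (trk k r) (B.indicator f) z‖ₑ ≤ t / 3 := not_lt.1 hc.2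
      have z3 : c1 * MF volume u x ≤ t / 3 := by
        rw [ENNReal.le_div_iff_mul_le (by norm_num) (by norm_num)]
        rw [ENNReal.le_div_iff_mul_le (Or.inl ha0) (Or.inl hat)] at h1
        refine le_trans ?_ h1
        calc c1 * MF volume u x * 3 = MF volume u x * (3 * c1) := by ring
          _ ≤ _ := mul_le_mul' le_rfl (by rw [ha, add_assoc]; exact le_self_add)
      have := trk_shift h hr hrR hf hi (x := x) (z := z) (by rw [dist_comm]; exact hz)
      have h3 := this.trans (add_le_add (add_le_add z1 z2) z3)
      rw [ENNReal.add_thirds] at h3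
      exact absurd hx (not_lt.2 h3)
    have v0 : volume (ball x (R / 4)) ≠ 0 := vol_pos x (by positivity)
    have v1 : volume (ball x (R / 4)) ≠ ⊤ := vol_fin x _
    have hS : volume S ≤ volume (ball x (R / 4)) / 2 := by
      have := H r hr (B.indicator f) (hf.indicator measurableSet_ball) (hi.indicator measurableSet_ball) _ t3 t3'
      have e : ∫⁻ y, ‖B.indicator f y‖ₑ = ∫⁻ y in B, u y := by
        rw [← lintegral_indicator measurableSet_ball]
        refine lintegral_congr fun y => ?_
        by_cases hy : y ∈ ball x (4 * R) <;> simp [B, hy, u, -mem_ball]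
      rw [e] at this
      have h4 : ∫⁻ y in B, u y ≤ ofReal (16 ^ Q X) * volume (ball x (R / 4)) * (t / a) := by
        refine (lint_le_MF (doub_vol X) (by positivity) (mem_ball_self (x := x) (by positivity : 0 < 4 * R))).trans ?_
        rw [← vol_mul x (by positivity) (by norm_num : (0:ℝ) < 16), show 16 * (R / 4) = 4 * R by ring]
        gcongr
      have h5 : (t / 3) * volume S ≤ (t / 3) * (volume (ball x (R / 4)) / 2) := by
        refine this.trans ((mul_le_mul' le_rfl h4).trans ?_)
        have : 6 * C1 * ofReal (16 ^ Q X) * a⁻¹ ≤ 1 := by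
          rw [← div_eq_mul_inv]
          exact ENNReal.div_le_of_le_mul (by rw [one_mul, ha]; exact le_add_right le_add_self)
        calc C1 * (ofReal (16 ^ Q X) * volume (ball x (R / 4)) * (t / a))
            = ((3⁻¹ * 2⁻¹ * 6) * C1 * ofReal (16 ^ Q X) * a⁻¹) * (t * volume (ball x (R / 4))) := by
              rw [show (3⁻¹ * 2⁻¹ * 6 : ℝ≥0∞) = 1 by
                rw [← ENNReal.mul_inv (by norm_num) (by norm_num), show (3 * 2 : ℝ≥0∞) = 6 by norm_num]
                exact ENNReal.inv_mul_cancel (by norm_num) (by norm_num), show t / a = t * a⁻¹ from div_eq_mul_inv _ _]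
              ring
          _ = (6 * C1 * ofReal (16 ^ Q X) * a⁻¹) * ((3⁻¹ * 2⁻¹) * (t * volume (ball x (R / 4)))) := by ring
          _ ≤ 1 * ((3⁻¹ * 2⁻¹) * (t * volume (ball x (R / 4)))) := mul_le_mul' this le_rfl
          _ = _ := by simp only [div_eq_mul_inv]; ring
      exact (ENNReal.mul_le_mul_iff_right t3 t3').1 h5
    have h6 : volume (ball x (R / 4)) ≤ volume (ball x (R / 4)) / 4 + volume (ball x (R / 4)) / 2 := by
      refine (measure_mono hcov).trans ((measure_union_le _ _).trans (add_le_add ?_ hS))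
      have := (lint_le_MF (doub_vol X) (by positivity) (mem_ball_self (x := x) (by positivity : 0 < R / 4))).trans
        (mul_le_mul' (le_refl (volume (ball x (R / 4)))) h2)
      rw [lintegral_indicator_const mE, one_mul, Measure.restrict_apply mE] at this
      refine this.trans (le_of_eq ?_)
      rw [div_eq_mul_inv, one_div]; rfl
    set v := volume (ball x (R / 4))
    have h7 : v / 4 + v / 2 < v := by
      have : v.toReal ≠ 0 := ENNReal.toReal_ne_zero.2 ⟨v0, v1⟩
      have hv := toReal_pos v0 v1
      rw [← toReal_lt_toReal (by finiteness) v1, toReal_add (by finiteness) (by finiteness),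
        toReal_div, toReal_div]
      norm_num
      linarith
    exact absurd h6 (not_le.2 h7)
  have p1 : t * volume {x | t / a < MF volume u x} ≤ a * D * ∫⁻ x, u x := by
    have := MF_weak (doub_vol X) (f := u) (t := t / a)
    calc t * volume {x | t / a < MF volume u x} = a * (t / a * volume {x | t / a < MF volume u x}) := by
          rw [← mul_assoc, ENNReal.mul_div_cancel ha0 hat]
      _ ≤ a * (D * ∫⁻ x, u x) := mul_le_mul' le_rfl this
      _ = _ := by ring
  have p2 : t * volume {x | 1 / 4 < MF volume (E.indicator fun _ => 1) x} ≤ 12 * D * C1 * ∫⁻ x, u x := by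
    have h1 := MF_weak (doub_vol X) (f := E.indicator fun _ => (1:ℝ≥0∞)) (t := 1 / 4)
    rw [lintegral_indicator_const mE, one_mul] at h1
    have h2 := H r hr f hf hi _ t3 t3'
    calc t * volume {x | 1 / 4 < MF volume (E.indicator fun _ => 1) x}
        = t * (4 * (1 / 4 * volume {x | 1 / 4 < MF volume (E.indicator fun _ => 1) x})) := by
          rw [← mul_assoc 4, ENNReal.mul_div_cancel (by norm_num) (by norm_num), one_mul]
      _ ≤ t * (4 * (D * volume E)) := mul_le_mul' le_rfl (mul_le_mul' le_rfl h1)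
      _ = 3 * (t / 3) * (4 * (D * volume E)) := by rw [ENNReal.mul_div_cancel (by norm_num) (by norm_num)]
      _ = 12 * D * (t / 3 * volume E) := by ring
      _ ≤ 12 * D * (C1 * ∫⁻ x, u x) := mul_le_mul' le_rfl h2
      _ = _ := by ring
  calc _ ≤ t * (volume {x | t / a < MF volume u x} + volume {x | 1 / 4 < MF volume (E.indicator fun _ => 1) x}) :=
        mul_le_mul' le_rfl ((measure_mono hsub).trans (measure_union_le _ _))
    _ ≤ _ := by rw [mul_add, add_mul]; exact add_le_add p1 p2

lemma shk_le (h : CZK k A) (hi : Integrable f) {ε : ℝ} (hε : 0 < ε) (x : X) :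
    ∃ J : ℤ, ‖op (shk k ε) f x‖ₑ ≤ ‖op (trk k (2 ^ J)) f x‖ₑ +
      ofReal (A * (c0 X * 4 ^ Q X)) * MF volume (fun y => ‖f y‖ₑ) x := by
  obtain ⟨J, hJ1, hJ2⟩ := exists_mem_Ico_zpow hε (y := (2:ℝ)) (by norm_num)
  refine ⟨J, ?_⟩
  have hR : (0:ℝ) < 2 ^ J := by positivity
  have hA := h.nonneg
  have e : op (shk k ε) f x - op (trk k (2 ^ J)) f x = op (fun x y => shk k ε x y - trk k (2 ^ J) x y) f x := by
    simp only [op, sub_mul]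
    exact (integral_sub (int_bdd (meas_shk h.meas) (h.toSK.shk_bd hε) hi x)
      (int_bdd (meas_trk h.meas) (h.toSK.trk_bd hR) hi x)).symm
  have b : ‖op (shk k ε) f x - op (trk k (2 ^ J)) f x‖ₑ ≤
      ofReal (A * (c0 X * 4 ^ Q X)) * MF volume (fun y => ‖f y‖ₑ) x := by
    rw [e]
    refine le_trans ?_ (lint_ball_le_MF hR (mem_ball_self (x := x) (by positivity : 0 < 4 * (2:ℝ) ^ J)) (by norm_num))
    refine (enorm_op_le _ _ _).trans ?_
    rw [← lintegral_indicator measurableSet_ball, ← lintegral_const_mul' _ _ ofReal_ne_top]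
    refine lintegral_mono fun y => ?_
    rw [zpow_add_one₀ two_ne_zero] at hJ2
    by_cases hy : y ∈ ball x (4 * 2 ^ J)
    · rw [indicator_of_mem hy, Real.enorm_eq_ofReal_abs]
      gcongr
      rcases le_or_gt (dist x y) (2 ^ J) with h1 | h1
      · rw [trk_zero hR h1, shk, if_neg (by linarith)]; simp; positivity
      · refine le_trans ?_ (h.toSK.size' hR h1.le)
        have h0 := eta_nonneg (dist x y / 2 ^ J)
        have h2 := eta_le (dist x y / 2 ^ J)
        unfold shk trk
        split_ifs
        · rw [show k x y - k x y * eta (dist x y / 2 ^ J) = k x y * (1 - eta (dist x y / 2 ^ J)) by ring, abs_mul]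
          exact mul_le_of_le_one_right (abs_nonneg _) (by rw [abs_le]; constructor <;> linarith)
        · rw [zero_sub, abs_neg, abs_mul]
          exact mul_le_of_le_one_right (abs_nonneg _) (by rw [abs_le]; constructor <;> linarith)
    · rw [indicator_of_notMem hy]
      have hy' : 4 * 2 ^ J ≤ dist x y := by simpa [dist_comm] using hy
      rw [trk_eq hR (by linarith), shk, if_pos (by linarith)]
      simp
  calc _ = ‖op (trk k (2 ^ J)) f x + (op (shk k ε) f x - op (trk k (2 ^ J)) f x)‖ₑ := by congr 1; ring
    _ ≤ _ := (enorm_add_le _ _).trans (add_le_add le_rfl b)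

/-- Weak type `(1,1)` of the maximal sharp truncation. -/
lemma weak_Ws (h : CZK k A) : ∃ C : ℝ≥0∞, C ≠ ⊤ ∧ ∀ (f : X → ℝ), Measurable f → Integrable f →
    ∀ t : ℝ≥0∞, t ≠ 0 → t ≠ ⊤ → t * volume {x | t < Ws k f x} ≤ C * ∫⁻ x, ‖f x‖ₑ := by
  obtain ⟨C, hC, H⟩ := weak_dyadic h
  set c1 := ofReal (A * (c0 X * 4 ^ Q X)) + 1 with hc1
  have hc10 : c1 ≠ 0 := by simp [hc1]
  have hc1t : c1 ≠ ⊤ := by finiteness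
  refine ⟨2 * C + 2 * c1 * (6 ^ Q X : ℝ≥0), by finiteness, fun f hf hi t ht ht' => ?_⟩
  have t2 : t / 2 ≠ 0 := ENNReal.div_ne_zero.2 ⟨ht, by norm_num⟩
  have t2' : t / 2 ≠ ⊤ := div_ne_top ht' (by norm_num)
  have hsub : {x | t < Ws k f x} ⊆ (⋃ m : ℕ, {x | ∃ J, -(m:ℤ) ≤ J ∧ t / 2 < ‖op (trk k (2 ^ J)) f x‖ₑ}) ∪
      {x | t / 2 / c1 < MF volume (fun y => ‖f y‖ₑ) x} := by
    intro x hx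
    simp only [mem_setOf_eq, Ws, lt_iSup_iff] at hx
    obtain ⟨ε, hε, hx⟩ := hx
    obtain ⟨J, hJ⟩ := shk_le h hi hε x
    by_contra hcon
    simp only [mem_union, mem_setOf_eq, not_or, not_lt, mem_iUnion, not_exists, not_and] at hcon
    have h1 := hcon.1 J.natAbs J (by omega)
    have h2 : ofReal (A * (c0 X * 4 ^ Q X)) * MF volume (fun y => ‖f y‖ₑ) x ≤ t / 2 := by
      have := hcon.2
      rw [ENNReal.le_div_iff_mul_le (Or.inl hc10) (Or.inl hc1t), mul_comm] at this
      exact (mul_le_mul' le_self_add le_rfl).trans this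
    have := hJ.trans (add_le_add h1 h2)
    rw [ENNReal.add_halves] at this
    exact absurd hx (not_lt.2 this)
  have p1 : t * volume (⋃ m : ℕ, {x | ∃ J, -(m:ℤ) ≤ J ∧ t / 2 < ‖op (trk k (2 ^ J)) f x‖ₑ}) ≤
      2 * C * ∫⁻ x, ‖f x‖ₑ := by
    rw [Monotone.measure_iUnion (fun a b hab x => by rintro ⟨J, h1, h2⟩; exact ⟨J, by omega, h2⟩), ENNReal.mul_iSup]
    refine iSup_le fun m => ?_
    have := H (-(m:ℤ)) f hf hi _ t2 t2'
    calc _ = 2 * (t / 2 * volume {x | ∃ J, -(m:ℤ) ≤ J ∧ t / 2 < ‖op (trk k (2 ^ J)) f x‖ₑ}) := by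
          rw [← mul_assoc, ENNReal.mul_div_cancel (by norm_num) (by norm_num)]
      _ ≤ 2 * (C * ∫⁻ x, ‖f x‖ₑ) := mul_le_mul' le_rfl this
      _ = _ := by ring
  have p2 : t * volume {x | t / 2 / c1 < MF volume (fun y => ‖f y‖ₑ) x} ≤
      2 * c1 * (6 ^ Q X : ℝ≥0) * ∫⁻ x, ‖f x‖ₑ := by
    have := MF_weak (doub_vol X) (f := fun y => ‖f y‖ₑ) (t := t / 2 / c1)
    calc _ = 2 * c1 * (t / 2 / c1 * volume {x | t / 2 / c1 < MF volume (fun y => ‖f y‖ₑ) x}) := by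
          rw [← mul_assoc, mul_assoc 2, ENNReal.mul_div_cancel hc10 hc1t, ENNReal.mul_div_cancel (by norm_num) (by norm_num)]
      _ ≤ 2 * c1 * ((6 ^ Q X : ℝ≥0) * ∫⁻ x, ‖f x‖ₑ) := mul_le_mul' le_rfl this
      _ = _ := by ring
  calc _ ≤ t * (_ + _) := mul_le_mul' le_rfl ((measure_mono hsub).trans (measure_union_le _ _))
    _ ≤ _ := by rw [mul_add, add_mul]; exact add_le_add p1 p2

/-- The sharp truncations of `k` applied to `f` converge almost everywhere. -/
def PV (k : X → X → ℝ) (f : X → ℝ) : Prop :=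
  ∀ᵐ x, ∃ L : ℝ, Tendsto (fun ε => op (shk k ε) f x) (𝓝[>] 0) (𝓝 L)

lemma PV_congr (h : f =ᵐ[volume] g) (hf : PV k f) : PV k g := by
  filter_upwards [hf] with x hx
  simpa only [op_congr h] using hx

lemma PV_add (h : CZK k A) (hi : Integrable f) (hg : Integrable g) (hf : PV k f) (hf' : PV k g) :
    PV k fun x => f x + g x := by
  filter_upwards [hf, hf'] with x hx hx'
  obtain ⟨L, hL⟩ := hx
  obtain ⟨L', hL'⟩ := hx'
  refine ⟨L + L', (hL.add hL').congr' ?_⟩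
  filter_upwards [self_mem_nhdsWithin] with ε hε
  exact (op_add (meas_shk h.meas) (h.toSK.shk_bd hε) hi hg x).symm

lemma PV_smul (c : ℝ) (hf : PV k f) : PV k fun x => c * f x := by
  filter_upwards [hf] with x hx
  obtain ⟨L, hL⟩ := hx
  refine ⟨c * L, (hL.const_mul c).congr fun ε => ?_⟩
  simp only [op]
  rw [← integral_const_mul]
  congr 1; ext y; ring

/-- Almost everywhere convergence passes to limits in `L¹`. -/
lemma PV_of_approx (h : CZK k A) (hf : Measurable f) (hi : Integrable f)
    (ha : ∀ δ : ℝ≥0∞, δ ≠ 0 → ∃ g, Measurable g ∧ Integrable g ∧ PV k g ∧ ∫⁻ x, ‖f x - g x‖ₑ ≤ δ) : PV k f := by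
  obtain ⟨C, hC, H⟩ := weak_Ws h
  have key : ∀ n : ℕ, ∀ᵐ x, ∃ δ > 0, ∀ ε ∈ Ioo 0 δ, ∀ ε' ∈ Ioo 0 δ,
      |op (shk k ε) f x - op (shk k ε') f x| ≤ 1 / (n + 1 : ℝ) := by
    intro n
    set s : ℝ := 1 / (n + 1 : ℝ) with hs
    have hs0 : 0 < s := by positivity
    set t := ofReal (s / 4) with htd
    have ht : t ≠ 0 := by simp [htd, hs0]
    have ht' : t ≠ ⊤ := ofReal_ne_top
    rw [ae_iff]
    set E := {x | ¬ ∃ δ > 0, ∀ ε ∈ Ioo 0 δ, ∀ ε' ∈ Ioo 0 δ, |op (shk k ε) f x - op (shk k ε') f x| ≤ s} with hE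
    by_contra hE0
    have hEt : t * volume E ≠ 0 := mul_ne_zero ht hE0
    obtain ⟨δ, hδ, hδ'⟩ : ∃ δ : ℝ≥0∞, δ ≠ 0 ∧ C * δ < t * volume E := by
      refine ⟨min 1 (t * volume E) / (2 * (C + 1)), ?_, ?_⟩
      · refine ENNReal.div_ne_zero.2 ⟨?_, by finiteness⟩
        simp [hEt, min_eq_iff, ht, hE0]
      · set m := min 1 (t * volume E)
        have hm0 : m ≠ 0 := by
          intro h0
          rcases min_eq_iff.1 h0 with h1 | h1
          · exact one_ne_zero h1.1
          · exact hEt h1.1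
        have hmt : m ≠ ⊤ := ne_top_of_le_ne_top one_ne_top (min_le_left _ _)
        calc C * (m / (2 * (C + 1))) = (C * m) / (2 * (C + 1)) := (mul_div_assoc _ _ _).symm
          _ ≤ m / 2 := by
            refine ENNReal.div_le_of_le_mul ?_
            rw [← mul_assoc, ENNReal.div_mul_cancel (by norm_num) (by norm_num), mul_comm]
            gcongr; exact le_self_add
          _ < m := ENNReal.half_lt_self hm0 hmt
          _ ≤ _ := min_le_right _ _
    obtain ⟨g, hg, hgi, hPV, hd⟩ := ha δ hδ
    have h1 : volume E ≤ volume {x | t < Ws k (fun x => f x - g x) x} := by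
      refine measure_mono_ae ?_
      filter_upwards [hPV] with x hx hxE
      obtain ⟨L, hL⟩ := hx
      by_contra hcon
      have hW : ∀ ε > 0, |op (shk k ε) (fun x => f x - g x) x| ≤ s / 4 := by
        intro ε hε
        have h2 : ‖op (shk k ε) (fun x => f x - g x) x‖ₑ ≤ t :=
          (le_iSup₂ (f := fun ε (_ : 0 < ε) => ‖op (shk k ε) (fun x => f x - g x) x‖ₑ) ε hε).trans (not_lt.1 hcon)
        rw [Real.enorm_eq_ofReal_abs] at h2
        exact (ofReal_le_ofReal_iff (by positivity)).1 h2
      refine hxE ?_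
      have := (Metric.tendsto_nhdsWithin_nhds.1 hL) (s / 4) (by positivity)
      obtain ⟨δ, hδ, hh⟩ := this
      refine ⟨δ, hδ, fun ε hε ε' hε' => ?_⟩
      have a1 := hh hε.1 (by rw [Real.dist_eq, sub_zero, abs_of_pos hε.1]; exact hε.2)
      have a2 := hh hε'.1 (by rw [Real.dist_eq, sub_zero, abs_of_pos hε'.1]; exact hε'.2)
      have a3 := hW ε hε.1
      have a4 := hW ε' hε'.1
      rw [op_sub (meas_shk h.meas) (h.toSK.shk_bd hε.1) hi hgi] at a3
      rw [op_sub (meas_shk h.meas) (h.toSK.shk_bd hε'.1) hi hgi] at a4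
      rw [Real.dist_eq] at a1 a2
      rw [abs_lt] at a1 a2
      rw [abs_le] at a3 a4 ⊢
      constructor <;> linarith [a1.1, a1.2, a2.1, a2.2, a3.1, a3.2, a4.1, a4.2]
    have h2 := H _ (hf.sub hg) (hi.sub hgi) t ht ht'
    have := (mul_le_mul' (le_refl t) h1).trans (h2.trans (mul_le_mul' le_rfl hd))
    exact absurd this (not_le.2 hδ')
  filter_upwards [ae_all_iff.2 key] with x hx
  refine cauchy_map_iff_exists_tendsto.1 ?_
  rw [Metric.cauchy_iff]
  refine ⟨inferInstance, fun e he => ?_⟩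
  obtain ⟨n, hn⟩ := exists_nat_one_div_lt he
  obtain ⟨δ, hδ, hh⟩ := hx n
  refine ⟨_, image_mem_map (Ioo_mem_nhdsGT hδ), ?_⟩
  rintro _ ⟨ε, hε, rfl⟩ _ ⟨ε', hε', rfl⟩
  exact (hh ε hε ε' hε').trans_lt hn

/-- For the indicator of an open set with null boundary, cancellation gives convergence. -/
lemma PV_open (h : CZK k A) {U : Set X} (hU : MeasurableSet U) (hfr : volume (frontier U) = 0) (hfin : volume U ≠ ⊤) :
    PV k (U.indicator fun _ => 1) := by
  have hi : Integrable (U.indicator fun _ => (1:ℝ)) := (integrable_indicator_iff hU).2 (integrableOn_const hfin)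
  have : ∀ᵐ x, x ∉ frontier U := measure_eq_zero_iff_ae_notMem.1 hfr
  filter_upwards [this] with x hx
  obtain ⟨c, δ, hδ, hc⟩ : ∃ c : ℝ, ∃ δ > 0, ∀ y ∈ ball x δ, U.indicator (fun _ => (1:ℝ)) y = c := by
    by_cases h1 : x ∈ interior U
    · obtain ⟨δ, hδ, hs⟩ := Metric.isOpen_iff.1 isOpen_interior x h1
      exact ⟨1, δ, hδ, fun y hy => indicator_of_mem (interior_subset (hs hy)) _⟩
    · have h2 : x ∈ (closure U)ᶜ := fun h3 => hx ⟨h3, h1⟩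
      obtain ⟨δ, hδ, hs⟩ := Metric.isOpen_iff.1 isClosed_closure.isOpen_compl x h2
      exact ⟨0, δ, hδ, fun y hy => indicator_of_notMem (fun h4 => hs hy (subset_closure h4)) _⟩
  refine ⟨op (shk k (δ / 2)) (U.indicator fun _ => 1) x, tendsto_const_nhds.congr' ?_⟩
  filter_upwards [Ioo_mem_nhdsGT (half_pos hδ)] with ε hε
  rw [eq_comm, ← sub_eq_zero]
  simp only [op]
  rw [← integral_sub (int_bdd (meas_shk h.meas) (h.toSK.shk_bd hε.1) hi x)
    (int_bdd (meas_shk h.meas) (h.toSK.shk_bd (half_pos hδ)) hi x)]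
  have e : ∀ y, shk k ε x y * U.indicator (fun _ => 1) y - shk k (δ / 2) x y * U.indicator (fun _ => 1) y =
      {y | ε < dist x y ∧ dist x y ≤ δ / 2}.indicator (fun y => c * k x y) y := by
    intro y
    unfold shk
    by_cases h1 : ε < dist x y
    · by_cases h2 : dist x y ≤ δ / 2
      · rw [if_pos h1, if_neg (not_lt.2 h2), indicator_of_mem (show y ∈ {y | ε < dist x y ∧ dist x y ≤ δ / 2} from ⟨h1, h2⟩),
          hc y (by rw [mem_ball, dist_comm]; linarith)]
        ring
      · rw [if_pos h1, if_pos (not_le.1 h2), indicator_of_notMem (show y ∉ {y | ε < dist x y ∧ dist x y ≤ δ / 2} from fun h3 => h2 h3.2), sub_self]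
    · rw [if_neg h1, if_neg (by linarith [hε.2]), indicator_of_notMem (show y ∉ {y | ε < dist x y ∧ dist x y ≤ δ / 2} from fun h3 => h1 h3.1), sub_self]
  have ms : MeasurableSet {y | ε < dist x y ∧ dist x y ≤ δ / 2} := by
    rw [setOf_and]
    exact (measurableSet_lt (by fun_prop) (by fun_prop)).inter (measurableSet_le (by fun_prop) (by fun_prop))
  simp only [e]
  rw [integral_indicator ms, integral_const_mul, h.can1 x ε (δ / 2) hε.1 hε.2.le, mul_zero]

/-- Indicators of sets of finite measure are `L¹` limits of indicators of finite unions of balls. -/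
lemma PV_set (h : CZK k A) {E : Set X} (hE : MeasurableSet E) (hfin : volume E ≠ ⊤) :
    PV k (E.indicator fun _ => 1) := by
  refine PV_of_approx h (measurable_const.indicator hE)
    ((integrable_indicator_iff hE).2 (integrableOn_const hfin)) fun δ hδ => ?_
  obtain ⟨U, hEU, hU, hUf, hUE⟩ := hE.exists_isOpen_diff_lt hfin (ENNReal.half_pos hδ).ne'
  have hr : ∀ x, ∃ s, ball x s ⊆ U ∧ (x ∈ U → 0 < s) := fun x => by
    by_cases hx : x ∈ U
    · obtain ⟨s, h0, h1⟩ := Metric.isOpen_iff.1 hU x hx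
      exact ⟨s, h1, fun _ => h0⟩
    · exact ⟨0, by simp, fun h => absurd h hx⟩
  choose s hs hs0 using hr
  obtain ⟨t, -, ht, hUt⟩ := TopologicalSpace.countable_cover_nhdsWithin (s := U) (f := fun x => ball x (s x))
    fun x hx => mem_nhdsWithin_of_mem_nhds (ball_mem_nhds x (hs0 x hx))
  obtain ⟨a, ha⟩ := countable_iff_exists_subset_range.1 ht
  let V : ℕ → Set X := fun n => ⋃ i ∈ Finset.range n, ball (a i) (s (a i))
  have mV : ∀ n, MeasurableSet (V n) := fun n => Finset.measurableSet_biUnion _ fun i _ => measurableSet_ball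
  have hVU : ∀ n, V n ⊆ U := fun n => iUnion₂_subset fun i _ => hs _
  have hVf : ∀ n, volume (V n) ≠ ⊤ := fun n => ne_top_of_le_ne_top hUf.ne (measure_mono (hVU n))
  have hfr : ∀ n, volume (frontier (V n)) = 0 := by
    intro n
    induction n with
    | zero => simp [V]
    | succ n ih =>
      simp only [V, Finset.range_add_one, Finset.set_biUnion_insert]
      exact measure_mono_null (frontier_union_subset _ _) (measure_union_null
        (measure_mono_null (inter_subset_left.trans frontier_ball_subset_sphere) (vol_sphere _ _))
        (measure_mono_null inter_subset_right ih))
  have hlim : Tendsto (fun n => volume (U \ V n)) atTop (𝓝 0) := by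
    have := tendsto_measure_iInter_atTop (μ := (volume : Measure X)) (s := fun n => U \ V n)
      (fun n => (hU.measurableSet.diff (mV n)).nullMeasurableSet)
      (fun n m hnm => diff_subset_diff_right (biUnion_subset_biUnion_left (by simpa using hnm)))
      ⟨0, ne_top_of_le_ne_top hUf.ne (measure_mono diff_subset)⟩
    rwa [← diff_iUnion, diff_eq_empty.2, measure_empty] at this
    refine hUt.trans (iUnion₂_subset fun x hx => ?_)
    obtain ⟨i, rfl⟩ := ha hx
    exact subset_iUnion_of_subset (i + 1) (subset_biUnion_of_mem (u := fun i => ball (a i) (s (a i))) (by simp))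
  obtain ⟨n, hn⟩ := (hlim.eventually (gt_mem_nhds (ENNReal.half_pos hδ))).exists
  refine ⟨_, measurable_const.indicator (mV n), (integrable_indicator_iff (mV n)).2 (integrableOn_const (hVf n)),
    PV_open h (mV n) (hfr n) (hVf n), ?_⟩
  calc _ ≤ ∫⁻ x, ((U \ E).indicator 1 x + (U \ V n).indicator 1 x) := lintegral_mono fun x => by
        have := @hEU x
        have := @hVU n x
        by_cases h1 : x ∈ E <;> by_cases h2 : x ∈ V n <;> by_cases h3 : x ∈ U <;> simp_all [indicator]
    _ ≤ δ / 2 + δ / 2 := by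
        rw [lintegral_add_left (measurable_one.indicator (hU.measurableSet.diff hE)),
          lintegral_indicator_one (hU.measurableSet.diff hE), lintegral_indicator_one (hU.measurableSet.diff (mV n))]
        exact add_le_add hUE.le hn.le
    _ = δ := ENNReal.add_halves δ

/-- Almost everywhere convergence of the sharp truncations on `L¹`. -/
lemma PV_int (h : CZK k A) (hi : Integrable f) : PV k f := by
  refine Integrable.induction (P := fun f => PV k f) ?_ ?_ ?_ ?_ hi
  · intro c s hs hsf
    refine PV_congr (ae_of_all _ fun x => ?_) (PV_smul c (PV_set h hs hsf.ne))
    by_cases hx : x ∈ s <;> simp [hx]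
  · exact fun f g _ hf hg h1 h2 => PV_add h hf hg h1 h2
  · refine isClosed_of_closure_subset fun f hf =>
      PV_of_approx h (Lp.stronglyMeasurable f).measurable (L1.integrable_coeFn f) fun δ hδ => ?_
    obtain ⟨g, hg, hd⟩ := EMetric.mem_closure_iff.1 hf δ (pos_iff_ne_zero.2 hδ)
    refine ⟨g, (Lp.stronglyMeasurable g).measurable, L1.integrable_coeFn g, hg, ?_⟩
    rw [edist_comm, L1.edist_def] at hd
    refine le_trans (le_of_eq ?_) hd.le
    refine lintegral_congr fun x => ?_
    rw [edist_comm, edist_eq_enorm_sub]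
  · exact fun f g hfg _ hf => PV_congr hfg hf

end weak

/-! ### Fair measures and the John–Nirenberg inequality -/

section fair
variable [Dya X]
variable {ν : Measure X} {b : X → ℝ}

/-- Measures for which a subset carrying a fixed proportion of the volume of a ball carries a fixed
proportion of the mass of that ball; this is the only consequence of the `A_p` condition used in the
John–Nirenberg inequality and in the selection of disjoint major subsets. -/
structure Fair (ν : Measure X) : Prop where
  pos : ∀ x r, 0 < r → ν (ball x r) ≠ 0
  fin : ∀ x r, ν (ball x r) ≠ ⊤
  ac : ν ≪ volume
  fair : ∀ θ : ℝ≥0∞, θ ≠ 0 → ∃ D : ℝ≥0, ∀ (x : X) (r : ℝ) (E : Set X), 0 < r → MeasurableSet E →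
    E ⊆ ball x r → θ * volume (ball x r) ≤ volume E → ν (ball x r) ≤ D * ν E

lemma Fair.doub (h : Fair ν) : ∃ D, Doub ν D := by
  obtain ⟨D, hD⟩ := h.fair (ofReal (6 ^ Q X))⁻¹ (by simp)
  refine ⟨D, h.pos, h.fin, fun x r hr => ?_⟩
  refine hD x (6 * r) (ball x r) (by positivity) measurableSet_ball (ball_subset_ball (by linarith)) ?_
  rw [vol_mul x hr (by norm_num), ← mul_assoc, ENNReal.inv_mul_cancel (by simp) (by simp), one_mul]

lemma Fair.scale (h : Fair ν) {t : ℝ} (ht : 1 ≤ t) : ∃ D : ℝ≥0, ∀ x r, 0 < r → ν (ball x (t * r)) ≤ D * ν (ball x r) := by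
  have ht0 : 0 < t := by linarith
  obtain ⟨D, hD⟩ := h.fair (ofReal (t ^ Q X))⁻¹ (by simp)
  refine ⟨D, fun x r hr => ?_⟩
  refine hD x (t * r) (ball x r) (by positivity) measurableSet_ball (ball_subset_ball (by nlinarith)) ?_
  rw [vol_mul x hr ht0, ← mul_assoc, ENNReal.inv_mul_cancel _ (by simp), one_mul]
  simp only [ne_eq, ofReal_eq_zero, not_le]; positivity

/-- Reverse doubling. -/
lemma Fair.reverse (h : Fair ν) : ∃ θ : ℝ≥0, 0 < θ ∧ θ < 1 ∧ ∀ x r, 0 < r → ν (ball x r) ≤ θ * ν (ball x (2 * r)) := by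
  obtain ⟨D, hD⟩ := h.fair (1 / 2) (by simp)
  refine ⟨1 - (D + 2)⁻¹, ?_, ?_, fun x r hr => ?_⟩
  · rw [tsub_pos_iff_lt]
    exact inv_lt_one_of_one_lt₀ (by linarith [D.2, show (1:ℝ≥0) < 2 by norm_num, (zero_le : (0:ℝ≥0) ≤ D)])
  · exact tsub_lt_self one_pos (by positivity)
  have hsub : ball x r ⊆ ball x (2 * r) := ball_subset_ball (by linarith)
  have h2 := hD x (2 * r) (ball x (2 * r) \ ball x r) (by positivity) (measurableSet_ball.diff measurableSet_ball) diff_subset (by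
    rw [measure_diff hsub measurableSet_ball.nullMeasurableSet (vol_fin x r), vol_mul x hr (by norm_num)]
    have h1 : (2:ℝ) ≤ 2 ^ Q X := by
      calc (2:ℝ) = 2 ^ 1 := by norm_num
        _ ≤ 2 ^ Q X := pow_le_pow_right₀ (by norm_num) Qpos
    have h3 : (2:ℝ≥0∞) ≤ ofReal (2 ^ Q X) := by
      rw [show (2:ℝ≥0∞) = ofReal 2 by norm_num]
      exact ofReal_le_ofReal h1
    refine le_sub_of_add_le_right (vol_fin x r) ?_
    set V := volume (ball x r)
    set T := ofReal (2 ^ Q X)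
    calc 1 / 2 * (T * V) + V = (1 / 2 * T + 1 / 2 * 2) * V := by
          rw [add_mul, ENNReal.div_mul_cancel (by norm_num) (by norm_num), one_mul, mul_assoc]
      _ ≤ (1 / 2 * T + 1 / 2 * T) * V := mul_le_mul' (add_le_add le_rfl (mul_le_mul' le_rfl h3)) le_rfl
      _ = T * V := by rw [← add_mul, ENNReal.add_halves, one_mul])
  rw [measure_diff hsub measurableSet_ball.nullMeasurableSet (h.fin x r)] at h2
  have ha := h.fin x r
  have hb := h.fin x (2 * r)
  have hab : ν (ball x r) ≤ ν (ball x (2 * r)) := measure_mono hsub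
  generalize ν (ball x r) = a at *
  generalize ν (ball x (2 * r)) = c at *
  lift a to ℝ≥0 using ha
  lift c to ℝ≥0 using hb
  norm_cast at h2 hab ⊢
  have hinv : (D + 2)⁻¹ ≤ 1 := inv_le_one_of_one_le₀ (by
    linarith [show (1:ℝ≥0) ≤ 2 by norm_num, (zero_le : (0:ℝ≥0) ≤ D)])
  rw [← NNReal.coe_le_coe] at h2 hab ⊢
  push_cast [hinv, hab] at h2 ⊢
  rw [NNReal.coe_sub (by exact_mod_cast hab)] at h2
  have hp : (0:ℝ) < D + 2 := by positivity
  have : (1 - ((D:ℝ) + 2)⁻¹) * c = c - c / (D + 2) := by field_simp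
  rw [this, le_sub_comm, div_le_iff₀ hp]
  have := mul_comm (D:ℝ) c
  nlinarith [D.2, a.2, c.2]

lemma Fair.cube (h : Fair ν) : ∃ D : ℝ≥0, 1 ≤ D ∧ ∀ (q : ℤ × ι X) (E : Set X), MeasurableSet E → E ⊆ cu q →
    volume (cu q) ≤ 2 * volume E → ν (st q) ≤ D * ν E := by
  have hk := kst_pos (X := X)
  obtain ⟨D, hD⟩ := h.fair (2 * ofReal (kst X))⁻¹ (by simp; finiteness)
  refine ⟨D + 1, by simp, fun q E hE hs hv => ?_⟩
  refine (hD (ce q) _ E (srad_pos q) hE (hs.trans (cu_sub_st q)) ?_).trans (mul_le_mul' (by simp) le_rfl)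
  have h1 : volume (st q) ≤ 2 * ofReal (kst X) * volume E :=
    (vol_st_le q).trans ((mul_le_mul' le_rfl hv).trans (le_of_eq (by ring)))
  change _ * volume (st q) ≤ _
  rw [mul_comm, ← div_eq_mul_inv]
  exact ENNReal.div_le_of_le_mul' h1

/-- The average of `b` over a ball. -/
def av (b : X → ℝ) (x : X) (r : ℝ) : ℝ := (volume.real (ball x r))⁻¹ * ∫ y in ball x r, b y

/-- Functions of mean oscillation at most one. -/
structure BM (b : X → ℝ) : Prop where
  meas : Measurable b
  li : LI b
  osc : ∀ x r, 0 < r → ∫⁻ y in ball x r, ‖b y - av b x r‖ₑ ≤ volume (ball x r)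

lemma av_sub (hb : LI b) (x : X) {r : ℝ} (hr : 0 < r) (c : ℝ) :
    ‖av b x r - c‖ₑ * volume (ball x r) ≤ ∫⁻ y in ball x r, ‖b y - c‖ₑ := by
  have hv : volume.real (ball x r) ≠ 0 := ENNReal.toReal_ne_zero.2 ⟨vol_pos x hr, vol_fin x r⟩
  have e : volume.real (ball x r) * (av b x r - c) = ∫ y in ball x r, (b y - c) := by
    rw [integral_sub (hb x r) (integrableOn_const (vol_fin x r)), setIntegral_const, av, smul_eq_mul]
    field_simp
  have h1 := enorm_integral_le_lintegral_enorm (μ := volume.restrict (ball x r)) fun y => b y - c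
  rw [← e, enorm_mul] at h1
  refine le_trans (le_of_eq ?_) h1
  rw [mul_comm, Real.enorm_of_nonneg measureReal_nonneg, Measure.real, ofReal_toReal (vol_fin x r)]

/-- The average over the ball attached to a cube. -/
def bq (b : X → ℝ) (q : ℤ × ι X) : ℝ := av b (ce q) (8 * rad X * 2 ^ q.1)

lemma BM.osc_st (hb : BM b) (q : ℤ × ι X) : ∫⁻ y in st q, ‖b y - bq b q‖ₑ ≤ volume (st q) :=
  hb.osc _ _ (srad_pos q)

lemma BM.bq_sub (hb : BM b) (q : ℤ × ι X) (c : ℝ) :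
    ‖bq b q - c‖ₑ * volume (st q) ≤ ∫⁻ y in st q, ‖b y - c‖ₑ := av_sub hb.li _ (srad_pos q) c

/-- One step of the Calderón–Zygmund selection for `b` on a cube. -/
lemma BM.step (X : Type) [MetricSpace X] [MeasureSpace X] [BorelSpace X] [SecondCountableTopology X]
    [Ahl X] [Dya X] [Nonempty X] : ∃ Λ : ℝ≥0, 0 < Λ ∧ ∀ b : X → ℝ, BM b → ∀ q : ℤ × ι X,
    ∃ S : ℤ × ι X → Prop, (∀ P ∈ stp S, cu P ⊆ cu q) ∧
      2 * volume (⋃ P ∈ stp S, cu P) ≤ volume (cu q) ∧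
      (∀ P ∈ stp S, ‖bq b P - bq b q‖ₑ ≤ Λ) ∧
      ∀ᵐ x, x ∈ cu q → x ∉ (⋃ P ∈ stp S, cu P) → ‖b x - bq b q‖ₑ ≤ Λ := by
  have hk := kst_pos (X := X)
  set D : ℝ≥0 := 6 ^ Q X with hD
  set Λ : ℝ≥0 := 2 * D * (kst X).toNNReal + 1 with hΛ
  have hΛ1 : 1 ≤ Λ := by simp [hΛ]
  have hΛ2 : Λ ≤ 2 ^ Q X * Λ := le_mul_of_one_le_left' (one_le_pow₀ (by norm_num))
  refine ⟨2 ^ Q X * Λ, by positivity, fun b hb q => ?_⟩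
  let u : X → ℝ≥0∞ := (st q).indicator fun y => ‖b y - bq b q‖ₑ
  let S : ℤ × ι X → Prop := fun P => P.1 < q.1 ∧ cu P ⊆ cu q ∧ Λ * volume (st P) < ∫⁻ y in st P, ‖b y - bq b q‖ₑ
  have hS : ∀ P, q.1 ≤ P.1 → ¬ S P := fun P hP h => absurd h.1 (not_lt.2 hP)
  have hsub : ∀ P ∈ stp S, cu P ⊆ cu q := fun P hP => hP.1.2.1
  -- the parent of a selected cube is not selected
  have hpar : ∀ (k : ℤ) (x : X), x ∈ cu q → k ≤ q.1 → ¬ S (at' k x) → ∫⁻ y in st (at' k x), ‖b y - bq b q‖ₑ ≤ Λ * volume (st (at' k x)) := by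
    intro k x hx hk hn
    rcases hk.lt_or_eq with h1 | h1
    · by_contra h2
      exact hn ⟨h1, cu_sub (P := at' k x) h1.le (mem_cu_at k x) hx, not_le.1 h2⟩
    · rw [h1, mem_cu.1 hx]
      refine (hb.osc_st q).trans ?_
      calc volume (st q) = 1 * volume (st q) := (one_mul _).symm
        _ ≤ _ := mul_le_mul' (by exact_mod_cast hΛ1) le_rfl
  refine ⟨S, hsub, ?_, ?_, ?_⟩
  · have h1 : (⋃ P ∈ stp S, cu P) ⊆ {x | (Λ : ℝ≥0∞) < MF volume u x} := by
      intro x hx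
      simp only [mem_iUnion] at hx
      obtain ⟨P, hP, hxP⟩ := hx
      have hst : st P ⊆ st q := st_sub hP.1.1 hxP (hsub P hP hxP)
      have h2 := lint_le_MF (f := u) (doub_vol X) (srad_pos P) (cu_sub_st P hxP)
      have h3 : ∫⁻ y in st P, u y = ∫⁻ y in st P, ‖b y - bq b q‖ₑ :=
        setLIntegral_congr_fun (meas_st P) fun y hy => indicator_of_mem (hst hy) _
      have h4 := hP.1.2.2.trans_le (h3.ge.trans h2)
      change _ < volume (st P) * _ at h4
      rw [mul_comm] at h4
      exact lt_of_mul_lt_mul_left' h4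
    have h2 := MF_weak (f := u) (doub_vol X) (t := Λ)
    have h3 : ∫⁻ x, u x ≤ ofReal (kst X) * volume (cu q) := by
      rw [lintegral_indicator (meas_st q)]
      exact (hb.osc_st q).trans (vol_st_le q)
    have h4 : (Λ : ℝ≥0∞) * (2 * volume (⋃ P ∈ stp S, cu P)) ≤ Λ * volume (cu q) := by
      calc (Λ : ℝ≥0∞) * (2 * volume (⋃ P ∈ stp S, cu P)) = 2 * (Λ * volume (⋃ P ∈ stp S, cu P)) := by ring
        _ ≤ 2 * (D * (ofReal (kst X) * volume (cu q))) := by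
            refine mul_le_mul' le_rfl (le_trans (mul_le_mul' le_rfl (measure_mono h1)) (h2.trans ?_))
            exact mul_le_mul' (by rw [hD]) h3
        _ = (2 * D * ofReal (kst X)) * volume (cu q) := by ring
        _ ≤ Λ * volume (cu q) := by
            refine mul_le_mul' ?_ le_rfl
            rw [hΛ]; push_cast; exact le_self_add
    exact (ENNReal.mul_le_mul_iff_right (by simp only [ne_eq, ENNReal.coe_eq_zero]; positivity) (by simp)).1 h4
  · intro P hP
    obtain ⟨x, hx⟩ := cu_nonempty P
    have h1 := hpar (P.1 + 1) x (hsub P hP hx) (by have := hP.1.1; omega) (hP.2 x hx _ (by omega))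
    have h2 : st P ⊆ st (at' (P.1 + 1) x) := st_sub (by simp [at']) hx (mem_cu_at _ x)
    have h3 := (hb.bq_sub P (bq b q)).trans ((lintegral_mono_set h2).trans h1)
    rw [vol_parent, ← mul_assoc] at h3
    refine ((ENNReal.mul_le_mul_iff_left (vol_st_pos P) (vol_st_fin P)).1 h3).trans (le_of_eq ?_)
    rw [mul_comm]; push_cast
    rw [ofReal_pow (by norm_num)]; norm_num
  · have hli : LI fun y => b y - bq b q := fun x r => (hb.li x r).sub (integrableOn_const (vol_fin x r))
    filter_upwards [leb_diff hli] with x hx hxq hxn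
    refine (hx Λ q.1 fun k hk => hpar k x hxq hk fun h => hxn ?_).trans (by exact_mod_cast hΛ2)
    rw [stop_cover hS]
    exact ⟨k, h⟩

variable [Nonempty X]

/-- Exponential decay of the level sets of the oscillation, with respect to a fair measure. -/
lemma jn_level (h : Fair ν) : ∃ Λ θ : ℝ≥0, 0 < Λ ∧ θ < 1 ∧ ∀ b : X → ℝ, BM b → ∀ (t : ℕ) (q : ℤ × ι X),
    ν {x ∈ cu q | t * (Λ : ℝ≥0∞) < ‖b x - bq b q‖ₑ} ≤ θ ^ t * ν (cu q) := by
  obtain ⟨Λ, hΛ, H⟩ := BM.step X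
  obtain ⟨D, hD1, hD⟩ := h.cube
  refine ⟨Λ, 1 - D⁻¹, hΛ, tsub_lt_self one_pos (by positivity), fun b hb t => ?_⟩
  induction t with
  | zero => intro q; simpa using measure_mono (sep_subset _ _)
  | succ t ih =>
    intro q
    obtain ⟨S, h1, h2, h3, h4⟩ := H b hb q
    set Ω := ⋃ P ∈ stp S, cu P with hΩ
    have hΩq : Ω ⊆ cu q := iUnion₂_subset h1
    have mΩ : MeasurableSet Ω := meas_stp S
    have hfq : ν (cu q) ≠ ⊤ := ne_top_of_le_ne_top (h.fin _ _) (measure_mono (cu_sub_st q))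
    have hΩν : ν Ω ≤ (1 - D⁻¹ : ℝ≥0) * ν (cu q) := by
      have h5 := hD q (cu q \ Ω) ((meas_cu q).diff mΩ) diff_subset (by
        rw [measure_diff hΩq mΩ.nullMeasurableSet (ne_top_of_le_ne_top (vol_cu_fin q) (measure_mono hΩq)), ENNReal.mul_sub (by simp)]
        refine le_sub_of_add_le_right ?_ ?_
        · exact mul_ne_top (by simp) (ne_top_of_le_ne_top (vol_cu_fin q) (measure_mono hΩq))
        · calc volume (cu q) + 2 * volume Ω ≤ volume (cu q) + volume (cu q) := add_le_add le_rfl h2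
            _ = _ := (two_mul _).symm)
      have h6 := (measure_mono (μ := ν) (cu_sub_st q)).trans h5
      have hΩf : ν Ω ≠ ⊤ := ne_top_of_le_ne_top hfq (measure_mono hΩq)
      rw [measure_diff hΩq mΩ.nullMeasurableSet hΩf] at h6
      have hle : ν Ω ≤ ν (cu q) := measure_mono hΩq
      generalize ν Ω = a at *
      generalize ν (cu q) = c at *
      lift a to ℝ≥0 using hΩf
      lift c to ℝ≥0 using hfq
      norm_cast at h6 hle ⊢
      have hinv : D⁻¹ ≤ 1 := inv_le_one_of_one_le₀ hD1
      rw [← NNReal.coe_le_coe] at h6 ⊢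
      push_cast [hinv, hle] at h6 ⊢
      have hp : (0:ℝ) < D := by positivity
      have : (1 - (D:ℝ)⁻¹) * c = c - c / D := by field_simp
      rw [this, le_sub_comm, div_le_iff₀ hp]
      linarith
    have hcov : {x ∈ cu q | ((t + 1 : ℕ) : ℝ≥0∞) * (Λ : ℝ≥0∞) < ‖b x - bq b q‖ₑ} ≤ᵐ[ν]
        ⋃ P ∈ stp S, {x ∈ cu P | t * (Λ : ℝ≥0∞) < ‖b x - bq b P‖ₑ} := by
      filter_upwards [h.ac.ae_le h4] with x hx hxq
      obtain ⟨hxq, hxl⟩ := hxq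
      push_cast at hxl
      have hxΩ : x ∈ Ω := by
        by_contra hn
        refine absurd ((hx hxq hn).trans_lt' hxl) (not_lt.2 ?_)
        rw [add_mul, one_mul]; exact le_add_self
      rw [hΩ] at hxΩ
      simp only [mem_iUnion] at hxΩ
      obtain ⟨P, hP, hxP⟩ := hxΩ
      refine mem_biUnion hP ⟨hxP, ?_⟩
      by_contra hn
      refine absurd hxl (not_lt.2 ?_)
      calc ‖b x - bq b q‖ₑ = ‖(b x - bq b P) + (bq b P - bq b q)‖ₑ := by congr 1; ring
        _ ≤ ‖b x - bq b P‖ₑ + ‖bq b P - bq b q‖ₑ := enorm_add_le _ _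
        _ ≤ t * Λ + Λ := add_le_add (not_lt.1 hn) (h3 P hP)
        _ = _ := by ring
    calc ν {x ∈ cu q | ((t + 1 : ℕ) : ℝ≥0∞) * (Λ : ℝ≥0∞) < ‖b x - bq b q‖ₑ}
        ≤ ν (⋃ P ∈ stp S, {x ∈ cu P | t * (Λ : ℝ≥0∞) < ‖b x - bq b P‖ₑ}) := measure_mono_ae hcov
      _ ≤ ∑' P : stp S, ν {x ∈ cu P.1 | t * (Λ : ℝ≥0∞) < ‖b x - bq b P.1‖ₑ} := measure_biUnion_le _ (to_countable _) _
      _ ≤ ∑' P : stp S, ((1 - D⁻¹ : ℝ≥0) : ℝ≥0∞) ^ t * ν (cu P.1) := tsum_le_tsum fun P => ih P.1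
      _ = ((1 - D⁻¹ : ℝ≥0) : ℝ≥0∞) ^ t * ν Ω := by rw [ENNReal.tsum_mul_left, hΩ, meas_stp_eq]
      _ ≤ ((1 - D⁻¹ : ℝ≥0) : ℝ≥0∞) ^ t * ((1 - D⁻¹ : ℝ≥0) * ν (cu q)) := mul_le_mul' le_rfl hΩν
      _ = _ := by rw [pow_succ, mul_assoc]

/-- The John–Nirenberg inequality on cubes. -/
lemma jn_cube (h : Fair ν) (s : ℝ) (hs : 0 < s) : ∃ C : ℝ≥0∞, C ≠ ⊤ ∧ ∀ b : X → ℝ, BM b → ∀ q : ℤ × ι X,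
    ∫⁻ x in cu q, ‖b x - bq b q‖ₑ ^ s ∂ν ≤ C * ν (cu q) := by
  obtain ⟨Λ, θ, hΛ, hθ, H⟩ := jn_level h
  obtain ⟨N, hN⟩ := exists_nat_ge s
  set a : ℕ → ℝ≥0 := fun t => (Λ * (t + 1)) ^ s * θ ^ t with ha
  have hsum : Summable a := by
    set η : ℝ≥0 := max θ (1 / 2) with hη
    have hη1 : η < 1 := max_lt hθ (by norm_num)
    have hη0 : 0 < η := lt_max_of_lt_right (by norm_num)
    have h1 : Summable fun t : ℕ => ((t + 1 : ℕ) : ℝ) ^ N * (η:ℝ) ^ (t + 1) := by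
      have := summable_pow_mul_geometric_of_norm_lt_one (R := ℝ) N (r := η) (by simpa using hη1)
      exact (summable_nat_add_iff (f := fun t : ℕ => (t : ℝ) ^ N * (η:ℝ) ^ t) 1).2 this
    have h2 : Summable fun t : ℕ => ((t + 1 : ℕ) : ℝ≥0) ^ N * η ^ (t + 1) := by
      rw [← summable_coe]; simpa using h1
    refine summable_of_le (fun t => ?_) (h2.mul_left (Λ ^ s * η⁻¹))
    calc a t = Λ ^ s * (((t + 1 : ℕ) : ℝ≥0) ^ s * θ ^ t) := by
          rw [ha]; push_cast; rw [mul_rpow, mul_assoc]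
      _ ≤ Λ ^ s * (((t + 1 : ℕ) : ℝ≥0) ^ N * η ^ t) := by
          refine mul_le_mul' le_rfl (mul_le_mul' ?_ (pow_le_pow_left' (le_max_left _ _) t))
          rw [← NNReal.rpow_natCast]
          exact NNReal.rpow_le_rpow_of_exponent_le (by simp) hN
      _ = Λ ^ s * η⁻¹ * (((t + 1 : ℕ) : ℝ≥0) ^ N * η ^ (t + 1)) := by
          rw [pow_succ]; field_simp
  refine ⟨∑' t, (a t : ℝ≥0∞), ENNReal.tsum_coe_ne_top_iff_summable.2 hsum, fun b hb q => ?_⟩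
  set u : X → ℝ≥0∞ := fun x => ‖b x - bq b q‖ₑ with hu
  have mu : Measurable u := (hb.meas.sub measurable_const).enorm
  let E : ℕ → Set X := fun t => {x ∈ cu q | t * (Λ : ℝ≥0∞) < u x}
  have mE : ∀ t, MeasurableSet (E t) := fun t => (meas_cu q).inter (measurableSet_lt measurable_const mu)
  have hpt : ∀ x ∈ cu q, u x ^ s ≤ ∑' t : ℕ, (E t).indicator (fun _ => ((Λ * (t + 1) : ℝ≥0) : ℝ≥0∞) ^ s) x := by
    intro x hx
    by_cases h0 : u x = 0
    · rw [h0, zero_rpow_of_pos hs]; exact zero_le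
    have hL : (Λ : ℝ≥0∞) ≠ 0 := by simpa using hΛ.ne'
    have hex : ∃ t : ℕ, u x ≤ ((t + 1 : ℕ) : ℝ≥0∞) * Λ := by
      obtain ⟨t, ht⟩ := exists_nat_mul_gt hL (show u x ≠ ⊤ by simp [hu])
      exact ⟨t, ht.le.trans (mul_le_mul' (by exact_mod_cast Nat.le_succ t) le_rfl)⟩
    classical
    let t := Nat.find hex
    have ht : u x ≤ ((t + 1 : ℕ) : ℝ≥0∞) * Λ := Nat.find_spec hex
    have hxt : x ∈ E t := by
      refine ⟨hx, ?_⟩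
      rcases Nat.eq_zero_or_pos t with h1 | h1
      · rw [h1]; simpa using pos_iff_ne_zero.2 h0
      · have := Nat.find_min hex (m := t - 1) (by omega)
        rw [Nat.sub_add_cancel h1] at this
        exact not_le.1 this
    refine le_trans ?_ (le_tsum t)
    rw [indicator_of_mem hxt]
    refine ENNReal.rpow_le_rpow (ht.trans (le_of_eq ?_)) hs.le
    push_cast; ring
  calc ∫⁻ x in cu q, u x ^ s ∂ν ≤ ∫⁻ x in cu q, ∑' t : ℕ, (E t).indicator (fun _ => ((Λ * (t + 1) : ℝ≥0) : ℝ≥0∞) ^ s) x ∂ν :=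
        setLIntegral_mono' (meas_cu q) hpt
    _ = ∑' t : ℕ, ∫⁻ x in cu q, (E t).indicator (fun _ => ((Λ * (t + 1) : ℝ≥0) : ℝ≥0∞) ^ s) x ∂ν :=
        lintegral_tsum fun t => (measurable_const.indicator (mE t)).aemeasurable
    _ ≤ ∑' t : ℕ, (a t : ℝ≥0∞) * ν (cu q) := by
        refine tsum_le_tsum fun t => ?_
        rw [lintegral_indicator_const (mE t)]
        calc ((Λ * (t + 1) : ℝ≥0) : ℝ≥0∞) ^ s * (ν.restrict (cu q)) (E t)
            ≤ ((Λ * (t + 1) : ℝ≥0) : ℝ≥0∞) ^ s * (θ ^ t * ν (cu q)) :=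
              mul_le_mul' le_rfl ((Measure.restrict_apply_le _ _).trans (H b hb t q))
          _ = _ := by
              rw [ha, ← mul_assoc, ← coe_rpow_of_nonneg _ hs.le]; push_cast; rfl
    _ = _ := by rw [ENNReal.tsum_mul_right]

lemma lint_level (k : ℤ) (I : Set (ι X)) (ν : Measure X) (f : X → ℝ≥0∞) :
    ∫⁻ x in ⋃ i ∈ I, cu (k, i), f x ∂ν = ∑' i : I, ∫⁻ x in cu (k, i.1), f x ∂ν := by
  refine lintegral_biUnion (to_countable I) (fun i _ => meas_cu (k, i)) (fun i _ j _ hij => ?_) f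
  exact disjoint_left.2 fun x hx hx' => hij (by
    have h1 := mem_cu.1 hx; have h2 := mem_cu.1 hx'
    simpa using congrArg Prod.snd (h1.symm.trans h2))

lemma meas_level (k : ℤ) (I : Set (ι X)) (ν : Measure X) :
    ν (⋃ i ∈ I, cu (k, i)) = ∑' i : I, ν (cu (k, i.1)) := by
  simpa using lint_level k I ν fun _ => 1

/-- The John–Nirenberg inequality on balls. -/
lemma jn_ball (h : Fair ν) (s : ℝ) (hs : 1 ≤ s) : ∃ C : ℝ≥0∞, C ≠ ⊤ ∧ ∀ b : X → ℝ, BM b → ∀ (x : X) (r : ℝ), 0 < r →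
    ∫⁻ y in ball x r, ‖b y - av b x r‖ₑ ^ s ∂ν ≤ C * ν (ball x r) := by
  have hs0 : 0 < s := by linarith
  obtain ⟨C, hC, H⟩ := jn_cube h s hs0
  have hR : 1 ≤ rad X := one_le_rad
  set T : ℝ := 1 + 20 * rad X with hT
  have hT1 : 1 ≤ T := by linarith
  have hT0 : 0 < T := by linarith
  obtain ⟨D, hD⟩ := h.scale hT1
  -- the oscillation between the ball and the cubes of comparable size that meet it
  set L : ℝ≥0∞ := ofReal (T ^ Q X) with hL
  set M : ℝ≥0∞ := 2 ^ (s - 1) * (C + (L + L) ^ s) with hM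
  have hMt : M ≠ ⊤ := by
    refine mul_ne_top ?_ (ENNReal.add_ne_top.2 ⟨hC, ?_⟩)
    · exact rpow_ne_top_of_nonneg (by linarith) (by simp)
    · exact rpow_ne_top_of_nonneg hs0.le (by finiteness)
  refine ⟨M * D, by finiteness, fun b hb x r hr => ?_⟩
  obtain ⟨k, hk1, hk2⟩ := exists_mem_Ico_zpow (y := (2:ℝ)) hr (by norm_num)
  have hkr : (2:ℝ) ^ (k + 1) = 2 * 2 ^ k := by rw [zpow_add₀ (by norm_num)]; ring
  rw [hkr] at hk2
  set c := av b x (T * r) with hc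
  have hTr := mul_pos hT0 hr
  have hosc := hb.osc x (T * r) hTr
  rw [vol_mul x hr hT0] at hosc
  have hB : ‖av b x r - c‖ₑ ≤ L := by
    have h1 := (av_sub hb.li x hr c).trans ((lintegral_mono_set (ball_subset_ball (by nlinarith))).trans hosc)
    exact (ENNReal.mul_le_mul_iff_left (vol_pos x hr) (vol_fin x r)).1 h1
  set I : Set (ι X) := {i | (cu (k, i) ∩ ball x r).Nonempty} with hI
  have hcov : ball x r ⊆ ⋃ i ∈ I, cu (k, i) := fun y hy =>
    mem_biUnion (show code k y ∈ I from ⟨y, mem_cu_at k y, hy⟩) (mem_cu_at k y)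
  have hdist : ∀ i ∈ I, dist (ce (k, i)) x < rad X * 2 ^ k + r := by
    rintro i ⟨y, hy, hyx⟩
    have h1 := dist_ce hy
    rw [dist_comm] at h1
    exact (dist_triangle _ y _).trans_lt (add_lt_add h1 hyx)
  have hstT : ∀ i ∈ I, st (k, i) ⊆ ball x (T * r) := by
    intro i hi
    refine ball_subset_ball' ?_
    have h1 := hdist i hi
    simp only
    nlinarith
  have hcuT : (⋃ i ∈ I, cu (k, i)) ⊆ ball x (T * r) := iUnion₂_subset fun i hi => (cu_sub_st _).trans (hstT i hi)
  have hq : ∀ i ∈ I, ‖bq b (k, i) - av b x r‖ₑ ≤ L + L := by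
    intro i hi
    have h1 := (hb.bq_sub (k, i) c).trans ((lintegral_mono_set (hstT i hi)).trans hosc)
    have h2 : volume (ball x r) ≤ volume (st (k, i)) := by
      rw [Ahl.vol_ball x r hr, vol_st]
      refine ofReal_le_ofReal (mul_le_mul_of_nonneg_left (pow_le_pow_left₀ hr.le ?_ _) (c0_pos X).le)
      simp only
      nlinarith [zpow_pos (show (0:ℝ) < 2 by norm_num) k]
    have h3 := (ENNReal.mul_le_mul_iff_left (vol_st_pos _) (vol_st_fin _)).1 (h1.trans (mul_le_mul' le_rfl h2))
    calc ‖bq b (k, i) - av b x r‖ₑ = ‖(bq b (k, i) - c) - (av b x r - c)‖ₑ := by congr 1; ring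
      _ ≤ _ := enorm_sub_le.trans (add_le_add h3 hB)
  calc ∫⁻ y in ball x r, ‖b y - av b x r‖ₑ ^ s ∂ν
      ≤ ∫⁻ y in ⋃ i ∈ I, cu (k, i), ‖b y - av b x r‖ₑ ^ s ∂ν := lintegral_mono_set hcov
    _ = ∑' i : I, ∫⁻ y in cu (k, i.1), ‖b y - av b x r‖ₑ ^ s ∂ν := lint_level k I ν _
    _ ≤ ∑' i : I, M * ν (cu (k, i.1)) := by
        refine tsum_le_tsum fun i => ?_
        have hm : Measurable fun y => ‖b y - bq b (k, i.1)‖ₑ ^ s := (hb.meas.sub measurable_const).enorm.pow_const s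
        calc ∫⁻ y in cu (k, i.1), ‖b y - av b x r‖ₑ ^ s ∂ν
            ≤ ∫⁻ y in cu (k, i.1), 2 ^ (s - 1) * (‖b y - bq b (k, i.1)‖ₑ ^ s + (L + L) ^ s) ∂ν := by
              refine lintegral_mono fun y => ?_
              refine le_trans (ENNReal.rpow_le_rpow ?_ hs0.le) (ENNReal.rpow_add_le_mul_rpow_add_rpow _ _ hs)
              calc ‖b y - av b x r‖ₑ = ‖(b y - bq b (k, i.1)) + (bq b (k, i.1) - av b x r)‖ₑ := by congr 1; ring
                _ ≤ _ := (enorm_add_le _ _).trans (add_le_add le_rfl (hq i.1 i.2))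
          _ = 2 ^ (s - 1) * ((∫⁻ y in cu (k, i.1), ‖b y - bq b (k, i.1)‖ₑ ^ s ∂ν) + (L + L) ^ s * ν (cu (k, i.1))) := by
              rw [lintegral_const_mul _ (hm.add_const _), lintegral_add_left hm, lintegral_const, Measure.restrict_apply_univ]
          _ ≤ 2 ^ (s - 1) * (C * ν (cu (k, i.1)) + (L + L) ^ s * ν (cu (k, i.1))) :=
              mul_le_mul' le_rfl (add_le_add (H b hb _) le_rfl)
          _ = _ := by rw [hM]; ring
    _ = M * ν (⋃ i ∈ I, cu (k, i)) := by rw [ENNReal.tsum_mul_left, meas_level]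
    _ ≤ M * (D * ν (ball x r)) := mul_le_mul' le_rfl ((measure_mono hcuT).trans (hD x r hr))
    _ = _ := by ring

end fair

/-! ### Sparse selection for the truncated commutators -/

section sparse
variable [Dya X] [Nonempty X]
variable {k K : X → X → ℝ} {A : ℝ} {f u b : X → ℝ}

/-- The part of a truncated singular integral far from a cube is almost constant on the cube, up to
the maximal function. -/
lemma far_le (h : SK k A) {ε : ℝ} (hε : 0 < ε) {P : ℤ × ι X} (hP : ε < 2 ^ (P.1 + 1)) (hu : Measurable u) (hi : Integrable u)
    {x y : X} (hx : x ∈ cu P) (hy : y ∈ cu P) :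
    ‖op (shk k ε) ((st P)ᶜ.indicator u) y‖ₑ ≤ Ws k u x +
      (ofReal A * ofReal (2 ^ (Q X + 1) * c0 X) + ofReal (A * (c0 X * (9 / 7) ^ Q X))) *
        MF volume (fun z => ‖u z‖ₑ) x := by
  have hR : 1 ≤ rad X := one_le_rad
  have h2 : (0:ℝ) < 2 ^ P.1 := by positivity
  have hk2 : (2:ℝ) ^ (P.1 + 1) = 2 * 2 ^ P.1 := by rw [zpow_add₀ (by norm_num)]; ring
  set ρ : ℝ := rad X * 2 ^ P.1 with hρ
  have hρ0 : 0 < ρ := by positivity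
  have hερ : ε < 2 * ρ := by rw [hk2] at hP; nlinarith
  have hst : st P = ball (ce P) (8 * ρ) := by rw [hρ, ← mul_assoc]; rfl
  have hxc := dist_ce hx
  have hyc := dist_ce hy
  rw [← hρ] at hxc hyc
  have hxy : dist x y < 2 * ρ := by
    have := dist_triangle_right x y (ce P); linarith
  have hout : ∀ z ∉ st P, ∀ x, dist x (ce P) < ρ → 7 * ρ < dist x z := by
    intro z hz x hx
    rw [hst, mem_ball, not_lt] at hz
    have := dist_triangle z x (ce P)
    rw [dist_comm z x] at this; linarith
  have hin : ∀ z ∈ st P, dist x z < 9 * ρ := by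
    intro z hz
    rw [hst, mem_ball] at hz
    have := dist_triangle_right x z (ce P); linarith
  have i1 := int_bdd (meas_shk h.meas) (h.shk_bd hε) (hi.indicator (meas_st P).compl) y
  have i2 := int_bdd (meas_shk h.meas) (h.shk_bd (by positivity : 0 < 8 * ρ)) hi x
  have hsz : ∀ z, 7 * ρ < dist x z → ‖k x z‖ₑ ≤ ofReal (A / (7 * ρ) ^ Q X) := fun z hz => by
    rw [← ofReal_norm, Real.norm_eq_abs]
    exact ofReal_le_ofReal (h.size' (by positivity) hz.le)
  have hpt : ∀ z, ‖shk k ε y z * (st P)ᶜ.indicator u z - shk k (8 * ρ) x z * u z‖ₑ ≤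
      (ball x (7 * ρ))ᶜ.indicator (fun z => ‖k x z - k y z‖ₑ * ‖u z‖ₑ) z +
        ofReal (A / (7 * ρ) ^ Q X) * (ball x (9 / 7 * (7 * ρ))).indicator (fun z => ‖u z‖ₑ) z := by
    intro z
    have e9 : 9 / 7 * (7 * ρ) = 9 * ρ := by ring
    rw [e9]
    by_cases hz : z ∈ st P
    · rw [indicator_of_notMem (show z ∉ (st P)ᶜ from fun h => h hz), mul_zero, zero_sub, enorm_neg, enorm_mul,
        indicator_of_mem (show z ∈ ball x (9 * ρ) by rw [mem_ball, dist_comm]; exact hin z hz)]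
      refine le_trans (mul_le_mul' ?_ le_rfl) le_add_self
      unfold shk
      split_ifs with h1
      · exact hsz z (by linarith)
      · simp
    · rw [indicator_of_mem (show z ∈ (st P)ᶜ from hz), ← sub_mul, enorm_mul]
      have hxz := hout z hz x hxc
      have hyz := hout z hz y hyc
      rw [indicator_of_mem (show z ∈ (ball x (7 * ρ))ᶜ by rw [mem_compl_iff, mem_ball, dist_comm, not_lt]; exact hxz.le)]
      have e1 : shk k ε y z = k y z := if_pos (by linarith)
      rw [e1]
      by_cases h1 : 8 * ρ < dist x z
      · have e2 : shk k (8 * ρ) x z = k x z := if_pos h1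
        rw [e2, ← enorm_neg, neg_sub]
        exact le_self_add
      · have e2 : shk k (8 * ρ) x z = 0 := if_neg h1
        rw [e2, sub_zero, indicator_of_mem (show z ∈ ball x (9 * ρ) by rw [mem_ball, dist_comm]; linarith), ← add_mul]
        refine mul_le_mul' ?_ le_rfl
        calc ‖k y z‖ₑ = ‖k x z - (k x z - k y z)‖ₑ := by congr 1; ring
          _ ≤ ‖k x z‖ₑ + ‖k x z - k y z‖ₑ := enorm_sub_le
          _ ≤ _ := by rw [add_comm]; exact add_le_add le_rfl (hsz z hxz)
  have hd : op (shk k ε) ((st P)ᶜ.indicator u) y - op (shk k (8 * ρ)) u x =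
      ∫ z, (shk k ε y z * (st P)ᶜ.indicator u z - shk k (8 * ρ) x z * u z) := (integral_sub i1 i2).symm
  have hdb : ‖op (shk k ε) ((st P)ᶜ.indicator u) y - op (shk k (8 * ρ)) u x‖ₑ ≤
      (ofReal A * ofReal (2 ^ (Q X + 1) * c0 X) + ofReal (A * (c0 X * (9 / 7) ^ Q X))) *
        MF volume (fun z => ‖u z‖ₑ) x := by
    rw [hd]
    refine (enorm_integral_le_lintegral_enorm _).trans ((lintegral_mono hpt).trans ?_)
    have mu : Measurable fun z => ‖u z‖ₑ := hu.enorm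
    rw [lintegral_add_right _ ((mu.indicator measurableSet_ball).const_mul _), lintegral_indicator measurableSet_ball.compl,
      lintegral_const_mul _ (mu.indicator measurableSet_ball), lintegral_indicator measurableSet_ball, add_mul, mul_assoc]
    exact add_le_add (sk_diff h mu (by positivity) (by linarith))
      (lint_ball_le_MF (by positivity) (mem_ball_self (by positivity)) (by norm_num))
  calc ‖op (shk k ε) ((st P)ᶜ.indicator u) y‖ₑ
      = ‖op (shk k (8 * ρ)) u x + (op (shk k ε) ((st P)ᶜ.indicator u) y - op (shk k (8 * ρ)) u x)‖ₑ := by congr 1; ring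
    _ ≤ _ := (enorm_add_le _ _).trans (add_le_add
        (le_iSup₂_of_le (f := fun (ε : ℝ) (_ : 0 < ε) => ‖op (shk k ε) u x‖ₑ) (8 * ρ) (by positivity) le_rfl) hdb)

/-- A cube on whose ball the average of `|u|`, or the far part of the truncated integral of `u`,
exceeds the height `l`. -/
def Bad (k : X → X → ℝ) (ε : ℝ) (u : X → ℝ) (l : ℝ≥0∞) (P : ℤ × ι X) : Prop :=
  l * volume (st P) < ∫⁻ y in st P, ‖u y‖ₑ ∨ ∃ y ∈ cu P, l < ‖op (shk k ε) ((st P)ᶜ.indicator u) y‖ₑ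

lemma bad_vol (h : CZK k A) : ∃ Λ : ℝ≥0∞, Λ ≠ ⊤ ∧ 1 ≤ Λ ∧ ∀ ε, 0 < ε → ∀ (q : ℤ × ι X) (u : X → ℝ) (a : ℝ≥0∞),
    Measurable u → Integrable u → a ≠ ⊤ → ∫⁻ x, ‖u x‖ₑ ≤ a * volume (st q) →
    4 * volume {x | ∃ P, x ∈ cu P ∧ ε < 2 ^ (P.1 + 1) ∧ Bad k ε u (Λ * a) P} ≤ volume (cu q) := by
  obtain ⟨Cw, hCw, hW⟩ := weak_Ws h
  set C1 : ℝ≥0∞ := ofReal A * ofReal (2 ^ (Q X + 1) * c0 X) + ofReal (A * (c0 X * (9 / 7) ^ Q X)) with hC1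
  set D : ℝ≥0∞ := ((6 ^ Q X : ℝ≥0) : ℝ≥0∞) with hD
  set l : ℝ≥0∞ := 4 * ((Cw + D) * ofReal (kst X)) + 1 with hl
  have hC1t : C1 ≠ ⊤ := by finiteness
  have hlt : l ≠ ⊤ := by finiteness
  have hl1 : 1 ≤ l := le_add_self
  refine ⟨l * (1 + C1), by finiteness, one_le_mul hl1 le_self_add, fun ε hε q u a hu hi ha hua => ?_⟩
  rcases eq_or_ne a 0 with rfl | ha0
  · have hu0 : ∀ᵐ x, u x = 0 := by
      have : ∫⁻ x, ‖u x‖ₑ = 0 := by simpa using hua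
      rw [lintegral_eq_zero_iff hu.enorm] at this
      filter_upwards [this] with x hx using by simpa using hx
    have : {x | ∃ P, x ∈ cu P ∧ ε < 2 ^ (P.1 + 1) ∧ Bad k ε u (l * (1 + C1) * 0) P} = ∅ := by
      refine eq_empty_of_forall_notMem ?_
      rintro x ⟨P, _, _, h1 | ⟨y, _, h1⟩⟩
      · refine absurd h1 (not_lt.2 ?_)
        refine (setLIntegral_le_lintegral _ _).trans ?_
        rw [zero_mul] at hua
        exact hua.trans zero_le
      · refine absurd h1 (not_lt.2 (le_trans (le_of_eq ?_) zero_le))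
        rw [op, integral_eq_zero_of_ae, enorm_zero]
        filter_upwards [hu0] with z hz
        by_cases h2 : z ∈ (st P)ᶜ <;> simp [h2, hz]
    rw [this]; simp
  have hl0 : l ≠ 0 := fun h0 => by rw [h0] at hl1; exact absurd hl1 (by simp)
  have hla : l * a ≠ 0 := mul_ne_zero hl0 ha0
  have hla' : l * a ≠ ⊤ := mul_ne_top hlt ha
  have hsub : {x | ∃ P, x ∈ cu P ∧ ε < 2 ^ (P.1 + 1) ∧ Bad k ε u (l * (1 + C1) * a) P} ⊆
      {x | l * a < Ws k u x} ∪ {x | l * a < MF volume (fun z => ‖u z‖ₑ) x} := by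
    rintro x ⟨P, hx, hP, hb⟩
    by_contra hn
    rw [mem_union, not_or] at hn
    have h1 : Ws k u x ≤ l * a := not_lt.1 hn.1
    have h2 : MF volume (fun z => ‖u z‖ₑ) x ≤ l * a := not_lt.1 hn.2
    have e : l * (1 + C1) * a = l * a + C1 * (l * a) := by ring
    rcases hb with h3 | ⟨y, hy, h3⟩
    · refine absurd h3 (not_lt.2 ((lint_le_MF (doub_vol X) (srad_pos P) (cu_sub_st P hx)).trans ?_))
      change volume (st P) * _ ≤ _
      rw [mul_comm, e]
      exact mul_le_mul' (h2.trans le_self_add) le_rfl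
    · refine absurd h3 (not_lt.2 ((far_le h.toSK hε hP hu hi hx hy).trans ?_))
      rw [e]
      exact add_le_add h1 (mul_le_mul' le_rfl h2)
  refine (ENNReal.mul_le_mul_iff_right hla hla').1 ?_
  calc l * a * (4 * volume {x | ∃ P, x ∈ cu P ∧ ε < 2 ^ (P.1 + 1) ∧ Bad k ε u (l * (1 + C1) * a) P})
      ≤ l * a * (4 * (volume {x | l * a < Ws k u x} + volume {x | l * a < MF volume (fun z => ‖u z‖ₑ) x})) :=
        mul_le_mul' le_rfl (mul_le_mul' le_rfl ((measure_mono hsub).trans (measure_union_le _ _)))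
    _ = 4 * (l * a * volume {x | l * a < Ws k u x} + l * a * volume {x | l * a < MF volume (fun z => ‖u z‖ₑ) x}) := by ring
    _ ≤ 4 * (Cw * (∫⁻ x, ‖u x‖ₑ) + D * ∫⁻ x, ‖u x‖ₑ) :=
        mul_le_mul' le_rfl (add_le_add (hW u hu hi _ hla hla') (MF_weak (doub_vol X)))
    _ ≤ 4 * ((Cw + D) * (a * (ofReal (kst X) * volume (cu q)))) := by
        rw [← add_mul]
        exact mul_le_mul' le_rfl (mul_le_mul' le_rfl (hua.trans (mul_le_mul' le_rfl (vol_st_le q))))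
    _ = 4 * ((Cw + D) * ofReal (kst X)) * a * volume (cu q) := by ring
    _ ≤ l * a * volume (cu q) := mul_le_mul' (mul_le_mul' le_self_add le_rfl) le_rfl

/-- The truncated integral of a function outside `N` on a cube which is not bad. -/
lemma good_bd (h : SK k A) {ε : ℝ} (hε : 0 < ε) {P : ℤ × ι X} {l : ℝ≥0∞} (hP : ¬ Bad k ε u l P) (hi : Integrable u)
    {x : X} (hx : x ∈ cu P) {N : Set X} (mN : MeasurableSet N) (hN : N ⊆ st P) {s τ : ℝ} (hs : 0 < s) (hτ : 0 < τ) (hsτ : 8 * rad X * 2 ^ P.1 ≤ τ * s)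
    (hNs : ∀ z ∉ N, |shk k ε x z| ≤ A / s ^ Q X) :
    ‖op (shk k ε) (Nᶜ.indicator u) x‖ₑ ≤ (1 + ofReal (A * (c0 X * τ ^ Q X))) * l := by
  rw [Bad, not_or] at hP
  push_neg at hP
  obtain ⟨h1, h2⟩ := hP
  have hc := c0_pos X
  have hA := h.nonneg
  have e : Nᶜ.indicator u = fun z => (st P)ᶜ.indicator u z + (st P \ N).indicator u z := by
    ext z
    by_cases hz : z ∈ N
    · simp [hz, hN hz]
    · by_cases hz' : z ∈ st P <;> simp [hz, hz']
  have hm := meas_shk (ε := ε) h.meas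
  have mS : MeasurableSet (st P \ N) := (meas_st P).diff mN
  rw [e, op_add hm (h.shk_bd hε) (hi.indicator (meas_st P).compl) (hi.indicator mS), add_mul, one_mul]
  refine (enorm_add_le _ _).trans (add_le_add (h2 x hx) ?_)
  have h3 : ‖op (shk k ε) ((st P \ N).indicator u) x‖ₑ ≤ ofReal (A / s ^ Q X) * ∫⁻ z in st P, ‖u z‖ₑ := by
    refine (enorm_integral_le_lintegral_enorm _).trans ?_
    rw [← lintegral_const_mul' _ _ (by simp), ← lintegral_indicator (meas_st P)]
    refine lintegral_mono fun z => ?_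
    by_cases hz : z ∈ st P \ N
    · rw [indicator_of_mem hz, indicator_of_mem hz.1, enorm_mul]
      refine mul_le_mul' ?_ le_rfl
      rw [← ofReal_norm, Real.norm_eq_abs]
      exact ofReal_le_ofReal (hNs z hz.2)
    · rw [indicator_of_notMem hz]; simp
  refine h3.trans ((mul_le_mul' le_rfl h1).trans ?_)
  rw [vol_st, mul_comm l, ← mul_assoc, ← ofReal_mul (by positivity)]
  refine mul_le_mul' (ofReal_le_ofReal ?_) le_rfl
  have hr := srad_pos P
  calc A / s ^ Q X * (c0 X * (8 * rad X * 2 ^ P.1) ^ Q X) ≤ A / s ^ Q X * (c0 X * (τ * s) ^ Q X) := by gcongr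
    _ = _ := by rw [mul_pow]; field_simp

/-- The commutator of the truncated singular integral with `b`. -/
def cop (k : X → X → ℝ) (b : X → ℝ) (ε : ℝ) (f : X → ℝ) (x : X) : ℝ := ∫ y, shk k ε x y * ((b x - b y) * f y)

lemma cop_eq (h : SK k A) {ε : ℝ} (hε : 0 < ε) (c : ℝ) (hf : Integrable f) (hbf : Integrable fun y => (b y - c) * f y) (x : X) :
    cop k b ε f x = (b x - c) * op (shk k ε) f x - op (shk k ε) (fun y => (b y - c) * f y) x := by
  unfold cop op
  rw [← integral_const_mul, ← integral_sub]
  · congr 1; ext y; ring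
  · exact (int_bdd (meas_shk h.meas) (h.shk_bd hε) hf x).const_mul _
  · exact int_bdd (meas_shk h.meas) (h.shk_bd hε) hbf x

/-- The coefficient of the sparse bound of the commutator on the cube `q`. -/
def spc (b f : X → ℝ) (q : ℤ × ι X) (x : X) : ℝ≥0∞ :=
  ‖b x - bq b q‖ₑ * ((∫⁻ y in st q, ‖f y‖ₑ) / volume (st q)) + (∫⁻ y in st q, ‖b y - bq b q‖ₑ * ‖f y‖ₑ) / volume (st q)

/-- One step of the pointwise sparse domination of the truncated commutators. -/
lemma sparse_step (h : CZK k A) : ∃ C : ℝ≥0∞, C ≠ ⊤ ∧ ∀ b f : X → ℝ, Measurable b → Measurable f → LI f → (LI fun y => b y * f y) →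
    ∀ (ε : ℝ) (k0 : ℤ), 2 ^ k0 ≤ ε → ε < 2 ^ (k0 + 1) → ∀ q : ℤ × ι X, k0 ≤ q.1 →
    ∃ S : ℤ × ι X → Prop, (∀ P ∈ stp S, cu P ⊆ cu q ∧ k0 ≤ P.1 ∧ P.1 < q.1) ∧
      2 * volume (⋃ P ∈ stp S, cu P) ≤ volume (cu q) ∧
      (∀ P ∈ stp S, ∀ x ∈ cu P, ‖cop k b ε ((st q).indicator f) x‖ₑ ≤ ‖cop k b ε ((st P).indicator f) x‖ₑ + C * spc b f q x) ∧
      (∀ x ∈ cu q, x ∉ (⋃ P ∈ stp S, cu P) → ‖cop k b ε ((st q).indicator f) x‖ₑ ≤ C * spc b f q x) := by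
  obtain ⟨Λ, hΛ, hΛ1, H⟩ := bad_vol h
  have hR : 1 ≤ rad X := one_le_rad
  set τ : ℝ := 8 * rad X + 3 with hτ
  have hτ0 : 0 < τ := by positivity
  set C2 : ℝ≥0∞ := 1 + ofReal (A * (c0 X * τ ^ Q X)) with hC2
  refine ⟨C2 * Λ, by finiteness, fun b f hb hf hfi hbi ε k0 hε1 hε2 q hq => ?_⟩
  have hε : 0 < ε := lt_of_lt_of_le (by positivity) hε1
  set c := bq b q with hc
  let u1 : X → ℝ := (st q).indicator f
  let u2 : X → ℝ := (st q).indicator fun y => (b y - c) * f y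
  have hbc : LI fun y => (b y - c) * f y := fun x r => by
    have := (hbi x r).sub ((hfi x r).const_mul c)
    refine this.congr_fun (fun y _ => ?_) measurableSet_ball
    simp; ring
  have hind : ∀ P : ℤ × ι X, Integrable ((st P).indicator f) ∧ Integrable ((st P).indicator fun y => (b y - c) * f y) := fun P =>
    ⟨(integrable_indicator_iff (meas_st P)).2 (hfi _ _), (integrable_indicator_iff (meas_st P)).2 (hbc _ _)⟩
  have mu1 : Measurable u1 := hf.indicator (meas_st q)
  have mu2 : Measurable u2 := ((hb.sub measurable_const).mul hf).indicator (meas_st q)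
  have iu1 : Integrable u1 := (hind q).1
  have iu2 : Integrable u2 := (hind q).2
  set a1 : ℝ≥0∞ := (∫⁻ y in st q, ‖f y‖ₑ) / volume (st q) with ha1
  set a2 : ℝ≥0∞ := (∫⁻ y in st q, ‖b y - c‖ₑ * ‖f y‖ₑ) / volume (st q) with ha2
  have hn : ∀ g : X → ℝ, ∫⁻ x, ‖(st q).indicator g x‖ₑ = ∫⁻ y in st q, ‖g y‖ₑ := fun g => by
    simp_rw [enorm_indicator_eq_indicator_enorm]
    exact lintegral_indicator (meas_st q) _
  have n1 : ∫⁻ x, ‖u1 x‖ₑ = ∫⁻ y in st q, ‖f y‖ₑ := hn f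
  have n2 : ∫⁻ x, ‖u2 x‖ₑ = ∫⁻ y in st q, ‖b y - c‖ₑ * ‖f y‖ₑ := by simp_rw [← enorm_mul]; exact hn _
  have hd : ∀ a : ℝ≥0∞, a / volume (st q) * volume (st q) = a := fun a =>
    ENNReal.div_mul_cancel (vol_st_pos q) (vol_st_fin q)
  have e1 : ∫⁻ x, ‖u1 x‖ₑ ≤ a1 * volume (st q) := by rw [n1, ha1, hd]
  have e2 : ∫⁻ x, ‖u2 x‖ₑ ≤ a2 * volume (st q) := by rw [n2, ha2, hd]
  have t1 : a1 ≠ ⊤ := div_ne_top (n1 ▸ iu1.2.ne) (vol_st_pos q)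
  have t2 : a2 ≠ ⊤ := div_ne_top (n2 ▸ iu2.2.ne) (vol_st_pos q)
  let bad : ℤ × ι X → Prop := fun P => Bad k ε u1 (Λ * a1) P ∨ Bad k ε u2 (Λ * a2) P
  let S : ℤ × ι X → Prop := fun P => k0 ≤ P.1 ∧ P.1 < q.1 ∧ cu P ⊆ cu q ∧ bad P
  have hSq : ∀ P, q.1 ≤ P.1 → ¬ S P := fun P hP h => absurd h.2.1 (not_lt.2 hP)
  -- the cube `q` itself is never bad
  have hgq : ∀ (u : X → ℝ) (a : ℝ≥0∞), ∫⁻ x, ‖((st q).indicator u) x‖ₑ ≤ a * volume (st q) → ¬ Bad k ε ((st q).indicator u) (Λ * a) q := by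
    rintro u a hua (h1 | ⟨y, _, h1⟩)
    · refine absurd h1 (not_lt.2 ((setLIntegral_le_lintegral _ _).trans (hua.trans (mul_le_mul' ?_ le_rfl))))
      exact le_mul_of_one_le_left' hΛ1
    · refine absurd h1 (not_lt.2 (le_trans (le_of_eq ?_) zero_le))
      have : (st q)ᶜ.indicator ((st q).indicator u) = 0 := by
        ext z; by_cases hz : z ∈ st q <;> simp [hz]
      rw [this]; simp [op]
  have hgood : ∀ (k' : ℤ) (x : X), x ∈ cu q → k0 ≤ k' → k' ≤ q.1 → ¬ S (at' k' x) → ¬ Bad k ε u1 (Λ * a1) (at' k' x) ∧ ¬ Bad k ε u2 (Λ * a2) (at' k' x) := by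
    intro k' x hx hk0 hk hn
    rcases hk.lt_or_eq with h1 | h1
    · rw [← not_or]
      exact fun h2 => hn ⟨hk0, h1, cu_sub (P := at' k' x) h1.le (mem_cu_at k' x) hx, h2⟩
    · rw [h1, mem_cu.1 hx]
      exact ⟨hgq _ _ e1, hgq _ _ e2⟩
  have hcop : ∀ (N : Set X), MeasurableSet N → N ⊆ st q → ∀ x, ‖cop k b ε ((st q).indicator f) x - cop k b ε (N.indicator f) x‖ₑ ≤
      ‖b x - c‖ₑ * ‖op (shk k ε) (Nᶜ.indicator u1) x‖ₑ + ‖op (shk k ε) (Nᶜ.indicator u2) x‖ₑ := by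
    intro N mN hN x
    have hm := meas_shk (ε := ε) h.meas
    have hi : ∀ g : X → ℝ, Integrable ((st q).indicator g) → Integrable (N.indicator g) := fun g hg => by
      have := hg.indicator mN
      rwa [indicator_indicator, inter_eq_left.2 hN] at this
    have i1 := hi _ iu1
    have i2 := hi _ iu2
    have ei : ∀ M : Set X, (fun y => (b y - c) * M.indicator f y) = M.indicator fun y => (b y - c) * f y := by
      intro M; ext y; by_cases hy : y ∈ M <;> simp [hy]
    rw [cop_eq h.toSK hε c (hind q).1 (by rw [ei]; exact (hind q).2), cop_eq h.toSK hε c i1 (by rw [ei]; exact i2), ei, ei]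
    have hs : ∀ g : X → ℝ, Nᶜ.indicator ((st q).indicator g) = fun y => (st q).indicator g y - N.indicator g y := fun g => by
      ext y
      by_cases hy : y ∈ N
      · simp [hy, hN hy]
      · simp [hy]
    rw [hs, hs, op_sub hm (h.toSK.shk_bd hε) (hind q).1 i1, op_sub hm (h.toSK.shk_bd hε) (hind q).2 i2, ← enorm_mul]
    refine le_trans (le_of_eq ?_) enorm_sub_le
    congr 1; ring
  have hfin : ∀ (x : X) (v1 v2 : ℝ≥0∞), v1 ≤ C2 * (Λ * a1) → v2 ≤ C2 * (Λ * a2) → ‖b x - c‖ₑ * v1 + v2 ≤ C2 * Λ * spc b f q x := by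
    intro x v1 v2 h1 h2
    refine (add_le_add (mul_le_mul' le_rfl h1) h2).trans (le_of_eq ?_)
    rw [spc]; ring
  refine ⟨S, fun P hP => ⟨hP.1.2.2.1, hP.1.1, hP.1.2.1⟩, ?_, ?_, ?_⟩
  · have hsub : (⋃ P ∈ stp S, cu P) ⊆ {x | ∃ P, x ∈ cu P ∧ ε < 2 ^ (P.1 + 1) ∧ Bad k ε u1 (Λ * a1) P} ∪
        {x | ∃ P, x ∈ cu P ∧ ε < 2 ^ (P.1 + 1) ∧ Bad k ε u2 (Λ * a2) P} := by
      refine iUnion₂_subset fun P hP x hx => ?_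
      have h1 : ε < 2 ^ (P.1 + 1) := hε2.trans_le (zpow_le_zpow_right₀ (by norm_num) (by have := hP.1.1; omega))
      exact hP.1.2.2.2.imp (fun h2 => ⟨P, hx, h1, h2⟩) fun h2 => ⟨P, hx, h1, h2⟩
    have h3 := H ε hε q u1 a1 mu1 iu1 t1 e1
    have h4 := H ε hε q u2 a2 mu2 iu2 t2 e2
    have h5 : 4 * volume (⋃ P ∈ stp S, cu P) ≤ 2 * volume (cu q) := by
      rw [two_mul]
      refine (mul_le_mul' le_rfl ((measure_mono hsub).trans (measure_union_le _ _))).trans ?_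
      rw [mul_add]
      exact add_le_add h3 h4
    refine (ENNReal.mul_le_mul_iff_right (a := 2) (by norm_num) (by norm_num)).1 ?_
    rw [← mul_assoc]; norm_num; exact h5
  · intro P hP x hx
    have hxq := hP.1.2.2.1 hx
    obtain ⟨g1, g2⟩ := hgood (P.1 + 1) x hxq (by have := hP.1.1; omega) (by have := hP.1.2.1; omega) (hP.2 x hx _ (by omega))
    have hst1 : st P ⊆ st (at' (P.1 + 1) x) := st_sub (by simp [at']) hx (mem_cu_at _ x)
    have hst2 : st P ⊆ st q := st_sub hP.1.2.1 hx hxq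
    have hk2 : (2:ℝ) ^ (P.1 + 1) = 2 * 2 ^ P.1 := by rw [zpow_add₀ (by norm_num)]; ring
    have h2 : (0:ℝ) < 2 ^ P.1 := by positivity
    have hs : 0 < 7 * (rad X * 2 ^ P.1) := by positivity
    have hst3 : 8 * rad X * 2 ^ (at' (P.1 + 1) x).1 ≤ τ * (7 * (rad X * 2 ^ P.1)) := by
      simp only [at']
      rw [hk2]
      have : 0 < rad X * 2 ^ P.1 := by positivity
      nlinarith
    have hN : ∀ z ∉ st P, |shk k ε x z| ≤ A / (7 * (rad X * 2 ^ P.1)) ^ Q X := by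
      intro z hz
      have h3 := dist_ce hx
      have h4 : 8 * rad X * 2 ^ P.1 ≤ dist z (ce P) := not_lt.1 hz
      have h5 := dist_triangle z x (ce P)
      rw [dist_comm z x] at h5
      have h6 : 7 * (rad X * 2 ^ P.1) ≤ dist x z := by linarith
      have := h.toSK.size' hs h6
      unfold shk
      split_ifs
      · exact this
      · rw [abs_zero]; exact (abs_nonneg _).trans this
    have r1 := good_bd h.toSK hε g1 iu1 (mem_cu_at _ x) (meas_st P) hst1 hs hτ0 hst3 hN
    have r2 := good_bd h.toSK hε g2 iu2 (mem_cu_at _ x) (meas_st P) hst1 hs hτ0 hst3 hN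
    have r3 := (hcop (st P) (meas_st P) hst2 x).trans (hfin x _ _ r1 r2)
    rw [← add_sub_cancel (cop k b ε ((st P).indicator f) x) (cop k b ε ((st q).indicator f) x)]
    exact (enorm_add_le _ _).trans (add_le_add le_rfl r3)
  · intro x hx hxn
    rw [stop_cover hSq, not_exists] at hxn
    obtain ⟨g1, g2⟩ := hgood k0 x hx le_rfl hq (hxn k0)
    have hst3 : 8 * rad X * 2 ^ (at' k0 x).1 ≤ τ * ε := by
      simp only [at']
      have : 0 < (2:ℝ) ^ k0 := by positivity
      nlinarith
    have hN : ∀ z ∉ (∅ : Set X), |shk k ε x z| ≤ A / ε ^ Q X := fun z _ => h.toSK.shk_bd hε x z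
    have r1 := good_bd h.toSK hε g1 iu1 (mem_cu_at _ x) MeasurableSet.empty (empty_subset _) hε hτ0 hst3 hN
    have r2 := good_bd h.toSK hε g2 iu2 (mem_cu_at _ x) MeasurableSet.empty (empty_subset _) hε hτ0 hst3 hN
    have r3 := (hcop ∅ MeasurableSet.empty (empty_subset _) x).trans (hfin x _ _ r1 r2)
    have e0 : cop k b ε ((∅ : Set X).indicator f) x = 0 := by simp [cop]
    rwa [e0, sub_zero] at r3

end sparse

/-! ### Muckenhoupt weights and the local weighted estimate -/

section local_est
variable [Dya X] [Nonempty X]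
variable {k : X → X → ℝ} {A : ℝ} {w σ : X → ℝ≥0∞} {a c : ℝ} {ν : Measure X}

/-- The measure with density `w`. -/
def wd (w : X → ℝ≥0∞) : Measure X := volume.withDensity w

/-- The Muckenhoupt condition for a weight `w` and its dual weight `σ`, in the symmetric form
`W(B)^a S(B)^c ≤ C |B|`, where `a = 1/p` and `c = 1/p'` are the reciprocals of the exponents. -/
structure Wp (a c : ℝ) (w σ : X → ℝ≥0∞) : Prop where
  a0 : 0 < a
  c0 : 0 < c
  ac : a + c = 1
  mw : Measurable w
  ms : Measurable σ
  w0 : ∀ x, w x ≠ 0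
  wt : ∀ x, w x ≠ ⊤
  s0 : ∀ x, σ x ≠ 0
  sT : ∀ x, σ x ≠ ⊤
  fw : ∀ x r, wd w (ball x r) ≠ ⊤
  fs : ∀ x r, wd σ (ball x r) ≠ ⊤
  rel : ∀ x, w x ^ a * σ x ^ c = 1
  ap : ∃ C : ℝ≥0, ∀ x r, 0 < r → wd w (ball x r) ^ a * wd σ (ball x r) ^ c ≤ C * volume (ball x r)

lemma Wp.symm (h : Wp a c w σ) : Wp c a σ w where
  a0 := h.c0
  c0 := h.a0
  ac := by rw [add_comm]; exact h.ac
  mw := h.ms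
  ms := h.mw
  w0 := h.s0
  wt := h.sT
  s0 := h.w0
  sT := h.wt
  fw := h.fs
  fs := h.fw
  rel x := by rw [mul_comm]; exact h.rel x
  ap := by
    obtain ⟨C, hC⟩ := h.ap
    exact ⟨C, fun x r hr => by rw [mul_comm (wd σ _ ^ c)]; exact hC x r hr⟩

lemma Wp.hol (h : Wp a c w σ) {E : Set X} (hE : MeasurableSet E) :
    volume E ≤ wd w E ^ a * wd σ E ^ c := by
  have := lintegral_mul_norm_pow_le (μ := volume.restrict E) h.mw.aemeasurable
    h.ms.aemeasurable h.a0.le h.c0.le h.ac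
  simp only [h.rel] at this
  rw [wd, wd, withDensity_apply _ hE, withDensity_apply _ hE]
  simpa using this

lemma Wp.pos (h : Wp a c w σ) (x : X) {r : ℝ} (hr : 0 < r) : wd w (ball x r) ≠ 0 := by
  intro h0
  have := h.hol (measurableSet_ball (x := x) (ε := r))
  rw [h0, zero_rpow_of_pos h.a0, zero_mul] at this
  exact vol_pos x hr (le_antisymm this bot_le)

lemma Wp.fair (h : Wp a c w σ) : Fair (wd w) where
  pos x r hr := h.pos x hr
  fin := h.fw
  ac := withDensity_absolutelyContinuous _ _
  fair θ hθ := by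
    obtain ⟨C, hC⟩ := h.ap
    set τ : ℝ≥0∞ := min θ 1 with hτ
    have t0 : τ ≠ 0 := by rw [hτ]; exact (lt_min (pos_iff_ne_zero.2 hθ) one_pos).ne'
    have tt : τ ≠ ⊤ := ne_top_of_le_ne_top one_ne_top (min_le_right _ _)
    have hne : ((C:ℝ≥0∞) / τ) ^ (1 / a) ≠ ⊤ :=
      rpow_ne_top_of_nonneg (by have := h.a0; positivity) (div_ne_top coe_ne_top t0)
    refine ⟨(((C:ℝ≥0∞) / τ) ^ (1 / a)).toNNReal, fun x r E hr mE hE hv => ?_⟩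
    rw [coe_toNNReal hne]
    have s0 : wd σ (ball x r) ^ c ≠ 0 := (ENNReal.rpow_pos (pos_iff_ne_zero.2 (h.symm.pos x hr)) (h.fs x r)).ne'
    have st : wd σ (ball x r) ^ c ≠ ⊤ := rpow_ne_top_of_nonneg h.c0.le (h.fs x r)
    have e1 : wd w (ball x r) ^ a * wd σ (ball x r) ^ c ≤ ((C:ℝ≥0∞) / τ * wd w E ^ a) * wd σ (ball x r) ^ c := by
      calc _ ≤ C * volume (ball x r) := hC x r hr
        _ = (C / τ) * (τ * volume (ball x r)) := by
            rw [← mul_assoc, ENNReal.div_mul_cancel t0 tt]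
        _ ≤ (C / τ) * (wd w E ^ a * wd σ (ball x r) ^ c) := by
            refine mul_le_mul' le_rfl ?_
            calc τ * volume (ball x r) ≤ θ * volume (ball x r) := mul_le_mul' (min_le_left _ _) le_rfl
              _ ≤ volume E := hv
              _ ≤ _ := h.hol mE
              _ ≤ _ := mul_le_mul' le_rfl (ENNReal.rpow_le_rpow (measure_mono hE) h.c0.le)
        _ = _ := by rw [mul_assoc]
    have e2 := (ENNReal.mul_le_mul_iff_left s0 st).1 e1
    have e3 := ENNReal.rpow_le_rpow e2 (z := 1 / a) (by have := h.a0; positivity)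
    rwa [mul_rpow_of_nonneg _ _ (by have := h.a0; positivity), ← ENNReal.rpow_mul, ← ENNReal.rpow_mul,
      mul_one_div_cancel h.a0.ne', ENNReal.rpow_one, ENNReal.rpow_one] at e3

/-- The `s`-average of `F` over a set. -/
def pav (ν : Measure X) (F : X → ℝ≥0∞) (s : ℝ) (B : Set X) : ℝ≥0∞ := ((∫⁻ y in B, F y ^ s ∂ν) / ν B) ^ (1 / s)

lemma hold_gen {B : Set X} (h0 : ν B ≠ 0) (hT : ν B ≠ ⊤) {s s' : ℝ} (hs : s'.HolderConjugate s) {H F : X → ℝ≥0∞}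
    (mH : Measurable H) (mF : Measurable F) {K : ℝ≥0∞} (hK : ∫⁻ y in B, H y ^ s' ∂ν ≤ K * ν B) :
    ∫⁻ y in B, H y * F y ∂ν ≤ K ^ (1 / s') * (ν B * pav ν F s B) := by
  have p1 : 0 ≤ 1 / s' := by have := hs.pos; positivity
  have p2 : 0 ≤ 1 / s := by have := hs.symm.pos; positivity
  have p3 : 1 / s' + 1 / s = 1 := by rw [one_div, one_div]; exact hs.inv_add_inv_eq_one
  calc ∫⁻ y in B, H y * F y ∂ν ≤ (∫⁻ y in B, H y ^ s' ∂ν) ^ (1 / s') * (∫⁻ y in B, F y ^ s ∂ν) ^ (1 / s) :=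
        ENNReal.lintegral_mul_le_Lp_mul_Lq _ hs mH.aemeasurable mF.aemeasurable
    _ ≤ (K * ν B) ^ (1 / s') * (∫⁻ y in B, F y ^ s ∂ν) ^ (1 / s) :=
        mul_le_mul' (ENNReal.rpow_le_rpow hK p1) le_rfl
    _ = _ := by
        rw [mul_rpow_of_nonneg _ _ p1, pav, mul_assoc]
        congr 1
        conv_rhs => enter [1]; rw [← ENNReal.rpow_one (ν B), ← p3, ENNReal.rpow_add_of_nonneg _ _ p1 p2]
        rw [mul_assoc, ← mul_rpow_of_nonneg _ _ p2, ENNReal.mul_div_cancel h0 hT]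

lemma hold_one (h : Fair ν) {s : ℝ} (hs : 1 < s) (x : X) {r : ℝ} (hr : 0 < r) {F : X → ℝ≥0∞} (mF : Measurable F) :
    ∫⁻ y in ball x r, F y ∂ν ≤ ν (ball x r) * pav ν F s (ball x r) := by
  have := hold_gen (h.pos x r hr) (h.fin x r) (Real.HolderConjugate.conjExponent hs).symm (H := fun _ => 1) measurable_const mF
    (K := 1) (by simp)
  simpa using this

lemma hold_osc (h : Fair ν) {s : ℝ} (hs : 1 < s) : ∃ C : ℝ≥0∞, C ≠ ⊤ ∧ ∀ b : X → ℝ, BM b → ∀ (x : X) (r : ℝ), 0 < r →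
    ∀ F : X → ℝ≥0∞, Measurable F →
    ∫⁻ y in ball x r, ‖b y - av b x r‖ₑ * F y ∂ν ≤ C * (ν (ball x r) * pav ν F s (ball x r)) := by
  have hc := (Real.HolderConjugate.conjExponent hs).symm
  obtain ⟨C, hC, H⟩ := jn_ball h (Real.conjExponent s) hc.lt.le
  refine ⟨C ^ (1 / Real.conjExponent s), rpow_ne_top_of_nonneg (by have := hc.pos; positivity) hC,
    fun b hb x r hr F mF => ?_⟩
  have mb := hb.meas
  exact hold_gen (h.pos x r hr) (h.fin x r) hc (by fun_prop) mF (H b hb x r hr)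

/-- On a large portion of a cube, the average over the enlarged cube is dominated by the maximal function. -/
lemma pav_le (h : Fair ν) {s t : ℝ} (hs : 1 < s) (ht : 0 < t) : ∃ D : ℝ≥0∞, D ≠ ⊤ ∧ ∀ (q : ℤ × ι X) (E : Set X),
    MeasurableSet E → E ⊆ cu q → volume (cu q) ≤ 2 * volume E → ∀ F : X → ℝ≥0∞,
    ν (st q) * pav ν F s (st q) ^ t ≤ D * ∫⁻ x in E, MF ν (fun y => F y ^ s) x ^ (t / s) ∂ν := by
  obtain ⟨D, -, hD⟩ := h.cube
  refine ⟨D, coe_ne_top, fun q E mE hE hv F => ?_⟩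
  calc _ ≤ (D * ν E) * pav ν F s (st q) ^ t := mul_le_mul' (hD q E mE hE hv) le_rfl
    _ = D * ∫⁻ x in E, pav ν F s (st q) ^ t ∂ν := by
        rw [lintegral_const, Measure.restrict_apply_univ, mul_assoc, mul_comm (ν E)]
    _ ≤ _ := by
        refine mul_le_mul' le_rfl (setLIntegral_mono' mE fun x hx => ?_)
        rw [pav, ← ENNReal.rpow_mul, one_div, inv_mul_eq_div]
        exact ENNReal.rpow_le_rpow (le_MF (srad_pos q) (cu_sub_st q (hE hx))) (by positivity)

lemma young_max {a c : ℝ} (ha : 0 < a) (hc : 0 < c) (hac : a + c = 1) (x y : ℝ≥0∞) : x ^ a * y ^ c ≤ x + y := by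
  calc x ^ a * y ^ c ≤ (x + y) ^ a * (x + y) ^ c :=
        mul_le_mul' (ENNReal.rpow_le_rpow le_self_add ha.le) (ENNReal.rpow_le_rpow le_add_self hc.le)
    _ = x + y := by rw [← ENNReal.rpow_add_of_nonneg _ _ ha.le hc.le, hac, ENNReal.rpow_one]

/-- The Muckenhoupt condition turns a product of averages into a sum of energies. -/
lemma Wp.energy (h : Wp a c w σ) : ∃ C : ℝ≥0, ∀ (x : X) (r : ℝ), 0 < r → ∀ α β : ℝ≥0∞,
    (wd σ (ball x r) * α) * (wd w (ball x r) * β) / volume (ball x r) ≤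
      C * (wd σ (ball x r) * α ^ (1 / a) + wd w (ball x r) * β ^ (1 / c)) := by
  obtain ⟨C, hC⟩ := h.ap
  refine ⟨C, fun x r hr α β => ?_⟩
  have ha := h.a0
  have hc := h.c0
  have e : ∀ z : ℝ≥0∞, z = z ^ a * z ^ c := fun z => by
    rw [← ENNReal.rpow_add_of_nonneg _ _ ha.le hc.le, h.ac, ENNReal.rpow_one]
  set S := wd σ (ball x r)
  set W := wd w (ball x r)
  refine ENNReal.div_le_of_le_mul ?_
  calc (S * α) * (W * β) = (W ^ a * S ^ c) * ((S ^ a * α) * (W ^ c * β)) := by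
        nth_rw 1 [e S, e W]; ring
    _ ≤ (C * volume (ball x r)) * ((S * α ^ (1 / a)) ^ a * (W * β ^ (1 / c)) ^ c) := by
        refine mul_le_mul' (hC x r hr) ?_
        rw [mul_rpow_of_nonneg _ _ ha.le, mul_rpow_of_nonneg _ _ hc.le, ← ENNReal.rpow_mul,
          ← ENNReal.rpow_mul, one_div_mul_cancel ha.ne', one_div_mul_cancel hc.ne', ENNReal.rpow_one, ENNReal.rpow_one]
    _ ≤ (C * volume (ball x r)) * (S * α ^ (1 / a) + W * β ^ (1 / c)) := mul_le_mul' le_rfl (young_max ha hc h.ac _ _)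
    _ = _ := by ring

lemma lint_wd (hw : Measurable w) {E : Set X} (hE : MeasurableSet E) {F : X → ℝ≥0∞} (mF : Measurable F) :
    ∫⁻ x in E, F x ∂(wd w) = ∫⁻ x in E, F x * w x := by
  rw [wd, setLIntegral_withDensity_eq_setLIntegral_mul _ hw mF hE]
  simp only [Pi.mul_apply, mul_comm]

/-- The energy measure controlling the bilinear form of the commutator: `F` is the density of `|f|`
with respect to `σ`, and `g` is the test function. -/
def enm (w σ : X → ℝ≥0∞) (a c s t : ℝ) (F g : X → ℝ≥0∞) : Measure X :=
  (wd σ).withDensity (fun x => MF (wd σ) (fun y => F y ^ s) x ^ (1 / a / s)) +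
    (wd w).withDensity (fun x => MF (wd w) (fun y => g y ^ t) x ^ (1 / c / t))

lemma meas_spc {b f : X → ℝ} (hb : Measurable b) (q : ℤ × ι X) : Measurable (spc b f q) := by
  unfold spc
  fun_prop

lemma spc_energy (h : Wp a c w σ) {s t : ℝ} (hs : 1 < s) (ht : 1 < t) : ∃ C : ℝ≥0∞, C ≠ ⊤ ∧
    ∀ (b f : X → ℝ) (F g : X → ℝ≥0∞), BM b → Measurable F → Measurable g → (∀ y, ‖f y‖ₑ = F y * σ y) →
    ∀ (q : ℤ × ι X) (E : Set X), MeasurableSet E → E ⊆ cu q → volume (cu q) ≤ 2 * volume E →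
    ∫⁻ x in cu q, spc b f q x * g x ∂(wd w) ≤ C * enm w σ a c s t F g E := by
  obtain ⟨C1, hC1, H1⟩ := hold_osc h.symm.fair hs
  obtain ⟨C2, hC2, H2⟩ := hold_osc h.fair ht
  have ha := h.a0
  have hc := h.c0
  obtain ⟨D1, hD1, G1⟩ := pav_le h.symm.fair hs (t := 1 / a) (by positivity)
  obtain ⟨D2, hD2, G2⟩ := pav_le h.fair ht (t := 1 / c) (by positivity)
  obtain ⟨C0, H0⟩ := h.energy
  refine ⟨(C1 + C2) * (C0 * (D1 + D2)), by finiteness, fun b f F g hb mF mg hf q E mE hE hv => ?_⟩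
  have mb := hb.meas
  have ms := h.ms
  have mw := h.mw
  set S := wd σ (st q) with hS
  set W := wd w (st q) with hW
  set α := pav (wd σ) F s (st q) with hα
  set β := pav (wd w) g t (st q) with hβ
  set V := volume (st q) with hV
  have i1 : ∫⁻ y in st q, ‖f y‖ₑ ≤ S * α := by
    simp only [hf]
    rw [← lint_wd ms (meas_st q) mF]
    exact hold_one h.symm.fair hs _ (srad_pos q) mF
  have i2 : ∫⁻ y in st q, ‖b y - bq b q‖ₑ * ‖f y‖ₑ ≤ C1 * (S * α) := by
    simp only [hf, ← mul_assoc]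
    rw [← lint_wd ms (meas_st q) (by fun_prop), mul_assoc]
    exact H1 b hb _ _ (srad_pos q) F mF
  have i3 : ∫⁻ y in cu q, g y ∂(wd w) ≤ W * β :=
    (lintegral_mono_set (cu_sub_st q)).trans (hold_one h.fair ht _ (srad_pos q) mg)
  have i4 : ∫⁻ y in cu q, ‖b y - bq b q‖ₑ * g y ∂(wd w) ≤ C2 * (W * β) :=
    (lintegral_mono_set (cu_sub_st q)).trans (H2 b hb _ _ (srad_pos q) g mg)
  calc ∫⁻ x in cu q, spc b f q x * g x ∂(wd w)
      = ∫⁻ x in cu q, (((∫⁻ y in st q, ‖f y‖ₑ) / V) * (‖b x - bq b q‖ₑ * g x) +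
          ((∫⁻ y in st q, ‖b y - bq b q‖ₑ * ‖f y‖ₑ) / V) * g x) ∂(wd w) := by
        refine lintegral_congr fun x => ?_
        rw [spc]; ring
    _ = ((∫⁻ y in st q, ‖f y‖ₑ) / V) * ∫⁻ x in cu q, ‖b x - bq b q‖ₑ * g x ∂(wd w) +
          ((∫⁻ y in st q, ‖b y - bq b q‖ₑ * ‖f y‖ₑ) / V) * ∫⁻ x in cu q, g x ∂(wd w) := by
        rw [lintegral_add_left (by fun_prop), lintegral_const_mul _ (by fun_prop), lintegral_const_mul _ mg]
    _ ≤ ((S * α) / V) * (C2 * (W * β)) + ((C1 * (S * α)) / V) * (W * β) :=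
        add_le_add (mul_le_mul' (div_le_div_right i1 _) i4) (mul_le_mul' (div_le_div_right i2 _) i3)
    _ = (C1 + C2) * ((S * α) * (W * β) / V) := by simp only [div_eq_mul_inv]; ring
    _ ≤ (C1 + C2) * (C0 * (S * α ^ (1 / a) + W * β ^ (1 / c))) := mul_le_mul' le_rfl (H0 _ _ (srad_pos q) α β)
    _ ≤ (C1 + C2) * (C0 * ((D1 + D2) * enm w σ a c s t F g E)) := by
        refine mul_le_mul' le_rfl (mul_le_mul' le_rfl ?_)
        rw [enm, Measure.add_apply, withDensity_apply _ mE, withDensity_apply _ mE, mul_add]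
        exact add_le_add ((G1 q E mE hE hv F).trans (mul_le_mul' le_self_add le_rfl))
          ((G2 q E mE hE hv g).trans (mul_le_mul' le_add_self le_rfl))
    _ = _ := by ring

/-- The bilinear form of a truncated commutator on a cube, by iteration of the sparse selection. -/
lemma form_cube (hk : CZK k A) (h : Wp a c w σ) {s t : ℝ} (hs : 1 < s) (ht : 1 < t) : ∃ C : ℝ≥0∞, C ≠ ⊤ ∧
    ∀ (b f : X → ℝ) (F g : X → ℝ≥0∞), BM b → Measurable f → LI f → (LI fun y => b y * f y) →
    Measurable F → Measurable g → (∀ y, ‖f y‖ₑ = F y * σ y) →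
    ∀ (ε : ℝ) (k0 : ℤ), 2 ^ k0 ≤ ε → ε < 2 ^ (k0 + 1) → ∀ q : ℤ × ι X, k0 ≤ q.1 →
    ∫⁻ x in cu q, ‖cop k b ε ((st q).indicator f) x‖ₑ * g x ∂(wd w) ≤ C * enm w σ a c s t F g (cu q) := by
  obtain ⟨C1, hC1, H1⟩ := sparse_step hk
  obtain ⟨C2, hC2, H2⟩ := spc_energy h hs ht
  refine ⟨C1 * C2, by finiteness, fun b f F g hb mf lf lbf mF mg hf ε k0 h0 h1 => ?_⟩
  have mb := hb.meas
  set μ := enm w σ a c s t F g with hμ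
  have key : ∀ N : ℕ, ∀ q : ℤ × ι X, k0 ≤ q.1 → q.1 < k0 + N →
      ∫⁻ x in cu q, ‖cop k b ε ((st q).indicator f) x‖ₑ * g x ∂(wd w) ≤ C1 * C2 * μ (cu q) := by
    intro N
    induction N with
    | zero => intro q hq hq'; simp at hq'; omega
    | succ N ih =>
      intro q hq hq'
      obtain ⟨S, S1, S2, S3, S4⟩ := H1 b f mb mf lf lbf ε k0 h0 h1 q hq
      set U := ⋃ P ∈ stp S, cu P with hU
      have mU : MeasurableSet U := meas_stp S
      have hUq : U ⊆ cu q := iUnion₂_subset fun P hP => (S1 P hP).1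
      have mE : MeasurableSet (cu q \ U) := (meas_cu q).diff mU
      have hE2 : volume (cu q) ≤ 2 * volume (cu q \ U) := by
        have hUf : volume U ≠ ⊤ := ne_top_of_le_ne_top (vol_cu_fin q) (measure_mono hUq)
        have e := measure_diff_add_inter (μ := volume) (cu q) mU
        rw [inter_eq_right.2 hUq] at e
        have : volume (cu q) + volume (cu q) ≤ volume (cu q) + 2 * volume (cu q \ U) := by
          calc volume (cu q) + volume (cu q) = 2 * volume (cu q \ U) + 2 * volume U := by rw [← e]; ring
            _ ≤ 2 * volume (cu q \ U) + volume (cu q) := add_le_add le_rfl S2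
            _ = _ := add_comm _ _
        exact (ENNReal.add_le_add_iff_left (vol_cu_fin q)).1 this
      have ms := meas_spc (f := f) mb q
      have eq1 := lintegral_inter_add_diff (μ := wd w) (fun x => ‖cop k b ε ((st q).indicator f) x‖ₑ * g x) (cu q) mU
      have eq2 := lintegral_inter_add_diff (μ := wd w) (fun x => spc b f q x * g x) (cu q) mU
      rw [inter_eq_right.2 hUq] at eq1 eq2
      rw [← eq1]
      have a1 : ∫⁻ x in cu q \ U, ‖cop k b ε ((st q).indicator f) x‖ₑ * g x ∂(wd w) ≤
          C1 * ∫⁻ x in cu q \ U, spc b f q x * g x ∂(wd w) := by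
        rw [← lintegral_const_mul _ (by fun_prop)]
        refine setLIntegral_mono' mE fun x hx => ?_
        rw [← mul_assoc]
        exact mul_le_mul' (S4 x hx.1 hx.2) le_rfl
      have a2 : ∫⁻ x in U, ‖cop k b ε ((st q).indicator f) x‖ₑ * g x ∂(wd w) ≤
          C1 * C2 * μ U + C1 * ∫⁻ x in U, spc b f q x * g x ∂(wd w) := by
        rw [hU, lint_stp, lint_stp, meas_stp_eq, ← ENNReal.tsum_mul_left, ← ENNReal.tsum_mul_left, ← tsum_add]
        refine tsum_le_tsum fun P => ?_
        calc _ ≤ ∫⁻ x in cu P.1, (‖cop k b ε ((st P.1).indicator f) x‖ₑ * g x + C1 * (spc b f q x * g x)) ∂(wd w) := by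
              refine setLIntegral_mono' (meas_cu _) fun x hx => ?_
              rw [← mul_assoc, ← add_mul]
              exact mul_le_mul' (S3 P.1 P.2 x hx) le_rfl
          _ = (∫⁻ x in cu P.1, ‖cop k b ε ((st P.1).indicator f) x‖ₑ * g x ∂(wd w)) + C1 * ∫⁻ x in cu P.1, spc b f q x * g x ∂(wd w) := by
              rw [lintegral_add_right _ (by fun_prop), lintegral_const_mul _ (by fun_prop)]
          _ ≤ _ := by
              have := S1 P.1 P.2
              exact add_le_add (ih P.1 this.2.1 (by push_cast at hq'; omega)) le_rfl
      calc _ ≤ (C1 * C2 * μ U + C1 * ∫⁻ x in U, spc b f q x * g x ∂(wd w)) +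
            C1 * ∫⁻ x in cu q \ U, spc b f q x * g x ∂(wd w) := add_le_add a2 a1
        _ = C1 * C2 * μ U + C1 * ∫⁻ x in cu q, spc b f q x * g x ∂(wd w) := by rw [← eq2]; ring
        _ ≤ C1 * C2 * μ U + C1 * (C2 * μ (cu q \ U)) :=
            add_le_add le_rfl (mul_le_mul' le_rfl (H2 b f F g hb mF mg hf q _ mE diff_subset hE2))
        _ = C1 * C2 * (μ (cu q \ U) + μ U) := by ring
        _ = _ := by
            have e := measure_diff_add_inter (μ := μ) (cu q) mU
            rw [inter_eq_right.2 hUq] at e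
            rw [e]
  intro q hq
  refine key (q.1 - k0 + 1).toNat q hq ?_
  omega

lemma Wp.lt_inv (h : Wp a c w σ) : 1 < 1 / a := by
  rw [one_div, one_lt_inv₀ h.a0]; linarith [h.ac, h.c0]

lemma enm_univ (h : Wp a c w σ) {s t : ℝ} (hs : 1 < s) (hs' : s < 1 / a) (ht : 1 < t) (ht' : t < 1 / c) :
    ∃ C : ℝ≥0∞, C ≠ ⊤ ∧ ∀ F g : X → ℝ≥0∞, Measurable F → Measurable g →
    enm w σ a c s t F g univ ≤ C * ((∫⁻ y, F y ^ (1 / a) ∂(wd σ)) + ∫⁻ y, g y ^ (1 / c) ∂(wd w)) := by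
  obtain ⟨D1, hD1⟩ := h.symm.fair.doub
  obtain ⟨D2, hD2⟩ := h.fair.doub
  have aux : ∀ {s q : ℝ}, 1 < s → s < q → 1 < q / s := fun h1 h2 => by rwa [one_lt_div (by linarith)]
  refine ⟨ofReal (D1 * 2 ^ (1 / a / s) * (1 / a / s) / (1 / a / s - 1)) +
    ofReal (D2 * 2 ^ (1 / c / t) * (1 / c / t) / (1 / c / t - 1)), by finiteness, fun F g mF mg => ?_⟩
  · rw [enm, Measure.add_apply, withDensity_apply _ .univ, withDensity_apply _ .univ, Measure.restrict_univ,
      Measure.restrict_univ]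
    refine (add_le_add (MF_strong hD1 _ (aux hs hs') (mF.pow_const s)) (MF_strong hD2 _ (aux ht ht') (mg.pow_const t))).trans ?_
    have e1 : ∀ y, (F y ^ s) ^ (1 / a / s) = F y ^ (1 / a) := fun y => by
      rw [← ENNReal.rpow_mul]; congr 1; field_simp
    have e2 : ∀ y, (g y ^ t) ^ (1 / c / t) = g y ^ (1 / c) := fun y => by
      rw [← ENNReal.rpow_mul]; congr 1; field_simp
    simp only [e1, e2, mul_add]
    exact add_le_add (mul_le_mul' le_self_add le_rfl) (mul_le_mul' le_add_self le_rfl)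

lemma form_ball (hk : CZK k A) (h : Wp a c w σ) : ∃ C : ℝ≥0∞, C ≠ ⊤ ∧
    ∀ (b f : X → ℝ) (F g : X → ℝ≥0∞), BM b → Measurable f → LI f → (LI fun y => b y * f y) →
    Measurable F → Measurable g → (∀ y, ‖f y‖ₑ = F y * σ y) → ∀ (x : X) (r : ℝ), (∀ y ∉ ball x r, f y = 0) →
    ∀ ε : ℝ, 0 < ε → ∫⁻ y in ball x r, ‖cop k b ε f y‖ₑ * g y ∂(wd w) ≤
      C * ((∫⁻ y, F y ^ (1 / a) ∂(wd σ)) + ∫⁻ y, g y ^ (1 / c) ∂(wd w)) := by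
  obtain ⟨s, hs, hs'⟩ := exists_between h.lt_inv
  obtain ⟨t, ht, ht'⟩ := exists_between h.symm.lt_inv
  obtain ⟨C1, hC1, H1⟩ := form_cube hk h hs ht
  obtain ⟨C2, hC2, H2⟩ := enm_univ h hs hs' ht ht'
  refine ⟨C1 * C2, by finiteness, fun b f F g hb mf lf lbf mF mg hf x r hfr ε hε => ?_⟩
  obtain ⟨k0, hk0⟩ := exists_mem_Ico_zpow hε (by norm_num : (1:ℝ) < 2)
  obtain ⟨N, hN⟩ := pow_unbounded_of_one_lt r (by norm_num : (1:ℝ) < 2)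
  set K : ℤ := max k0 N with hK
  have hrK : r < (2:ℝ) ^ K := hN.trans_le (by
    rw [← zpow_natCast]; exact zpow_le_zpow_right₀ (by norm_num) (le_max_right _ _))
  have hR : 1 ≤ rad X := one_le_rad
  set I : Set (ι X) := {i | (cu (K, i) ∩ ball x r).Nonempty} with hI
  have cov : ball x r ⊆ ⋃ i ∈ I, cu (K, i) := fun z hz => by
    refine mem_iUnion₂.2 ⟨(at' K z).2, ⟨z, mem_cu_at K z, hz⟩, mem_cu_at K z⟩
  have ind : ∀ i ∈ I, (st (K, i)).indicator f = f := by
    rintro i ⟨z, hz, hz'⟩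
    refine indicator_eq_self.2 fun y hy => ?_
    have hy' : y ∈ ball x r := by
      by_contra hn
      exact hy (hfr y hn)
    have h1 := dist_ce hz
    rw [mem_ball] at hz' hy'
    rw [st, mem_ball]
    have h2 : dist y (ce (K, i)) ≤ dist y x + dist z x + dist z (ce (K, i)) := by
      have := dist_triangle y x (ce (K, i))
      have := dist_triangle x z (ce (K, i))
      rw [dist_comm x z] at this
      linarith
    have h3 : (2:ℝ) ^ K ≤ rad X * 2 ^ K := le_mul_of_one_le_left (by positivity) hR
    show _ < 8 * rad X * 2 ^ K
    have h4 : dist z (ce (K, i)) < rad X * 2 ^ K := h1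
    have h5 : (0:ℝ) < 2 ^ K := by positivity
    linarith
  calc _ ≤ ∫⁻ y in ⋃ i ∈ I, cu (K, i), ‖cop k b ε f y‖ₑ * g y ∂(wd w) := lintegral_mono_set cov
    _ = ∑' i : I, ∫⁻ y in cu (K, i.1), ‖cop k b ε f y‖ₑ * g y ∂(wd w) := lint_level _ _ _ _
    _ ≤ ∑' i : I, C1 * enm w σ a c s t F g (cu (K, i.1)) := by
        refine tsum_le_tsum fun i => ?_
        have := H1 b f F g hb mf lf lbf mF mg hf ε k0 hk0.1 hk0.2 (K, i.1) (le_max_left _ _)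
        rwa [ind i.1 i.2] at this
    _ = C1 * enm w σ a c s t F g (⋃ i ∈ I, cu (K, i)) := by rw [meas_level, ENNReal.tsum_mul_left]
    _ ≤ C1 * (C2 * _) := mul_le_mul' le_rfl ((measure_mono (subset_univ _)).trans (H2 F g mF mg))
    _ = _ := by rw [mul_assoc]

lemma Wp.dual_pow (h : Wp a c w σ) (y : X) (z : ℝ≥0∞) : (z / σ y) ^ (1 / a) * σ y = z ^ (1 / a) * w y := by
  have ha := h.a0
  have hc := h.c0
  have e0 : w y * σ y ^ (c / a) = 1 := by
    have := congrArg (fun z => z ^ (1 / a)) (h.rel y)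
    simp only [ENNReal.one_rpow] at this
    rwa [mul_rpow_of_nonneg _ _ (by positivity), ← ENNReal.rpow_mul, ← ENNReal.rpow_mul, mul_one_div_cancel ha.ne',
      ENNReal.rpow_one, mul_one_div] at this
  have e1 : w y * σ y ^ (1 / a) = σ y := by
    have : 1 / a = c / a + 1 := by rw [div_add_one ha.ne', add_comm c, h.ac]
    rw [this, ENNReal.rpow_add_of_nonneg _ _ (by positivity) zero_le_one, ENNReal.rpow_one, ← mul_assoc, e0, one_mul]
  have p0 : σ y ^ (1 / a) ≠ 0 := (ENNReal.rpow_pos (pos_iff_ne_zero.2 (h.s0 y)) (h.sT y)).ne'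
  have pt : σ y ^ (1 / a) ≠ ⊤ := rpow_ne_top_of_nonneg (by positivity) (h.sT y)
  rw [div_rpow_of_nonneg _ _ (by positivity)]
  nth_rw 2 [← e1]
  rw [mul_comm (w y), ← mul_assoc, ENNReal.div_mul_cancel p0 pt]

/-- Functions in `L^p_loc(w)` are locally integrable, also after multiplication by a function of
bounded mean oscillation. -/
lemma Wp.li (h : Wp a c w σ) {b f : X → ℝ} (hb : BM b) (mf : Measurable f)
    (hf : ∀ x r, 0 < r → ∫⁻ y in ball x r, ‖f y‖ₑ ^ (1 / a) ∂(wd w) ≠ ⊤) : LI f ∧ LI fun y => b y * f y := by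
  have mb := hb.meas
  have ms := h.ms
  have mw := h.mw
  have ha := h.a0
  obtain ⟨C, hC, H⟩ := hold_osc h.symm.fair h.lt_inv
  set F : X → ℝ≥0∞ := fun y => ‖f y‖ₑ / σ y with hF
  have mF : Measurable F := by fun_prop
  have hfF : ∀ y, ‖f y‖ₑ = F y * σ y := fun y => (ENNReal.div_mul_cancel (h.s0 y) (h.sT y)).symm
  have fin : ∀ x r, 0 < r → wd σ (ball x r) * pav (wd σ) F (1 / a) (ball x r) ≠ ⊤ := fun x r hr => by
    refine mul_ne_top (h.fs x r) (rpow_ne_top_of_nonneg (by positivity) (div_ne_top ?_ (h.symm.pos x hr)))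
    rw [lint_wd ms measurableSet_ball (by fun_prop)]
    have := hf x r hr
    rw [lint_wd mw measurableSet_ball (by fun_prop)] at this
    simpa only [hF, h.dual_pow] using this
  have i1 : ∀ x r, 0 < r → ∫⁻ y in ball x r, ‖f y‖ₑ ≠ ⊤ := fun x r hr => by
    simp only [hfF]
    rw [← lint_wd ms measurableSet_ball mF]
    exact ne_top_of_le_ne_top (fin x r hr) (hold_one h.symm.fair h.lt_inv x hr mF)
  have i2 : ∀ x r, 0 < r → ∫⁻ y in ball x r, ‖b y - av b x r‖ₑ * ‖f y‖ₑ ≠ ⊤ := fun x r hr => by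
    simp only [hfF, ← mul_assoc]
    rw [← lint_wd ms measurableSet_ball (by fun_prop)]
    exact ne_top_of_le_ne_top (mul_ne_top hC (fin x r hr)) (H b hb x r hr F mF)
  have l1 : LI f := fun x r => by
    rcases le_or_gt r 0 with hr | hr
    · rw [ball_eq_empty.2 hr]; exact integrableOn_empty
    · exact ⟨mf.aestronglyMeasurable, (i1 x r hr).lt_top⟩
  refine ⟨l1, fun x r => ?_⟩
  rcases le_or_gt r 0 with hr | hr
  · rw [ball_eq_empty.2 hr]; exact integrableOn_empty
  · have i3 : IntegrableOn (fun y => (b y - av b x r) * f y) (ball x r) :=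
      ⟨by fun_prop, by
        rw [hasFiniteIntegral_iff_enorm]
        simp only [enorm_mul]
        exact (i2 x r hr).lt_top⟩
    have := i3.add ((l1 x r).const_mul (av b x r))
    refine this.congr (Eventually.of_forall fun y => ?_)
    simp only [Pi.add_apply]; ring

lemma meas_cop (hk : SK k A) {b f : X → ℝ} (hb : Measurable b) (hf : Measurable f) (ε : ℝ) :
    Measurable (cop k b ε f) := by
  have m := meas_shk hk.meas (ε := ε)
  have : Measurable fun p : X × X => shk k ε p.1 p.2 * ((b p.1 - b p.2) * f p.2) :=
    (m.comp measurable_id).mul (by fun_prop)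
  exact (this.stronglyMeasurable.integral_prod_right').measurable

/-- The weighted bound for the truncated commutators of a function living on a ball, uniformly in
the truncation, by duality with a truncated power of the commutator itself. -/
lemma loc_bd (hk : CZK k A) (h : Wp a c w σ) : ∃ C : ℝ≥0∞, C ≠ ⊤ ∧ ∀ b f : X → ℝ, BM b → Measurable f →
    ∀ (x : X) (r : ℝ), (∀ y ∉ ball x r, f y = 0) → ∀ ε : ℝ, 0 < ε →
    ∫⁻ y in ball x r, ‖cop k b ε f y‖ₑ ^ (1 / a) ∂(wd w) ≤ C * ∫⁻ y, ‖f y‖ₑ ^ (1 / a) ∂(wd w) := by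
  obtain ⟨C0, hC0, H0⟩ := form_ball hk h
  have ha := h.a0
  have hc := h.c0
  have hac := h.ac
  set C := C0 + 1 with hC
  have hCt : C ≠ ⊤ := by finiteness
  have hC1 : 1 ≤ C := le_add_self
  have hp' : 0 < 1 / c - 1 := by linarith [h.symm.lt_inv]
  -- `δ` is chosen so that `C δ^{p'} = δ / 2`
  set δ : ℝ≥0∞ := (2 * C)⁻¹ ^ (1 / (1 / c - 1)) with hδ
  have d0 : δ ≠ 0 := (ENNReal.rpow_pos (ENNReal.inv_pos.2 (by finiteness)) (by simp [hC])).ne'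
  have dt : δ ≠ ⊤ := rpow_ne_top_of_nonneg (by positivity) (by simp [hC])
  have dC : 2 * (C * δ ^ (1 / c)) = δ := by
    have : (1 / c) = (1 / c - 1) + 1 := by ring
    rw [this, ENNReal.rpow_add_of_nonneg _ _ hp'.le zero_le_one, ENNReal.rpow_one]
    rw [show δ ^ (1 / c - 1) = (2 * C)⁻¹ from by
      rw [hδ, ← ENNReal.rpow_mul, one_div_mul_cancel hp'.ne', ENNReal.rpow_one]]
    rw [← mul_assoc, ← mul_assoc, ENNReal.mul_inv_cancel (by simp [hC]) (by finiteness), one_mul]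
  refine ⟨2 * C / δ, div_ne_top (by finiteness) d0, fun b f hb mf x r hfr ε hε => ?_⟩
  by_cases hfin : ∫⁻ y, ‖f y‖ₑ ^ (1 / a) ∂(wd w) = ⊤
  · rw [hfin, mul_top (ENNReal.div_ne_zero.2 ⟨by simp [hC], dt⟩)]; exact le_top
  have ms := h.ms
  have mw := h.mw
  obtain ⟨lf, lbf⟩ := h.li hb mf (fun x r _ => ne_top_of_le_ne_top hfin (setLIntegral_le_lintegral _ _))
  set F : X → ℝ≥0∞ := fun y => ‖f y‖ₑ / σ y with hF
  have mF : Measurable F := by fun_prop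
  have hfF : ∀ y, ‖f y‖ₑ = F y * σ y := fun y => (ENNReal.div_mul_cancel (h.s0 y) (h.sT y)).symm
  have eF : ∫⁻ y, F y ^ (1 / a) ∂(wd σ) = ∫⁻ y, ‖f y‖ₑ ^ (1 / a) ∂(wd w) := by
    have := lint_wd ms MeasurableSet.univ (mF.pow_const (1 / a))
    have h2 := lint_wd mw MeasurableSet.univ (mf.enorm.pow_const (1 / a))
    rw [Measure.restrict_univ] at this h2
    rw [this, h2]
    simp only [hF, h.dual_pow]
  set T : X → ℝ≥0∞ := fun y => ‖cop k b ε f y‖ₑ with hT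
  have mT : Measurable T := (meas_cop hk.toSK hb.meas mf ε).enorm
  have mB : MeasurableSet (ball x r) := measurableSet_ball
  have step : ∀ N : ℕ, ∫⁻ y in ball x r, min (T y) N ^ (1 / a) ∂(wd w) ≤
      2 * C / δ * ∫⁻ y, ‖f y‖ₑ ^ (1 / a) ∂(wd w) := by
    intro N
    set J := ∫⁻ y in ball x r, min (T y) N ^ (1 / a) ∂(wd w) with hJ
    have Jt : J ≠ ⊤ := by
      refine ne_top_of_le_ne_top (b := (N:ℝ≥0∞) ^ (1 / a) * wd w (ball x r)) ?_ ?_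
      · exact mul_ne_top (rpow_ne_top_of_nonneg (by positivity) (by simp)) (h.fw x r)
      · rw [← setLIntegral_const]
        exact setLIntegral_mono' mB fun y _ => ENNReal.rpow_le_rpow (min_le_right _ _) (by positivity)
    set g : X → ℝ≥0∞ := (ball x r).indicator fun y => δ * min (T y) N ^ (1 / a - 1) with hg
    have mg : Measurable g := Measurable.indicator (by fun_prop) mB
    have hp : 0 < 1 / a - 1 := by linarith [h.lt_inv]
    have e1 : δ * J ≤ ∫⁻ y in ball x r, T y * g y ∂(wd w) := by
      rw [hJ, ← lintegral_const_mul _ (by fun_prop)]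
      refine setLIntegral_mono' mB fun y hy => ?_
      rw [hg, indicator_of_mem hy]
      have : min (T y) N ^ (1 / a) = min (T y) N * min (T y) N ^ (1 / a - 1) := by
        conv_lhs => rw [show 1 / a = 1 + (1 / a - 1) by ring, ENNReal.rpow_add_of_nonneg _ _ zero_le_one hp.le, ENNReal.rpow_one]
      rw [this, mul_left_comm]
      exact mul_le_mul' (min_le_left _ _) le_rfl
    have e2 : ∫⁻ y, g y ^ (1 / c) ∂(wd w) = δ ^ (1 / c) * J := by
      rw [hJ, ← lintegral_const_mul _ (by fun_prop), ← lintegral_indicator mB]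
      refine lintegral_congr fun y => ?_
      by_cases hy : y ∈ ball x r
      · rw [hg, indicator_of_mem hy, indicator_of_mem hy, mul_rpow_of_nonneg _ _ (by positivity), ← ENNReal.rpow_mul (min (T y) N)]
        have : (1 / a - 1) * (1 / c) = 1 / a := by
          have : 1 - a = c := by linarith
          rw [div_sub_one ha.ne', this]
          field_simp
        rw [this]
      · rw [hg, indicator_of_notMem hy, indicator_of_notMem hy, zero_rpow_of_pos (by positivity)]
    have e3 := H0 b f F g hb mf lf lbf mF mg hfF x r hfr ε hε
    rw [eF, e2] at e3
    set Nf := ∫⁻ y, ‖f y‖ₑ ^ (1 / a) ∂(wd w)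
    have e4 : δ * J + δ * J ≤ 2 * C * Nf + δ * J := by
      calc δ * J + δ * J = 2 * (δ * J) := by ring
        _ ≤ 2 * (C * (Nf + δ ^ (1 / c) * J)) := by
            refine mul_le_mul' le_rfl ((e1.trans e3).trans (mul_le_mul' le_self_add le_rfl))
        _ = 2 * C * Nf + (2 * (C * δ ^ (1 / c))) * J := by ring
        _ = _ := by rw [dC]
    have e5 := (ENNReal.add_le_add_iff_right (by finiteness)).1 e4
    rw [mul_comm δ J] at e5
    rw [← ENNReal.mul_div_right_comm]
    exact (ENNReal.le_div_iff_mul_le (Or.inl d0) (Or.inl dt)).2 e5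
  have sup : ∀ y, T y ^ (1 / a) = ⨆ N : ℕ, min (T y) N ^ (1 / a) := fun y => by
    refine le_antisymm ?_ (iSup_le fun N => ENNReal.rpow_le_rpow (min_le_left _ _) (by positivity))
    obtain ⟨N, hN⟩ := ENNReal.exists_nat_gt (show T y ≠ ⊤ from enorm_ne_top)
    refine le_iSup_of_le N ?_
    rw [min_eq_left hN.le]
  show ∫⁻ y in ball x r, T y ^ (1 / a) ∂(wd w) ≤ _
  simp only [sup]
  rw [lintegral_iSup (f := fun (N : ℕ) y => min (T y) N ^ (1 / a)) (fun N => by fun_prop) (fun N M hNM y => ENNReal.rpow_le_rpow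
    (min_le_min_left _ (by exact_mod_cast hNM)) (by positivity))]
  exact iSup_le step

end local_est

/-! ### The commutator on weighted Morrey spaces -/

section morrey
variable [Dya X] [Nonempty X]
variable {k : X → X → ℝ} {A : ℝ} {w σ : X → ℝ≥0∞} {a c κ : ℝ}

/-- The Morrey bound `∫_B |f|^p w ≤ N w(B)^κ`, with `p = 1/a`. -/
def Mor (a κ : ℝ) (w : X → ℝ≥0∞) (N : ℝ≥0∞) (f : X → ℝ) : Prop :=
  ∀ x r, 0 < r → ∫⁻ y in ball x r, ‖f y‖ₑ ^ (1 / a) ∂(wd w) ≤ N * wd w (ball x r) ^ κ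

lemma mor_ball (h : Wp a c w σ) : ∃ C : ℝ≥0∞, C ≠ ⊤ ∧ ∀ (b f : X → ℝ) (N : ℝ≥0∞), BM b → Measurable f → Mor a κ w N f →
    ∀ x r, 0 < r →
    (∫⁻ y in ball x r, ‖f y‖ₑ) ≤ C * (volume (ball x r) * (N ^ a * wd w (ball x r) ^ (-(a * (1 - κ))))) ∧
    (∫⁻ y in ball x r, ‖b y - av b x r‖ₑ * ‖f y‖ₑ) ≤
      C * (volume (ball x r) * (N ^ a * wd w (ball x r) ^ (-(a * (1 - κ))))) := by
  obtain ⟨C1, hC1, H1⟩ := hold_osc h.symm.fair h.lt_inv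
  obtain ⟨C0, H0⟩ := h.ap
  have ha := h.a0
  refine ⟨(1 + C1) * C0, by finiteness, fun b f N hb mf hN x r hr => ?_⟩
  have mb := hb.meas
  have ms := h.ms
  have mw := h.mw
  set F : X → ℝ≥0∞ := fun y => ‖f y‖ₑ / σ y with hF
  have mF : Measurable F := by fun_prop
  have hfF : ∀ y, ‖f y‖ₑ = F y * σ y := fun y => (ENNReal.div_mul_cancel (h.s0 y) (h.sT y)).symm
  set W := wd w (ball x r) with hW
  set S := wd σ (ball x r) with hS
  have eF : ∫⁻ y in ball x r, F y ^ (1 / a) ∂(wd σ) ≤ N * W ^ κ := by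
    have := hN x r hr
    rw [lint_wd mw measurableSet_ball (by fun_prop)] at this
    rw [lint_wd ms measurableSet_ball (by fun_prop)]
    simpa only [hF, h.dual_pow] using this
  have W0 : W ≠ 0 := h.pos x hr
  have Wt : W ≠ ⊤ := h.fw x r
  have S0 : S ≠ 0 := h.symm.pos x hr
  have St : S ≠ ⊤ := h.fs x r
  have main : S * pav (wd σ) F (1 / a) (ball x r) ≤ C0 * (volume (ball x r) * (N ^ a * W ^ (-(a * (1 - κ))))) := by
    have e : S = S ^ a * S ^ c := by
      rw [← ENNReal.rpow_add_of_nonneg _ _ ha.le h.c0.le, h.ac, ENNReal.rpow_one]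
    calc S * pav (wd σ) F (1 / a) (ball x r) ≤ S * ((N * W ^ κ) / S) ^ a := by
          rw [pav, one_div_one_div]
          exact mul_le_mul' le_rfl (ENNReal.rpow_le_rpow (div_le_div_right eF _) ha.le)
      _ = (S * ((N * W ^ κ) / S)) ^ a * S ^ c := by
          rw [mul_rpow_of_nonneg _ _ ha.le]
          nth_rw 1 [e]; ring
      _ = (W ^ a * S ^ c) * (N ^ a * W ^ (-(a * (1 - κ)))) := by
          rw [ENNReal.mul_div_cancel S0 St, mul_rpow_of_nonneg _ _ ha.le, ← ENNReal.rpow_mul,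
            show κ * a = a + -(a * (1 - κ)) by ring, ENNReal.rpow_add _ _ W0 Wt]
          ring
      _ ≤ (C0 * volume (ball x r)) * (N ^ a * W ^ (-(a * (1 - κ)))) := mul_le_mul' (H0 x r hr) le_rfl
      _ = _ := by rw [mul_assoc]
  constructor
  · simp only [hfF]
    rw [← lint_wd ms measurableSet_ball mF]
    refine (hold_one h.symm.fair h.lt_inv x hr mF).trans (main.trans ?_)
    refine mul_le_mul' ?_ le_rfl
    exact le_mul_of_one_le_left' le_self_add
  · simp only [hfF, ← mul_assoc]
    rw [← lint_wd ms measurableSet_ball (by fun_prop)]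
    refine (H1 b hb x r hr F mF).trans ((mul_le_mul' le_rfl main).trans ?_)
    simp only [← mul_assoc]
    gcongr
    exact le_add_self

lemma av_dbl {b : X → ℝ} (hb : BM b) (x : X) {r : ℝ} (hr : 0 < r) (j : ℕ) :
    ‖av b x (2 ^ j * r) - av b x r‖ₑ ≤ j * ofReal (2 ^ Q X) := by
  induction j with
  | zero => simp
  | succ j ih =>
    have hr' : 0 < 2 ^ j * r := by positivity
    have e : (2:ℝ) ^ (j + 1) * r = 2 * (2 ^ j * r) := by ring
    have h1 : ‖av b x (2 ^ j * r) - av b x (2 ^ (j + 1) * r)‖ₑ ≤ ofReal (2 ^ Q X) := by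
      have := (av_sub hb.li x hr' (av b x (2 ^ (j + 1) * r))).trans ((lintegral_mono_set (ball_subset_ball
        (by rw [e]; linarith))).trans (hb.osc x (2 ^ (j + 1) * r) (by positivity)))
      rw [e, vol_mul x hr' two_pos, ← e] at this
      exact (ENNReal.mul_le_mul_iff_left (vol_pos x hr') (vol_fin x _)).1 this
    calc ‖av b x (2 ^ (j + 1) * r) - av b x r‖ₑ
        = ‖(av b x (2 ^ j * r) - av b x r) - (av b x (2 ^ j * r) - av b x (2 ^ (j + 1) * r))‖ₑ := by congr 1; ring
      _ ≤ _ := enorm_sub_le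
      _ ≤ _ := add_le_add ih h1
      _ = _ := by push_cast; ring

lemma Fair.reverse_pow {ν : Measure X} {θ : ℝ≥0} (H : ∀ x r, 0 < r → ν (ball x r) ≤ θ * ν (ball x (2 * r)))
    (x : X) {r : ℝ} (hr : 0 < r) (j : ℕ) : ν (ball x r) ≤ θ ^ j * ν (ball x (2 ^ j * r)) := by
  induction j with
  | zero => simp
  | succ j ih =>
    refine ih.trans ?_
    rw [pow_succ, mul_assoc]
    refine mul_le_mul' le_rfl ((H x (2 ^ j * r) (by positivity)).trans ?_)
    rw [show (2:ℝ) ^ (j + 1) * r = 2 * (2 ^ j * r) by ring]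

lemma sum_geo {τ : ℝ≥0} (hτ : τ < 1) : ∑' j : ℕ, ((j:ℝ≥0∞) + 3) * (τ:ℝ≥0∞) ^ (j + 2) ≠ ⊤ := by
  have h1 : Summable fun j : ℕ => ((j:ℝ≥0) + 3) * τ ^ (j + 2) := by
    rw [← summable_coe]
    have hn : ‖(τ:ℝ)‖ < 1 := by simpa using hτ
    have s1 : Summable fun j : ℕ => ((j:ℝ) ^ 1 * (τ:ℝ) ^ j) := summable_pow_mul_geometric_of_norm_lt_one 1 hn
    have s2 : Summable fun j : ℕ => (τ:ℝ) ^ j := summable_geometric_of_norm_lt_one hn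
    refine ((s1.mul_right ((τ:ℝ) ^ 2)).add (s2.mul_right (3 * (τ:ℝ) ^ 2))).congr fun j => ?_
    push_cast; ring
  have := ENNReal.tsum_coe_ne_top_iff_summable.2 h1
  refine ne_of_eq_of_ne (tsum_congr fun j => ?_) this
  push_cast; rfl

/-- The part of the commutator coming from outside the double of a ball. -/
lemma tail_bd (hk : SK k A) (h : Wp a c w σ) (hκ : κ < 1) : ∃ C : ℝ≥0∞, C ≠ ⊤ ∧ ∀ (b f : X → ℝ) (N : ℝ≥0∞),
    BM b → Measurable f → Mor a κ w N f → ∀ x0 r, 0 < r → ∀ x ∈ ball x0 r,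
    ∫⁻ y in (ball x0 (2 * r))ᶜ, ‖k x y‖ₑ * (‖b x - b y‖ₑ * ‖f y‖ₑ) ≤
      C * (N ^ a * wd w (ball x0 r) ^ (-(a * (1 - κ)))) * (‖b x - av b x0 r‖ₑ + 1) := by
  obtain ⟨C1, hC1, H1⟩ := mor_ball (κ := κ) h
  obtain ⟨θ, -, hθ1, Hθ⟩ := h.fair.reverse
  have hA := hk.nonneg
  have hc := c0_pos X
  set e : ℝ := a * (1 - κ) with he
  have he0 : 0 < e := mul_pos h.a0 (by linarith)
  set τ : ℝ≥0 := θ ^ e with hτ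
  have hτ1 : τ < 1 := NNReal.rpow_lt_one hθ1 he0
  set Λ : ℝ≥0∞ := ofReal (2 ^ Q X) with hΛ
  have hΛ1 : 1 ≤ Λ := by
    rw [hΛ, one_le_ofReal]; exact one_le_pow₀ (by norm_num)
  have hsum := sum_geo hτ1
  set Sg := ∑' j : ℕ, ((j:ℝ≥0∞) + 3) * (τ:ℝ≥0∞) ^ (j + 2)
  refine ⟨ofReal (A * (c0 X * 4 ^ Q X)) * C1 * Λ * Sg, by finiteness, fun b f N hb mf hN x0 r hr x hx => ?_⟩
  have mb := hb.meas
  set z := ‖b x - av b x0 r‖ₑ with hz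
  set V := wd w (ball x0 r) with hV
  have mk := hk.meas
  have mkx : Measurable (k x) := mk.comp measurable_prodMk_left
  set ρ : ℕ → ℝ := fun j => 2 ^ (j + 2) * r with hρ
  have ρ0 : ∀ j, 0 < ρ j := fun j => by simp only [hρ]; positivity
  set κj : ℕ → ℝ≥0∞ := fun j => ofReal (A / (2 ^ j * r) ^ Q X) with hκj
  let Φ : ℕ → X → ℝ≥0∞ := fun j => (ball x0 (ρ j)).indicator (fun y => κj j * (‖b x - b y‖ₑ * ‖f y‖ₑ))
  have hpt : ∀ y ∈ (ball x0 (2 * r))ᶜ, ‖k x y‖ₑ * (‖b x - b y‖ₑ * ‖f y‖ₑ) ≤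
      ∑' j : ℕ, Φ j y := by
    intro y hy
    have hy' : 2 * r ≤ dist x0 y := by simpa [dist_comm] using hy
    obtain ⟨j, hj1, hj2⟩ := exists_nat_pow_near (one_le_div (by positivity) |>.2 hy') (one_lt_two)
    rw [le_div_iff₀ (by positivity)] at hj1
    rw [div_lt_iff₀ (by positivity)] at hj2
    refine le_trans ?_ (le_tsum j)
    simp only [Φ]
    rw [indicator_of_mem (by rw [mem_ball, dist_comm]; simp only [hρ]; rw [pow_succ]; linarith)]
    refine mul_le_mul' ?_ le_rfl
    rw [Real.enorm_eq_ofReal_abs]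
    refine ofReal_le_ofReal (hk.size' (by positivity) ?_)
    have h1 := dist_triangle x0 x y
    rw [mem_ball, dist_comm] at hx
    have h2 : (1:ℝ) ≤ 2 ^ j := one_le_pow₀ (by norm_num)
    nlinarith
  have hterm : ∀ j : ℕ, ∫⁻ y, Φ j y ≤
      ofReal (A * (c0 X * 4 ^ Q X)) * C1 * Λ * (N ^ a * V ^ (-e)) * (z + 1) * (((j:ℝ≥0∞) + 3) * (τ:ℝ≥0∞) ^ (j + 2)) := by
    intro j
    simp only [Φ]
    rw [lintegral_indicator measurableSet_ball, lintegral_const_mul _ (by fun_prop)]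
    obtain ⟨J1, J2⟩ := H1 b f N hb mf hN x0 (ρ j) (ρ0 j)
    set Vj := wd w (ball x0 (ρ j)) with hVj
    set U := N ^ a * Vj ^ (-e) with hU
    have e1 : ∫⁻ y in ball x0 (ρ j), ‖b x - b y‖ₑ * ‖f y‖ₑ ≤
        (z + (j + 2) * Λ + 1) * (C1 * (volume (ball x0 (ρ j)) * U)) := by
      have hav := av_dbl hb x0 hr (j + 2)
      push_cast at hav
      calc _ ≤ ∫⁻ y in ball x0 (ρ j), ((z + (j + 2) * Λ) * ‖f y‖ₑ + ‖b y - av b x0 (ρ j)‖ₑ * ‖f y‖ₑ) := by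
            refine lintegral_mono fun y => ?_
            rw [← add_mul]
            refine mul_le_mul' ?_ le_rfl
            calc ‖b x - b y‖ₑ = ‖((b x - av b x0 r) - (av b x0 (ρ j) - av b x0 r)) - (b y - av b x0 (ρ j))‖ₑ := by
                  congr 1; ring
              _ ≤ _ := enorm_sub_le
              _ ≤ _ := add_le_add (enorm_sub_le.trans (add_le_add le_rfl hav)) le_rfl
        _ = (z + (j + 2) * Λ) * (∫⁻ y in ball x0 (ρ j), ‖f y‖ₑ) + ∫⁻ y in ball x0 (ρ j), ‖b y - av b x0 (ρ j)‖ₑ * ‖f y‖ₑ := by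
            rw [lintegral_add_left (by fun_prop), lintegral_const_mul _ (by fun_prop)]
        _ ≤ (z + (j + 2) * Λ) * (C1 * (volume (ball x0 (ρ j)) * U)) + C1 * (volume (ball x0 (ρ j)) * U) :=
            add_le_add (mul_le_mul' le_rfl J1) J2
        _ = _ := by ring
    have e2 : κj j * volume (ball x0 (ρ j)) = ofReal (A * (c0 X * 4 ^ Q X)) := by
      rw [vol_ball _ _ (ρ0 j), hκj, ← ofReal_mul (by positivity)]
      congr 1
      have : ρ j = 4 * (2 ^ j * r) := by simp only [hρ]; ring
      have p : (2 ^ j * r) ^ Q X ≠ 0 := by positivity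
      rw [this, mul_pow 4, div_mul_eq_mul_div, div_eq_iff p]
      ring
    have e3 : z + (j + 2) * Λ + 1 ≤ Λ * (z + 1) * (j + 3) := by
      calc z + (j + 2) * Λ + 1 ≤ z * (Λ * (j + 3)) + (j + 2) * Λ + Λ := by
            refine add_le_add (add_le_add ?_ le_rfl) hΛ1
            refine le_mul_of_one_le_right' (one_le_mul_of_one_le_of_one_le hΛ1 ?_)
            exact le_add_left (by norm_num)
        _ = _ := by ring
    have e4 : Vj ^ (-e) ≤ (τ:ℝ≥0∞) ^ (j + 2) * V ^ (-e) := by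
      have g := ENNReal.rpow_le_rpow (Fair.reverse_pow Hθ x0 hr (j + 2)) he0.le
      rw [mul_rpow_of_nonneg _ _ he0.le] at g
      have g2 : ((θ:ℝ≥0∞) ^ (j + 2)) ^ e = (τ:ℝ≥0∞) ^ (j + 2) := by
        rw [hτ, coe_rpow_of_nonneg _ he0.le, ← ENNReal.rpow_natCast, ← ENNReal.rpow_natCast, ← ENNReal.rpow_mul,
          ← ENNReal.rpow_mul, mul_comm]
      rw [g2] at g
      have u0 : V ^ e ≠ 0 := (ENNReal.rpow_pos (pos_iff_ne_zero.2 (h.pos x0 hr)) (h.fw x0 r)).ne'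
      have ut : V ^ e ≠ ⊤ := rpow_ne_top_of_nonneg he0.le (h.fw x0 r)
      rw [ENNReal.rpow_neg, ENNReal.rpow_neg, ← div_eq_mul_inv, ENNReal.le_div_iff_mul_le (.inl u0) (.inl ut), mul_comm,
        ← div_eq_mul_inv]
      exact ENNReal.div_le_of_le_mul g
    calc κj j * ∫⁻ y in ball x0 (ρ j), ‖b x - b y‖ₑ * ‖f y‖ₑ
        ≤ κj j * ((Λ * (z + 1) * (j + 3)) * (C1 * (volume (ball x0 (ρ j)) * (N ^ a * ((τ:ℝ≥0∞) ^ (j + 2) * V ^ (-e)))))) := by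
          refine mul_le_mul' le_rfl (e1.trans (mul_le_mul' e3 (mul_le_mul' le_rfl (mul_le_mul' le_rfl (mul_le_mul' le_rfl e4)))))
      _ = (κj j * volume (ball x0 (ρ j))) * C1 * Λ * (N ^ a * V ^ (-e)) * (z + 1) * (((j:ℝ≥0∞) + 3) * (τ:ℝ≥0∞) ^ (j + 2)) := by ring
      _ = _ := by rw [e2]
  refine ((setLIntegral_mono' measurableSet_ball.compl hpt).trans (setLIntegral_le_lintegral _ _)).trans ?_
  rw [lintegral_tsum fun j => (Measurable.indicator (by fun_prop) measurableSet_ball).aemeasurable]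
  refine (tsum_le_tsum hterm).trans (le_of_eq ?_)
  rw [ENNReal.tsum_mul_left]; ring

/-- Almost everywhere convergence of the truncated commutator on any set of points where the integrals make
sense; no global hypothesis is made on `f`. -/
lemma cop_exists (hk : CZK k A) {b f : X → ℝ} (s : Set X)
    (h1 : ∀ x ∈ s, ∀ ε R : ℝ, 0 < ε → IntegrableOn (fun y => (b x - b y) * f y) {y | ε < dist x y ∧ dist x y < R})
    (h2 : ∀ x ∈ s, ∀ ε : ℝ, 0 < ε → Integrable fun y => shk k ε x y * ((b x - b y) * f y)) :
    ∀ᵐ x, x ∈ s → ∃ L : ℝ, Tendsto (fun ε => cop k b ε f x) (𝓝[>] 0) (𝓝 L) := by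
  -- around every point off `P`, an integrable function near the diagonal
  have loc : ∀ x ∈ s, ∀ z, z ≠ x → ∃ δ, 0 < δ ∧ IntegrableOn (fun y => (b x - b y) * f y) (ball z δ) := by
    intro x hx z hz
    have hd : 0 < dist x z := dist_pos.2 hz.symm
    refine ⟨dist x z / 2, by linarith, (h1 x hx (dist x z / 2) (2 * dist x z) (by linarith)).mono_set fun y hy => ?_⟩
    rw [mem_ball, dist_comm] at hy
    constructor
    · have := dist_triangle x y z
      rw [dist_comm y z] at this; linarith
    · have := dist_triangle x z y
      linarith
  obtain ⟨P, u, v, hP, huv, heq⟩ : ∃ (P : Set X) (u v : X → ℝ), P.Finite ∧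
      (∀ z ∉ P, ∃ δ, 0 < δ ∧ IntegrableOn u (ball z δ) ∧ IntegrableOn v (ball z δ)) ∧
      ∀ x ∈ s, ∀ y, (b x - b y) * f y = b x * u y - v y := by
    by_cases hs : ∃ x1 ∈ s, ∃ x2 ∈ s, b x1 ≠ b x2
    · obtain ⟨x1, hx1, x2, hx2, hne⟩ := hs
      have hne' := sub_ne_zero.2 hne
      refine ⟨{x1, x2}, f, fun y => b y * f y, by simp, fun z hz => ?_, fun x _ y => by ring⟩
      simp only [mem_insert_iff, mem_singleton_iff, not_or] at hz
      obtain ⟨δ1, p1, i1⟩ := loc x1 hx1 z hz.1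
      obtain ⟨δ2, p2, i2⟩ := loc x2 hx2 z hz.2
      have j1 := i1.mono_set (ball_subset_ball (min_le_left δ1 δ2))
      have j2 := i2.mono_set (ball_subset_ball (min_le_right δ1 δ2))
      have jf : IntegrableOn f (ball z (min δ1 δ2)) := by
        refine ((j1.sub j2).const_mul (b x1 - b x2)⁻¹).congr (Eventually.of_forall fun y => ?_)
        simp only [Pi.sub_apply]
        field_simp; ring
      refine ⟨min δ1 δ2, lt_min p1 p2, jf, ((jf.const_mul (b x1)).sub j1).congr (Eventually.of_forall fun y => ?_)⟩
      simp only [Pi.sub_apply]; ring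
    · push Not at hs
      by_cases hne : s.Nonempty
      · obtain ⟨x1, hx1⟩ := hne
        refine ⟨{x1}, 0, fun y => -((b x1 - b y) * f y), by simp, fun z hz => ?_, fun x hx y => ?_⟩
        · obtain ⟨δ, p, i⟩ := loc x1 hx1 z hz
          exact ⟨δ, p, integrableOn_zero, i.neg⟩
        · rw [hs x hx x1 hx1]; simp
      · refine ⟨∅, 0, 0, by simp, fun z _ => ⟨1, one_pos, integrableOn_zero, integrableOn_zero⟩, fun x hx => ?_⟩
        exact absurd ⟨x, hx⟩ hne
  have hbad : (volume : Measure X) ({x | x ∈ s ∧ ¬ ∃ L : ℝ, Tendsto (fun ε => cop k b ε f x) (𝓝[>] 0) (𝓝 L)} \ P) = 0 := by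
    refine measure_null_of_locally_null _ fun z hz => ?_
    obtain ⟨δ, hδ, iu, iv⟩ := huv z hz.2
    refine ⟨ball z (δ / 2) ∩ {x | x ∈ s ∧ ¬ ∃ L : ℝ, Tendsto (fun ε => cop k b ε f x) (𝓝[>] 0) (𝓝 L)},
      mem_nhdsWithin.2 ⟨ball z (δ / 2), isOpen_ball, mem_ball_self (by linarith), fun x hx => ⟨hx.1, hx.2.1⟩⟩, ?_⟩
    have pu := PV_int hk (iu.integrable_indicator measurableSet_ball)
    have pv := PV_int hk (iv.integrable_indicator measurableSet_ball)
    refine measure_mono_null ?_ (ae_iff.1 (Filter.Eventually.and pu pv))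
    rintro x ⟨hxb, hxs, hxn⟩ ⟨⟨L1, t1⟩, ⟨L2, t2⟩⟩
    refine hxn ⟨b x * L1 - L2 + ∫ y in (ball z δ)ᶜ, k x y * ((b x - b y) * f y),
      (((t1.const_mul (b x)).sub t2).add tendsto_const_nhds).congr' ?_⟩
    have hlt : ∀ᶠ ε : ℝ in 𝓝[>] 0, ε < δ / 2 := nhdsWithin_le_nhds (Iio_mem_nhds (by linarith))
    filter_upwards [self_mem_nhdsWithin, hlt] with ε (hε : 0 < ε) hεδ
    have i2 := h2 x hxs ε hε
    have far : ∫ y in (ball z δ)ᶜ, k x y * ((b x - b y) * f y) = ∫ y in (ball z δ)ᶜ, shk k ε x y * ((b x - b y) * f y) := by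
      refine setIntegral_congr_fun measurableSet_ball.compl fun y hy => ?_
      have hy' : δ ≤ dist y z := by simpa using hy
      rw [mem_ball] at hxb
      have := dist_triangle y x z
      simp only [shk]
      rw [if_pos (by rw [dist_comm x y]; linarith)]
    have near : ∫ y in ball z δ, shk k ε x y * ((b x - b y) * f y) =
        b x * op (shk k ε) ((ball z δ).indicator u) x - op (shk k ε) ((ball z δ).indicator v) x := by
      have m := meas_shk hk.meas (ε := ε)
      have bd := hk.toSK.shk_bd hε
      rw [op, op, ← integral_const_mul, ← integral_sub
        ((int_bdd m bd (iu.integrable_indicator measurableSet_ball) x).const_mul _)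
        (int_bdd m bd (iv.integrable_indicator measurableSet_ball) x), ← integral_indicator measurableSet_ball]
      congr 1
      ext y
      by_cases hy : y ∈ ball z δ
      · simp only [indicator_of_mem hy, heq x hxs y]; ring
      · simp only [indicator_of_notMem hy]; ring
    rw [far, ← near, cop, integral_add_compl measurableSet_ball i2]
  rw [ae_iff]
  refine measure_mono_null ?_ (measure_union_null hbad (hP.measure_zero _))
  intro x hx
  simp only [mem_setOf_eq, Classical.not_imp] at hx
  by_cases hxP : x ∈ P
  · exact Or.inr hxP
  · exact Or.inl ⟨hx, hxP⟩

lemma far_bd {s : Set X} (hs : MeasurableSet s) (b f : X → ℝ) (ε : ℝ) (x : X) :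
    ∫⁻ y, ‖shk k ε x y * ((b x - b y) * s.indicator f y)‖ₑ ≤ ∫⁻ y in s, ‖k x y‖ₑ * (‖b x - b y‖ₑ * ‖f y‖ₑ) := by
  rw [← lintegral_indicator hs]
  refine lintegral_mono fun y => ?_
  by_cases hy : y ∈ s
  · simp only [indicator_of_mem hy, enorm_mul]
    refine mul_le_mul' ?_ le_rfl
    rw [shk]; split_ifs <;> simp
  · simp only [indicator_of_notMem hy]; simp

/-- The part of `f` near a ball and the part away from it contribute integrably to the commutator. -/
lemma cop_int (hk : CZK k A) (h : Wp a c w σ) (hκ0 : 0 ≤ κ) (hκ : κ < 1) {b f : X → ℝ} {N : ℝ≥0∞} (hb : BM b) (mf : Measurable f)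
    (hN : N ≠ ⊤) (hM : Mor a κ w N f) (x0 : X) {r : ℝ} (hr : 0 < r) {x : X} (hx : x ∈ ball x0 r) {ε : ℝ} (hε : 0 < ε) :
    Integrable (fun y => shk k ε x y * ((b x - b y) * (ball x0 (2 * r)).indicator f y)) ∧
    Integrable (fun y => shk k ε x y * ((b x - b y) * (ball x0 (2 * r))ᶜ.indicator f y)) := by
  have ha := h.a0
  have mb := hb.meas
  have hfin : ∀ x r, 0 < r → ∫⁻ y in ball x r, ‖f y‖ₑ ^ (1 / a) ∂(wd w) ≠ ⊤ := fun x r hr =>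
    ne_top_of_le_ne_top (mul_ne_top hN (rpow_ne_top_of_nonneg hκ0 (h.fw x r))) (hM x r hr)
  obtain ⟨l1, l2⟩ := h.li hb mf hfin
  have m := meas_shk hk.meas (ε := ε)
  have bd := hk.toSK.shk_bd hε
  have mx : Measurable (shk k ε x) := m.comp measurable_prodMk_left
  constructor
  · refine int_bdd m bd ?_ x
    refine ((((l1 x0 (2 * r)).integrable_indicator measurableSet_ball).const_mul (b x)).sub
      ((l2 x0 (2 * r)).integrable_indicator measurableSet_ball)).congr (Eventually.of_forall fun y => ?_)
    by_cases hy : y ∈ ball x0 (2 * r)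
    · simp only [Pi.sub_apply, indicator_of_mem hy]; ring
    · simp only [Pi.sub_apply, indicator_of_notMem hy]; ring
  · obtain ⟨C, hC, H⟩ := tail_bd hk.toSK h hκ
    refine ⟨(mx.mul ((measurable_const.sub mb).mul (mf.indicator measurableSet_ball.compl))).aestronglyMeasurable, ?_⟩
    refine (far_bd measurableSet_ball.compl b f ε x).trans_lt ((H b f N hb mf hM x0 r hr x hx).trans_lt ?_)
    have := rpow_ne_top_of_nonneg ha.le hN
    have h2 : wd w (ball x0 r) ^ (-(a * (1 - κ))) ≠ ⊤ := by
      rw [ENNReal.rpow_neg]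
      exact ENNReal.inv_ne_top.2 (ENNReal.rpow_pos (pos_iff_ne_zero.2 (h.pos x0 hr)) (h.fw x0 r)).ne'
    exact lt_top_iff_ne_top.2 (by finiteness)

/-- The Morrey bound for the truncated commutators, uniform in the truncation. -/
lemma morrey_trunc (hk : CZK k A) (h : Wp a c w σ) (hκ0 : 0 < κ) (hκ : κ < 1) : ∃ C : ℝ≥0∞, C ≠ ⊤ ∧
    ∀ (b f : X → ℝ) (N : ℝ≥0∞), BM b → Measurable f → N ≠ ⊤ → Mor a κ w N f → ∀ ε, 0 < ε →
      Mor a κ w (C * N) (cop k b ε f) := by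
  obtain ⟨C1, hC1, H1⟩ := loc_bd hk h
  obtain ⟨C2, hC2, H2⟩ := tail_bd hk.toSK h hκ
  have hp := h.lt_inv
  have ha := h.a0
  obtain ⟨J, hJ, HJ⟩ := jn_ball h.fair (1 / a) hp.le
  obtain ⟨D, HD⟩ := h.fair.scale (t := 2) one_le_two
  have ip : (0:ℝ) ≤ 1 / a := by positivity
  set p := 1 / a with hpdef
  have n2 : (2:ℝ≥0∞) ^ (p - 1) ≠ ⊤ := rpow_ne_top_of_nonneg (by linarith) (by simp)
  have nD : (D:ℝ≥0∞) ^ κ ≠ ⊤ := rpow_ne_top_of_nonneg hκ0.le (by simp)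
  have nC2 : C2 ^ p ≠ ⊤ := rpow_ne_top_of_nonneg ip hC2
  refine ⟨2 ^ (p - 1) * (C1 * D ^ κ) + 2 ^ (p - 1) * (C2 ^ p * (2 ^ (p - 1) * (J + 1))), by finiteness,
    fun b f N hb mf hN hM ε hε x0 r hr => ?_⟩
  set f1 := (ball x0 (2 * r)).indicator f with hf1
  set f2 := (ball x0 (2 * r))ᶜ.indicator f with hf2
  have mb := hb.meas
  have m1 : Measurable f1 := mf.indicator measurableSet_ball
  have m2 : Measurable f2 := mf.indicator measurableSet_ball.compl
  have mc1 := meas_cop hk.toSK mb m1 ε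
  have mc2 := meas_cop hk.toSK mb m2 ε
  set W := wd w (ball x0 r) with hW
  have W0 : W ≠ 0 := h.pos x0 hr
  have Wt : W ≠ ⊤ := h.fw x0 r
  have split : ∀ x ∈ ball x0 r, ‖cop k b ε f x‖ₑ ^ p ≤ 2 ^ (p - 1) * ‖cop k b ε f1 x‖ₑ ^ p + 2 ^ (p - 1) * ‖cop k b ε f2 x‖ₑ ^ p := by
    intro x hx
    obtain ⟨i1, i2⟩ := cop_int hk h hκ0.le hκ hb mf hN hM x0 hr hx hε
    have : cop k b ε f x = cop k b ε f1 x + cop k b ε f2 x := by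
      rw [cop, cop, cop, ← integral_add i1 i2]
      congr 1; ext y
      have : f y = f1 y + f2 y := (congrFun (indicator_self_add_compl (ball x0 (2 * r)) f) y).symm
      rw [this]; ring
    rw [this, ← mul_add]
    refine (ENNReal.rpow_le_rpow (enorm_add_le _ _) ip).trans ?_
    exact ENNReal.rpow_add_le_mul_rpow_add_rpow _ _ hp.le
  have near : ∫⁻ x in ball x0 r, ‖cop k b ε f1 x‖ₑ ^ p ∂(wd w) ≤ C1 * D ^ κ * (N * W ^ κ) := by
    calc _ ≤ ∫⁻ x in ball x0 (2 * r), ‖cop k b ε f1 x‖ₑ ^ p ∂(wd w) := lintegral_mono_set (ball_subset_ball (by linarith))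
      _ ≤ C1 * ∫⁻ x, ‖f1 x‖ₑ ^ p ∂(wd w) :=
          H1 b f1 hb m1 x0 (2 * r) (fun y hy => indicator_of_notMem hy _) ε hε
      _ = C1 * ∫⁻ x in ball x0 (2 * r), ‖f x‖ₑ ^ p ∂(wd w) := by
          rw [← lintegral_indicator measurableSet_ball]
          congr 2; ext y
          by_cases hy : y ∈ ball x0 (2 * r)
          · simp [hf1, indicator_of_mem hy]
          · simp [hf1, indicator_of_notMem hy, show 0 < p by linarith]
      _ ≤ C1 * (N * (D * W) ^ κ) := by
          refine mul_le_mul' le_rfl ((hM x0 (2 * r) (by linarith)).trans (mul_le_mul' le_rfl ?_))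
          exact ENNReal.rpow_le_rpow (HD x0 r hr) hκ0.le
      _ = _ := by rw [mul_rpow_of_nonneg _ _ hκ0.le]; ring
  set U := N ^ a * W ^ (-(a * (1 - κ))) with hU
  have hUp : U ^ p * W = N * W ^ κ := by
    rw [hU, mul_rpow_of_nonneg _ _ ip, ← ENNReal.rpow_mul, ← ENNReal.rpow_mul,
      show a * p = 1 by rw [hpdef]; field_simp,
      show -(a * (1 - κ)) * p = κ + -1 by rw [hpdef]; field_simp; ring, ENNReal.rpow_one,
      ENNReal.rpow_add _ _ W0 Wt, ENNReal.rpow_neg_one, mul_assoc, mul_assoc, ENNReal.inv_mul_cancel W0 Wt, mul_one]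
  have far : ∫⁻ x in ball x0 r, ‖cop k b ε f2 x‖ₑ ^ p ∂(wd w) ≤ C2 ^ p * (2 ^ (p - 1) * (J + 1)) * (N * W ^ κ) := by
    calc _ ≤ ∫⁻ x in ball x0 r, (C2 * U) ^ p * (2 ^ (p - 1) * (‖b x - av b x0 r‖ₑ ^ p + 1)) ∂(wd w) := by
          refine setLIntegral_mono' measurableSet_ball fun x hx => ?_
          have e1 : ‖cop k b ε f2 x‖ₑ ≤ C2 * U * (‖b x - av b x0 r‖ₑ + 1) := (enorm_integral_le_lintegral_enorm _).trans
            ((far_bd measurableSet_ball.compl b f ε x).trans (H2 b f N hb mf hM x0 r hr x hx))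
          refine (ENNReal.rpow_le_rpow e1 ip).trans ?_
          rw [mul_rpow_of_nonneg _ _ ip]
          refine mul_le_mul' le_rfl ((ENNReal.rpow_add_le_mul_rpow_add_rpow _ _ hp.le).trans ?_)
          rw [ENNReal.one_rpow]
      _ = (C2 * U) ^ p * (2 ^ (p - 1) * ((∫⁻ x in ball x0 r, ‖b x - av b x0 r‖ₑ ^ p ∂(wd w)) + W)) := by
          rw [lintegral_const_mul _ (by fun_prop), lintegral_const_mul _ (by fun_prop), lintegral_add_right _ (by fun_prop)]
          simp [hW]
      _ ≤ (C2 * U) ^ p * (2 ^ (p - 1) * (J * W + W)) :=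
          mul_le_mul' le_rfl (mul_le_mul' le_rfl (add_le_add (HJ b hb x0 r hr) le_rfl))
      _ = C2 ^ p * (2 ^ (p - 1) * (J + 1)) * (U ^ p * W) := by
          rw [mul_rpow_of_nonneg _ _ ip]; ring
      _ = _ := by rw [hUp]
  calc _ ≤ ∫⁻ x in ball x0 r, (2 ^ (p - 1) * ‖cop k b ε f1 x‖ₑ ^ p + 2 ^ (p - 1) * ‖cop k b ε f2 x‖ₑ ^ p) ∂(wd w) :=
        setLIntegral_mono' measurableSet_ball split
    _ = 2 ^ (p - 1) * (∫⁻ x in ball x0 r, ‖cop k b ε f1 x‖ₑ ^ p ∂(wd w)) + 2 ^ (p - 1) * ∫⁻ x in ball x0 r, ‖cop k b ε f2 x‖ₑ ^ p ∂(wd w) := by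
        rw [lintegral_add_left (by fun_prop), lintegral_const_mul _ (by fun_prop), lintegral_const_mul _ (by fun_prop)]
    _ ≤ 2 ^ (p - 1) * (C1 * D ^ κ * (N * W ^ κ)) + 2 ^ (p - 1) * (C2 ^ p * (2 ^ (p - 1) * (J + 1)) * (N * W ^ κ)) :=
        add_le_add (mul_le_mul' le_rfl near) (mul_le_mul' le_rfl far)
    _ = _ := by ring

/-- The commutator of a Calderón–Zygmund kernel is bounded on the weighted Morrey space. -/
lemma morrey_lim (hk : CZK k A) (h : Wp a c w σ) (hκ0 : 0 < κ) (hκ : κ < 1) : ∃ C : ℝ≥0∞, C ≠ ⊤ ∧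
    ∀ (b f : X → ℝ) (N : ℝ≥0∞), BM b → Measurable f → N ≠ ⊤ → Mor a κ w N f → ∀ T : X → ℝ,
      (∀ᵐ x, Tendsto (fun ε => cop k b ε f x) (𝓝[>] 0) (𝓝 (T x))) → Mor a κ w (C * N) T := by
  obtain ⟨C, hC, H⟩ := morrey_trunc hk h hκ0 hκ
  refine ⟨C, hC, fun b f N hb mf hN hM T hT x0 r hr => ?_⟩
  have mb := hb.meas
  set e : ℕ → ℝ := fun n => 1 / ((n:ℝ) + 1) with he
  have e0 : ∀ n, 0 < e n := fun n => by simp only [he]; positivity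
  have te : Tendsto e atTop (𝓝[>] 0) :=
    tendsto_nhdsWithin_iff.2 ⟨tendsto_one_div_add_atTop_nhds_zero_nat, Eventually.of_forall e0⟩
  have hT' : ∀ᵐ x ∂((wd w).restrict (ball x0 r)), ‖T x‖ₑ ^ (1 / a) ≤ liminf (fun n => ‖cop k b (e n) f x‖ₑ ^ (1 / a)) atTop := by
    refine ae_restrict_of_ae (h.fair.ac.ae_le (hT.mono fun x hx => ?_))
    exact ((((ENNReal.continuous_rpow_const (y := 1 / a)).comp continuous_enorm).tendsto _).comp (hx.comp te)).liminf_eq.ge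
  calc _ ≤ ∫⁻ x in ball x0 r, liminf (fun n => ‖cop k b (e n) f x‖ₑ ^ (1 / a)) atTop ∂(wd w) := lintegral_mono_ae hT'
    _ ≤ liminf (fun n => ∫⁻ x in ball x0 r, ‖cop k b (e n) f x‖ₑ ^ (1 / a) ∂(wd w)) atTop :=
        lintegral_liminf_le fun n => ((meas_cop hk.toSK mb mf (e n)).enorm.pow_const _)
    _ ≤ _ := liminf_le_of_le (by isBoundedDefault) fun y hy => by
        obtain ⟨n, hn⟩ := hy.exists
        exact hn.trans (H b f N hb mf hN hM (e n) (e0 n) x0 r hr)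

end morrey
end ahl

/-! ### The quaternionic Heisenberg group as a metric measure space -/

section group
open Quaternion
open QHeis (G bmat idx mul inv hnorm dil rho toQ dre)
variable {n : ℕ}

/-- The horizontal coordinates. -/
abbrev Hor (n : ℕ) := Fin (4 * (n - 1)) → ℝ

/-- The components of `Im⟨y, z⟩`. -/
def br (α : Fin 3) (y z : Hor n) : ℝ :=
  ∑ l : Fin (n - 1), ∑ k : Fin 4, ∑ j : Fin 4, bmat α k j * y (idx l k) * z (idx l j)

lemma mul_def (a b : G n) : mul a b = (fun α => a.1 α + b.1 α + 2 * br α a.2 b.2, a.2 + b.2) := rfl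

lemma br_add_left (α : Fin 3) (x y z : Hor n) : br α (x + y) z = br α x z + br α y z := by
  simp only [br, Pi.add_apply, mul_add, add_mul, Finset.sum_add_distrib]

lemma br_add_right (α : Fin 3) (x y z : Hor n) : br α x (y + z) = br α x y + br α x z := by
  simp only [br, Pi.add_apply, mul_add, Finset.sum_add_distrib]

lemma br_smul_left (α : Fin 3) (r : ℝ) (x y : Hor n) : br α (r • x) y = r * br α x y := by
  simp only [br, Pi.smul_apply, smul_eq_mul, Finset.mul_sum]
  exact Finset.sum_congr rfl fun _ _ => Finset.sum_congr rfl fun _ _ => Finset.sum_congr rfl fun _ _ => by ring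

lemma br_smul_right (α : Fin 3) (r : ℝ) (x y : Hor n) : br α x (r • y) = r * br α x y := by
  simp only [br, Pi.smul_apply, smul_eq_mul, Finset.mul_sum]
  exact Finset.sum_congr rfl fun _ _ => Finset.sum_congr rfl fun _ _ => Finset.sum_congr rfl fun _ _ => by ring

lemma bmat_anti (α : Fin 3) (k j : Fin 4) : bmat α k j = - bmat α j k := by
  fin_cases α <;> fin_cases k <;> fin_cases j <;> simp [bmat]

lemma br_anti (α : Fin 3) (x y : Hor n) : br α x y = - br α y x := by
  simp only [br, ← Finset.sum_neg_distrib]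
  refine Finset.sum_congr rfl fun l _ => ?_
  rw [Finset.sum_comm]
  exact Finset.sum_congr rfl fun k _ => Finset.sum_congr rfl fun j _ => by rw [bmat_anti]; ring

lemma br_self (α : Fin 3) (x : Hor n) : br α x x = 0 := by
  have := br_anti α x x; linarith

lemma br_neg_left (α : Fin 3) (x y : Hor n) : br α (-x) y = - br α x y := by
  have := br_smul_left α (-1) x y; simpa using this

lemma br_neg_right (α : Fin 3) (x y : Hor n) : br α x (-y) = - br α x y := by
  have := br_smul_right α (-1) x y; simpa using this

lemma br_zero_left (α : Fin 3) (y : Hor n) : br α 0 y = 0 := by simp [br]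

lemma br_cont (α : Fin 3) : Continuous fun p : (Hor n) × (Hor n) => br α p.1 p.2 := by
  unfold br; fun_prop

lemma mul_ass (a b c : G n) : mul (mul a b) c = mul a (mul b c) := by
  simp only [mul_def, br_add_left, br_add_right]
  refine Prod.ext (funext fun α => ?_) (add_assoc _ _ _)
  ring

lemma inv_mul (a : G n) : mul (inv a) a = 0 := by
  simp only [mul_def, inv, br_neg_left, br_self]
  refine Prod.ext (funext fun α => ?_) ?_ <;> simp

lemma mul_inv' (a : G n) : mul a (inv a) = 0 := by
  simp only [mul_def, inv, br_neg_right, br_self]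
  refine Prod.ext (funext fun α => ?_) ?_ <;> simp

lemma zero_mul' (a : G n) : mul 0 a = a := by
  simp only [mul_def]
  refine Prod.ext (funext fun α => ?_) ?_ <;> simp [br_zero_left]

lemma mul_zero' (a : G n) : mul a 0 = a := by
  simp only [mul_def]
  refine Prod.ext (funext fun α => ?_) ?_ <;> simp [br_anti _ _ (0 : Hor n), br_zero_left]

lemma inv_cancel (a b : G n) : mul (inv a) (mul a b) = b := by
  rw [← mul_ass, inv_mul, zero_mul']

lemma cancel_inv (a b : G n) : mul a (mul (inv a) b) = b := by
  rw [← mul_ass, mul_inv', zero_mul']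

lemma inv_inv' (a : G n) : inv (inv a) = a := by simp [inv]

lemma inv_of_mul (a b : G n) : inv (mul a b) = mul (inv b) (inv a) := by
  simp only [mul_def, inv, br_neg_left, br_neg_right, neg_neg]
  refine Prod.ext (funext fun α => ?_) ?_
  · simp only [Pi.neg_apply]; rw [br_anti α b.2]; ring
  · simp only; abel

lemma dil_mul (r : ℝ) (a b : G n) : dil r (mul a b) = mul (dil r a) (dil r b) := by
  simp only [mul_def, dil]
  refine Prod.ext (funext fun α => ?_) (funext fun i => ?_)
  · have e1 : (fun i => r * a.2 i) = r • a.2 := rfl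
    have e2 : (fun i => r * b.2 i) = r • b.2 := rfl
    simp only [e1, e2, br_smul_left, br_smul_right]; ring
  · simp [mul_add]

lemma dil_inv (r : ℝ) (a : G n) : dil r (inv a) = inv (dil r a) := by
  simp only [inv, dil]
  refine Prod.ext (funext fun α => ?_) (funext fun i => ?_) <;> simp

lemma dil_dil (r s : ℝ) (a : G n) : dil r (dil s a) = dil (r * s) a := by
  simp only [dil]
  refine Prod.ext (funext fun α => ?_) (funext fun i => ?_) <;> simp only <;> ring

lemma dil_one (a : G n) : dil 1 a = a := by
  simp only [dil]
  refine Prod.ext (funext fun α => ?_) (funext fun i => ?_) <;> simp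

lemma sum_idx (F : Hor n) : ∑ i, F i = ∑ l : Fin (n - 1), ∑ k : Fin 4, F (idx l k) := by
  rw [← Fintype.sum_prod_type']
  symm
  refine Fintype.sum_bijective (fun p : Fin (n - 1) × Fin 4 => idx p.1 p.2) ⟨?_, ?_⟩ _ _ fun _ => rfl
  · rintro ⟨l, k⟩ ⟨l', k'⟩ h
    simp only [idx, Fin.mk.injEq] at h
    have := k.2; have := k'.2
    refine Prod.ext (Fin.ext ?_) (Fin.ext ?_) <;> simp only <;> omega
  · intro i
    have := i.2
    refine ⟨(⟨i.1 / 4, by omega⟩, ⟨i.1 % 4, by omega⟩), Fin.ext ?_⟩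
    simp only [idx]; omega

/-- The quaternionic coordinates of a vector. -/
def qv (y : Hor n) (l : Fin (n - 1)) : Quaternion ℝ :=
  ⟨y (idx l 0), y (idx l 1), y (idx l 2), y (idx l 3)⟩

lemma qv_re (y : Hor n) (l : Fin (n - 1)) : (qv y l).re = y (idx l 0) := rfl
lemma qv_I (y : Hor n) (l : Fin (n - 1)) : (qv y l).imI = y (idx l 1) := rfl
lemma qv_J (y : Hor n) (l : Fin (n - 1)) : (qv y l).imJ = y (idx l 2) := rfl
lemma qv_K (y : Hor n) (l : Fin (n - 1)) : (qv y l).imK = y (idx l 3) := rfl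

lemma qre_sum {ι : Type} (s : Finset ι) (F : ι → Quaternion ℝ) : (∑ i ∈ s, F i).re = ∑ i ∈ s, (F i).re := by
  classical
  induction s using Finset.induction_on with
  | empty => rfl
  | insert a s ha ih => rw [Finset.sum_insert ha, Finset.sum_insert ha, re_add, ih]
lemma qI_sum {ι : Type} (s : Finset ι) (F : ι → Quaternion ℝ) : (∑ i ∈ s, F i).imI = ∑ i ∈ s, (F i).imI := by
  classical
  induction s using Finset.induction_on with
  | empty => rfl
  | insert a s ha ih => rw [Finset.sum_insert ha, Finset.sum_insert ha, imI_add, ih]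
lemma qJ_sum {ι : Type} (s : Finset ι) (F : ι → Quaternion ℝ) : (∑ i ∈ s, F i).imJ = ∑ i ∈ s, (F i).imJ := by
  classical
  induction s using Finset.induction_on with
  | empty => rfl
  | insert a s ha ih => rw [Finset.sum_insert ha, Finset.sum_insert ha, imJ_add, ih]
lemma qK_sum {ι : Type} (s : Finset ι) (F : ι → Quaternion ℝ) : (∑ i ∈ s, F i).imK = ∑ i ∈ s, (F i).imK := by
  classical
  induction s using Finset.induction_on with
  | empty => rfl
  | insert a s ha ih => rw [Finset.sum_insert ha, Finset.sum_insert ha, imK_add, ih]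

/-- The quaternionic hermitian product `⟨y, z⟩`. -/
def qin (y z : Hor n) : Quaternion ℝ := ∑ l, star (qv y l) * qv z l

lemma toQ_mul (a b : G n) : toQ (mul a b) = toQ a + toQ b + (2 : ℝ) • qin a.2 b.2 := by
  ext
  · rw [re_add, re_add, re_smul, qin, qre_sum]
    simp only [toQ, mul_def, sum_idx, Pi.add_apply, smul_eq_mul]
    rw [Finset.mul_sum, ← Finset.sum_add_distrib, ← Finset.sum_add_distrib]
    refine Finset.sum_congr rfl fun l _ => ?_
    simp only [Fin.sum_univ_four, Quaternion.re_mul, re_star, imI_star, imJ_star, imK_star, qv_re, qv_I, qv_J, qv_K]; ring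
  · simp only [toQ, mul_def, imI_add, imI_smul, qin, qI_sum, br,
      smul_eq_mul]
    congr 2
    refine Finset.sum_congr rfl fun l _ => ?_
    simp [Fin.sum_univ_four, Quaternion.imI_mul, qv_re, qv_I, qv_J, qv_K, bmat]
  · simp only [toQ, mul_def, imJ_add, imJ_smul, qin, qJ_sum, br,
      smul_eq_mul]
    congr 2
    refine Finset.sum_congr rfl fun l _ => ?_
    simp [Fin.sum_univ_four, Quaternion.imJ_mul, qv_re, qv_I, qv_J, qv_K, bmat]
  · simp only [toQ, mul_def, imK_add, imK_smul, qin, qK_sum, br,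
      smul_eq_mul]
    congr 2
    refine Finset.sum_congr rfl fun l _ => ?_
    simp [Fin.sum_univ_four, Quaternion.imK_mul, qv_re, qv_I, qv_J, qv_K, bmat]

lemma toQ_nsq (g : G n) : normSq (toQ g) = (∑ i, (g.2 i) ^ 2) ^ 2 + ∑ α, (g.1 α) ^ 2 := by
  rw [Quaternion.normSq_def', Fin.sum_univ_three]; simp [toQ]; ring

lemma hnorm_nonneg (g : G n) : 0 ≤ hnorm g := by unfold hnorm; positivity

lemma hnorm_sq (g : G n) : hnorm g ^ 2 = ‖toQ g‖ := by
  refine (sq_eq_sq₀ (by positivity) (norm_nonneg _)).1 ?_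
  rw [pow_two ‖_‖, ← normSq_eq_norm_mul_self, toQ_nsq, ← pow_mul, hnorm, ← Real.rpow_natCast,
    ← Real.rpow_mul (by positivity)]
  norm_num

lemma y_le (g : G n) : ∑ i, (g.2 i) ^ 2 ≤ hnorm g ^ 2 := by
  rw [hnorm_sq]
  refine (abs_le_of_sq_le_sq' ?_ (norm_nonneg _)).2
  rw [pow_two ‖_‖, ← normSq_eq_norm_mul_self, toQ_nsq]
  have : 0 ≤ ∑ α, (g.1 α) ^ 2 := by positivity
  linarith

lemma qin_le (y z : Hor n) : ‖qin y z‖ ^ 2 ≤ (∑ i, y i ^ 2) * ∑ i, z i ^ 2 := by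
  have e : ∀ y : Hor n, ∑ i, y i ^ 2 = ∑ l, ‖qv y l‖ ^ 2 := by
    intro y
    rw [sum_idx]
    refine Finset.sum_congr rfl fun l _ => ?_
    rw [pow_two ‖_‖, ← normSq_eq_norm_mul_self, Quaternion.normSq_def', Fin.sum_univ_four]; rfl
  rw [e, e]
  refine le_trans (pow_le_pow_left₀ (norm_nonneg _) ((norm_sum_le _ _).trans (le_of_eq (Finset.sum_congr rfl fun l _ => ?_))) 2)
    (Finset.sum_mul_sq_le_sq_mul_sq _ _ _)
  rw [norm_mul, Quaternion.norm_star]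

lemma qin_le' (g h : G n) : ‖qin g.2 h.2‖ ≤ hnorm g * hnorm h := by
  refine (abs_le_of_sq_le_sq' ?_ (mul_nonneg (hnorm_nonneg g) (hnorm_nonneg h))).2
  refine (qin_le _ _).trans ?_
  rw [mul_pow]
  exact mul_le_mul (y_le g) (y_le h) (by positivity) (by positivity)

lemma hnorm_mul_le (g h : G n) : hnorm (mul g h) ≤ hnorm g + hnorm h := by
  have hg := hnorm_nonneg g
  have hh := hnorm_nonneg h
  refine (abs_le_of_sq_le_sq' ?_ (by positivity)).2
  rw [hnorm_sq, toQ_mul]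
  have h1 := norm_add_le (toQ g + toQ h) ((2:ℝ) • qin g.2 h.2)
  have h2 := norm_add_le (toQ g) (toQ h)
  rw [norm_smul, Real.norm_two] at h1
  have h3 := qin_le' g h
  rw [← hnorm_sq, ← hnorm_sq] at h2
  nlinarith

/-- A small right factor changes the quaternion of a point by a relatively small amount. -/
lemma toQ_mul_sub (g h : G n) (hle : hnorm h ≤ hnorm g) :
    ‖toQ (mul g h) - toQ g‖ ≤ 3 * hnorm g * hnorm h := by
  have hh := hnorm_nonneg h
  rw [toQ_mul, show ∀ a b c : Quaternion ℝ, a + b + c - a = b + c by intros; abel]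
  refine (norm_add_le _ _).trans ?_
  rw [norm_smul, Real.norm_two, ← hnorm_sq]
  have h3 := qin_le' g h
  nlinarith

lemma hnorm_inv (g : G n) : hnorm (inv g) = hnorm g := by simp [hnorm, inv]

lemma hnorm_zero : hnorm (0 : G n) = 0 := by simp [hnorm]

lemma hnorm_eq_zero {g : G n} (h : hnorm g = 0) : g = 0 := by
  have h1 : normSq (toQ g) = 0 := by
    rw [normSq_eq_norm_mul_self, ← hnorm_sq, h]; ring
  rw [toQ_nsq] at h1
  have a1 : 0 ≤ ∑ i, (g.2 i) ^ 2 := by positivity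
  have a2 : 0 ≤ ∑ α, (g.1 α) ^ 2 := by positivity
  have e1 : ∑ i, (g.2 i) ^ 2 = 0 := by nlinarith
  have e2 : ∑ α, (g.1 α) ^ 2 = 0 := by nlinarith
  rw [Finset.sum_eq_zero_iff_of_nonneg fun _ _ => sq_nonneg _] at e1 e2
  refine Prod.ext (funext fun α => ?_) (funext fun i => ?_)
  · exact pow_eq_zero_iff two_ne_zero |>.1 (e2 α (Finset.mem_univ _))
  · exact pow_eq_zero_iff two_ne_zero |>.1 (e1 i (Finset.mem_univ _))

lemma toQ_dil (r : ℝ) (g : G n) : toQ (dil r g) = (r ^ 2) • toQ g := by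
  ext
  · rw [re_smul]; simp [toQ, dil, mul_pow, Finset.mul_sum]
  · rw [imI_smul]; simp [toQ, dil]
  · rw [imJ_smul]; simp [toQ, dil]
  · rw [imK_smul]; simp [toQ, dil]

lemma hnorm_dil {r : ℝ} (hr : 0 ≤ r) (g : G n) : hnorm (dil r g) = r * hnorm g := by
  have hg := hnorm_nonneg g
  refine (sq_eq_sq₀ (hnorm_nonneg _) (by positivity)).1 ?_
  rw [hnorm_sq, toQ_dil, norm_smul, mul_pow, hnorm_sq]; simp

lemma hnorm_cont : Continuous (hnorm : G n → ℝ) := by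
  unfold hnorm
  refine Continuous.rpow_const (by fun_prop) fun _ => Or.inr (by norm_num)

lemma mul_cont : Continuous fun p : G n × G n => mul p.1 p.2 := by
  simp only [mul_def]
  refine Continuous.prodMk (continuous_pi fun α => ?_) (by fun_prop)
  have := (br_cont (n := n) α).comp (f := fun p : G n × G n => (p.1.2, p.2.2)) (by fun_prop)
  exact Continuous.add (by fun_prop) (continuous_const.mul this)

lemma inv_cont : Continuous (inv : G n → G n) := by unfold inv; fun_prop

lemma dil_cont (r : ℝ) : Continuous (dil r : G n → G n) := by unfold dil; fun_prop

lemma toQ_cont : Continuous (toQ : G n → Quaternion ℝ) := by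
  have : (toQ : G n → Quaternion ℝ) = fun g => linearIsometryEquivTuple.symm
      (WithLp.toLp 2 ![∑ i, (g.2 i) ^ 2, g.1 0, g.1 1, g.1 2]) := by
    ext g <;> simp [toQ]
  rw [this]
  refine (LinearIsometryEquiv.continuous _).comp ((PiLp.continuous_toLp 2 _).comp (continuous_pi fun i => ?_))
  fin_cases i <;> simp <;> fun_prop

end group

section meas
open QHeis (G bmat idx mul inv hnorm dil rho toQ dre)
variable {n : ℕ}

lemma shear_mp {f : (Hor n) → (Hor n)} (hf : MeasurePreserving f)
    {u : (Hor n) → (Fin 3 → ℝ)} (hu : Measurable u) :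
    MeasurePreserving (fun g : G n => ((g.1 + u g.2, f g.2) : G n)) := by
  have h1 : MeasurePreserving (fun p : (Hor n) × (Fin 3 → ℝ) => (f p.1, p.2 + u p.1))
      (volume.prod volume) (volume.prod volume) := by
    refine hf.skew_product (g := fun y t => t + u y) (by fun_prop) ?_
    exact Eventually.of_forall fun y => (measurePreserving_add_right volume (u y)).map_eq
  exact (Measure.measurePreserving_swap.comp h1).comp (Measure.measurePreserving_swap
    (μ := (volume : Measure (Fin 3 → ℝ))) (ν := (volume : Measure (Hor n))))

lemma left_mp (a : G n) : MeasurePreserving (fun g : G n => mul a g) := by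
  have := shear_mp (n := n) (f := fun y => a.2 + y) (measurePreserving_add_left volume a.2)
    (u := fun y α => a.1 α + 2 * br α a.2 y) (by unfold br; fun_prop)
  convert this using 2 with g
  rw [mul_def]; ext i <;> simp; ring

lemma right_mp (a : G n) : MeasurePreserving (fun g : G n => mul g a) := by
  have := shear_mp (n := n) (f := fun y => y + a.2) (measurePreserving_add_right volume a.2)
    (u := fun y α => a.1 α + 2 * br α y a.2) (by unfold br; fun_prop)
  convert this using 2 with g
  rw [mul_def]; ext i <;> simp; ring

lemma inv_mp : MeasurePreserving (inv : G n → G n) := 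
  (Measure.measurePreserving_neg (volume : Measure (Fin 3 → ℝ))).prod
    (Measure.measurePreserving_neg (volume : Measure (Hor n)))

/-- The homogeneous dimension. -/
def hQ (n : ℕ) : ℕ := 6 + 4 * (n - 1)

lemma map_dil {r : ℝ} (hr : 0 < r) :
    (volume : Measure (G n)).map (dil r) = ofReal ((r⁻¹) ^ hQ n) • volume := by
  have e : (dil r : G n → G n) = Prod.map (fun t => (r ^ 2) • t) (fun y => r • y) := by
    ext g i <;> simp [dil]
  rw [e, show (volume : Measure (G n)) = volume.prod volume from rfl,
    ← Measure.map_prod_map _ _ (by fun_prop) (by fun_prop),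
    Measure.map_addHaar_smul _ (by positivity), Measure.map_addHaar_smul _ hr.ne',
    Measure.prod_smul_left, Measure.prod_smul_right, smul_smul,
    ← ofReal_mul (by positivity)]
  congr 2
  rw [abs_of_pos (by positivity), abs_of_pos (by positivity)]
  simp [hQ, pow_add, ← pow_mul]

lemma vol_dil_pre {r : ℝ} (hr : 0 < r) {E : Set (G n)} (hE : MeasurableSet E) :
    volume (dil r ⁻¹' E) = ofReal ((r⁻¹) ^ hQ n) * volume E := by
  rw [← Measure.map_apply (dil_cont r).measurable hE, map_dil hr]; simp

end meas

/-- The quaternionic Heisenberg group as a metric measure space: `G n` carrying the distance of the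
homogeneous norm (which satisfies the triangle inequality) and Lebesgue measure. -/
def H (n : ℕ) : Type := QHeis.G n

section space
variable {n : ℕ}
open QHeis (G mul inv hnorm dil rho toQ)

lemma rho_comm (g h : G n) : rho g h = rho h g := by
  unfold rho; rw [← hnorm_inv, inv_of_mul, inv_inv']

lemma rho_tri (a b c : G n) : rho a c ≤ rho a b + rho b c := by
  have := hnorm_mul_le (mul (inv c) b) (mul (inv b) a)
  rw [mul_ass, cancel_inv] at this; unfold rho; linarith

lemma rho_self (a : G n) : rho a a = 0 := by rw [rho, inv_mul, hnorm_zero]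

lemma eq_of_rho (x y : G n) (h : rho x y = 0) : x = y := by
  have := congrArg (mul y) (hnorm_eq_zero h)
  rwa [cancel_inv, mul_zero'] at this

lemma norm_le_hnorm {g : G n} (h : hnorm g ≤ 1) : ‖g‖ ≤ hnorm g := by
  have h0 := hnorm_nonneg g
  have h4 : hnorm g ^ 4 = (∑ i, (g.2 i) ^ 2) ^ 2 + ∑ α, (g.1 α) ^ 2 := by
    rw [← toQ_nsq, Quaternion.normSq_eq_norm_mul_self, ← hnorm_sq]; ring
  refine max_le ?_ ?_
  · refine (pi_norm_le_iff_of_nonneg h0).2 fun α => ?_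
    have h1 : g.1 α ^ 2 ≤ ∑ α, (g.1 α) ^ 2 :=
      Finset.single_le_sum (f := fun α => (g.1 α) ^ 2) (fun _ _ => sq_nonneg _) (Finset.mem_univ α)
    have h2 : hnorm g ^ 4 ≤ hnorm g ^ 2 := pow_le_pow_of_le_one h0 h (by norm_num)
    exact abs_le_of_sq_le_sq (by nlinarith [sq_nonneg (∑ i, (g.2 i) ^ 2)]) h0
  · refine (pi_norm_le_iff_of_nonneg h0).2 fun α => ?_
    have h1 : g.2 α ^ 2 ≤ ∑ α, (g.2 α) ^ 2 :=
      Finset.single_le_sum (f := fun α => (g.2 α) ^ 2) (fun _ _ => sq_nonneg _) (Finset.mem_univ α)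
    exact abs_le_of_sq_le_sq (h1.trans (y_le g)) h0

lemma isOpen_rho (s : Set (G n)) :
    IsOpen s ↔ ∀ x ∈ s, ∃ ε > 0, ∀ y, rho x y < ε → y ∈ s := by
  have c1 (x : G n) : Continuous fun y => mul x y :=
    mul_cont.comp (continuous_const.prodMk continuous_id)
  constructor
  · intro hs x hx
    have h1 : (fun y => mul x y) ⁻¹' s ∈ 𝓝 (0 : G n) :=
      (hs.preimage (c1 x)).mem_nhds (by simpa [mul_zero'] using hx)
    obtain ⟨δ, hδ, hs'⟩ := Metric.mem_nhds_iff.1 h1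
    refine ⟨min δ 1, by positivity, fun y hy => ?_⟩
    rw [rho_comm] at hy
    have h2 : mul (inv x) y ∈ ball (0 : G n) δ := by
      rw [mem_ball_zero_iff]
      exact (norm_le_hnorm (hy.le.trans (min_le_right _ _))).trans_lt (hy.trans_le (min_le_left _ _))
    simpa [cancel_inv] using hs' h2
  · intro h
    refine isOpen_iff_mem_nhds.2 fun x hx => ?_
    obtain ⟨ε, hε, h1⟩ := h x hx
    have c2 : Continuous fun y => rho x y := by
      simp_rw [rho_comm x]; exact hnorm_cont.comp (c1 _)
    have h2 : IsOpen {y | rho x y < ε} := isOpen_lt c2 continuous_const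
    exact mem_of_superset (h2.mem_nhds (by simpa [rho, inv_mul, hnorm_zero] using hε)) fun y hy => h1 y hy

instance : MetricSpace (H n) := @MetricSpace.ofDistTopology (H n)
  (inferInstanceAs (TopologicalSpace (G n))) (fun x y => rho (n := n) x y)
  (fun x => rho_self (n := n) x)
  (fun x y => rho_comm (n := n) x y) (fun x y z => rho_tri (n := n) x y z)
  (fun s => isOpen_rho s)
  (fun x y h => eq_of_rho (n := n) x y h)

instance : MeasureSpace (H n) := inferInstanceAs (MeasureSpace (G n))
instance : BorelSpace (H n) := inferInstanceAs (BorelSpace (G n))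
instance : SecondCountableTopology (H n) := inferInstanceAs (SecondCountableTopology (G n))
instance : Nonempty (H n) := inferInstanceAs (Nonempty (G n))

lemma ball_meas (g : G n) (r : ℝ) : MeasurableSet (QHeis.ball g r) :=
  (measurableSet_ball : MeasurableSet (ball (α := H n) g r))

lemma vol_ball_G (g : G n) {r : ℝ} (hr : 0 < r) :
    volume (QHeis.ball g r) = ofReal (r ^ hQ n) * volume (QHeis.ball (0 : G n) 1) := by
  have e1 : volume (QHeis.ball g r) = volume (QHeis.ball (0 : G n) r) := by
    rw [← (left_mp g).measure_preimage (ball_meas g r).nullMeasurableSet]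
    congr 1; ext h; simp [QHeis.ball, rho, inv_cancel]
    rw [show inv (0 : G n) = 0 by simp [inv], zero_mul']
  have e2 : QHeis.ball (0 : G n) r = dil r⁻¹ ⁻¹' QHeis.ball (0 : G n) 1 := by
    ext h; simp [QHeis.ball, rho]
    rw [show inv (0 : G n) = 0 by simp [inv], zero_mul', zero_mul',
      hnorm_dil (by positivity), inv_mul_lt_iff₀ hr, mul_one]
  rw [e1, e2, vol_dil_pre (by positivity) (ball_meas _ _), inv_inv]

lemma unit_ball_pos : 0 < volume (QHeis.ball (0 : G n) 1) :=
  IsOpen.measure_pos (volume : Measure (G n)) (isOpen_ball (α := H n))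
    ⟨_, mem_ball_self (α := H n) (x := (0 : G n)) one_pos⟩

lemma unit_ball_fin : volume (QHeis.ball (0 : G n) 1) < ⊤ := by
  refine (measure_mono fun h hh => ?_).trans_lt (measure_closedBall_lt_top (x := (0 : G n)) (r := 1))
  have h1 : hnorm h < 1 := by
    have : hnorm (mul (inv 0) h) < 1 := hh
    rwa [show inv (0 : G n) = 0 by simp [inv], zero_mul'] at this
  rw [mem_closedBall_zero_iff]
  exact (norm_le_hnorm h1.le).trans h1.le

instance : Ahl (H n) where
  Q := hQ n
  c0 := (volume (QHeis.ball (0 : G n) 1)).toReal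
  Qpos := by unfold hQ; omega
  c0pos := toReal_pos unit_ball_pos.ne' unit_ball_fin.ne
  vol_ball x r hr := by
    rw [mul_comm, ofReal_mul (by positivity), ofReal_toReal unit_ball_fin.ne]
    exact vol_ball_G (n := n) x hr

end space

/-! ### The self-similar tile and the dyadic cubes of the group -/

section tile
open QHeis (G bmat idx mul inv hnorm dil rho toQ dre)
variable {n : ℕ}

/-- Integer points among the horizontal coordinates. -/
abbrev ZH (n : ℕ) := Fin (4 * (n - 1)) → ℤ

/-- Componentwise fractional part. -/
def fr (y : Hor n) : Hor n := fun i => Int.fract (y i)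

/-- Componentwise integer part, as a real vector. -/
def fv (v : ZH n) : Hor n := fun i => v i

lemma bmat_le (α : Fin 3) (k j : Fin 4) : |bmat α k j| ≤ 1 := by
  fin_cases α <;> fin_cases k <;> fin_cases j <;> simp [bmat]

def Bc (n : ℕ) : ℝ := ∑ _l : Fin (n - 1), ∑ _k : Fin 4, ∑ _j : Fin 4, 1

lemma br_bd (α : Fin 3) (y z : Hor n) (hy : ∀ i, |y i| ≤ 1) (hz : ∀ i, |z i| ≤ 1) :
    |br α y z| ≤ Bc n := by
  unfold br Bc
  refine (Finset.abs_sum_le_sum_abs _ _).trans (Finset.sum_le_sum fun l _ => ?_)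
  refine (Finset.abs_sum_le_sum_abs _ _).trans (Finset.sum_le_sum fun k _ => ?_)
  refine (Finset.abs_sum_le_sum_abs _ _).trans (Finset.sum_le_sum fun j _ => ?_)
  rw [abs_mul, abs_mul]
  exact mul_le_one₀ (mul_le_one₀ (bmat_le _ _ _) (abs_nonneg _) (hy _)) (abs_nonneg _) (hz _)

def Rt (α : Fin 3) (y : Hor n) (k : ℕ) : ℝ :=
  (1 / 4) ^ k * br α (fr ((2 : ℝ) ^ k • y)) (fr ((2 : ℝ) ^ (k + 1) • y))

/-- The bounded part of the height function of the self-similar tile; it solves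
`R y = R (2y) / 4 + br (fr y) (fr (2y))`. -/
def Rf (α : Fin 3) (y : Hor n) : ℝ := ∑' k : ℕ, Rt α y k

lemma fr_abs (y : Hor n) (i) : |fr y i| ≤ 1 := by
  rw [fr, abs_of_nonneg (Int.fract_nonneg _)]; exact (Int.fract_lt_one _).le

lemma Rt_bd (α : Fin 3) (y : Hor n) (k : ℕ) : ‖Rt α y k‖ ≤ (1 / 4) ^ k * Bc n := by
  rw [Rt, norm_mul, Real.norm_eq_abs, Real.norm_eq_abs, abs_of_pos (by positivity)]
  exact mul_le_mul_of_nonneg_left (br_bd _ _ _ (fr_abs _) (fr_abs _)) (by positivity)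

lemma geo_sum : HasSum (fun k : ℕ => (1 / 4 : ℝ) ^ k * Bc n) (4 / 3 * Bc n) := by
  have := (hasSum_geometric_of_lt_one (r := (1 / 4 : ℝ)) (by norm_num) (by norm_num)).mul_right (Bc n)
  rwa [show ((1 : ℝ) - 1 / 4)⁻¹ = 4 / 3 by norm_num] at this

lemma Rt_summable (α : Fin 3) (y : Hor n) : Summable (Rt α y) :=
  Summable.of_norm_bounded geo_sum.summable (Rt_bd α y)

lemma Rf_bd (α : Fin 3) (y : Hor n) : |Rf α y| ≤ 4 / 3 * Bc n :=
  tsum_of_norm_bounded geo_sum (Rt_bd α y)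

lemma Rf_eq (α : Fin 3) (y : Hor n) :
    Rf α y = br α (fr y) (fr ((2 : ℝ) • y)) + Rf α ((2 : ℝ) • y) / 4 := by
  rw [Rf, (Rt_summable α y).tsum_eq_zero_add]
  congr 1
  · simp [Rt]
  · rw [Rf, ← tsum_div_const]
    refine tsum_congr fun k => ?_
    simp only [Rt, smul_smul, ← pow_succ]; ring

lemma Rf_meas (α : Fin 3) : Measurable (Rf α : (Hor n) → ℝ) := by
  have h1 : Measurable (fr : (Hor n) → _) :=
    measurable_pi_lambda _ fun i => measurable_fract.comp (measurable_pi_apply i)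
  refine measurable_of_tendsto_metrizable (f := fun N y => ∑ k ∈ Finset.range N, Rt α y k)
    (fun N => Finset.measurable_sum _ fun k _ => ?_)
    (tendsto_pi_nhds.2 fun y => (Rt_summable α y).hasSum.tendsto_sum_nat)
  have h2 := (br_cont (n := n) α).measurable.comp
    (f := fun y => (fr ((2 : ℝ) ^ k • y), fr ((2 : ℝ) ^ (k + 1) • y))) (by fun_prop)
  exact measurable_const.mul h2

/-- Componentwise floor. -/
def fl (y : Hor n) : ZH n := fun i => ⌊y i⌋

lemma fv_fl (y : Hor n) : fv (fl y) = y - fr y := by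
  ext i; simp [fv, fl, fr]

def Sf (α : Fin 3) (y : Hor n) : ℝ := 2 * br α (fv (fl y)) y + Rf α y

/-- The address of the unit tile containing a point. -/
def code0 (g : G n) : (Fin 3 → ℤ) × ZH n := (fun α => ⌊g.1 α - Sf α g.2⌋, fl g.2)

def hf (v : ZH n) : ZH n := fun i => v i / 2

lemma fl_half (y : Hor n) : fl (fun i => (1 / 2) * y i) = hf (fl y) := by
  ext i
  have := Int.floor_div_natCast (y i) 2
  simp only [fl, hf]; push_cast at this; rw [← this]; congr 1; ring

lemma bmat_int (α : Fin 3) (k j : Fin 4) : ∃ z : ℤ, bmat α k j = z := by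
  fin_cases α <;> fin_cases k <;> fin_cases j <;>
    first | (refine ⟨0, ?_⟩; simp [bmat]; done) | (refine ⟨1, ?_⟩; simp [bmat]; done) | (refine ⟨-1, ?_⟩; simp [bmat]; done)

lemma br_int (α : Fin 3) (u v : ZH n) : ∃ z : ℤ, br α (fv u) (fv v) = z := by
  choose B hB using bmat_int
  refine ⟨∑ l : Fin (n - 1), ∑ k : Fin 4, ∑ j : Fin 4, B α k j * u (idx l k) * v (idx l j), ?_⟩
  simp only [br, hB, fv]; push_cast; rfl

/-- The functional equation of the height function that makes the tiling nested. -/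
lemma Sf_half (α : Fin 3) (y : Hor n) :
    Sf α (fun i => (1 / 2) * y i) = (Sf α y + 4 * br α (fv (hf (fl y))) (fv (fl y))) / 4 := by
  set x : Hor n := fun i => (1 / 2) * y i with hx
  have hy : y = (2 : ℝ) • x := by ext i; simp [hx]
  rw [← fl_half, ← hx, Sf, Sf, Rf_eq α x, ← hy, fv_fl, fv_fl]
  have e : ∀ a b : Hor n, br α (a - b) = fun z => br α a z - br α b z := by
    intro a b; ext z; rw [sub_eq_add_neg, br_add_left, br_neg_left]; ring
  have e' : ∀ z a b : Hor n, br α z (a - b) = br α z a - br α z b := by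
    intro z a b; rw [sub_eq_add_neg, br_add_right, br_neg_right]; ring
  simp only [e, e']
  have h1 : br α x y = 0 := by rw [hy, br_smul_right, br_self]; ring
  have h2 : br α (fr y) y = 2 * br α (fr y) x := by rw [hy, br_smul_right]
  have h3 : br α (fr x) y = 2 * br α (fr x) x := by conv_lhs => rw [hy, br_smul_right]
  have h4 := br_anti α x (fr y)
  rw [br_self, br_self, h1, h2, h3, h4]; ring

lemma code0_half (x y : G n) (h : code0 x = code0 y) :
    code0 (dil (1 / 2) x) = code0 (dil (1 / 2) y) := by
  have h1 := congrArg Prod.fst h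
  have h2 : fl x.2 = fl y.2 := congrArg Prod.snd h
  have key (g : G n) (α : Fin 3) (z : ℤ) (hz : br α (fv (hf (fl g.2))) (fv (fl g.2)) = z) :
      (code0 (dil (1 / 2) g)).1 α = ((code0 g).1 α - 4 * z) / 4 := by
    have := Int.floor_div_natCast (g.1 α - Sf α g.2 - ((4 * z : ℤ) : ℝ)) 4
    simp only [code0, dil]
    rw [Int.floor_sub_intCast] at this
    push_cast at this
    rw [← this, Sf_half, hz]; congr 1; ring
  refine Prod.ext (funext fun α => ?_) ?_
  · obtain ⟨z, hz⟩ := br_int α (hf (fl y.2)) (fl y.2)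
    rw [key y α z hz, key x α z (by rw [h2, hz]), show (code0 x).1 α = (code0 y).1 α from congrFun h1 α]
  · change fl (fun i => 1 / 2 * x.2 i) = fl (fun i => 1 / 2 * y.2 i)
    rw [fl_half, fl_half, h2]

lemma Sf_meas (α : Fin 3) : Measurable (Sf α : (Hor n) → ℝ) := by
  have h1 : Measurable fun y : Hor n => fv (fl y) :=
    measurable_pi_lambda _ fun i => by simp only [fv, fl]; fun_prop
  exact (measurable_const.mul ((br_cont (n := n) α).measurable.comp (h1.prodMk measurable_id))).add (Rf_meas α)

lemma code0_pre (i : (Fin 3 → ℤ) × ZH n) :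
    code0 ⁻¹' {i} = (fun g : G n => ((g.1 + (fun α => - Sf α g.2), g.2) : G n)) ⁻¹'
      ((Set.pi univ fun α => Ico (i.1 α : ℝ) (i.1 α + 1)) ×ˢ
        (Set.pi univ fun l => Ico (i.2 l : ℝ) (i.2 l + 1))) := by
  ext g
  simp only [mem_preimage, mem_singleton_iff, Prod.ext_iff, funext_iff, code0, fl, Int.floor_eq_iff,
    mem_prod, Set.mem_pi, mem_univ, mem_Ico, true_imp_iff, Pi.add_apply, ← sub_eq_add_neg]

lemma box_meas (i : (Fin 3 → ℤ) × ZH n) : MeasurableSet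
    ((Set.pi univ fun α => Ico (i.1 α : ℝ) (i.1 α + 1)) ×ˢ
        (Set.pi univ fun l => Ico (i.2 l : ℝ) (i.2 l + 1)) : Set (G n)) :=
  (MeasurableSet.univ_pi fun _ => measurableSet_Ico).prod (MeasurableSet.univ_pi fun _ => measurableSet_Ico)

lemma tile_mp : MeasurePreserving (fun g : G n => ((g.1 + (fun α => - Sf α g.2), g.2) : G n)) :=
  shear_mp (f := id) (MeasurePreserving.id _) (measurable_pi_lambda _ fun α => (Sf_meas α).neg)

lemma code0_meas (i : (Fin 3 → ℤ) × ZH n) : MeasurableSet (code0 (n := n) ⁻¹' {i}) := by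
  rw [code0_pre]; exact tile_mp.measurable (box_meas i)

lemma code0_vol (i : (Fin 3 → ℤ) × ZH n) : volume (code0 (n := n) ⁻¹' {i}) = 1 := by
  rw [code0_pre, tile_mp.measure_preimage (box_meas i).nullMeasurableSet,
    show (volume : Measure (G n)) = volume.prod volume from rfl, Measure.prod_prod,
    Real.volume_pi_Ico, Real.volume_pi_Ico]
  simp

def rd (n : ℕ) : ℝ := 1 + ((∑ _i : Fin (4 * (n - 1)), (1 : ℝ)) ^ 2 + ∑ _α : Fin 3, (1 + 4 / 3 * Bc n) ^ 2)

def cen0 (i : (Fin 3 → ℤ) × ZH n) : G n := (fun α => i.1 α, fv i.2)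

lemma one_le_rd : 1 ≤ rd n := by unfold rd; have : 0 ≤ Bc n := by { unfold Bc; positivity }
                                 linarith [show 0 ≤ ((∑ _i : Fin (4 * (n - 1)), (1 : ℝ)) ^ 2 + ∑ _α : Fin 3, (1 + 4 / 3 * Bc n) ^ 2) by positivity]

lemma cen0_dist (g : G n) : hnorm (mul (inv (cen0 (code0 g))) g) < rd n := by
  set u := mul (inv (cen0 (code0 g))) g with hu
  have h0 := hnorm_nonneg u
  have h4 : hnorm u ^ 4 = (∑ i, (u.2 i) ^ 2) ^ 2 + ∑ α, (u.1 α) ^ 2 := by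
    rw [← toQ_nsq, Quaternion.normSq_eq_norm_mul_self, ← hnorm_sq]; ring
  have h2 : u.2 = fr g.2 := by
    rw [hu, mul_def]; ext i; simp [inv, cen0, code0, fv_fl]
  have h1 (α) : |u.1 α| ≤ 1 + 4 / 3 * Bc n := by
    have e : u.1 α = Int.fract (g.1 α - Sf α g.2) + Rf α g.2 := by
      rw [hu, mul_def]
      simp only [inv, cen0, code0, br_neg_left, Pi.neg_apply, Int.fract, Sf]; ring
    rw [e]
    refine (abs_add_le _ _).trans (add_le_add ?_ (Rf_bd _ _))
    rw [abs_of_nonneg (Int.fract_nonneg _)]; exact (Int.fract_lt_one _).le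
  have h5 : hnorm u ^ 4 ≤ rd n - 1 := by
    rw [h4, rd, add_sub_cancel_left, h2]
    refine add_le_add (pow_le_pow_left₀ (by positivity) (Finset.sum_le_sum fun i _ => ?_) 2)
      (Finset.sum_le_sum fun α _ => ?_)
    · rw [← sq_abs]; exact pow_le_one₀ (abs_nonneg _) (fr_abs _ _)
    · rw [← sq_abs]; exact pow_le_pow_left₀ (abs_nonneg _) (h1 α) 2
  by_contra hc
  push Not at hc
  have h6 : rd n ≤ rd n ^ 4 := by
    nlinarith [pow_le_pow_right₀ (one_le_rd (n := n)) (show 1 ≤ 4 by norm_num)]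
  have h7 : rd n ^ 4 ≤ hnorm u ^ 4 := pow_le_pow_left₀ (by linarith [one_le_rd (n := n)]) hc 4
  linarith

lemma dya_nest (k : ℤ) (x y : G n)
    (h : code0 (dil ((2 : ℝ) ^ (-k)) x) = code0 (dil ((2 : ℝ) ^ (-k)) y)) :
    code0 (dil ((2 : ℝ) ^ (-(k + 1))) x) = code0 (dil ((2 : ℝ) ^ (-(k + 1))) y) := by
  have e : (2 : ℝ) ^ (-(k + 1)) = 1 / 2 * 2 ^ (-k) := by
    rw [neg_add, zpow_add₀ two_ne_zero]; norm_num; ring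
  rw [e, ← dil_dil, ← dil_dil]; exact code0_half _ _ h

lemma dya_sub (k : ℤ) (x : G n) :
    rho x (dil ((2 : ℝ) ^ k) (cen0 (code0 (dil ((2 : ℝ) ^ (-k)) x)))) < rd n * 2 ^ k := by
  have h2 : (0 : ℝ) < 2 ^ k := by positivity
  have h1 := cen0_dist (dil ((2 : ℝ) ^ (-k)) x)
  rw [← mul_lt_mul_iff_right₀ h2, ← hnorm_dil h2.le, dil_mul, dil_inv, dil_dil, ← zpow_add₀ two_ne_zero,
    add_neg_cancel, zpow_zero, dil_one, mul_comm (2 ^ k)] at h1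
  exact h1

instance : Dya (H n) where
  ι := (Fin 3 → ℤ) × ZH n
  cnt := inferInstance
  code k g := code0 (dil (n := n) ((2 : ℝ) ^ (-k)) g)
  cen k i := dil (n := n) ((2 : ℝ) ^ k) (cen0 i)
  rad := rd n
  low := 1
  meas k i := (dil_cont (n := n) ((2 : ℝ) ^ (-k))).measurable (code0_meas i)
  nest k x y h := dya_nest (n := n) k x y h
  one_le_rad := one_le_rd
  sub k x := dya_sub (n := n) k x
  low_pos := one_pos
  low_le k i := by
    have := vol_dil_pre (n := n) (r := (2 : ℝ) ^ (-k)) (by positivity) (code0_meas i)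
    rw [code0_vol, mul_one] at this
    rw [one_mul]
    refine le_of_eq (Eq.trans ?_ this.symm)
    rw [zpow_neg, inv_inv]; rfl

end tile

/-! ### Real derivatives of the fundamental quaternionic kernel -/

section quat
open Quaternion QHeis
open scoped Quaternion

/-- The iterated real derivatives of `conj σ / |σ|⁴`. -/
def UF (m : ℕ) : ℍ[ℝ] → ℍ[ℝ] := dre^[m] fun τ => ((normSq τ) ^ 2)⁻¹ • star τ

lemma UF_succ (m : ℕ) : UF (m + 1) = dre (UF m) := Function.iterate_succ_apply' _ _ _

lemma coe_hasDeriv (σ : ℍ[ℝ]) (x : ℝ) : HasDerivAt (fun s : ℝ => σ + (s : ℍ[ℝ])) 1 x := by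
  have h1 : HasDerivAt (fun s : ℝ => s • (1 : ℍ[ℝ])) ((1 : ℝ) • 1) x := (hasDerivAt_id x).smul_const _
  have := h1.const_add σ
  rw [one_smul] at this
  refine this.congr_of_eventuallyEq (Eventually.of_forall fun s => ?_)
  simp only [add_right_inj]; rw [← Quaternion.coe_one, ← Quaternion.coe_smul]; simp

lemma dre_eq {F : ℍ[ℝ] → ℍ[ℝ]} {σ : ℍ[ℝ]} (h : DifferentiableAt ℝ F σ) :
    HasDerivAt (fun s : ℝ => F (σ + (s : ℍ[ℝ]))) (fderiv ℝ F σ 1) 0 := by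
  have h1 := coe_hasDeriv σ 0
  have h2 : DifferentiableAt ℝ F (σ + ((0 : ℝ) : ℍ[ℝ])) := by simpa using h
  have := h2.hasFDerivAt.comp_hasDerivAt (0 : ℝ) h1
  rw [Quaternion.coe_zero, add_zero] at this
  exact this

instance : StarModule ℝ ℍ[ℝ] := ⟨fun r a => by rw [Quaternion.star_smul, star_trivial r]⟩

lemma UF_smooth (m : ℕ) : ContDiffOn ℝ (⊤ : ℕ∞) (UF m) {0}ᶜ := by
  induction m with
  | zero =>
    have h1 : ContDiff ℝ (⊤ : ℕ∞) fun τ : ℍ[ℝ] => normSq τ := by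
      have : (fun τ : ℍ[ℝ] => normSq τ) = fun τ => ‖τ‖ ^ 2 := by
        ext τ; rw [normSq_eq_norm_mul_self, sq]
      rw [this]; exact contDiff_norm_sq ℝ
    have h2 : ContDiff ℝ (⊤ : ℕ∞) fun τ : ℍ[ℝ] => star τ := (starL' ℝ : ℍ[ℝ] ≃L[ℝ] ℍ[ℝ]).contDiff
    refine ContDiffOn.smul (ContDiffOn.inv (h1.pow 2).contDiffOn fun x hx => ?_) h2.contDiffOn
    exact pow_ne_zero _ (Quaternion.normSq_ne_zero.2 hx)
  | succ m ih =>
    have h1 : ContDiffOn ℝ (⊤ : ℕ∞) (fun σ => fderiv ℝ (UF m) σ 1) {0}ᶜ :=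
      (ih.fderiv_of_isOpen isOpen_compl_singleton (by simp)).clm_apply contDiffOn_const
    refine h1.congr fun σ hσ => ?_
    rw [UF_succ]
    exact (dre_eq ((ih.differentiableOn (by simp)).differentiableAt
      (isOpen_compl_singleton.mem_nhds hσ))).deriv

lemma UF_diff (m : ℕ) {σ : ℍ[ℝ]} (h : σ ≠ 0) : DifferentiableAt ℝ (UF m) σ :=
  ((UF_smooth m).differentiableOn (by simp)).differentiableAt (isOpen_compl_singleton.mem_nhds h)

lemma UF_hasDeriv (m : ℕ) {σ : ℍ[ℝ]} (h : σ ≠ 0) :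
    HasDerivAt (fun s : ℝ => UF m (σ + (s : ℍ[ℝ]))) (UF (m + 1) σ) 0 := by
  have := dre_eq (UF_diff m h)
  rw [UF_succ]; rwa [← this.deriv] at this

lemma UF_hom (m : ℕ) {r : ℝ} (hr : 0 < r) (σ : ℍ[ℝ]) :
    UF m (r • σ) = (r ^ (m + 3))⁻¹ • UF m σ := by
  induction m generalizing σ with
  | zero =>
    simp only [UF, Function.iterate_zero, id]
    rw [normSq_smul, Quaternion.star_smul, smul_smul, smul_smul]
    congr 1
    by_cases h : normSq σ = 0
    · simp [h]
    · field_simp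
  | succ m ih =>
    rw [UF_succ]
    unfold dre
    have e : (fun s : ℝ => UF m (r • σ + (s : ℍ[ℝ]))) =
        fun s => (r ^ (m + 3))⁻¹ • (fun s : ℝ => UF m (σ + (s : ℍ[ℝ]))) (r⁻¹ * s) := by
      ext1 s
      simp only
      rw [← ih, smul_add, ← Quaternion.coe_smul, smul_eq_mul, mul_inv_cancel_left₀ hr.ne']
    rw [e, deriv_fun_const_smul_field, deriv_comp_mul_left (f := fun s : ℝ => UF m (σ + (s : ℍ[ℝ]))), mul_zero, smul_smul, ← mul_inv, ← pow_succ]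

lemma UF_star (m : ℕ) (σ : ℍ[ℝ]) : UF m (star σ) = star (UF m σ) := by
  induction m generalizing σ with
  | zero => simp [UF, Quaternion.normSq_star]
  | succ m ih =>
    rw [UF_succ]; unfold dre
    rw [← deriv.star]
    congr 1; ext1 s; rw [← ih]; simp

lemma UF_bd (m : ℕ) : ∃ C, 0 < C ∧ ∀ σ : ℍ[ℝ], σ ≠ 0 → ‖UF m σ‖ * ‖σ‖ ^ (m + 3) ≤ C := by
  haveI : ProperSpace ℍ[ℝ] := FiniteDimensional.proper_real _
  obtain ⟨C, hC⟩ := (isCompact_sphere (0 : ℍ[ℝ]) 1).exists_bound_of_continuousOn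
    ((UF_smooth m).continuousOn.mono fun σ hσ => by
      simp only [mem_compl_iff, mem_singleton_iff]; rintro rfl; simp at hσ)
  refine ⟨max C 1, by positivity, fun σ hσ => le_max_of_le_left ?_⟩
  have h0 : 0 < ‖σ‖ := norm_pos_iff.2 hσ
  have h1 := hC (‖σ‖⁻¹ • σ) (by simp [norm_smul, h0.ne'])
  rw [UF_hom m (inv_pos.2 h0), norm_smul, inv_pow, inv_inv, Real.norm_eq_abs, abs_of_pos (by positivity)] at h1
  linarith

lemma UF_lip (m : ℕ) : ∃ L, 0 < L ∧ ∀ σ σ' : ℍ[ℝ], σ ≠ 0 → 2 * ‖σ' - σ‖ ≤ ‖σ‖ →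
    ‖UF m σ' - UF m σ‖ * ‖σ‖ ^ (m + 4) ≤ L * ‖σ' - σ‖ := by
  haveI : ProperSpace ℍ[ℝ] := FiniteDimensional.proper_real _
  have hcpt : IsCompact (closedBall (0 : ℍ[ℝ]) 2 \ ball 0 (1 / 2)) :=
    (isCompact_closedBall _ _).diff isOpen_ball
  obtain ⟨L, hL⟩ := hcpt.exists_bound_of_continuousOn (f := fderiv ℝ (UF m))
    (((UF_smooth m).continuousOn_fderiv_of_isOpen isOpen_compl_singleton (by simp)).mono fun σ hσ => by
      simp only [mem_compl_iff, mem_singleton_iff]; rintro rfl; norm_num at hσ)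
  have key : ∀ σ σ' : ℍ[ℝ], ‖σ‖ = 1 → 2 * ‖σ' - σ‖ ≤ 1 → ‖UF m σ' - UF m σ‖ ≤ L * ‖σ' - σ‖ := by
    intro σ σ' h1 h2
    have hsub : ∀ x ∈ closedBall σ (1 / 2), 1 / 2 ≤ ‖x‖ ∧ ‖x‖ ≤ 2 := by
      intro x hx
      rw [mem_closedBall, dist_eq_norm] at hx
      have := norm_sub_norm_le σ x; have := norm_sub_norm_le x σ
      rw [norm_sub_rev] at *
      constructor <;> linarith [norm_sub_rev σ x]
    refine (convex_closedBall σ (1 / 2)).norm_image_sub_le_of_norm_fderiv_le (𝕜 := ℝ) (f := UF m)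
      (fun x hx => UF_diff m ?_) (fun x hx => hL x ?_) (mem_closedBall_self (by norm_num)) ?_
    · have := (hsub x hx).1; rintro rfl; norm_num at this
    · simpa using (hsub x hx).symm
    · rw [mem_closedBall, dist_eq_norm]; linarith
  refine ⟨max L 1, by positivity, fun σ σ' hσ h => ?_⟩
  have h0 : 0 < ‖σ‖ := norm_pos_iff.2 hσ
  have hi : 0 < ‖σ‖⁻¹ := inv_pos.2 h0
  have h1 := key (‖σ‖⁻¹ • σ) (‖σ‖⁻¹ • σ') (by simp [norm_smul, h0.ne']) (by
    rw [← smul_sub, norm_smul, norm_inv, norm_norm, ← mul_assoc, mul_comm 2, mul_assoc,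
      inv_mul_le_iff₀ h0]; linarith)
  rw [UF_hom m hi, UF_hom m hi, ← smul_sub, ← smul_sub, norm_smul, norm_smul, inv_pow, inv_inv,
    Real.norm_eq_abs, abs_of_pos (by positivity), norm_inv, norm_norm] at h1
  have h2 := mul_le_mul_of_nonneg_right h1 h0.le
  have e : L * (‖σ‖⁻¹ * ‖σ' - σ‖) * ‖σ‖ = L * ‖σ' - σ‖ := by field_simp
  rw [e] at h2
  calc _ = ‖σ‖ ^ (m + 3) * ‖UF m σ' - UF m σ‖ * ‖σ‖ := by ring
    _ ≤ _ := h2.trans (mul_le_mul_of_nonneg_right (le_max_left _ _) (norm_nonneg _))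

/-- Restricted to a line `s ↦ s + τ μ`, the `m`-th derivative of the kernel is `(-1)^m m!` times
`∑ (j+1) a^(j+2) b^(m+1-j)`, `a = (s + τ i)⁻¹`, `b = (s - τ i)⁻¹`; this is that sum, written
recursively. -/
def TT (a b : ℂ) : ℕ → ℂ
  | 0 => a ^ 2 * b
  | m + 1 => b * TT a b m + (m + 2) * a ^ (m + 3) * b

lemma TT_deriv (m : ℕ) {a b : ℝ → ℂ} {s : ℝ} (ha : HasDerivAt a (-(a s) ^ 2) s)
    (hb : HasDerivAt b (-(b s) ^ 2) s) :
    HasDerivAt (fun s => TT (a s) (b s) m) (-(m + 1) * TT (a s) (b s) (m + 1)) s := by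
  induction m with
  | zero =>
    refine ((ha.pow 2).mul hb).congr_deriv ?_
    simp [TT]; ring
  | succ m ih =>
    refine ((hb.mul ih).add (((ha.pow (m + 3)).const_mul ((m : ℂ) + 2)).mul hb)).congr_deriv ?_
    simp only [TT]; push_cast; simp only [Nat.add_sub_cancel, Pi.pow_apply]; ring

lemma TT_id (a b : ℂ) (m : ℕ) : (b - a) ^ 2 * TT a b m + (m + 1) * (b - a) * a ^ (m + 3) * b =
    a ^ 2 * b ^ 2 * (b ^ (m + 1) - a ^ (m + 1)) := by
  induction m with
  | zero => simp [TT]; ring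
  | succ m ih =>
    simp only [TT]; push_cast
    linear_combination b * ih

lemma TT_ne {a b : ℂ} (ha : a ≠ 0) (hab : ‖a‖ = ‖b‖) (m : ℕ) : TT a b m ≠ 0 := by
  intro h0
  have hb : b ≠ 0 := by rw [← norm_ne_zero_iff, ← hab]; exact norm_ne_zero_iff.2 ha
  by_cases h : a = b
  · subst h
    have : ∀ m : ℕ, TT a a m = ((m + 1) * (m + 2) / 2) * a ^ (m + 3) := by
      intro m
      induction m with
      | zero => simp [TT]; ring
      | succ m ih => simp only [TT, ih]; push_cast; ring
    rw [this] at h0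
    have h1 : ((m : ℂ) + 1) * (m + 2) / 2 ≠ 0 := by
      have : (((m + 1) * (m + 2) : ℕ) : ℂ) / 2 ≠ 0 := by
        rw [div_ne_zero_iff]; exact ⟨by exact_mod_cast (by positivity : (m + 1) * (m + 2) ≠ 0), by norm_num⟩
      push_cast at this; exact this
    exact mul_ne_zero h1 (pow_ne_zero _ ha) h0
  · have h1 := TT_id a b m
    rw [h0, mul_zero, zero_add] at h1
    set q := b / a with hq
    have hbq : b = q * a := by rw [hq]; field_simp
    have hq1 : q ≠ 1 := fun h' => h (by rw [hbq, h', one_mul])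
    have h2 : ((m : ℂ) + 1) * (q - 1) = q * (q ^ (m + 1) - 1) := by
      have : a ^ (m + 3) * b ≠ 0 := by positivity
      refine mul_right_cancel₀ (mul_ne_zero this ha) ?_
      have : (m + 1) * (q - 1) * (a ^ (m + 3) * b * a) = (m + 1) * (b - a) * a ^ (m + 3) * b := by
        rw [hbq]; ring
      rw [this, h1, hbq]; ring
    rw [← geom_sum_mul, ← mul_assoc] at h2
    have h3 := congrArg Complex.re (mul_right_cancel₀ (sub_ne_zero.2 hq1) h2)
    have hqn : ‖q‖ = 1 := by rw [hq, norm_div, hab, div_self (norm_ne_zero_iff.2 hb)]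
    have h4 : ∀ j, (q * q ^ j).re ≤ 1 := fun j =>
      (Complex.re_le_norm _).trans (by rw [norm_mul, norm_pow, hqn, one_pow, one_mul])
    have h5 : q.re = 1 := by
      refine le_antisymm (by simpa using h4 0) ?_
      have h6 := Finset.sum_le_sum (s := Finset.range m) fun j _ => h4 (j + 1)
      rw [Finset.mul_sum, Complex.re_sum, Finset.sum_range_succ'] at h3
      simp at h6 h3
      linarith
    apply hq1
    have h8 : q.im = 0 := by
      have := Complex.sq_norm q
      rw [hqn, Complex.normSq_apply, h5] at this
      nlinarith
    exact Complex.ext (by simpa using h5) (by simpa using h8)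

lemma exists_axis (v : ℍ[ℝ]) (hv : v.re = 0) : ∃ (τ : ℝ) (μ : ℍ[ℝ]), μ.re = 0 ∧ normSq μ = 1 ∧
    v = τ • μ := by
  by_cases h : v = 0
  · obtain ⟨μ, h0, h1⟩ : ∃ μ : ℍ[ℝ], μ.re = 0 ∧ normSq μ = 1 :=
      ⟨(⟨0, 1, 0, 0⟩ : ℍ[ℝ]), rfl, (Quaternion.normSq_def' _).trans (by norm_num)⟩
    exact ⟨0, μ, h0, h1, by rw [h, zero_smul]⟩
  · have h0 : ‖v‖ ≠ 0 := norm_ne_zero_iff.2 h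
    refine ⟨‖v‖, ‖v‖⁻¹ • v, by rw [re_smul, hv, smul_zero], ?_, by rw [smul_smul, mul_inv_cancel₀ h0, one_smul]⟩
    rw [normSq_smul, normSq_eq_norm_mul_self]; field_simp

/-- The embedding of `ℂ` into the quaternions sending `i` to `μ`. -/
def cq (μ : ℍ[ℝ]) : ℂ →L[ℝ] ℍ[ℝ] :=
  Complex.reCLM.smulRight (1 : ℍ[ℝ]) + Complex.imCLM.smulRight μ

lemma cq_apply (μ : ℍ[ℝ]) (z : ℂ) : cq μ z = z.re • (1 : ℍ[ℝ]) + z.im • μ := rfl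

lemma UF_line (μ : ℍ[ℝ]) (h0 : μ.re = 0) (h1 : normSq μ = 1) (τ : ℝ) (m : ℕ) :
    ∀ s : ℝ, (s : ℂ) + τ * Complex.I ≠ 0 → UF m (s • (1 : ℍ[ℝ]) + τ • μ) =
      cq μ (((-1) ^ m * m.factorial) * TT ((s + τ * Complex.I)⁻¹) ((s - τ * Complex.I)⁻¹) m) := by
  have hstar : star μ = -μ := by
    ext <;> simp [h0]
  have hz : ∀ s : ℝ, Complex.normSq (s + τ * Complex.I) = s ^ 2 + τ ^ 2 := by
    intro s; simp [Complex.normSq_apply]; ring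
  have hn : ∀ s : ℝ, normSq (s • (1 : ℍ[ℝ]) + τ • μ) = s ^ 2 + τ ^ 2 := by
    intro s
    have : μ.imI ^ 2 + μ.imJ ^ 2 + μ.imK ^ 2 = 1 := by
      rw [Quaternion.normSq_def', h0] at h1; linarith
    rw [Quaternion.normSq_def']
    simp [h0]
    linear_combination τ ^ 2 * this
  have hconj : ∀ s : ℝ, (s : ℂ) + τ * Complex.I ≠ 0 → (s : ℂ) - τ * Complex.I ≠ 0 := by
    intro s h h'
    have := congrArg (starRingEnd ℂ) h'
    simp at this; exact h this
  induction m with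
  | zero =>
    intro s hs
    have hp : (s : ℂ) ^ 2 + τ ^ 2 = (s + τ * Complex.I) * (s - τ * Complex.I) := by
      linear_combination ((τ : ℂ) ^ 2) * Complex.I_sq
    have e : TT ((s + τ * Complex.I)⁻¹) ((s - τ * Complex.I)⁻¹) 0 =
        (((s ^ 2 + τ ^ 2) ^ 2)⁻¹ : ℝ) * (s - τ * Complex.I) := by
      have := hconj s hs
      push_cast; rw [hp, TT]; field_simp
    simp only [UF, Function.iterate_zero, id, hn, star_add, Quaternion.star_smul, star_one, hstar]
    rw [pow_zero, Nat.factorial_zero, Nat.cast_one, one_mul, one_mul, e, cq_apply, Complex.re_ofReal_mul, Complex.im_ofReal_mul, smul_add, smul_smul,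
      smul_neg, smul_neg, smul_smul]
    simp
  | succ m ih =>
    intro s hs
    have hσ : s • (1 : ℍ[ℝ]) + τ • μ ≠ 0 := by
      rw [Ne, ← Quaternion.normSq_eq_zero, hn, ← hz]; simpa [Complex.normSq_eq_zero] using hs
    have d1 := UF_hasDeriv m hσ
    have da : HasDerivAt (fun r : ℝ => ((s + r : ℝ) + τ * Complex.I : ℂ)) 1 0 := by
      have := ((hasDerivAt_id (0 : ℝ)).const_add s).ofReal_comp
      simpa using this.add_const (τ * Complex.I)
    have db : HasDerivAt (fun r : ℝ => ((s + r : ℝ) - τ * Complex.I : ℂ)) 1 0 := by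
      have := ((hasDerivAt_id (0 : ℝ)).const_add s).ofReal_comp
      simpa using this.sub_const (τ * Complex.I)
    have da' := da.inv (by simpa using hs)
    have db' := db.inv (by simpa using hconj s hs)
    have d2 := (TT_deriv m (a := fun r : ℝ => ((s + r : ℝ) + τ * Complex.I : ℂ)⁻¹)
      (b := fun r : ℝ => ((s + r : ℝ) - τ * Complex.I : ℂ)⁻¹) (s := 0)
      (da'.congr_deriv (by simp; ring)) (db'.congr_deriv (by simp; ring))).const_mul
        ((-1) ^ m * m.factorial : ℂ)
    have d3 := (cq μ).hasFDerivAt.comp_hasDerivAt (0 : ℝ) d2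
    have hev : ∀ᶠ r : ℝ in 𝓝 0, ((s + r : ℝ) : ℂ) + τ * Complex.I ≠ 0 :=
      da.continuousAt.eventually_ne (by simpa using hs)
    have d4 := d1.unique (d3.congr_of_eventuallyEq (hev.mono fun r hr => by
      have := ih (s + r) hr
      rw [Function.comp_apply, ← this, add_smul]
      congr 1
      have hr : (r : ℍ[ℝ]) = r • (1 : ℍ[ℝ]) := by rw [← Quaternion.coe_one, ← Quaternion.coe_smul]; simp
      rw [add_right_comm]; beta_reduce; rw [hr]))
    rw [d4]
    congr 1
    simp only [add_zero, Nat.factorial_succ]; push_cast; ring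

lemma UF_ne (m : ℕ) {σ : ℍ[ℝ]} (h : σ ≠ 0) : UF m σ ≠ 0 := by
  obtain ⟨τ, μ, h0, h1, h2⟩ := exists_axis (σ - σ.re • (1 : ℍ[ℝ])) (by simp)
  have e : σ = σ.re • (1 : ℍ[ℝ]) + τ • μ := by rw [← h2]; abel
  have hz : (σ.re : ℂ) + τ * Complex.I ≠ 0 := by
    intro hz
    have a1 := congrArg Complex.re hz
    have a2 := congrArg Complex.im hz
    simp at a1 a2
    exact h (by rw [e, a1, a2]; simp)
  intro h3
  rw [e, UF_line μ h0 h1 τ m _ hz, cq_apply] at h3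
  set z := ((-1) ^ m * m.factorial : ℂ) * TT ((σ.re + τ * Complex.I)⁻¹) ((σ.re - τ * Complex.I)⁻¹) m with hzdef
  have hre : z.re = 0 := by have := congrArg (fun q : ℍ[ℝ] => q.re) h3; simpa [h0] using this
  have him : z.im = 0 := by
    rw [hre, zero_smul, zero_add, smul_eq_zero] at h3
    rcases h3 with h3 | h3
    · exact h3
    · rw [h3] at h1; simp at h1
  have hz0 : z = 0 := Complex.ext hre him
  rw [hzdef] at hz0
  refine mul_ne_zero (mul_ne_zero (pow_ne_zero _ (by norm_num)) (by exact_mod_cast m.factorial_ne_zero))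
    (TT_ne (inv_ne_zero hz) ?_ m) hz0
  rw [norm_inv, norm_inv, ← Complex.norm_conj]; simp [sub_eq_add_neg]

end quat

/-! ### Size, smoothness and cancellation of the Cauchy–Szegő kernel -/

section kern
open Quaternion QHeis
open scoped Quaternion
variable {n : ℕ}

/-- The `i`-th real coordinate of a quaternion. -/
def qc (i : Fin 4) : ℍ[ℝ] →L[ℝ] ℝ := EuclideanSpace.proj i ∘L
  linearIsometryEquivTuple.toContinuousLinearEquiv.toContinuousLinearMap

/-- The Cauchy–Szegő kernel on the group, without its constant. -/
def KU (u : G n) : ℍ[ℝ] := UF (2 * (n - 1)) (toQ u)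

lemma toQ_ne {u : G n} (h : u ≠ 0) : toQ u ≠ 0 := fun h' => h (hnorm_eq_zero (by
  have := hnorm_sq u; rw [h', norm_zero] at this; exact pow_eq_zero_iff two_ne_zero |>.1 this))

lemma toQ_inv (u : G n) : toQ (inv u) = star (toQ u) := by
  ext <;> simp only [re_star, imI_star, imJ_star, imK_star] <;>
    simp [toQ, inv]

lemma KU_inv (u : G n) : KU (inv u) = star (KU u) := by rw [KU, toQ_inv, UF_star]; rfl

lemma KU_cont : ContinuousOn (KU : G n → ℍ[ℝ]) {0}ᶜ :=
  (UF_smooth _).continuousOn.comp toQ_cont.continuousOn fun _ hu => toQ_ne hu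

lemma hQ_pow (u : G n) : ‖toQ u‖ ^ (2 * (n - 1) + 3) = hnorm u ^ hQ n := by
  rw [← hnorm_sq, ← pow_mul]; congr 1; unfold hQ; omega

lemma KU_size : ∃ C, 0 < C ∧ ∀ u : G n, ‖KU u‖ * hnorm u ^ hQ n ≤ C := by
  obtain ⟨C, hC, h⟩ := UF_bd (2 * (n - 1))
  refine ⟨C, hC, fun u => ?_⟩
  by_cases hu : u = 0
  · rw [hu, hnorm_zero, zero_pow (by unfold hQ; omega), mul_zero]; exact hC.le
  · rw [← hQ_pow]; exact h _ (toQ_ne hu)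

lemma KU_sm : ∃ A, 0 < A ∧ ∀ g h : G n, 2 * hnorm h ≤ hnorm g →
    ‖KU (mul g h) - KU g‖ * hnorm g ^ (hQ n + 1) ≤ A * hnorm h := by
  obtain ⟨C, hC, hsz⟩ := KU_size (n := n)
  obtain ⟨L, hL, hl⟩ := UF_lip (2 * (n - 1))
  refine ⟨max (3 * L) (6 * (2 ^ hQ n + 1) * C), by positivity, fun g h hgh => ?_⟩
  have h0 := hnorm_nonneg h
  by_cases hg : g = 0
  · rw [hg, hnorm_zero, zero_pow (by omega), mul_zero]; positivity
  have hg0 : 0 < hnorm g := (hnorm_nonneg g).lt_of_ne fun h' => hg (hnorm_eq_zero h'.symm)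
  by_cases h6 : 6 * hnorm h ≤ hnorm g
  · have h1 := toQ_mul_sub g h (by linarith)
    have h2 := hl (toQ g) (toQ (mul g h)) (toQ_ne hg) (by
      rw [← hnorm_sq]; nlinarith)
    have e : ‖toQ g‖ ^ (2 * (n - 1) + 4) = hnorm g ^ (hQ n + 1) * hnorm g := by
      rw [← hnorm_sq, ← pow_mul, ← pow_succ]; congr 1; unfold hQ; omega
    rw [e, ← mul_assoc] at h2
    have h3 : ‖KU (mul g h) - KU g‖ * hnorm g ^ (hQ n + 1) * hnorm g ≤ 3 * L * hnorm h * hnorm g :=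
      h2.trans ((mul_le_mul_of_nonneg_left h1 hL.le).trans_eq (by ring))
    exact (le_of_mul_le_mul_right h3 hg0).trans (mul_le_mul_of_nonneg_right (le_max_left _ _) h0)
  · push Not at h6
    have h1 : hnorm g ≤ 2 * hnorm (mul g h) := by
      have := hnorm_mul_le (mul g h) (inv h)
      rw [mul_ass, mul_inv', mul_zero', hnorm_inv] at this
      linarith
    have h2 : ‖KU (mul g h)‖ * hnorm g ^ hQ n ≤ 2 ^ hQ n * C := by
      calc _ ≤ ‖KU (mul g h)‖ * (2 * hnorm (mul g h)) ^ hQ n := by gcongr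
        _ = 2 ^ hQ n * (‖KU (mul g h)‖ * hnorm (mul g h) ^ hQ n) := by rw [mul_pow]; ring
        _ ≤ _ := mul_le_mul_of_nonneg_left (hsz _) (by positivity)
    have h3 : ‖KU (mul g h) - KU g‖ * hnorm g ^ hQ n ≤ (2 ^ hQ n + 1) * C := by
      calc _ ≤ (‖KU (mul g h)‖ + ‖KU g‖) * hnorm g ^ hQ n := by gcongr; exact norm_sub_le _ _
        _ ≤ _ := by rw [add_mul]; linarith [hsz g]
    calc _ = ‖KU (mul g h) - KU g‖ * hnorm g ^ hQ n * hnorm g := by ring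
      _ ≤ (2 ^ hQ n + 1) * C * (6 * hnorm h) := by gcongr
      _ = (6 * (2 ^ hQ n + 1) * C) * hnorm h := by ring
      _ ≤ _ := mul_le_mul_of_nonneg_right (le_max_right _ _) h0

/-- An antiderivative of `x ^ k • UF (k + 1)` along the real direction. -/
def PP : ℕ → ℍ[ℝ] → ℍ[ℝ]
  | 0, σ => UF 0 σ
  | k + 1, σ => σ.re ^ (k + 1) • UF (k + 1) σ - ((k : ℝ) + 1) • PP k σ

lemma PP_deriv (k : ℕ) {σ : ℍ[ℝ]} (h : σ ≠ 0) :
    HasDerivAt (fun s : ℝ => PP k (σ + (s : ℍ[ℝ]))) (σ.re ^ k • UF (k + 1) σ) 0 := by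
  induction k with
  | zero => rw [pow_zero, one_smul]; exact UF_hasDeriv 0 h
  | succ k ih =>
    have h1 : HasDerivAt (fun s : ℝ => (σ + (s : ℍ[ℝ])).re ^ (k + 1)) ((k + 1 : ℝ) * σ.re ^ k) 0 := by
      refine (((hasDerivAt_id (0 : ℝ)).const_add σ.re).pow (k + 1)).congr_deriv (by simp) |>.congr_of_eventuallyEq
        (Eventually.of_forall fun s => ?_)
      simp
    refine ((h1.smul (UF_hasDeriv (k + 1) h)).sub (ih.const_smul ((k : ℝ) + 1))).congr_deriv ?_
    simp only [Quaternion.coe_zero, add_zero, smul_smul]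
    abel

lemma PP_hom (k : ℕ) {r : ℝ} (hr : 0 < r) (σ : ℍ[ℝ]) : PP k (r • σ) = (r ^ 3)⁻¹ • PP k σ := by
  induction k with
  | zero => exact UF_hom 0 hr σ
  | succ k ih =>
    simp only [PP]
    rw [ih, UF_hom _ hr, smul_sub, smul_smul, smul_smul, smul_smul, smul_smul, mul_comm ((k : ℝ) + 1)]
    congr 2
    simp only [re_smul, smul_eq_mul, mul_pow]
    field_simp
    ring

lemma abs_re_le (σ : ℍ[ℝ]) : |σ.re| ≤ ‖σ‖ := by
  have : σ.re ^ 2 ≤ ‖σ‖ ^ 2 := by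
    rw [pow_two ‖σ‖, ← normSq_eq_norm_mul_self, Quaternion.normSq_def']; nlinarith
  exact abs_le_of_sq_le_sq this (norm_nonneg _)

lemma PP_bd (k : ℕ) : ∃ C, 0 < C ∧ ∀ σ : ℍ[ℝ], σ ≠ 0 → ‖PP k σ‖ * ‖σ‖ ^ 3 ≤ C := by
  induction k with
  | zero => exact UF_bd 0
  | succ k ih =>
    obtain ⟨C, hC, h⟩ := ih
    obtain ⟨D, hD, h'⟩ := UF_bd (k + 1)
    refine ⟨D + (k + 1) * C, by positivity, fun σ hσ => ?_⟩
    have h1 : ‖σ.re ^ (k + 1) • UF (k + 1) σ‖ ≤ ‖σ‖ ^ (k + 1) * ‖UF (k + 1) σ‖ := by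
      rw [norm_smul, norm_pow]
      gcongr
      exact abs_re_le σ
    calc _ ≤ (‖σ‖ ^ (k + 1) * ‖UF (k + 1) σ‖ + (k + 1) * ‖PP k σ‖) * ‖σ‖ ^ 3 := by
          gcongr
          refine (norm_sub_le _ _).trans (add_le_add h1 ?_)
          rw [norm_smul, Real.norm_eq_abs, abs_of_pos (by positivity)]
      _ = ‖UF (k + 1) σ‖ * ‖σ‖ ^ (k + 1 + 3) + (k + 1) * (‖PP k σ‖ * ‖σ‖ ^ 3) := by ring
      _ ≤ _ := add_le_add (h' σ hσ) (mul_le_mul_of_nonneg_left (h σ hσ) (by positivity))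

lemma PP_zero (k : ℕ) {σ : ℍ[ℝ]} (h : σ.re = 0) : (PP k σ).re = 0 := by
  induction k with
  | zero => simp [PP, UF, h]
  | succ k ih => simp [PP, h, ih]

lemma PP_cont (k : ℕ) : ContinuousOn (PP k) {0}ᶜ := by
  induction k with
  | zero => exact (UF_smooth 0).continuousOn
  | succ k ih =>
    exact ((continuous_re.continuousOn.pow _).smul (UF_smooth _).continuousOn).sub
      (ih.const_smul ((k : ℝ) + 1))

/-- The quaternion with real part `x` and imaginary part `t`. -/
def qt (x : ℝ) (t : Fin 3 → ℝ) : ℍ[ℝ] := ⟨x, t 0, t 1, t 2⟩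

lemma qt_re (x : ℝ) (t : Fin 3 → ℝ) : (qt x t).re = x := rfl

lemma qt_norm (x : ℝ) (t : Fin 3 → ℝ) : ‖qt x t‖ ^ 2 = x ^ 2 + ∑ α, t α ^ 2 := by
  rw [pow_two, ← normSq_eq_norm_mul_self, Quaternion.normSq_def', Fin.sum_univ_three]
  simp only [qt]; ring

lemma qt_cont : Continuous fun p : ℝ × (Fin 3 → ℝ) => qt p.1 p.2 := by
  have : (fun p : ℝ × (Fin 3 → ℝ) => qt p.1 p.2) = fun p => linearIsometryEquivTuple.symm
      (WithLp.toLp 2 ![p.1, p.2 0, p.2 1, p.2 2]) := by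
    ext p <;> simp [qt]
  rw [this]
  refine (LinearIsometryEquiv.continuous _).comp ((PiLp.continuous_toLp 2 _).comp (continuous_pi fun i => ?_))
  fin_cases i <;> simp <;> fun_prop

lemma qt_ne (x : ℝ) {t : Fin 3 → ℝ} (ht : t ≠ 0) : qt x t ≠ 0 := by
  intro h
  apply ht
  have h1 := congrArg (fun q : ℍ[ℝ] => q.imI) h
  have h2 := congrArg (fun q : ℍ[ℝ] => q.imJ) h
  have h3 := congrArg (fun q : ℍ[ℝ] => q.imK) h
  ext i; fin_cases i
  exacts [h1, h2, h3]

lemma qt_deriv (k : ℕ) (x : ℝ) {t : Fin 3 → ℝ} (ht : t ≠ 0) :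
    HasDerivAt (fun x => (PP k (qt x t)).re) (x ^ k * (UF (k + 1) (qt x t)).re) x := by
  have h1 := PP_deriv k (qt_ne x ht)
  have h2 : HasDerivAt (fun s : ℝ => (PP k (qt x t + (s : ℍ[ℝ]))).re) (x ^ k * (UF (k + 1) (qt x t)).re) 0 := by
    have h3 := (qc 0).hasFDerivAt.comp_hasDerivAt
        (0 : ℝ) h1
    exact h3
  have h4 : HasDerivAt (fun s => s - x) 1 x := (hasDerivAt_id x).sub_const x
  have h5 := HasDerivAt.comp x (h₂ := fun s : ℝ => (PP k (qt x t + (s : ℍ[ℝ]))).re)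
    (by rw [sub_self]; exact h2) h4
  rw [mul_one] at h5
  refine h5.congr_of_eventuallyEq (Eventually.of_forall fun s => ?_)
  simp only [Function.comp_apply]
  congr 2
  ext <;> simp only [re_add, imI_add, imJ_add, imK_add,
    re_coe, imI_coe, imJ_coe, imK_coe] <;> simp [qt]

/-- The closed-open shell around the identity. -/
def shl (n : ℕ) (r R : ℝ) : Set (G n) := {u | r < hnorm u ∧ hnorm u ≤ R}

/-- On the shell boundary of radius `R`, the value of `|y|²` above `t` (`0` if there is none). -/
def XR (R : ℝ) (t : Fin 3 → ℝ) : ℝ := √(R ^ 4 - ∑ α, t α ^ 2)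

/-- The real part of the antiderivative on the sphere of radius `R`, as a function of `t`. -/
def IR (k : ℕ) (R : ℝ) (t : Fin 3 → ℝ) : ℝ := (PP k (qt (XR R t) t)).re

lemma hnorm4 (u : G n) : hnorm u ^ 4 = (∑ i, u.2 i ^ 2) ^ 2 + ∑ α, u.1 α ^ 2 := by
  rw [← qt_norm]
  have : hnorm u ^ 4 = (hnorm u ^ 2) ^ 2 := by ring
  rw [this, hnorm_sq]; rfl

lemma mem_shl {r R : ℝ} (hr : 0 < r) (hR : r ≤ R) (u : G n) : u ∈ shl n r R ↔
    r ^ 4 < (∑ i, u.2 i ^ 2) ^ 2 + ∑ α, u.1 α ^ 2 ∧ (∑ i, u.2 i ^ 2) ^ 2 + ∑ α, u.1 α ^ 2 ≤ R ^ 4 := by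
  rw [← hnorm4, pow_lt_pow_iff_left₀ hr.le (hnorm_nonneg u) (by norm_num),
    pow_le_pow_iff_left₀ (hnorm_nonneg u) (hr.le.trans hR) (by norm_num)]
  rfl

lemma inner_int (hn : 2 ≤ n) : ∃ c : ℝ, ∀ r R : ℝ, 0 < r → r ≤ R → ∀ t : Fin 3 → ℝ, t ≠ 0 →
    ∫ y, (shl n r R).indicator (fun u => (KU u).re) (t, y) =
      c * (IR (2 * (n - 1) - 1) R t - IR (2 * (n - 1) - 1) r t) := by
  set E := EuclideanSpace ℝ (Fin (4 * (n - 1)))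
  have hfin : Module.finrank ℝ E = 4 * (n - 1) := finrank_euclideanSpace_fin
  haveI : Nontrivial E := Module.nontrivial_of_finrank_pos (R := ℝ) (by rw [hfin]; omega)
  refine ⟨Module.finrank ℝ E * (volume : Measure E).real (ball 0 1) * (1 / 2), fun r R hr hR t ht => ?_⟩
  set τ := ∑ α, t α ^ 2 with hτ
  set F : ℝ → ℝ := fun s => if r ^ 4 < s ^ 4 + τ ∧ s ^ 4 + τ ≤ R ^ 4 then
    (UF (2 * (n - 1)) (qt (s ^ 2) t)).re else 0 with hF
  have e1 : ∀ y : Hor n, (shl n r R).indicator (fun u => (KU u).re) (t, y) =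
      F ‖(WithLp.toLp 2 y : E)‖ := by
    intro y
    have hs : ‖(WithLp.toLp 2 y : E)‖ ^ 2 = ∑ i, y i ^ 2 := by
      rw [EuclideanSpace.norm_sq_eq]; simp
    have hs4 : ‖(WithLp.toLp 2 y : E)‖ ^ 4 = (∑ i, y i ^ 2) ^ 2 := by rw [← hs]; ring
    classical
    simp only [hF]
    rw [indicator_apply, hs4, hs]
    exact if_congr (mem_shl hr hR (t, y)) rfl rfl
  have hr4 : ∀ ρ s : ℝ, 0 < s → (ρ ^ 4 < s ^ 4 + τ ↔ √(XR ρ t) < s) := by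
    intro ρ s hs
    rw [Real.sqrt_lt' hs, XR, Real.sqrt_lt' (by positivity), ← hτ, ← pow_mul, sub_lt_iff_lt_add]
  have hle : √(XR r t) ≤ √(XR R t) := by
    unfold XR; gcongr
  have hsq : ∀ ρ, √(XR ρ t) ^ 2 = XR ρ t := fun ρ => Real.sq_sqrt (Real.sqrt_nonneg _)
  have hd : ∀ s : ℝ, HasDerivAt (fun s : ℝ => 1 / 2 * (PP (2 * (n - 1) - 1) (qt (s ^ 2) t)).re)
      (s ^ (4 * (n - 1) - 1) * (UF (2 * (n - 1)) (qt (s ^ 2) t)).re) s := by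
    intro s
    have h1 := ((qt_deriv (2 * (n - 1) - 1) (s ^ 2) ht).comp s (hasDerivAt_pow 2 s)).const_mul (1 / 2)
    refine h1.congr_deriv ?_
    obtain ⟨m, rfl⟩ : ∃ m, n = m + 2 := ⟨n - 2, by omega⟩
    have a1 : 2 * (m + 2 - 1) - 1 = 2 * m + 1 := by omega
    have a2 : 2 * (m + 2 - 1) = 2 * m + 1 + 1 := by omega
    have a3 : 4 * (m + 2 - 1) - 1 = 2 * (2 * m + 1) + 1 := by omega
    rw [a1, a2, a3, ← pow_mul, pow_succ]
    push_cast
    ring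
  have hc : Continuous fun s : ℝ => s ^ (4 * (n - 1) - 1) * (UF (2 * (n - 1)) (qt (s ^ 2) t)).re :=
    (continuous_pow _).mul (continuous_re.comp
      ((UF_smooth _).continuousOn.comp_continuous (qt_cont.comp (by fun_prop : Continuous fun s : ℝ => (s ^ 2, t)))
        fun s => qt_ne _ ht))
  have e2 : ∫ s in Ioi (0 : ℝ), s ^ (4 * (n - 1) - 1) • F s =
      1 / 2 * (IR (2 * (n - 1) - 1) R t - IR (2 * (n - 1) - 1) r t) := by
    have e3 : ∫ s in Ioi (0 : ℝ), s ^ (4 * (n - 1) - 1) • F s = ∫ s in Ioi (0 : ℝ),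
        (Ioc (√(XR r t)) (√(XR R t))).indicator
          (fun s => s ^ (4 * (n - 1) - 1) * (UF (2 * (n - 1)) (qt (s ^ 2) t)).re) s := by
      refine setIntegral_congr_fun measurableSet_Ioi fun s hs => ?_
      simp only [hF, indicator_apply, smul_eq_mul, mul_ite, mul_zero]
      refine if_congr ?_ rfl rfl
      rw [hr4 r s hs, ← not_lt, hr4 R s hs, not_lt, mem_Ioc]
    rw [e3, setIntegral_indicator measurableSet_Ioc, inter_eq_right.2 fun s hs => ?_,
      ← intervalIntegral.integral_of_le hle,
      intervalIntegral.integral_eq_sub_of_hasDerivAt (fun s _ => hd s) (hc.intervalIntegrable _ _), hsq, hsq, IR, IR]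
    · ring
    · exact (Real.sqrt_nonneg _).trans_lt hs.1
  simp_rw [e1]
  rw [(PiLp.volume_preserving_toLp (Fin (4 * (n - 1)))).integral_comp (MeasurableEquiv.toLp 2 _).measurableEmbedding
    (fun x : E => F ‖x‖), integral_fun_norm_addHaar, hfin, e2]
  simp only [nsmul_eq_mul, smul_eq_mul]; ring

lemma XR_hom {R : ℝ} (hR : 0 < R) (t : Fin 3 → ℝ) : XR R (R ^ 2 • t) = R ^ 2 * XR 1 t := by
  have : R ^ 4 - ∑ α, (R ^ 2 • t) α ^ 2 = (R ^ 2) ^ 2 * (1 ^ 4 - ∑ α, t α ^ 2) := by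
    simp only [Pi.smul_apply, smul_eq_mul, mul_pow, ← Finset.mul_sum]; ring
  rw [XR, this, Real.sqrt_mul (by positivity), Real.sqrt_sq (by positivity), XR]

lemma IR_hom (k : ℕ) {R : ℝ} (hR : 0 < R) (t : Fin 3 → ℝ) : IR k R (R ^ 2 • t) = ((R ^ 2) ^ 3)⁻¹ * IR k 1 t := by
  have : qt (XR R (R ^ 2 • t)) (R ^ 2 • t) = (R ^ 2) • qt (XR 1 t) t := by
    rw [XR_hom hR]
    ext <;> simp only [re_smul, imI_smul, imJ_smul, imK_smul] <;> simp [qt]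
  rw [IR, this, PP_hom k (by positivity), re_smul, smul_eq_mul, IR]

/-- The integral over `t` of the antiderivative on a sphere does not depend on its radius, by
homogeneity. -/
lemma IR_int (k : ℕ) {R : ℝ} (hR : 0 < R) : ∫ t, IR k R t = ∫ t, IR k 1 t := by
  have h1 := Measure.integral_comp_smul_of_nonneg (volume : Measure (Fin 3 → ℝ)) (IR k R) (R ^ 2) (hR := by positivity)
  simp_rw [IR_hom k hR] at h1
  rw [integral_const_mul, Module.finrank_fintype_fun_eq_card, Fintype.card_fin, smul_eq_mul] at h1
  exact (mul_left_cancel₀ (by positivity) h1).symm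

lemma IR_integrable (k : ℕ) {R : ℝ} (hR : 0 < R) : Integrable (IR k R) := by
  obtain ⟨C, hC, h⟩ := PP_bd k
  have hm : Measurable (IR k R) := by
    refine measurable_of_continuousOn_compl_singleton 0 ?_
    have : Continuous fun t : Fin 3 → ℝ => qt (XR R t) t :=
      qt_cont.comp (by unfold XR; fun_prop : Continuous fun t : Fin 3 → ℝ => (XR R t, t))
    exact continuous_re.comp_continuousOn ((PP_cont k).comp this.continuousOn fun t ht => qt_ne _ ht)
  have hz : ∀ t, t ∉ closedBall (0 : Fin 3 → ℝ) (R ^ 2) → IR k R t = 0 := by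
    intro t ht
    refine PP_zero k ?_
    rw [qt_re, XR, Real.sqrt_eq_zero']
    simp only [mem_closedBall_zero_iff, pi_norm_le_iff_of_nonneg (sq_nonneg R), not_forall, not_le] at ht
    obtain ⟨i, hi⟩ := ht
    have h1 := Finset.single_le_sum (f := fun α => t α ^ 2) (fun α _ => sq_nonneg _) (Finset.mem_univ i)
    have h2 : (R ^ 2) ^ 2 ≤ ‖t i‖ ^ 2 := pow_le_pow_left₀ (by positivity) hi.le 2
    rw [Real.norm_eq_abs, sq_abs] at h2
    nlinarith
  have hb : ∀ t, ‖IR k R t‖ ≤ C / (R ^ 2) ^ 3 := by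
    intro t
    by_cases hX : XR R t = 0
    · rw [IR, PP_zero k (by rw [qt_re, hX]), norm_zero]; positivity
    · have h0 : 0 < R ^ 4 - ∑ α, t α ^ 2 := by
        by_contra h'; exact hX (Real.sqrt_eq_zero'.2 (not_lt.1 h'))
      have h1 : ‖qt (XR R t) t‖ = R ^ 2 := by
        refine (sq_eq_sq₀ (norm_nonneg _) (by positivity)).1 ?_
        rw [qt_norm, XR, Real.sq_sqrt h0.le]; ring
      have h2 := h (qt (XR R t) t) (by rw [← norm_ne_zero_iff, h1]; positivity)
      rw [h1] at h2
      rw [le_div_iff₀ (by positivity)]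
      refine le_trans ?_ h2
      gcongr
      exact abs_re_le _
  have h3 : IntegrableOn (IR k R) (closedBall 0 (R ^ 2)) :=
    Measure.integrableOn_of_bounded (M := C / (R ^ 2) ^ 3) (isCompact_closedBall _ _).measure_lt_top.ne
      hm.aestronglyMeasurable (Eventually.of_forall hb)
  exact h3.integrable_of_forall_notMem_eq_zero hz

lemma shl_meas (r R : ℝ) : MeasurableSet (shl n r R) :=
  (measurableSet_lt measurable_const hnorm_cont.measurable).inter
    (measurableSet_le hnorm_cont.measurable measurable_const)

lemma KU_int {r R : ℝ} (hr : 0 < r) : IntegrableOn (KU : G n → ℍ[ℝ]) (shl n r R) := by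
  obtain ⟨C, hC, h⟩ := KU_size (n := n)
  have hsub : shl n r R ⊆ QHeis.ball (0 : G n) (R + 1) := fun u hu => by
    have : inv (0 : G n) = 0 := neg_zero
    change hnorm (mul (inv 0) u) < R + 1
    rw [this, zero_mul']; linarith [hu.2]
  refine Measure.integrableOn_of_bounded (M := C / r ^ hQ n)
    ((measure_mono hsub).trans_lt (vol_fin (X := H n) _ _).lt_top).ne
    ?_ ?_
  · have h1 := (KU_cont (n := n)).aestronglyMeasurable (μ := volume) (measurableSet_singleton 0).compl
    rwa [Measure.restrict_eq_self_of_ae_mem] at h1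
    rw [ae_iff]
    simp only [mem_compl_iff, mem_singleton_iff, not_not, setOf_eq_eq_singleton]
    exact measure_singleton (μ := (volume : Measure (H n))) (0 : G n)
  · refine (ae_restrict_iff' (shl_meas r R)).2 (Eventually.of_forall fun u hu => ?_)
    rw [le_div_iff₀ (by positivity)]
    exact le_trans (by gcongr; exact hu.1.le) (h u)

lemma KU_can (hn : 2 ≤ n) {r R : ℝ} (hr : 0 < r) (hR : r ≤ R) : ∫ u in shl n r R, KU u = 0 := by
  have hre : (∫ u in shl n r R, KU u).re = 0 := by
    have h1 := (qc 0).integral_comp_comm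
        (KU_int (n := n) (R := R) hr)
    have h1' : ∫ u in shl n r R, (KU u).re = (∫ u in shl n r R, KU u).re := h1
    have h2 : IntegrableOn (fun u : G n => (KU u).re) (shl n r R) :=
      (qc 0).integrable_comp (KU_int hr)
    obtain ⟨c, hc⟩ := inner_int hn
    rw [← h1', ← integral_indicator (shl_meas r R), Measure.volume_eq_prod,
      integral_prod _ (h2.integrable_indicator (shl_meas r R))]
    have h3 : ∀ᵐ t : Fin 3 → ℝ, t ≠ 0 := by simp [ae_iff]
    rw [integral_congr_ae (h3.mono fun t ht => hc r R hr hR t ht), integral_const_mul,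
      integral_sub (IR_integrable _ (hr.trans_le hR)) (IR_integrable _ hr), IR_int _ (hr.trans_le hR), IR_int _ hr,
      sub_self, mul_zero]
  -- the reflection `t ↦ -t` conjugates the kernel
  have hst : star (∫ u in shl n r R, KU u) = ∫ u in shl n r R, KU u := by
    let e : G n ≃ᵐ G n := (MeasurableEquiv.neg (Fin 3 → ℝ)).prodCongr (MeasurableEquiv.refl _)
    have he : MeasurePreserving e volume volume :=
      (Measure.measurePreserving_neg (volume : Measure (Fin 3 → ℝ))).prod (MeasurePreserving.id volume)
    have hq : ∀ u, toQ (e u) = star (toQ u) := by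
      intro u
      ext <;> simp only [re_star, imI_star, imJ_star, imK_star] <;> rfl
    have hh : ∀ u, hnorm (e u) = hnorm u := fun u => (sq_eq_sq₀ (hnorm_nonneg _) (hnorm_nonneg _)).1 (by
      rw [hnorm_sq, hnorm_sq, hq, norm_star])
    have h1 := he.setIntegral_preimage_emb e.measurableEmbedding KU (shl n r R)
    have h2 : e ⁻¹' shl n r R = shl n r R := by ext u; simp only [mem_preimage, shl, mem_setOf_eq, hh]
    rw [h2] at h1
    refine ((starL' ℝ : ℍ[ℝ] ≃L[ℝ] ℍ[ℝ]).integral_comp_comm _).symm.trans (Eq.trans ?_ h1)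
    refine setIntegral_congr_fun (shl_meas r R) fun u _ => ?_
    change star (UF _ (toQ u)) = UF _ (toQ (e u))
    rw [hq, UF_star]
  rw [star_eq_self] at hst
  rw [hst, hre, Quaternion.coe_zero]

end kern

/-! ### The real components of the Cauchy–Szegő kernel -/

section comp
open Quaternion QHeis Ahl
open scoped Quaternion
variable {n : ℕ}

/-- The `i`-th unit among `1, i, j, k`. -/
def qe (i : Fin 4) : ℍ[ℝ] := linearIsometryEquivTuple.symm (EuclideanSpace.single i 1)

lemma qc_le (i : Fin 4) (q : ℍ[ℝ]) : |qc i q| ≤ ‖q‖ := by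
  rw [← linearIsometryEquivTuple.norm_map q]
  exact PiLp.norm_apply_le (p := 2) (linearIsometryEquivTuple q) i

lemma qe_norm (i : Fin 4) : ‖qe i‖ = 1 := by
  rw [qe, LinearIsometryEquiv.norm_map, EuclideanSpace.norm_single, norm_one]

lemma qc_sum (q : ℍ[ℝ]) : ∑ i, qc i q • qe i = q := by
  apply linearIsometryEquivTuple.injective
  simp only [map_sum, map_smul, qe, LinearIsometryEquiv.apply_symm_apply]
  ext j
  simp [qc, Pi.single_apply]

/-- A real component of the Cauchy–Szegő kernel. -/
def kq (c : ℝ) (i : Fin 4) (x y : H n) : ℝ := qc i (Kker2 (n := n) c x y)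

lemma kq_eq (c : ℝ) (i : Fin 4) (x y : G n) : kq (n := n) c i x y = c * qc i (KU (mul (inv y) x)) := by
  change qc i (c • KU (mul (inv y) x)) = _
  rw [map_smul]; rfl

lemma kq_sub (c : ℝ) (i : Fin 4) (x y x' y' : G n) : |kq (n := n) c i x y - kq (n := n) c i x' y'| ≤
    |c| * ‖KU (mul (inv y) x) - KU (mul (inv y') x')‖ := by
  rw [kq_eq, kq_eq, ← mul_sub, abs_mul, ← map_sub]
  exact mul_le_mul_of_nonneg_left (qc_le _ _) (abs_nonneg _)

lemma KU_meas (i : Fin 4) : Measurable fun u : G n => qc i (KU u) :=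
  measurable_of_continuousOn_compl_singleton 0 ((qc i).continuous.comp_continuousOn KU_cont)

lemma KU_inv_sub (u v : G n) : ‖KU u - KU v‖ = ‖KU (inv u) - KU (inv v)‖ := by
  rw [KU_inv, KU_inv, ← star_sub, norm_star]

lemma kq_can1 (hn : 2 ≤ n) (c : ℝ) (i : Fin 4) (x : G n) {r R : ℝ} (hr : 0 < r) (hR : r ≤ R) :
    ∫ y in {y : G n | r < hnorm (mul (inv y) x) ∧ hnorm (mul (inv y) x) ≤ R}, kq (n := n) c i x y = 0 := by
  have e : MeasurableEmbedding fun y : G n => mul (inv y) x :=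
    Continuous.measurableEmbedding (mul_cont.comp (inv_cont.prodMk continuous_const)) fun y z h => by
      have h1 := congrArg (fun g => inv (mul g (inv x))) h
      simpa only [mul_ass, mul_inv', mul_zero', inv_inv'] using h1
  have h := ((right_mp x).comp inv_mp).setIntegral_preimage_emb e (fun u => c * qc i (KU u)) (shl n r R)
  simp only [kq_eq]
  refine h.trans ?_
  rw [integral_const_mul, (qc i).integral_comp_comm (KU_int hr), KU_can hn hr hR, map_zero, mul_zero]

lemma kq_can2 (hn : 2 ≤ n) (c : ℝ) (i : Fin 4) (y : G n) {r R : ℝ} (hr : 0 < r) (hR : r ≤ R) :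
    ∫ x in {x : G n | r < hnorm (mul (inv y) x) ∧ hnorm (mul (inv y) x) ≤ R}, kq (n := n) c i x y = 0 := by
  have e : MeasurableEmbedding fun x : G n => mul (inv y) x :=
    Continuous.measurableEmbedding (mul_cont.comp (continuous_const.prodMk continuous_id)) fun x z h => by
      have h1 := congrArg (fun g => mul y g) h
      simpa only [cancel_inv] using h1
  have h := (left_mp (inv y)).setIntegral_preimage_emb e (fun u => c * qc i (KU u)) (shl n r R)
  simp only [kq_eq]
  refine h.trans ?_
  rw [integral_const_mul, (qc i).integral_comp_comm (KU_int hr), KU_can hn hr hR, map_zero, mul_zero]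

lemma mul_quot (x y z : G n) : mul (mul (inv y) x) (mul (inv x) z) = mul (inv y) z := by
  rw [mul_ass, cancel_inv]

lemma inv_quot (x y : G n) : inv (mul (inv y) x) = mul (inv x) y := by
  rw [inv_of_mul, inv_inv']

lemma kq_czk (hn : 2 ≤ n) (c : ℝ) (i : Fin 4) : ∃ A, CZK (X := H n) (kq c i) A := by
  obtain ⟨C, hC, hs⟩ := KU_size (n := n)
  obtain ⟨A, hA, hm⟩ := KU_sm (n := n)
  refine ⟨|c| * max C A, ⟨⟨by positivity, ?_, ?_, ?_, ?_⟩, fun x r R => kq_can1 hn c i x,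
    fun y r R => kq_can2 hn c i y⟩⟩
  · have h : Measurable fun p : G n × G n => c * qc i (KU (mul (inv p.2) p.1)) :=
      ((KU_meas i).comp (mul_cont.comp ((inv_cont.comp continuous_snd).prodMk continuous_fst)).measurable).const_mul c
    refine (show Measurable fun p : G n × G n => kq (n := n) c i p.1 p.2 from ?_)
    simp only [kq_eq]; exact h
  · intro x y
    have : ∀ x y : G n, |kq (n := n) c i x y| * hnorm (mul (inv y) x) ^ hQ n ≤ |c| * max C A := fun x y => by
      rw [kq_eq, abs_mul, mul_assoc]
      refine mul_le_mul_of_nonneg_left ?_ (abs_nonneg _)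
      exact (mul_le_mul_of_nonneg_right (qc_le _ _) (pow_nonneg (hnorm_nonneg _) _)).trans
        ((hs _).trans (le_max_left _ _))
    exact this x y
  · intro x x' y h
    have : ∀ x x' y : G n, 2 * hnorm (mul (inv x) x') ≤ hnorm (mul (inv y) x) →
        |kq (n := n) c i x y - kq (n := n) c i x' y| * hnorm (mul (inv y) x) ^ (hQ n + 1) ≤
          |c| * max C A * hnorm (mul (inv x) x') := fun x x' y h => by
      have h1 := hm _ _ h
      rw [mul_quot, norm_sub_rev] at h1
      rw [mul_assoc]
      refine (mul_le_mul_of_nonneg_right (kq_sub c i x y x' y) (pow_nonneg (hnorm_nonneg _) _)).trans ?_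
      rw [mul_assoc]
      refine mul_le_mul_of_nonneg_left (h1.trans ?_) (abs_nonneg _)
      exact mul_le_mul_of_nonneg_right (le_max_right _ _) (hnorm_nonneg _)
    rw [dist_comm x x'] at h ⊢
    exact this x x' y h
  · intro x y y' h
    have : ∀ x y y' : G n, 2 * hnorm (mul (inv y) y') ≤ hnorm (mul (inv x) y) →
        |kq (n := n) c i x y - kq (n := n) c i x y'| * hnorm (mul (inv x) y) ^ (hQ n + 1) ≤
          |c| * max C A * hnorm (mul (inv y) y') := fun x y y' h => by
      have h1 := hm _ _ h
      rw [mul_quot, norm_sub_rev] at h1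
      rw [mul_assoc]
      refine (mul_le_mul_of_nonneg_right (kq_sub c i x y x y') (pow_nonneg (hnorm_nonneg _) _)).trans ?_
      rw [mul_assoc, KU_inv_sub, inv_quot, inv_quot]
      refine mul_le_mul_of_nonneg_left (h1.trans ?_) (abs_nonneg _)
      exact mul_le_mul_of_nonneg_right (le_max_right _ _) (hnorm_nonneg _)
    rw [dist_comm y y', dist_comm x y] at h ⊢
    exact this _ _ _ h

/-- The truncated commutator splits into its four real components. -/
lemma comm_split (c : ℝ) (b f : G n → ℝ) (g : G n) (ε : ℝ)
    (h : ∀ i, Integrable fun y : H n => shk (kq (n := n) c i) ε g y * ((b g - b y) * f y)) :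
    ∫ y in {y : G n | ε < rho g y}, ((b g - b y) * f y) • Kker2 c g y =
      ∑ i, cop (X := H n) (kq c i) b ε f g • qe i := by
  have hm : MeasurableSet {y : G n | ε < rho g y} :=
    measurableSet_lt measurable_const (hnorm_cont.comp
      (mul_cont.comp (inv_cont.prodMk continuous_const))).measurable
  have h' : ∀ i, Integrable fun y : G n => (shk (X := H n) (kq c i) ε g y * ((b g - b y) * f y)) • qe i :=
    fun i => Integrable.smul_const (h i) _
  rw [← integral_indicator hm]
  trans ∫ y : G n, ∑ i, (shk (X := H n) (kq c i) ε g y * ((b g - b y) * f y)) • qe i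
  · congr 1; ext1 y
    by_cases hy : ε < rho g y
    · rw [indicator_of_mem (by exact hy)]
      conv_lhs => rw [← qc_sum (Kker2 c g y), Finset.smul_sum]
      refine Finset.sum_congr rfl fun i _ => ?_
      have : shk (X := H n) (kq c i) ε g y = qc i (Kker2 c g y) := if_pos hy
      rw [this, smul_smul, mul_comm]
    · rw [indicator_of_notMem (by exact hy)]
      symm
      refine Finset.sum_eq_zero fun i _ => ?_
      have : shk (X := H n) (kq c i) ε g y = 0 := if_neg hy
      rw [this, zero_mul, zero_smul]
  · rw [integral_finset_sum _ fun i _ => h' i]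
    refine Finset.sum_congr rfl fun i _ => ?_
    exact integral_smul_const _ _
end comp

/-! ### Almost everywhere existence of the principal value -/

section exist
open Quaternion Ahl
open QHeis hiding ball
open scoped Quaternion
variable {n : ℕ}

lemma KU_low : ∃ m, 0 < m ∧ ∀ u : G n, u ≠ 0 → m ≤ ‖KU u‖ * hnorm u ^ hQ n := by
  haveI : ProperSpace ℍ[ℝ] := FiniteDimensional.proper_real _
  have hne : (sphere (0 : ℍ[ℝ]) 1).Nonempty := ⟨1, by simp⟩
  obtain ⟨σ, hσ, hm⟩ := (isCompact_sphere (0 : ℍ[ℝ]) 1).exists_isMinOn hne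
    (((UF_smooth (2 * (n - 1))).continuousOn.mono fun σ hσ => by
      rintro rfl; simp at hσ).norm)
  have hσ0 : σ ≠ 0 := by rintro rfl; simp at hσ
  refine ⟨‖UF (2 * (n - 1)) σ‖, norm_pos_iff.2 (UF_ne _ hσ0), fun u hu => ?_⟩
  have h0 : 0 < ‖toQ u‖ := norm_pos_iff.2 (toQ_ne hu)
  have h1 := UF_hom (2 * (n - 1)) (inv_pos.2 h0) (toQ u)
  have h2 : ‖UF (2 * (n - 1)) σ‖ ≤ ‖UF (2 * (n - 1)) (‖toQ u‖⁻¹ • toQ u)‖ :=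
    hm (show ‖toQ u‖⁻¹ • toQ u ∈ sphere (0 : ℍ[ℝ]) 1 by
      rw [mem_sphere_zero_iff_norm, norm_smul, norm_inv, norm_norm, inv_mul_cancel₀ h0.ne'])
  rw [h1, norm_smul, inv_pow, inv_inv, norm_pow, norm_norm, hQ_pow, mul_comm (hnorm u ^ hQ n)] at h2
  exact h2

lemma qc_sq (q : ℍ[ℝ]) : ∑ i, qc i q ^ 2 = ‖q‖ ^ 2 := by
  rw [← linearIsometryEquivTuple.norm_map q, EuclideanSpace.norm_sq_eq]
  simp only [Real.norm_eq_abs, sq_abs]; rfl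

lemma comm_lim {c : ℝ} {b f : G n → ℝ} {g : G n} {T : Fin 4 → ℝ}
    (h : ∀ ε : ℝ, 0 < ε → ∀ i, Integrable fun y : H n => shk (kq (n := n) c i) ε g y * ((b g - b y) * f y))
    (hT : ∀ i, Tendsto (fun ε => cop (X := H n) (kq c i) b ε f g) (𝓝[>] 0) (𝓝 (T i))) :
    commTendsto c b f g (∑ i, T i • qe i) := by
  refine Tendsto.congr' ?_ (tendsto_finset_sum _ fun i _ => (hT i).smul_const (qe i))
  filter_upwards [self_mem_nhdsWithin] with ε hε
  exact (comm_split c b f g ε (h ε hε)).symm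

/-- For arbitrary `b` and `f` the principal value exists almost everywhere, with Bochner integrals of
non-integrable truncations read as `0`. Where all truncations are integrable, the kernel being bounded
below makes `(b g - b) f` integrable on annuli around `g`. -/
lemma exists_any (hn : 2 ≤ n) {c : ℝ} (hc : c ≠ 0) (b f : G n → ℝ) :
    ∀ᵐ g, ∃ L, commTendsto c b f g L := by
  let F : G n → G n → ℍ[ℝ] := fun g y => ((b g - b y) * f y) • Kker2 c g y
  let s : Set (H n) := {g : G n | ∀ ε : ℝ, 0 < ε → IntegrableOn (F g) {y : G n | ε < rho g y}}
  have hm' : ∀ g : G n, Measurable fun y => mul (inv y) g := fun g =>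
    (mul_cont.comp (inv_cont.prodMk continuous_const)).measurable
  have hm : ∀ (g : G n) (ε : ℝ), MeasurableSet {y : G n | ε < rho g y} := fun g ε =>
    measurableSet_lt measurable_const (hnorm_cont.measurable.comp (hm' g))
  have h2 : ∀ i, ∀ x ∈ s, ∀ ε : ℝ, 0 < ε →
      Integrable fun y : H n => shk (kq (n := n) c i) ε x y * ((b x - b y) * f y) := fun i x hx ε hε => by
    have h := ((qc i).integrable_comp (hx ε hε))
    have h' := (integrable_indicator_iff (hm x ε)).2 h
    refine h'.congr (Eventually.of_forall fun y => ?_)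
    by_cases hy : ε < rho x y
    · rw [indicator_of_mem (by exact hy)]
      have : shk (X := H n) (kq c i) ε x y = qc i (Kker2 c x y) := if_pos hy
      simp only [this, F, map_smul, smul_eq_mul]
      ring
    · rw [indicator_of_notMem (by exact hy)]
      have : shk (X := H n) (kq c i) ε x y = 0 := if_neg hy
      simp only [this, zero_mul]
  obtain ⟨m, hm0, hlow⟩ := KU_low (n := n)
  have h1 : ∀ x ∈ s, ∀ ε R : ℝ, 0 < ε →
      IntegrableOn (fun y : H n => (b x - b y) * f y) {y | ε < dist x y ∧ dist x y < R} := fun x hx ε R hε => by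
    let K : G n → ℍ[ℝ] := fun y => Kker2 c x y
    let E : Set (G n) := {y : G n | ε < rho x y ∧ rho x y < R}
    have hE : MeasurableSet E := (hm x ε).inter (measurableSet_lt (hnorm_cont.measurable.comp (hm' x)) measurable_const)
    have hKl : ∀ y ∈ E, m * |c| / R ^ hQ n ≤ ‖K y‖ := fun y hy => by
      have h0 : 0 < rho x y := hε.trans hy.1
      have hu : mul (inv y) x ≠ 0 := fun h => by
        have : rho x y = 0 := by
          change hnorm (mul (inv y) x) = 0
          rw [h, hnorm_zero]
        linarith
      have h3 : m ≤ ‖KU (mul (inv y) x)‖ * R ^ hQ n := (hlow _ hu).trans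
        (mul_le_mul_of_nonneg_left (pow_le_pow_left₀ (hnorm_nonneg _) hy.2.le _) (norm_nonneg _))
      have hR : 0 < R ^ hQ n := pow_pos (h0.trans hy.2) _
      have h4 : ‖K y‖ = |c| * ‖KU (mul (inv y) x)‖ := norm_smul c _
      rw [h4, div_le_iff₀ hR, mul_assoc, mul_comm]
      exact mul_le_mul_of_nonneg_left h3 (abs_nonneg _)
    have hKm : ∀ i, Measurable fun y : G n => qc i (K y) := fun i => by
      have h : Measurable fun y : G n => c * qc i (KU (mul (inv y) x)) :=
        ((KU_meas i).comp (hm' x)).const_mul c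
      exact (funext fun y => kq_eq c i x y : (fun y : G n => qc i (K y)) = _) ▸ h
    have hp : ∀ y ∈ E, 0 < m * |c| / R ^ hQ n := fun y hy => by
      have hR : 0 < R := (hε.trans hy.1).trans hy.2
      positivity
    have hF : ∀ i, IntegrableOn (fun y => qc i (F x y)) E := fun i =>
      ((qc i).integrable_comp (hx ε hε)).mono_measure (Measure.restrict_mono (fun y hy => hy.1) le_rfl)
    have hb : ∀ i, IntegrableOn (fun y => (qc i (K y) / ∑ j, qc j (K y) ^ 2) * qc i (F x y)) E := fun i => by
      refine Integrable.bdd_mul (c := (m * |c| / R ^ hQ n)⁻¹) (hF i)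
        ((hKm i).div (Finset.measurable_sum _ fun j _ => (hKm j).pow_const 2)).aestronglyMeasurable
        ((ae_restrict_iff' hE).2 (Eventually.of_forall fun y hy => ?_))
      have hK0 : 0 < ‖K y‖ := (hp y hy).trans_le (hKl y hy)
      rw [qc_sq, norm_div, norm_pow, norm_norm]
      calc _ ≤ ‖K y‖ / ‖K y‖ ^ 2 := by gcongr; exact qc_le i _
        _ = ‖K y‖⁻¹ := by field_simp
        _ ≤ _ := inv_anti₀ (hp y hy) (hKl y hy)
    have hS := integrable_finset_sum Finset.univ fun i _ => hb i
    refine hS.congr ((ae_restrict_iff' hE).2 (Eventually.of_forall fun y hy => ?_))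
    have hK0 : 0 < ∑ j, qc j (K y) ^ 2 := by rw [qc_sq]; exact pow_pos ((hp y hy).trans_le (hKl y hy)) 2
    have e : ∀ i, (qc i (K y) / ∑ j, qc j (K y) ^ 2) * qc i (F x y) =
        ((b x - b y) * f y) / (∑ j, qc j (K y) ^ 2) * qc i (K y) ^ 2 := fun i => by
      have : qc i (F x y) = ((b x - b y) * f y) * qc i (K y) := by simp only [F, map_smul, smul_eq_mul]; rfl
      rw [this]; ring
    simp only [e]
    rw [← Finset.mul_sum, div_mul_cancel₀ _ hK0.ne']
  have h3 : ∀ i, ∀ᵐ x, x ∈ s →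
      ∃ L : ℝ, Tendsto (fun ε => cop (kq c i) b ε f x) (𝓝[>] 0) (𝓝 L) := fun i => by
    obtain ⟨A, hA⟩ := kq_czk hn c i
    exact cop_exists hA s h1 (h2 i)
  have h4 := ae_all_iff.2 h3
  filter_upwards [show ∀ᵐ x, _ from h4] with g hg
  by_cases hs : g ∈ s
  · choose T hT using fun i => hg i hs
    exact ⟨_, comm_lim (fun ε hε i => h2 i g hs ε hε) hT⟩
  · obtain ⟨ε0, h0, hni⟩ : ∃ ε : ℝ, 0 < ε ∧ ¬ IntegrableOn (F g) {y : G n | ε < rho g y} := by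
      by_contra! h; exact hs h
    refine ⟨0, tendsto_const_nhds.congr' ?_⟩
    filter_upwards [Ioo_mem_nhdsGT h0] with ε hε
    symm
    refine integral_undef fun h => hni ?_
    exact h.mono_measure (Measure.restrict_mono (fun y hy => lt_trans hε.2 hy) le_rfl)

variable {w : G n → ℝ} {p κ : ℝ}

/-- On the weighted space the limits of all components exist and satisfy the Morrey estimate. -/
lemma core (hn : 2 ≤ n) (c : ℝ) {a a' : ℝ} {W σ : H n → ℝ≥0∞} (h : Wp a a' W σ) (hκ0 : 0 < κ) (hκ : κ < 1) :
    ∃ D : ℝ≥0∞, D ≠ ⊤ ∧ ∀ (b f : H n → ℝ) (N : ℝ≥0∞), BM b → Measurable f → N ≠ ⊤ → Mor a κ W N f →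
      ∃ T : Fin 4 → H n → ℝ, (∀ i, Measurable (T i)) ∧ (∀ i, Mor a κ W (D * N) (T i)) ∧
        ∀ᵐ g, commTendsto (n := n) c b f g (∑ i, T i g • qe i) := by
  choose A hA using fun i => kq_czk hn c i
  choose C hC hl using fun i => morrey_lim (hA i) h hκ0 hκ
  refine ⟨∑ i, C i, ENNReal.sum_ne_top.2 fun i _ => hC i, fun b f N hb mf hN hM => ?_⟩
  have h2 : ∀ i x ε, 0 < ε → Integrable fun y : H n => shk (kq (n := n) c i) ε x y * ((b x - b y) * f y) :=
    fun i x ε hε => by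
      obtain ⟨h1, h2⟩ := cop_int (hA i) h hκ0.le hκ hb mf hN hM x one_pos (mem_ball_self one_pos) hε
      refine (h1.add h2).congr (Eventually.of_forall fun y => ?_)
      simp only [Pi.add_apply, ← mul_add]
      rw [← Pi.add_apply, indicator_self_add_compl]
  have hfin : ∀ x r, 0 < r → ∫⁻ y in ball x r, ‖f y‖ₑ ^ (1 / a) ∂wd W ≠ ⊤ := fun x r hr =>
    ((hM x r hr).trans_lt (mul_lt_top hN.lt_top
      (rpow_lt_top_of_nonneg hκ0.le (h.fw x r)))).ne
  obtain ⟨l1, l2⟩ := h.li hb mf hfin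
  have h1 : ∀ x ∈ (univ : Set (H n)), ∀ ε R : ℝ, 0 < ε →
      IntegrableOn (fun y : H n => (b x - b y) * f y) {y | ε < dist x y ∧ dist x y < R} := fun x _ ε R _ => by
    have : IntegrableOn (fun y => b x * f y - b y * f y) (ball x R) := ((l1 x R).const_mul _).sub (l2 x R)
    simp only [sub_mul]
    exact this.mono_set fun y hy => by rw [mem_ball, dist_comm]; exact hy.2
  have h3 : ∀ i, ∃ T : H n → ℝ, Measurable T ∧ ∀ᵐ x,
      Tendsto (fun ε => cop (kq c i) b ε f x) (𝓝[>] 0) (𝓝 (T x)) := fun i =>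
    measurable_limit_of_tendsto_metrizable_ae (fun ε => (meas_cop (hA i).toSK hb.meas mf ε).aemeasurable)
      ((cop_exists (hA i) univ h1 fun x _ => h2 i x).mono fun x hx => hx (mem_univ x))
  choose T hT hlim using h3
  refine ⟨T, hT, fun i x r hr => (hl i b f N hb mf hN hM (T i) (hlim i) x r hr).trans ?_, ?_⟩
  · exact mul_le_mul' (mul_le_mul' (Finset.single_le_sum (fun _ _ => zero_le) (Finset.mem_univ i)) le_rfl) le_rfl
  · filter_upwards [ae_all_iff.2 hlim] with g hg
    exact comm_lim (fun ε hε i => h2 i g ε hε) hg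
end exist

/-! ### Weights and functions of bounded mean oscillation on the group -/

section fin
open Quaternion Ahl
open QHeis hiding ball
open QHeis renaming ball → qball
open scoped Quaternion
variable {n : ℕ} {w : G n → ℝ} {p κ : ℝ}

lemma bsub {x : G n} {r R : ℝ} (h : r ≤ R) : qball x r ⊆ qball x R := fun y hy =>
  lt_of_lt_of_le (show rho y x < r from hy) h

lemma sig_fin (hp : 1 < p) (hw : IsAp p w) (hw0 : ¬ ∀ᵐ x, w x = 0) (x : G n) (r : ℝ) :
    ∫⁻ y in qball x r, (ofReal (w y)) ^ (-(1 / (p - 1))) ≠ ⊤ := by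
  obtain ⟨mw, pw, fw, hA⟩ := hw
  obtain ⟨-, C, hC⟩ := hA.resolve_left fun h => hp.ne' h.1
  obtain ⟨k, hk⟩ : ∃ k : ℕ, wInt w (qball x k) ≠ 0 := by
    by_contra! h
    apply hw0
    have h1 : ∀ k : ℕ, ∀ᵐ y, y ∈ qball x k → w y = 0 := fun k => by
      have h2 := (lintegral_eq_zero_iff mw.ennreal_ofReal).1 (h k)
      refine (ae_restrict_iff' (ball_meas _ _)).1 (h2.mono fun y hy => ?_)
      exact le_antisymm (ofReal_eq_zero.1 hy) (pw y)
    filter_upwards [ae_all_iff.2 h1] with y hy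
    obtain ⟨k, hk⟩ := exists_nat_gt (rho y x)
    exact hy k hk
  set R : ℝ := max (max r k) 1
  have hR : 0 < R := lt_max_of_lt_right one_pos
  have s1 : qball x r ⊆ qball x R := bsub ((le_max_left _ _).trans (le_max_left _ _))
  have s2 : qball x k ⊆ qball x R := bsub ((le_max_right _ _).trans (le_max_left _ _))
  have v0 : volume (qball x R) ≠ 0 := vol_pos (X := H n) x hR
  have vT : volume (qball x R) ≠ ⊤ := vol_fin (X := H n) x R
  have h1 : wInt w (qball x R) / volume (qball x R) ≠ 0 :=
    (ENNReal.div_pos (fun h => hk (le_antisymm ((lintegral_mono_set s2).trans h.le) zero_le)) vT).ne'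
  refine ne_top_of_le_ne_top ?_ (lintegral_mono_set s1)
  intro h
  have h2 := hC x R hR
  rw [h, top_div_of_ne_top vT, top_rpow_of_pos (by linarith), mul_top h1] at h2
  exact ofReal_ne_top (top_le_iff.1 h2)

lemma w_pos (hp : 1 < p) (hw : IsAp p w) (hw0 : ¬ ∀ᵐ x, w x = 0) :
    ∀ᵐ x, w x ≠ 0 := by
  have h1 : ∀ k : ℕ, ∀ᵐ y, y ∈ qball (0 : G n) k → w y ≠ 0 := fun k => by
    refine (ae_restrict_iff' (ball_meas _ _)).1 ?_
    filter_upwards [ae_lt_top (hw.1.ennreal_ofReal.pow_const _) (sig_fin hp hw hw0 0 k)] with y hy h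
    rw [h, ofReal_zero, zero_rpow_of_neg (by
      have : 0 < 1 / (p - 1) := one_div_pos.2 (by linarith)
      linarith)] at hy
    exact lt_irrefl _ hy
  filter_upwards [ae_all_iff.2 h1] with y hy
  obtain ⟨k, hk⟩ := exists_nat_gt (rho y 0)
  exact hy k hk

/-- The weight, changed on a null set so as not to vanish. -/
def Wm (w : G n → ℝ) (x : H n) : ℝ≥0∞ := if w x = 0 then 1 else ofReal (w x)

lemma Wm_int (hp : 1 < p) (hw : IsAp p w) (hw0 : ¬ ∀ᵐ x, w x = 0)
    (F : G n → ℝ≥0∞ → ℝ≥0∞) (E : Set (G n)) :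
    ∫⁻ x in E, F x (Wm w x) = ∫⁻ x in E, F x (ofReal (w x)) := by
  refine lintegral_congr_ae (ae_restrict_of_ae ?_)
  filter_upwards [w_pos hp hw hw0] with x hx
  rw [show Wm w x = _ from if_neg hx]

lemma Wm_meas (hw : IsAp p w) : Measurable (Wm w) := by
  have : Measurable fun x : G n => if w x = 0 then (1 : ℝ≥0∞) else ofReal (w x) :=
    Measurable.ite (hw.1 (measurableSet_singleton 0)) measurable_const hw.1.ennreal_ofReal
  exact this

lemma wd_ball (hp : 1 < p) (hw : IsAp p w) (hw0 : ¬ ∀ᵐ x, w x = 0) (x : H n) (r : ℝ) :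
    wd (Wm w) (ball x r) = wInt w (qball (n := n) x r) := by
  rw [wd, withDensity_apply _ measurableSet_ball]
  exact Wm_int hp hw hw0 (fun _ z => z) _

lemma Wm_wp (hp : 1 < p) (hw : IsAp p w) (hw0 : ¬ ∀ᵐ x, w x = 0) :
    Wp (1 / p) (1 - 1 / p) (Wm w) fun x => Wm w x ^ (-(1 / (p - 1))) := by
  have p0 : 0 < p := by linarith
  have hp1 : 0 < p - 1 := by linarith
  have n0 : ∀ x, Wm w x ≠ 0 := fun x => by
    rw [Wm]; split_ifs with h
    · exact one_ne_zero
    · exact (ENNReal.ofReal_pos.2 ((hw.2.1 x).lt_of_ne' h)).ne'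
  have nT : ∀ x, Wm w x ≠ ⊤ := fun x => by rw [Wm]; split_ifs <;> finiteness
  have a1 : 1 / p < 1 := (div_lt_one p0).2 hp
  have ms : Measurable fun x => Wm w x ^ (-(1 / (p - 1))) := (Wm_meas hw).pow_const _
  have hs : ∀ (x : H n) r, wd (fun x => Wm w x ^ (-(1 / (p - 1)))) (ball x r) =
      ∫⁻ y in qball (n := n) x r, (ofReal (w y)) ^ (-(1 / (p - 1))) := fun x r => by
    rw [wd, withDensity_apply _ measurableSet_ball]
    exact Wm_int hp hw hw0 (fun _ z => z ^ (-(1 / (p - 1)))) _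
  refine ⟨by positivity, by linarith, by ring, Wm_meas hw, ms, n0, nT, fun x => ?_, fun x => ?_,
    fun x r => ?_, fun x r => ?_, fun x => ?_, ?_⟩
  · exact (ENNReal.rpow_pos (n0 x).bot_lt (nT x)).ne'
  · exact rpow_ne_top_of_ne_zero (n0 x) (nT x)
  · rw [wd_ball hp hw hw0]
    refine ne_top_of_le_ne_top (hw.2.2.1 x (max r 1) (lt_max_of_lt_right one_pos)).ne
      (lintegral_mono_set (bsub (le_max_left _ _)))
  · rw [hs]; exact sig_fin hp hw hw0 x r
  · rw [← ENNReal.rpow_mul, ← ENNReal.rpow_add _ _ (n0 x) (nT x)]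
    have : 1 / p + -(1 / (p - 1)) * (1 - 1 / p) = 0 := by field_simp; ring
    rw [this, ENNReal.rpow_zero]
  · obtain ⟨-, C, hC⟩ := hw.2.2.2.resolve_left fun h => hp.ne' h.1
    refine ⟨(C.toNNReal) ^ (1 / p), fun x r hr => ?_⟩
    have h := ENNReal.rpow_le_rpow (hC x r hr) (z := 1 / p) (by positivity)
    rw [wd_ball hp hw hw0, hs]
    have v0 : volume (qball (n := n) x r) ≠ 0 := vol_pos (X := H n) x hr
    have vT : volume (qball (n := n) x r) ≠ ⊤ := vol_fin (X := H n) x r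
    have e : (p - 1) * (1 / p) = 1 - 1 / p := by field_simp
    rw [mul_rpow_of_nonneg _ _ (by positivity), ← ENNReal.rpow_mul, e,
      div_rpow_of_nonneg _ _ (by positivity), div_rpow_of_nonneg _ _ (by linarith)] at h
    set V := volume (qball (n := n) x r)
    set P := wInt w (qball (n := n) x r) ^ (1 / p)
    set S := (∫⁻ y in qball (n := n) x r, (ofReal (w y)) ^ (-(1 / (p - 1)))) ^ (1 - 1 / p)
    have hV : V ^ (1 / p) * V ^ (1 - 1 / p) = V := by
      rw [← ENNReal.rpow_add _ _ v0 vT, add_sub_cancel, ENNReal.rpow_one]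
    have q0 : ∀ z : ℝ, V ^ z ≠ 0 := fun z => (ENNReal.rpow_pos v0.bot_lt vT).ne'
    have qT : ∀ z : ℝ, V ^ z ≠ ⊤ := fun z => rpow_ne_top_of_ne_zero v0 vT
    calc P * S = P / V ^ (1 / p) * (S / V ^ (1 - 1 / p)) * (V ^ (1 / p) * V ^ (1 - 1 / p)) := by
          rw [mul_mul_mul_comm, ENNReal.div_mul_cancel (q0 _) (qT _), ENNReal.div_mul_cancel (q0 _) (qT _)]
      _ ≤ _ := by
          rw [hV]
          refine mul_le_mul' (h.trans_eq ?_) le_rfl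
          rw [coe_rpow_of_nonneg _ (by positivity)]; rfl

lemma osc_le {b : G n → ℝ} (hb : InBMO b) (g : G n) {r : ℝ} (hr : 0 < r) : oscB b g r ≤ bmoNorm b := by
  obtain ⟨-, C, hC⟩ := hb
  exact le_csInf ⟨max C 0, le_max_right _ _, fun g r hr => (hC g r hr).trans (le_max_left _ _)⟩
    fun D hD => hD.2 g r hr

lemma bmo_nonneg (b : G n → ℝ) : 0 ≤ bmoNorm b := Real.sInf_nonneg fun _ h => h.1

/-- A function of bounded mean oscillation agrees almost everywhere with `β` times a measurable function
whose mean oscillations are at most `1`, for every `β > bmoNorm b`. -/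
lemma bmo_rep {b : G n → ℝ} (hb : InBMO b) {β : ℝ} (hβ : bmoNorm b < β) :
    ∃ b' : H n → ℝ, BM b' ∧ ∀ᵐ x, b x = β * b' x := by
  have β0 : 0 < β := (bmo_nonneg b).trans_lt hβ
  have hm : AEStronglyMeasurable b (volume : Measure (G n)) := by
    rw [← Measure.restrict_univ (μ := (volume : Measure (G n)))]
    have : (univ : Set (G n)) = ⋃ k : ℕ, qball (0 : G n) k := by
      refine (eq_univ_of_forall fun y => ?_).symm
      obtain ⟨k, hk⟩ := exists_nat_gt (rho y 0)
      exact mem_iUnion.2 ⟨k, hk⟩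
    rw [this, aestronglyMeasurable_iUnion_iff]
    intro k
    refine ((hb.1 0 (max k 1) (lt_max_of_lt_right one_pos)).mono_set (bsub (le_max_left _ _))).aestronglyMeasurable
  let b' : G n → ℝ := fun x => β⁻¹ * hm.mk b x
  have hbb : ∀ᵐ x, b x = β * b' x := by
    filter_upwards [hm.ae_eq_mk] with x hx
    rw [hx, mul_inv_cancel_left₀ β0.ne']
  have hbb' : ∀ᵐ x, b' x = β⁻¹ * b x := by
    filter_upwards [hbb] with x hx
    rw [hx, inv_mul_cancel_left₀ β0.ne']
  have hI : ∀ (x : G n) r, 0 < r → IntegrableOn b' (qball x r) := fun x r hr =>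
    ((hb.1 x r hr).const_mul β⁻¹).congr (ae_restrict_of_ae (hbb'.mono fun y hy => hy.symm))
  refine ⟨b', ⟨hm.stronglyMeasurable_mk.measurable.const_mul _, fun x r => ?_, fun x r hr => ?_⟩, hbb⟩
  · exact (hI x (max r 1) (lt_max_of_lt_right one_pos)).mono_set
      (ball_subset_ball (α := H n) (le_max_left _ _))
  · let B : Set (G n) := qball x r
    let m := av (X := H n) b' x r
    have v0 : volume (B) ≠ 0 := vol_pos (X := H n) x hr
    have vT : volume (B) ≠ ⊤ := vol_fin (X := H n) x r
    have e1 : m = β⁻¹ * avg (B) b := by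
      change (volume (B)).toReal⁻¹ * (∫ y in B, b' y) = _
      rw [integral_congr_ae (ae_restrict_of_ae hbb'), integral_const_mul, avg]; ring
    have hJ : IntegrableOn (fun y => b' y - m) (B) :=
      (hI x r hr).sub (integrableOn_const vT)
    have e2 := ofReal_integral_norm_eq_lintegral_enorm hJ
    refine (show (∫⁻ y in B, ‖b' y - m‖ₑ) ≤
      volume (B) from ?_)
    rw [← e2]
    have e3 : ∫ y in B, ‖b' y - m‖ =
        β⁻¹ * ((volume (B)).toReal * oscB b x r) := by
      change _ = β⁻¹ * ((volume (B)).toReal * ((volume (B)).toReal⁻¹ *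
        ∫ y in B, |b y - avg (B) b|))
      rw [mul_inv_cancel_left₀ (toReal_pos v0 vT).ne', ← integral_const_mul]
      refine integral_congr_ae (ae_restrict_of_ae (hbb'.mono fun y hy => ?_))
      change ‖b' y - m‖ = _
      rw [hy, e1, ← mul_sub, norm_mul, Real.norm_eq_abs, Real.norm_eq_abs, abs_of_pos (inv_pos.2 β0)]
    rw [e3]
    refine ofReal_le_of_le_toReal ?_
    rw [inv_mul_le_iff₀ β0, mul_comm β]
    exact mul_le_mul_of_nonneg_left ((osc_le hb x hr).trans hβ.le) toReal_nonneg

lemma comm_scale {c β : ℝ} {b b' f : G n → ℝ} (hb : ∀ᵐ x, b x = β * b' x)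
    {g : G n} (hg : b g = β * b' g) {L : ℍ[ℝ]} (h : commTendsto c b' f g L) : commTendsto c b f g (β • L) := by
  refine (h.const_smul β).congr fun ε => ?_
  rw [← integral_smul]
  refine integral_congr_ae (ae_restrict_of_ae (hb.mono fun y hy => ?_))
  simp only [hy, hg, smul_smul]
  congr 1; ring

/-- The estimate with `bmoNorm b` replaced by any larger number. -/
lemma bound (hn : 2 ≤ n) (hp : 1 < p) (hκ0 : 0 < κ) (hκ1 : κ < 1) (hw : IsAp p w)
    (hw0 : ¬ ∀ᵐ x, w x = 0) (c : ℝ) :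
    ∃ C : ℝ, 0 < C ∧ ∀ b : G n → ℝ, InBMO b → ∀ f : G n → ℝ, MemMorrey p κ w f → ∀ β, bmoNorm b < β →
      morreyNormE p κ w (fun g => ofReal ‖commFun c b f g‖)
        ≤ ofReal (C * β) * morreyNorm p κ w f := by
  have p0 : 0 < p := by linarith
  have hW := Wm_wp hp hw hw0
  obtain ⟨D, hD, hc⟩ := core hn c hW hκ0 hκ1
  set E : ℝ≥0∞ := 4 ^ (p - 1) * (4 * D)
  have hE : E ≠ ⊤ := mul_ne_top (rpow_ne_top_of_nonneg (by linarith) (by simp))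
    (mul_ne_top (by simp) hD)
  have hE' : E ^ (1 / p) ≠ ⊤ := rpow_ne_top_of_nonneg (by positivity) hE
  refine ⟨(E ^ (1 / p)).toReal + 1, by positivity, fun b hb f hf β hβ => ?_⟩
  have β0 : 0 < β := (bmo_nonneg b).trans_lt hβ
  obtain ⟨b', hb', hbb⟩ := bmo_rep hb hβ
  set M := morreyNorm p κ w f
  have hmul : ∀ (F : G n → ℝ≥0∞), Measurable F → ∀ (x : H n) r, ∫⁻ y in ball x r, F y ∂(wd (Wm w)) =
      ∫⁻ y in qball (n := n) x r, F y * ofReal (w y) := fun F hF x r => by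
    rw [lint_wd hW.mw measurableSet_ball (show Measurable (α := H n) F from hF)]
    exact Wm_int hp hw hw0 (fun y z => F y * z) _
  have i0 : ∀ (x : G n) r, 0 < r → wInt w (qball x r) ^ κ ≠ 0 := fun x r hr => by
    rw [← show wd (Wm w) (ball (α := H n) x r) = wInt w (qball x r) from wd_ball hp hw hw0 x r]
    exact (ENNReal.rpow_pos (hW.fair.pos x r hr).bot_lt (hW.fw x r)).ne'
  have iT : ∀ (x : G n) r, 0 < r → wInt w (qball x r) ^ κ ≠ ⊤ := fun x r hr =>
    rpow_ne_top_of_nonneg hκ0.le (hw.2.2.1 x r hr).ne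
  have hM : Mor (1 / p) κ (Wm w) (M ^ p) f := fun x r hr => by
    rw [one_div_one_div, hmul _ (hf.1.enorm.pow_const p), wd_ball hp hw hw0]
    rw [← ENNReal.div_le_iff_le_mul (Or.inl (i0 x r hr)) (Or.inl (iT x r hr))]
    refine (ENNReal.rpow_inv_le_iff p0).1 ?_
    rw [← one_div]
    simp only [Real.enorm_eq_ofReal_abs]
    exact le_iSup_of_le x (le_iSup_of_le r (le_iSup_of_le hr le_rfl))
  obtain ⟨T, hT, hMT, hlim⟩ := hc b' f _ hb' hf.1 (rpow_ne_top_of_nonneg p0.le hf.2.ne) hM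
  have hae : ∀ᵐ g, ofReal ‖commFun c b f g‖ ^ p ≤
      ofReal β ^ p * (4 ^ (p - 1) * ∑ i, ‖T i g‖ₑ ^ p) := by
    filter_upwards [hbb, show ∀ᵐ g, _ from hlim] with g hg hl
    have e : commFun c b f g = β • ∑ i, T i g • qe i := (comm_scale hbb hg hl).limUnder_eq
    rw [e, ofReal_norm, enorm_smul, mul_rpow_of_nonneg _ _ p0.le, Real.enorm_of_nonneg β0.le]
    refine mul_le_mul' le_rfl ?_
    have h1 : ‖∑ i, T i g • qe i‖ₑ ≤ ∑ i, ‖T i g‖ₑ := by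
      refine (enorm_sum_le _ _).trans (Finset.sum_le_sum fun i _ => ?_)
      rw [enorm_smul, ← ofReal_norm (qe i), qe_norm, ofReal_one, mul_one]
    refine (ENNReal.rpow_le_rpow h1 p0.le).trans ?_
    have := ENNReal.rpow_sum_le_const_mul_sum_rpow Finset.univ (fun i => ‖T i g‖ₑ) hp.le
    simpa using this
  refine iSup_le fun x => iSup_le fun r => iSup_le fun hr => ?_
  have hmT : ∀ i, Measurable fun y : G n => ‖T i y‖ₑ ^ p := fun i => (hT i).enorm.pow_const p
  have hI : ∫⁻ y in qball x r, ofReal ‖commFun c b f y‖ ^ p * ofReal (w y) ≤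
      ofReal β ^ p * (E * M ^ p) * wInt w (qball x r) ^ κ := by
    calc _ ≤ ∫⁻ y in qball x r, (ofReal β ^ p * 4 ^ (p - 1)) *
            ∑ i, ‖T i y‖ₑ ^ p * ofReal (w y) := by
          refine lintegral_mono_ae (ae_restrict_of_ae (hae.mono fun y hy => (mul_le_mul' hy le_rfl).trans_eq ?_))
          rw [← Finset.sum_mul]; ring
      _ = (ofReal β ^ p * 4 ^ (p - 1)) *
            ∑ i, ∫⁻ y in qball x r, ‖T i y‖ₑ ^ p * ofReal (w y) := by
          rw [lintegral_const_mul, lintegral_finset_sum]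
          · exact fun i _ => (hmT i).mul hw.1.ennreal_ofReal
          · exact Finset.measurable_sum _ fun i _ => (hmT i).mul hw.1.ennreal_ofReal
      _ ≤ (ofReal β ^ p * 4 ^ (p - 1)) * ∑ i : Fin 4, D * M ^ p * wInt w (qball x r) ^ κ := by
          refine mul_le_mul' le_rfl (Finset.sum_le_sum fun i _ => ?_)
          have h1 : ∀ z : H n, ∫⁻ y in qball (n := n) z r, ‖T i y‖ₑ ^ p * ofReal (w y) ≤
              D * M ^ p * wInt w (qball (n := n) z r) ^ κ := fun z => by
            have h1 := hMT i z r hr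
            rwa [one_div_one_div, wd_ball hp hw hw0, hmul _ (hmT i)] at h1
          exact h1 x
      _ = _ := by
          rw [Finset.sum_const, Finset.card_univ, Fintype.card_fin, nsmul_eq_mul]
          simp only [E]; push_cast; ring
  have h2 := ENNReal.rpow_le_rpow (ENNReal.div_le_of_le_mul hI) (z := 1 / p) (by positivity)
  refine h2.trans ?_
  have pp : p * (1 / p) = 1 := mul_one_div_cancel p0.ne'
  rw [mul_rpow_of_nonneg _ _ (by positivity), mul_rpow_of_nonneg _ _ (by positivity),
    ← ENNReal.rpow_mul, ← ENNReal.rpow_mul, pp, ENNReal.rpow_one, ENNReal.rpow_one, ← mul_assoc,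
    mul_comm (ofReal β)]
  refine mul_le_mul' ?_ le_rfl
  rw [ofReal_mul (by positivity)]
  refine mul_le_mul' (le_ofReal_iff_toReal_le hE' (by positivity) |>.2 (by linarith)) le_rfl

end fin

end CZ

open QHeis MeasureTheory in
/-- Theorem 1.1(i): for `p ∈ (1,∞)`, `κ ∈ (0,1)`, `w ∈ A_p(𝓗^{n-1})`,
there is `C > 0` independent of `b` and `f` such that for every `b ∈ BMO(𝓗^{n-1})` and
every `f ∈ L^{p,κ}_w(𝓗^{n-1})`, the principal value `[b,𝒞]f` exists a.e. and
`‖[b,𝒞]f‖_{L^{p,κ}_w} ≤ C ‖b‖_BMO ‖f‖_{L^{p,κ}_w}`. -/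
theorem commutator_bounded_on_weighted_morrey (n : ℕ) (hn : 2 ≤ n)
    (p κ : ℝ) (hp : 1 < p) (hκ0 : 0 < κ) (hκ1 : κ < 1)
    (w : G n → ℝ) (hw : IsAp p w) (c : ℝ) (hc : c ≠ 0) :
    ∃ C : ℝ, 0 < C ∧ ∀ b : G n → ℝ, InBMO b → ∀ f : G n → ℝ, MemMorrey p κ w f →
      (∀ᵐ g ∂(volume : Measure (G n)), ∃ L : Quaternion ℝ, commTendsto c b f g L) ∧
      morreyNormE p κ w (fun g => ENNReal.ofReal ‖commFun c b f g‖)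
        ≤ ENNReal.ofReal (C * bmoNorm b) * morreyNorm p κ w f := by
  by_cases hw0 : ∀ᵐ x ∂(volume : Measure (G n)), w x = 0
  · refine ⟨1, one_pos, fun b _ f _ => ⟨CZ.exists_any hn hc b f, ?_⟩⟩
    refine iSup_le fun g => iSup_le fun r => iSup_le fun _ => ?_
    have : ∫⁻ x in ball g r, ofReal ‖commFun c b f x‖ ^ p * ofReal (w x) = 0 := by
      rw [← lintegral_zero (μ := volume.restrict (ball g r))]
      refine lintegral_congr_ae (ae_restrict_of_ae (hw0.mono fun x hx => ?_))
      simp [hx]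
    rw [this, ENNReal.zero_div, zero_rpow_of_pos (one_div_pos.2 (by linarith))]
    exact zero_le
  · obtain ⟨C, hC, h⟩ := CZ.bound hn hp hκ0 hκ1 hw hw0 c
    refine ⟨C, hC, fun b hb f hf => ⟨CZ.exists_any hn hc b f, ?_⟩⟩
    -- The bound holds for every `β > bmoNorm b`; let `β` decrease to `bmoNorm b`.
    have h1 : Tendsto (fun β : ℝ => ofReal (C * β) * morreyNorm p κ w f) (𝓝[>] bmoNorm b)
        (𝓝 (ofReal (C * bmoNorm b) * morreyNorm p κ w f)) := by
      refine ENNReal.Tendsto.mul_const ?_ (Or.inr hf.2.ne)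
      refine tendsto_ofReal ?_
      exact ((continuous_const.mul continuous_id).tendsto _).mono_left nhdsWithin_le_nhds
    exact ge_of_tendsto h1 (by filter_upwards [self_mem_nhdsWithin] with β hβ using h b hb f hf β hβ)
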